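/- For any compactly supported C^∞ functions f₁,f₂,g₁,g₂ on ℝ² there exists ε₀ > 0 such that for every ε ∈ (0,ε₀] the Cauchy problem □u₁ = −(∂ₜu₂)²∂ₜu₁, □u₂ = −(∂ₜu₁)²∂ₜu₂ on (0,∞)×ℝ² with data u_j(0,x) = εf_j(x), ∂ₜu_j(0,x) = εg_j(x) (j = 1,2) admits a global C^∞ solution u = (u₁,u₂) : [0,∞)×ℝ² → ℝ², and this solution is unique among global C^∞ solutions. -/

import Mathlib

/-!
The system is studied after the substitution `u = ε w`, which leaves fixed data for `w` and puts the
coupling `μ = ε²` in front of the cubic term, and after a translation in time which places the data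
at a time `T0` at which their support lies well inside the light cone `|x| < t`.
The cubic term is first multiplied by `ϑ³`, where `ϑ` is a time cut-off equal to one on `[T0, T]`
and zero after `2T`; the whole difficulty is a smallness threshold for `μ` independent of `T`.

*Existence for the cut-off problem.* On the Fourier side the velocity `∂ₜw` satisfies a Duhamel
equation whose cubic term is a double convolution. Truncating the unknown at a level `M` in the
weight `(1 + |ξ|)⁻³` makes the nonlinearity globally Lipschitz, and a contraction in a space with
exponential time weight gives a solution for all times (`HY.sol`), Lipschitz in `μ`
(`HY.sol_lip`). As long as the truncation is inactive the solution decays rapidly in `ξ` with all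
time derivatives (`HY.boot`), so that it synthesizes a smooth solution in physical space.

*The a priori estimate* (`ray_apriori`). Cubic terms in two space dimensions are critical:
`∂ₜw` decays only like `t^(-1/2)`, and `(∂ₜw)²` just fails to be integrable in time.
Suppose `μ t (ϑ ∂ₜw)² ≤ κ` with `κ` small.

* The energy on hyperboloids of the fields obtained from `w` by at most three Lorentz boosts obeys a
  differential inequality with coefficient `C κ / s`, hence grows at most like `s^(C κ)` (`Y_growth`).
  No derivative is lost here: Gagliardo–Nirenberg inequalities with the weight `√(s² + |x|²)`
  (`cubic_bound`) control boosts of the cubic term by its supremum bound and the top order energy.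
  Boosts of `ϑ` are bounded uniformly in `T` by scaling (`th_bound`).
* The weighted Sobolev inequality `sobolev` turns this into pointwise bounds with a small loss.
  They make the outgoing derivative `(∂ₜ + ∂ᵣ)w` and the angular part of `□` integrable
  perturbations, so that along outgoing rays the incoming derivative `z_i = √r (∂ₜ - ∂ᵣ)w_i`
  satisfies an ordinary differential equation `z_i' = -a_i z_i + b_i` with `b_i` integrable.
* The structure of the right-hand sides `-(∂ₜw_{1-i})² ∂ₜw_i` gives `a_i ≥ 0`. Hence `√t |∂ₜw_i|` is
  bounded by a constant `A0` depending only on bounds near time `T0` (`ray_Z`, `ray_apriori`).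

*Conclusion.* For fixed `T` the set of couplings in `[0, μ0]` for which the truncation is inactive and
`√t |∂ₜw| ≤ A0` contains `0`, and it propagates by a fixed step: the Lipschitz dependence on `μ` gives
the bound `2 A0` at the next coupling, and the a priori estimate restores `A0` (`Bas.core`). Energy
estimates in backward cones give uniqueness with finite speed of propagation (`uniq`). By uniqueness
the solutions with cut-off times `T = n` agree on growing slabs and can be glued (`Bas.glob`), and
the same lemma gives uniqueness in the theorem.
-/


open Real MeasureTheory Filter Topology

noncomputable section

/-- Partial derivative in `t`. -/
def pt (u : ℝ → ℝ → ℝ → ℝ) : ℝ → ℝ → ℝ → ℝ :=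
  fun t x1 x2 => deriv (fun s => u s x1 x2) t

/-- Partial derivative in `x₁`. -/
def p1 (u : ℝ → ℝ → ℝ → ℝ) : ℝ → ℝ → ℝ → ℝ :=
  fun t x1 x2 => deriv (fun y => u t y x2) x1

/-- Partial derivative in `x₂`. -/
def p2 (u : ℝ → ℝ → ℝ → ℝ) : ℝ → ℝ → ℝ → ℝ :=
  fun t x1 x2 => deriv (fun y => u t x1 y) x2

/-- The d'Alembertian `□ = ∂ₜ² − ∂₁² − ∂₂²`. -/
def dAlembert (u : ℝ → ℝ → ℝ → ℝ) : ℝ → ℝ → ℝ → ℝ :=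
  fun t x1 x2 => pt (pt u) t x1 x2 - p1 (p1 u) t x1 x2 - p2 (p2 u) t x1 x2

/-- `u : ℝ×ℝ² → ℝ` (curried) is C^∞. -/
def Smooth3 (u : ℝ → ℝ → ℝ → ℝ) : Prop :=
  ContDiff ℝ (⊤ : ℕ∞) (fun p : ℝ × ℝ × ℝ => u p.1 p.2.1 p.2.2)

/-- Compactly supported C^∞ function on ℝ². -/
def SmoothCompact2 (f : ℝ → ℝ → ℝ) : Prop :=
  ContDiff ℝ (⊤ : ℕ∞) (fun p : ℝ × ℝ => f p.1 p.2) ∧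
    HasCompactSupport (fun p : ℝ × ℝ => f p.1 p.2)

/-- Global C^∞ solution of the Cauchy problem
`□u₁ = −(∂ₜu₂)²∂ₜu₁`, `□u₂ = −(∂ₜu₁)²∂ₜu₂` with data `(εf_j, εg_j)`. -/
structure IsSolution (ε : ℝ) (f1 f2 g1 g2 : ℝ → ℝ → ℝ)
    (u1 u2 : ℝ → ℝ → ℝ → ℝ) : Prop where
  smooth1 : Smooth3 u1
  smooth2 : Smooth3 u2
  pde1 : ∀ t x1 x2 : ℝ, 0 < t →
    dAlembert u1 t x1 x2 = -(pt u2 t x1 x2) ^ 2 * pt u1 t x1 x2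
  pde2 : ∀ t x1 x2 : ℝ, 0 < t →
    dAlembert u2 t x1 x2 = -(pt u1 t x1 x2) ^ 2 * pt u2 t x1 x2
  init1 : ∀ x1 x2 : ℝ, u1 0 x1 x2 = ε * f1 x1 x2
  init2 : ∀ x1 x2 : ℝ, u2 0 x1 x2 = ε * f2 x1 x2
  initd1 : ∀ x1 x2 : ℝ, pt u1 0 x1 x2 = ε * g1 x1 x2
  initd2 : ∀ x1 x2 : ℝ, pt u2 0 x1 x2 = ε * g2 x1 x2

/-- `‖u(t)‖_E²  = ½∫ ((∂ₜu)² + (∂₁u)² + (∂₂u)²) dx`. -/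
def energySq (u : ℝ → ℝ → ℝ → ℝ) (t : ℝ) : ℝ :=
  (1 / 2) * ∫ x : ℝ × ℝ,
    ((pt u t x.1 x.2) ^ 2 + (p1 u t x.1 x.2) ^ 2 + (p2 u t x.1 x.2) ^ 2)

/-- The energy norm `‖u(t)‖_E`. -/
def energyNorm (u : ℝ → ℝ → ℝ → ℝ) (t : ℝ) : ℝ :=
  Real.sqrt (energySq u t)

/-- `|x|` in coordinates. -/
def radius (x1 x2 : ℝ) : ℝ := Real.sqrt (x1 ^ 2 + x2 ^ 2)

/-- The Japanese bracket `⟨z⟩ = (1+z²)^{1/2}`. -/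
def jb (z : ℝ) : ℝ := Real.sqrt (1 + z ^ 2)

/-- `U(t,x) = D(|x|^{1/2}u(t,x))` where `D = ½(∂_r − ∂ₜ)`. -/
def Uop (u : ℝ → ℝ → ℝ → ℝ) : ℝ → ℝ → ℝ → ℝ :=
  fun t x1 x2 =>
    (1 / 2) * ((x1 / radius x1 x2) *
        p1 (fun s y1 y2 => radius y1 y2 ^ ((1 : ℝ) / 2) * u s y1 y2) t x1 x2
      + (x2 / radius x1 x2) *
        p2 (fun s y1 y2 => radius y1 y2 ^ ((1 : ℝ) / 2) * u s y1 y2) t x1 x2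
      - pt (fun s y1 y2 => radius y1 y2 ^ ((1 : ℝ) / 2) * u s y1 y2) t x1 x2)

/-- `V(t;σ,ω) = U(t,(t+σ)ω)`. -/
def Vop (u : ℝ → ℝ → ℝ → ℝ) (t σ ω1 ω2 : ℝ) : ℝ :=
  Uop u t ((t + σ) * ω1) ((t + σ) * ω2)

/-- The rotation vector field `Ω = x₁∂₂ − x₂∂₁`. -/
def rot (u : ℝ → ℝ → ℝ → ℝ) : ℝ → ℝ → ℝ → ℝ :=
  fun t x1 x2 => x1 * p2 u t x1 x2 - x2 * p1 u t x1 x2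

/-- `H` for component `a` (the other component being `b`):
`H_a = ½(|x|^{1/2}(∂ₜu_b)²(∂ₜu_a) + t⁻¹U_b²U_a) − (8|x|^{3/2})⁻¹(4Ω²+1)u_a`. -/
def Hfun (ua ub : ℝ → ℝ → ℝ → ℝ) (t x1 x2 : ℝ) : ℝ :=
  (1 / 2) * (radius x1 x2 ^ ((1 : ℝ) / 2) * (pt ub t x1 x2) ^ 2 * pt ua t x1 x2
      + (1 / t) * (Uop ub t x1 x2) ^ 2 * Uop ua t x1 x2)
    - (1 / (8 * radius x1 x2 ^ ((3 : ℝ) / 2))) *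
        (4 * rot (rot ua) t x1 x2 + ua t x1 x2)

/-- `K_a(t;σ,ω) = H_a(t,(t+σ)ω)`. -/
def Kfun (ua ub : ℝ → ℝ → ℝ → ℝ) (t σ ω1 ω2 : ℝ) : ℝ :=
  Hfun ua ub t ((t + σ) * ω1) ((t + σ) * ω2)

/-- `ρ = V₁K₁ − V₂K₂`. -/
def rhoFun (u1 u2 : ℝ → ℝ → ℝ → ℝ) (t σ ω1 ω2 : ℝ) : ℝ :=
  Vop u1 t σ ω1 ω2 * Kfun u1 u2 t σ ω1 ω2 -
    Vop u2 t σ ω1 ω2 * Kfun u2 u1 t σ ω1 ω2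

/-- The Radon transform: line integral of `φ` over `{y : y·ω = s}`. -/
def Rline (φ : ℝ → ℝ → ℝ) (s ω1 ω2 : ℝ) : ℝ :=
  ∫ τ : ℝ, φ (s * ω1 - τ * ω2) (s * ω2 + τ * ω1)

/-- `R₂[φ](σ,ω) = (2√2π)⁻¹ ∫_σ^∞ R[φ](s,ω)(s−σ)^{−1/2} ds`. -/
def R2 (φ : ℝ → ℝ → ℝ) (σ ω1 ω2 : ℝ) : ℝ :=
  (1 / (2 * Real.sqrt 2 * Real.pi)) *
    ∫ s in Set.Ioi σ, Rline φ s ω1 ω2 / Real.sqrt (s - σ)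

/-- The Friedlander radiation field `F₀[φ,ψ] = −∂_σR₂[φ] + R₂[ψ]`. -/
def F0 (φ ψ : ℝ → ℝ → ℝ) (σ ω1 ω2 : ℝ) : ℝ :=
  -deriv (fun σ' => R2 φ σ' ω1 ω2) σ + R2 ψ σ ω1 ω2

/-- `∂_σF₀[φ,ψ]`. -/
def dF0 (φ ψ : ℝ → ℝ → ℝ) (σ ω1 ω2 : ℝ) : ℝ :=
  deriv (fun σ' => F0 φ ψ σ' ω1 ω2) σ

/-- The vector fields `Γ = (S, L₁, L₂, Ω, ∂ₜ, ∂₁, ∂₂)`. -/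
def Gam (i : Fin 7) (u : ℝ → ℝ → ℝ → ℝ) : ℝ → ℝ → ℝ → ℝ :=
  match i with
  | 0 => fun t x1 x2 => t * pt u t x1 x2 + x1 * p1 u t x1 x2 + x2 * p2 u t x1 x2
  | 1 => fun t x1 x2 => t * p1 u t x1 x2 + x1 * pt u t x1 x2
  | 2 => fun t x1 x2 => t * p2 u t x1 x2 + x2 * pt u t x1 x2
  | 3 => rot u
  | 4 => pt u
  | 5 => p1 u
  | 6 => p2 u

/-- `Γ^α = Γ₀^{α₀}⋯Γ₆^{α₆}`. -/
def GamMulti (α : Fin 7 → ℕ) (u : ℝ → ℝ → ℝ → ℝ) : ℝ → ℝ → ℝ → ℝ :=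
  (Gam 0)^[α 0] ((Gam 1)^[α 1] ((Gam 2)^[α 2] ((Gam 3)^[α 3]
    ((Gam 4)^[α 4] ((Gam 5)^[α 5] ((Gam 6)^[α 6] u))))))

/-- Pointwise norm `|φ(t,x)|_s = Σ_{|α|≤s}|Γ^αφ(t,x)|`, for a (finite) family of
components, `|Γ^αφ|` being the Euclidean norm of the vector of components. -/
def ptwiseNorm (s : ℕ) (us : List (ℝ → ℝ → ℝ → ℝ)) (t x1 x2 : ℝ) : ℝ :=
  ∑ α : Fin 7 → Fin (s + 1),
    if (∑ i, (α i : ℕ)) ≤ s then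
      Real.sqrt ((us.map fun u => (GamMulti (fun i => (α i : ℕ)) u t x1 x2) ^ 2).sum)
    else 0

/-- `‖φ(t)‖_s = Σ_{|α|≤s}‖Γ^αφ(t,·)‖_{L²(ℝ²)}`. -/
def sobNorm (s : ℕ) (us : List (ℝ → ℝ → ℝ → ℝ)) (t : ℝ) : ℝ :=
  ∑ α : Fin 7 → Fin (s + 1),
    if (∑ i, (α i : ℕ)) ≤ s then
      Real.sqrt (∫ x : ℝ × ℝ,
        (us.map fun u => (GamMulti (fun i => (α i : ℕ)) u t x.1 x.2) ^ 2).sum)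
    else 0

/-- The components of `∂u = (∂ₜu₁,∂₁u₁,∂₂u₁,∂ₜu₂,∂₁u₂,∂₂u₂)`. -/
def dList (u1 u2 : ℝ → ℝ → ℝ → ℝ) : List (ℝ → ℝ → ℝ → ℝ) :=
  [pt u1, p1 u1, p2 u1, pt u2, p1 u2, p2 u2]

/-- Smooth solution of the free wave equation with data `(φ0,φ1)`. -/
def IsFreeSolution (φ0 φ1 : ℝ → ℝ → ℝ) (φ : ℝ → ℝ → ℝ → ℝ) : Prop :=
  Smooth3 φ ∧ (∀ t x1 x2 : ℝ, 0 < t → dAlembert φ t x1 x2 = 0) ∧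
    (∀ x1 x2 : ℝ, φ 0 x1 x2 = φ0 x1 x2) ∧
    (∀ x1 x2 : ℝ, pt φ 0 x1 x2 = φ1 x1 x2)

/-- Mixed space-time partial `∂^α = ∂ₜ^{α₀}∂₁^{α₁}∂₂^{α₂}`. -/
def dmix (α : Fin 3 → ℕ) (u : ℝ → ℝ → ℝ → ℝ) : ℝ → ℝ → ℝ → ℝ :=
  pt^[α 0] (p1^[α 1] (p2^[α 2] u))

set_option linter.all false

namespace WaveGE

/-! ### Directional derivatives -/

section pdsec
variable {E : Type*} [NormedAddCommGroup E] [NormedSpace ℝ E]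

/-- Smooth real functions. -/
def Sm (f : E → ℝ) : Prop := ContDiff ℝ (⊤ : ℕ∞) f

/-- The derivative of `f` in the direction `v`, as a function of the base point. -/
def pd (v : E) (f : E → ℝ) (x : E) : ℝ := fderiv ℝ f x v

lemma Sm.cd {f : E → ℝ} (hf : Sm f) : ContDiff ℝ (⊤ : ℕ∞) f := hf
lemma Sm.cont {f : E → ℝ} (hf : Sm f) : Continuous f := ContDiff.continuous hf
lemma Sm.diff {f : E → ℝ} (hf : Sm f) : Differentiable ℝ f := hf.cd.differentiable (by simp)
lemma Sm.da {f : E → ℝ} (hf : Sm f) (x : E) : DifferentiableAt ℝ f x := hf.diff x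

lemma Sm.pd {f : E → ℝ} (hf : Sm f) (v : E) : Sm (pd v f) := by
  have h := (hf.cd.fderiv_right (m := (⊤ : ℕ∞)) (by simp)).clm_apply
    (contDiff_const (c := v))
  exact h

lemma Sm.mul {f g : E → ℝ} (hf : Sm f) (hg : Sm g) : Sm (fun x => f x * g x) :=
  ContDiff.mul hf hg
lemma Sm.add {f g : E → ℝ} (hf : Sm f) (hg : Sm g) : Sm (fun x => f x + g x) :=
  ContDiff.add hf hg
lemma Sm.sub {f g : E → ℝ} (hf : Sm f) (hg : Sm g) : Sm (fun x => f x - g x) :=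
  ContDiff.sub hf hg
lemma Sm.neg {f : E → ℝ} (hf : Sm f) : Sm (fun x => -f x) := ContDiff.neg hf
lemma Sm.pow {f : E → ℝ} (hf : Sm f) (n : ℕ) : Sm (fun x => f x ^ n) := ContDiff.pow hf n
lemma Sm.inv {f : E → ℝ} (hf : Sm f) (h : ∀ x, f x ≠ 0) : Sm (fun x => (f x)⁻¹) :=
  ContDiff.inv hf h
lemma Sm.const (c : ℝ) : Sm (fun _ : E => c) := contDiff_const

lemma pd_mul {f g : E → ℝ} (hf : Sm f) (hg : Sm g) (v x : E) :
    pd v (fun x => f x * g x) x = f x * pd v g x + pd v f x * g x := by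
  have := fderiv_fun_mul (hf.da x) (hg.da x)
  simp only [pd, this]; simp; ring

lemma pd_add {f g : E → ℝ} (hf : Sm f) (hg : Sm g) (v x : E) :
    pd v (fun x => f x + g x) x = pd v f x + pd v g x := by
  have := fderiv_fun_add (hf.da x) (hg.da x)
  simp only [pd, this]; simp

lemma pd_sub {f g : E → ℝ} (hf : Sm f) (hg : Sm g) (v x : E) :
    pd v (fun x => f x - g x) x = pd v f x - pd v g x := by
  have := fderiv_fun_sub (hf.da x) (hg.da x)
  simp only [pd, this]; simp

lemma pd_neg {f : E → ℝ} (v x : E) :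
    pd v (fun x => - f x) x = - pd v f x := by
  simp [pd, fderiv_fun_neg]

lemma pd_const (c : ℝ) (v x : E) : pd v (fun _ : E => c) x = 0 := by
  simp [pd]

lemma pd_cmul {f : E → ℝ} (hf : Sm f) (c : ℝ) (v x : E) :
    pd v (fun x => c * f x) x = c * pd v f x := by
  rw [pd_mul (Sm.const c) hf, pd_const]; ring

lemma pd_pow {f : E → ℝ} (hf : Sm f) (n : ℕ) (v x : E) :
    pd v (fun x => f x ^ n) x = n * f x ^ (n - 1) * pd v f x := by
  have := fderiv_fun_pow (𝕜 := ℝ) n (hf.da x)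
  simp only [pd, this]; simp

lemma pd_inv {f : E → ℝ} (hf : Sm f) (h : ∀ x, f x ≠ 0) (v x : E) :
    pd v (fun x => (f x)⁻¹) x = - ((f x)⁻¹ ^ 2 * pd v f x) := by
  have h1 : (fun x => f x * (f x)⁻¹) = fun _ => (1 : ℝ) := by
    ext y; exact mul_inv_cancel₀ (h y)
  have h2 := pd_mul hf (hf.inv h) v x
  rw [h1, pd_const] at h2
  have := h x
  field_simp at h2 ⊢
  linarith

lemma pd_comm {f : E → ℝ} (hf : Sm f) (v w x : E) :
    pd v (pd w f) x = pd w (pd v f) x := by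
  have hs : IsSymmSndFDerivAt ℝ f x := by
    apply ContDiffAt.isSymmSndFDerivAt (n := ((⊤ : ℕ∞) : WithTop ℕ∞)) hf.cd.contDiffAt
    simp only [minSmoothness_of_isRCLikeNormedField]
    show ((2 : ℕ∞) : WithTop ℕ∞) ≤ _
    exact WithTop.coe_le_coe.2 le_top
  have hd : DifferentiableAt ℝ (fderiv ℝ f) x :=
    ((hf.cd.fderiv_right (m := (⊤ : ℕ∞)) (by simp)).differentiable (by simp)) x
  have key : ∀ a b : E, pd a (pd b f) x = fderiv ℝ (fderiv ℝ f) x a b := by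
    intro a b
    have : pd b f = fun y => fderiv ℝ f y b := rfl
    rw [this, pd, fderiv_clm_apply hd (differentiableAt_const b)]
    simp
  rw [key, key]
  exact hs v w

/-- A function vanishing off a closed set has derivatives vanishing off that set. -/
lemma pd_zero {K : Set E} (hK : IsClosed K) {f : E → ℝ} (h0 : ∀ x ∉ K, f x = 0) (v : E) :
    ∀ x ∉ K, pd v f x = 0 := by
  intro x hx
  have h1 : f =ᶠ[𝓝 x] fun _ => (0 : ℝ) := by
    filter_upwards [hK.isOpen_compl.mem_nhds hx] with y hy using h0 y hy
  simp [pd, h1.fderiv_eq]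

lemma pd_congr {f g : E → ℝ} {x : E} (h : f =ᶠ[𝓝 x] g) (v : E) : pd v f x = pd v g x := by
  simp [pd, h.fderiv_eq]

lemma pd_vadd (f : E → ℝ) (v w x : E) : pd (v + w) f x = pd v f x + pd w f x := by
  simp [pd]
lemma pd_vsmul (f : E → ℝ) (c : ℝ) (v x : E) : pd (c • v) f x = c * pd v f x := by
  simp [pd]

lemma intK [MeasurableSpace E] [BorelSpace E] {μ : Measure E} [IsFiniteMeasureOnCompacts μ]
    {K : Set E} (hK : IsCompact K) {F : E → ℝ} (hF : Continuous F)
    (h0 : ∀ x ∉ K, F x = 0) : Integrable F μ :=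
  hF.integrable_of_hasCompactSupport (HasCompactSupport.intro hK h0)

/-- Integration by parts against a compactly supported function. -/
lemma ibp [MeasurableSpace E] [BorelSpace E] [FiniteDimensional ℝ E] {μ : Measure E}
    [μ.IsAddHaarMeasure] {K : Set E} (hK : IsCompact K) {f g : E → ℝ} (hf : Sm f) (hg : Sm g)
    (h0 : ∀ x ∉ K, g x = 0) (v : E) :
    ∫ x, f x * pd v g x ∂μ = - ∫ x, pd v f x * g x ∂μ := by
  have h1 := pd_zero hK.isClosed h0 v
  apply integral_mul_fderiv_eq_neg_fderiv_mul_of_integrable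
  · exact intK hK ((hf.pd v).cont.mul hg.cont) (fun x hx => by simp [h0 x hx])
  · exact intK hK (hf.cont.mul (hg.pd v).cont) (fun x hx => by
      have := h1 x hx
      show f x * pd v g x = 0
      rw [this, mul_zero])
  · exact intK hK (hf.cont.mul hg.cont) (fun x hx => by simp [h0 x hx])
  · intro x _; exact hf.da x
  · intro x _; exact hg.da x

end pdsec

end WaveGE

namespace WaveGE

/-! ### Interpolation on a weighted plane -/

/-- The coordinate vectors of `ℝ × ℝ`. -/
def bv (a : Fin 2) : ℝ × ℝ := if a = 0 then (1, 0) else (0, 1)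

/-- The scaled coordinate derivative `ρ ∂_a`. -/
def D (ρ : ℝ × ℝ → ℝ) (a : Fin 2) (f : ℝ × ℝ → ℝ) (x : ℝ × ℝ) : ℝ := ρ x * pd (bv a) f x

/-- Iterated scaled derivatives along a word. -/
def DW (ρ : ℝ × ℝ → ℝ) : List (Fin 2) → (ℝ × ℝ → ℝ) → ℝ × ℝ → ℝ
  | [], f => f
  | a :: I, f => D ρ a (DW ρ I f)

/-- Admissible weights: smooth, positive, with first derivatives bounded by one. -/
structure Wt (ρ : ℝ × ℝ → ℝ) : Prop where
  sm : Sm ρ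
  pos : ∀ x, 0 < ρ x
  d1 : ∀ a x, |pd (bv a) ρ x| ≤ 1

/-- Smooth functions vanishing off `K`. -/
structure SC (K : Set (ℝ × ℝ)) (f : ℝ × ℝ → ℝ) : Prop where
  sm : Sm f
  z : ∀ x ∉ K, f x = 0

variable {ρ : ℝ × ℝ → ℝ} {K : Set (ℝ × ℝ)}

lemma Wt.ne (h : Wt ρ) (x) : ρ x ≠ 0 := (h.pos x).ne'
lemma Wt.ism (h : Wt ρ) : Sm (fun x => (ρ x)⁻¹) := h.sm.inv h.ne

lemma SC.D (hρ : Wt ρ) (hK : IsCompact K) {f} (hf : SC K f) (a : Fin 2) : SC K (D ρ a f) :=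
  ⟨hρ.sm.mul (hf.sm.pd _), fun x hx => by
    simp [WaveGE.D, pd_zero hK.isClosed hf.z _ x hx]⟩

lemma SC.DW (hρ : Wt ρ) (hK : IsCompact K) {f} (hf : SC K f) (I : List (Fin 2)) :
    SC K (DW ρ I f) := by
  induction I with
  | nil => exact hf
  | cons a I ih => exact ih.D hρ hK a

/-- Comparison of integrals of continuous functions supported in a compact set. -/
lemma int_le (hK : IsCompact K) {F G : ℝ × ℝ → ℝ} (hF : Continuous F) (hG : Continuous G)
    (hF0 : ∀ x ∉ K, F x = 0) (hG0 : ∀ x ∉ K, G x = 0) (h : ∀ x, F x ≤ G x) :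
    ∫ x, F x ≤ ∫ x, G x :=
  integral_mono (intK hK hF hF0) (intK hK hG hG0) h

lemma iadd {α : Type*} [MeasurableSpace α] {μ : Measure α} {f g : α → ℝ} (hf : Integrable f μ)
    (hg : Integrable g μ) : Integrable (fun x => f x + g x) μ := hf.add hg

section gn
variable (hρ : Wt ρ) (hK : IsCompact K)
include hρ hK

/-- `∫ ρ⁻¹ (D_a v)⁴ ≤ 9 A² ∫ ρ⁻² (D_a² v)²` when `ρ v² ≤ A²`. -/
lemma gn_four {v : ℝ × ℝ → ℝ} (hv : SC K v) {A : ℝ} (hA : ∀ x, ρ x * v x ^ 2 ≤ A ^ 2)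
    (a : Fin 2) :
    ∫ x, (ρ x)⁻¹ * D ρ a v x ^ 4 ≤ 9 * A ^ 2 * ∫ x, (ρ x)⁻¹ ^ 2 * D ρ a (D ρ a v) x ^ 2 := by
  have hf := hv.D hρ hK a
  have hh := hf.D hρ hK a
  set f := D ρ a v with hfd
  set h := D ρ a f with hhd
  have c1 := hρ.ism.cont
  have c2 := hv.sm.cont
  have c3 := hf.sm.cont
  have c4 := hh.sm.cont
  have key : ∫ x, (ρ x)⁻¹ * f x ^ 4 = ∫ x, -3 * ((ρ x)⁻¹ * v x * f x ^ 2 * h x) := by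
    have e := ibp (μ := volume) hK (hf.sm.pow 3) hv.sm hv.z (bv a)
    have e1 : ∀ x, (ρ x)⁻¹ * f x ^ 4 = f x ^ 3 * pd (bv a) v x := by
      intro x
      have : f x = ρ x * pd (bv a) v x := rfl
      have h0 := hρ.ne x
      have e2 : pd (bv a) v x = (ρ x)⁻¹ * f x := by rw [this]; field_simp
      rw [e2]; ring
    simp_rw [e1]
    rw [e, ← integral_neg]
    congr 1; ext x
    rw [pd_pow hf.sm]
    have : h x = ρ x * pd (bv a) f x := rfl
    have h0 := hρ.ne x
    rw [this]; field_simp; norm_num; ring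
  have le : ∫ x, -3 * ((ρ x)⁻¹ * v x * f x ^ 2 * h x) ≤
      ∫ x, ((1 / 2) * ((ρ x)⁻¹ * f x ^ 4) + (9 / 2) * A ^ 2 * ((ρ x)⁻¹ ^ 2 * h x ^ 2)) := by
    apply int_le hK (by fun_prop) (by fun_prop)
    · intro x hx; simp [hv.z x hx]
    · intro x hx; simp [hf.z x hx, hh.z x hx]
    · intro x
      have p := hρ.pos x
      have q : v x ^ 2 ≤ A ^ 2 * (ρ x)⁻¹ := by
        rw [← div_eq_mul_inv, le_div_iff₀ p]; linarith [hA x]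
      have p' : 0 < (ρ x)⁻¹ := inv_pos.2 p
      set r := (ρ x)⁻¹
      have : r * (v x ^ 2 * h x ^ 2) ≤ r * (A ^ 2 * r * h x ^ 2) := by gcongr
      nlinarith [mul_nonneg p'.le (sq_nonneg (f x ^ 2 + 3 * (v x * h x)))]
  have i1 : Integrable fun x => (ρ x)⁻¹ * f x ^ 4 :=
    intK hK (by fun_prop) (fun x hx => by simp [hf.z x hx])
  have i2 : Integrable fun x => (ρ x)⁻¹ ^ 2 * h x ^ 2 :=
    intK hK (by fun_prop) (fun x hx => by simp [hh.z x hx])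
  rw [← key, integral_add (i1.const_mul _) (i2.const_mul _)] at le
  simp only [integral_const_mul] at le
  linarith

/-- `∫ ρ⁻¹ f² (D_b f)² ≤ (1/6) (λ ∫ f⁶ + λ⁻¹ ∫ ρ⁻² (D_b² f)²)`. -/
lemma gn_K {f : ℝ × ℝ → ℝ} (hf : SC K f) {l : ℝ} (hl : 0 < l) (b : Fin 2) :
    ∫ x, (ρ x)⁻¹ * (f x ^ 2 * D ρ b f x ^ 2) ≤
      (1 / 6) * (l * ∫ x, f x ^ 6) +
        (1 / 6) * (l⁻¹ * ∫ x, (ρ x)⁻¹ ^ 2 * D ρ b (D ρ b f) x ^ 2) := by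
  have hg := hf.D hρ hK b
  have hh := hg.D hρ hK b
  set g := D ρ b f with hfd
  set h := D ρ b g with hhd
  have c1 := hρ.ism.cont
  have c3 := hf.sm.cont
  have c2 := hg.sm.cont
  have c4 := hh.sm.cont
  have key : ∫ x, (ρ x)⁻¹ * (f x ^ 2 * g x ^ 2) = ∫ x, -(1 / 3) * ((ρ x)⁻¹ * f x ^ 3 * h x) := by
    have e := ibp (μ := volume) hK hg.sm (hf.sm.pow 3) (fun x hx => by simp [hf.z x hx]) (bv b)
    have e1 : ∀ x, (ρ x)⁻¹ * (f x ^ 2 * g x ^ 2) =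
        (1 / 3) * (g x * pd (bv b) (fun y => f y ^ 3) x) := by
      intro x
      rw [pd_pow hf.sm]
      have : g x = ρ x * pd (bv b) f x := rfl
      have h0 := hρ.ne x
      rw [this]; field_simp; norm_num; ring
    simp_rw [e1]
    rw [integral_const_mul, e, ← integral_neg, ← integral_const_mul]
    congr 1; ext x
    have : h x = ρ x * pd (bv b) g x := rfl
    have h0 := hρ.ne x
    rw [this]; field_simp
  have le : ∫ x, -(1 / 3) * ((ρ x)⁻¹ * f x ^ 3 * h x) ≤
      ∫ x, ((1 / 6) * (l * f x ^ 6) + (1 / 6) * (l⁻¹ * ((ρ x)⁻¹ ^ 2 * h x ^ 2))) := by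
    apply int_le hK (by fun_prop) (by fun_prop)
    · intro x hx; simp [hf.z x hx]
    · intro x hx; simp [hf.z x hx, hh.z x hx]
    · intro x
      set r := (ρ x)⁻¹
      have e : l * f x ^ 6 + l⁻¹ * (r ^ 2 * h x ^ 2) + 2 * (r * f x ^ 3 * h x) =
        l * (f x ^ 3 + l⁻¹ * (r * h x)) ^ 2 := by field_simp; ring
      have : 0 ≤ l * (f x ^ 3 + l⁻¹ * (r * h x)) ^ 2 := by positivity
      linarith
  have i1 : Integrable fun x => f x ^ 6 :=
    intK hK (by fun_prop) (fun x hx => by simp [hf.z x hx])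
  have i2 : Integrable fun x => (ρ x)⁻¹ ^ 2 * h x ^ 2 :=
    intK hK (by fun_prop) (fun x hx => by simp [hh.z x hx])
  rw [← key, integral_add ((i1.const_mul _).const_mul _) ((i2.const_mul _).const_mul _)] at le
  simp only [integral_const_mul] at le
  linarith

/-- `∫ (D_a v)⁶ ≤ C A⁴ S²`. -/
lemma gn_six {v : ℝ × ℝ → ℝ} (hv : SC K v) {A : ℝ} (hA0 : 0 < A)
    (hA : ∀ x, ρ x * v x ^ 2 ≤ A ^ 2) (a : Fin 2) {Q : ℝ}
    (h2 : ∫ x, (ρ x)⁻¹ ^ 2 * D ρ a (D ρ a v) x ^ 2 ≤ Q)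
    (h3 : ∫ x, (ρ x)⁻¹ ^ 2 * D ρ a (D ρ a (D ρ a v)) x ^ 2 ≤ Q) :
    ∫ x, D ρ a v x ^ 6 ≤ 400 * A ^ 4 * Q := by
  have hf := hv.D hρ hK a
  have hh := hf.D hρ hK a
  have f4 := gn_four hρ hK hv hA a
  have fK := gn_K hρ hK hf (l := 3 / (50 * A ^ 2)) (by positivity) a
  set f := D ρ a v with hfd
  set h := D ρ a f with hhd
  have c1 := hρ.ism.cont
  have c2 := hv.sm.cont
  have c3 := hf.sm.cont
  have c4 := hh.sm.cont
  have c5 := (hρ.sm.pd (bv a)).cont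
  have key : ∫ x, f x ^ 6 = ∫ x, (-(pd (bv a) ρ x * v x * f x ^ 5) - 5 * (v x * f x ^ 4 * h x)) := by
    have e := ibp (μ := volume) hK (hρ.sm.mul (hf.sm.pow 5)) hv.sm hv.z (bv a)
    have e1 : ∀ x, f x ^ 6 = ρ x * f x ^ 5 * pd (bv a) v x := by
      intro x
      have : f x = ρ x * pd (bv a) v x := rfl
      rw [this]; ring
    simp_rw [e1]
    rw [e, ← integral_neg]
    congr 1; ext x
    rw [pd_mul hρ.sm (hf.sm.pow 5), pd_pow hf.sm]
    have : h x = ρ x * pd (bv a) f x := rfl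
    rw [this]; ring
  have le : ∫ x, (-(pd (bv a) ρ x * v x * f x ^ 5) - 5 * (v x * f x ^ 4 * h x)) ≤
      ∫ x, ((1 / 2) * f x ^ 6 + (A ^ 2 * ((ρ x)⁻¹ * f x ^ 4) +
        25 * A ^ 2 * ((ρ x)⁻¹ * (f x ^ 2 * h x ^ 2)))) := by
    apply int_le hK (by fun_prop) (by fun_prop)
    · intro x hx; simp [hv.z x hx]
    · intro x hx; simp [hf.z x hx, hh.z x hx]
    · intro x
      have p := hρ.pos x
      have q : v x ^ 2 ≤ A ^ 2 * (ρ x)⁻¹ := by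
        rw [← div_eq_mul_inv, le_div_iff₀ p]; linarith [hA x]
      have d := hρ.d1 a x
      have d2 : pd (bv a) ρ x ^ 2 ≤ 1 := by
        rw [← sq_abs]; nlinarith [abs_nonneg (pd (bv a) ρ x)]
      set r := (ρ x)⁻¹
      set m := pd (bv a) ρ x
      have t1 : v x ^ 2 * f x ^ 4 ≤ A ^ 2 * r * f x ^ 4 := by gcongr
      have t2 : v x ^ 2 * (f x ^ 2 * h x ^ 2) ≤ A ^ 2 * r * (f x ^ 2 * h x ^ 2) := by gcongr
      have t3 : m ^ 2 * (v x ^ 2 * f x ^ 4) ≤ 1 * (v x ^ 2 * f x ^ 4) := by gcongr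
      nlinarith [sq_nonneg (f x ^ 3 / 2 + m * (v x * f x ^ 2)),
        sq_nonneg (f x ^ 3 / 2 + 5 * (v x * f x * h x))]
  have i0 : Integrable fun x => f x ^ 6 :=
    intK hK (by fun_prop) (fun x hx => by simp [hf.z x hx])
  have i1 : Integrable fun x => (ρ x)⁻¹ * f x ^ 4 :=
    intK hK (by fun_prop) (fun x hx => by simp [hf.z x hx])
  have i2 : Integrable fun x => (ρ x)⁻¹ * (f x ^ 2 * h x ^ 2) :=
    intK hK (by fun_prop) (fun x hx => by simp [hh.z x hx])
  rw [← key, integral_add (i0.const_mul _) (iadd (i1.const_mul _) (i2.const_mul _)),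
    integral_add (i1.const_mul _) (i2.const_mul _)] at le
  simp only [integral_const_mul] at le
  have A2 : 0 < A ^ 2 := by positivity
  have m1 : A ^ 2 * ∫ x, (ρ x)⁻¹ * f x ^ 4 ≤ A ^ 2 * (9 * A ^ 2 * Q) := by
    gcongr; exact f4.trans (by gcongr)
  have m2 : 25 * A ^ 2 * ∫ x, (ρ x)⁻¹ * (f x ^ 2 * h x ^ 2) ≤
      25 * A ^ 2 * ((1 / 6) * (3 / (50 * A ^ 2) * ∫ x, f x ^ 6) +
        (1 / 6) * ((3 / (50 * A ^ 2))⁻¹ * Q)) := by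
    gcongr; exact fK.trans (by gcongr)
  have e3 : 25 * A ^ 2 * ((1 / 6) * (3 / (50 * A ^ 2) * ∫ x, f x ^ 6) +
        (1 / 6) * ((3 / (50 * A ^ 2))⁻¹ * Q)) = (1 / 4) * (∫ x, f x ^ 6) + (625 / 9) * A ^ 4 * Q := by
    field_simp; ring
  have Q0 : 0 ≤ Q := le_trans (integral_nonneg fun x => by positivity) h2
  have : 0 ≤ A ^ 4 * Q := by positivity
  nlinarith

/-- `∫ ρ⁻¹ (D_a v)² (D_b D_a v)² ≤ C A² S²`. -/
lemma gn_Kb {v : ℝ × ℝ → ℝ} (hv : SC K v) {A : ℝ} (hA0 : 0 < A)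
    (hA : ∀ x, ρ x * v x ^ 2 ≤ A ^ 2) (a b : Fin 2) {Q : ℝ}
    (h2 : ∫ x, (ρ x)⁻¹ ^ 2 * D ρ a (D ρ a v) x ^ 2 ≤ Q)
    (h3 : ∫ x, (ρ x)⁻¹ ^ 2 * D ρ a (D ρ a (D ρ a v)) x ^ 2 ≤ Q)
    (h4 : ∫ x, (ρ x)⁻¹ ^ 2 * D ρ b (D ρ b (D ρ a v)) x ^ 2 ≤ Q) :
    ∫ x, (ρ x)⁻¹ * (D ρ a v x ^ 2 * D ρ b (D ρ a v) x ^ 2) ≤ 70 * A ^ 2 * Q := by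
  have h6 := gn_six hρ hK hv hA0 hA a h2 h3
  have fK := gn_K hρ hK (hv.D hρ hK a) (l := (A ^ 2)⁻¹) (by positivity) b
  have : (1 / 6) * ((A ^ 2)⁻¹ * ∫ x, D ρ a v x ^ 6) +
        (1 / 6) * ((A ^ 2)⁻¹⁻¹ * ∫ x, (ρ x)⁻¹ ^ 2 * D ρ b (D ρ b (D ρ a v)) x ^ 2) ≤
      (1 / 6) * ((A ^ 2)⁻¹ * (400 * A ^ 4 * Q)) + (1 / 6) * ((A ^ 2)⁻¹⁻¹ * Q) := by gcongr
  have e : (1 / 6) * ((A ^ 2)⁻¹ * (400 * A ^ 4 * Q)) + (1 / 6) * ((A ^ 2)⁻¹⁻¹ * Q) =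
    (401 / 6) * (A ^ 2 * Q) := by field_simp; ring
  have Q0 : 0 ≤ Q := le_trans (integral_nonneg fun x => by positivity) h2
  have : 0 ≤ A ^ 2 * Q := by positivity
  nlinarith

/-- The mixed term `∫ ρ⁻¹ (D_a v)² (D_b D_c w)² ≤ C A² S²`. -/
lemma gn_J {v w : ℝ × ℝ → ℝ} (hv : SC K v) (hw : SC K w) {A : ℝ} (hA0 : 0 < A)
    (hA : ∀ x, ρ x * v x ^ 2 ≤ A ^ 2) (hA' : ∀ x, ρ x * w x ^ 2 ≤ A ^ 2) (a b c : Fin 2) {Q : ℝ}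
    (hvQ : ∀ I : List (Fin 2), I.length ≤ 3 → ∫ x, (ρ x)⁻¹ ^ 2 * DW ρ I v x ^ 2 ≤ Q)
    (hwQ : ∀ I : List (Fin 2), I.length ≤ 3 → ∫ x, (ρ x)⁻¹ ^ 2 * DW ρ I w x ^ 2 ≤ Q) :
    ∫ x, (ρ x)⁻¹ * (D ρ a v x ^ 2 * D ρ b (D ρ c w) x ^ 2) ≤ 1000 * A ^ 2 * Q := by
  have v6 := gn_six hρ hK hv hA0 hA a (hvQ [a, a] (by simp)) (hvQ [a, a, a] (by simp))
  have w6 := gn_six hρ hK hw hA0 hA' c (hwQ [c, c] (by simp)) (hwQ [c, c, c] (by simp))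
  have vK := gn_Kb hρ hK hv hA0 hA a b (hvQ [a, a] (by simp)) (hvQ [a, a, a] (by simp))
    (hvQ [b, b, a] (by simp))
  have wK := gn_Kb hρ hK hw hA0 hA' c b (hwQ [c, c] (by simp)) (hwQ [c, c, c] (by simp))
    (hwQ [b, b, c] (by simp))
  have w3 : ∫ x, (ρ x)⁻¹ ^ 2 * D ρ b (D ρ b (D ρ c w)) x ^ 2 ≤ Q := hwQ [b, b, c] (by simp)
  have Q0 : 0 ≤ Q := le_trans (integral_nonneg fun x => by positivity) w3
  have hf := hv.D hρ hK a
  have hp := hf.D hρ hK b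
  have hh := hw.D hρ hK c
  have hg := hh.D hρ hK b
  have hk := hg.D hρ hK b
  set f := D ρ a v with hfd
  set p := D ρ b f with hpd
  set h := D ρ c w with hhd
  set g := D ρ b h with hgd
  set k := D ρ b g with hkd
  have c1 := hρ.ism.cont
  have c2 := hf.sm.cont
  have c3 := hp.sm.cont
  have c4 := hh.sm.cont
  have c5 := hg.sm.cont
  have c6 := hk.sm.cont
  have key : ∫ x, (ρ x)⁻¹ * (f x ^ 2 * g x ^ 2) =
      ∫ x, (-(2 * ((ρ x)⁻¹ * (h x * f x * p x * g x))) - (ρ x)⁻¹ * (h x * f x ^ 2 * k x)) := by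
    have e := ibp (μ := volume) hK ((hf.sm.pow 2).mul hg.sm) hh.sm hh.z (bv b)
    have e1 : ∀ x, (ρ x)⁻¹ * (f x ^ 2 * g x ^ 2) = f x ^ 2 * g x * pd (bv b) h x := by
      intro x
      have : g x = ρ x * pd (bv b) h x := rfl
      have h0 := hρ.ne x
      rw [this]; field_simp
    simp_rw [e1]
    rw [e, ← integral_neg]
    congr 1; ext x
    rw [pd_mul (hf.sm.pow 2) hg.sm, pd_pow hf.sm]
    have e2 : k x = ρ x * pd (bv b) g x := rfl
    have e3 : p x = ρ x * pd (bv b) f x := rfl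
    have h0 := hρ.ne x
    rw [e2, e3]; field_simp; norm_num; ring
  have A2 : 0 < A ^ 2 := by positivity
  have le : ∫ x, (-(2 * ((ρ x)⁻¹ * (h x * f x * p x * g x))) - (ρ x)⁻¹ * (h x * f x ^ 2 * k x)) ≤
      ∫ x, (((ρ x)⁻¹ * (f x ^ 2 * p x ^ 2) + (ρ x)⁻¹ * (h x ^ 2 * g x ^ 2)) +
        (((A ^ 2)⁻¹ * h x ^ 6 + (A ^ 2)⁻¹ * f x ^ 6) + A ^ 2 * ((ρ x)⁻¹ ^ 2 * k x ^ 2))) := by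
    apply int_le hK (by fun_prop) (by fun_prop)
    · intro x hx; simp [hf.z x hx]
    · intro x hx; simp [hf.z x hx, hh.z x hx, hk.z x hx]
    · intro x
      have p0 : 0 < (ρ x)⁻¹ := inv_pos.2 (hρ.pos x)
      set r := (ρ x)⁻¹
      have e1 : -(2 * (r * (h x * f x * p x * g x))) ≤
          r * (f x ^ 2 * p x ^ 2) + r * (h x ^ 2 * g x ^ 2) := by
        nlinarith [mul_nonneg p0.le (sq_nonneg (f x * p x + h x * g x))]
      have e2 : -(r * (h x * f x ^ 2 * k x)) ≤
          (A ^ 2)⁻¹ * (h x ^ 2 * f x ^ 4) + A ^ 2 * (r ^ 2 * k x ^ 2) := by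
        have : (A ^ 2)⁻¹ * (h x ^ 2 * f x ^ 4) + A ^ 2 * (r ^ 2 * k x ^ 2) +
            2 * (r * (h x * f x ^ 2 * k x)) = A ^ 2 * ((A ^ 2)⁻¹ * (h x * f x ^ 2) + r * k x) ^ 2 := by
          field_simp; ring
        have t : 0 ≤ A ^ 2 * ((A ^ 2)⁻¹ * (h x * f x ^ 2) + r * k x) ^ 2 := by positivity
        have t2 : 0 ≤ (A ^ 2)⁻¹ * (h x ^ 2 * f x ^ 4) + A ^ 2 * (r ^ 2 * k x ^ 2) := by positivity
        linarith
      have e3 : (A ^ 2)⁻¹ * (h x ^ 2 * f x ^ 4) ≤ (A ^ 2)⁻¹ * (h x ^ 6 + f x ^ 6) := by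
        gcongr
        nlinarith [mul_nonneg (add_nonneg (sq_nonneg (h x)) (sq_nonneg (f x)))
          (sq_nonneg (h x ^ 2 - f x ^ 2)), sq_nonneg (f x ^ 3), sq_nonneg (h x ^ 3),
          mul_nonneg (sq_nonneg (h x)) (sq_nonneg (h x ^ 2 - f x ^ 2)),
          mul_nonneg (sq_nonneg (f x)) (sq_nonneg (h x ^ 2 - f x ^ 2))]
      linarith
  have i1 : Integrable fun x => (ρ x)⁻¹ * (f x ^ 2 * p x ^ 2) :=
    intK hK (by fun_prop) (fun x hx => by simp [hf.z x hx])
  have i2 : Integrable fun x => (ρ x)⁻¹ * (h x ^ 2 * g x ^ 2) :=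
    intK hK (by fun_prop) (fun x hx => by simp [hh.z x hx])
  have i3 : Integrable fun x => h x ^ 6 :=
    intK hK (by fun_prop) (fun x hx => by simp [hh.z x hx])
  have i4 : Integrable fun x => f x ^ 6 :=
    intK hK (by fun_prop) (fun x hx => by simp [hf.z x hx])
  have i5 : Integrable fun x => (ρ x)⁻¹ ^ 2 * k x ^ 2 :=
    intK hK (by fun_prop) (fun x hx => by simp [hk.z x hx])
  rw [← key, integral_add (iadd i1 i2) (iadd (iadd (i3.const_mul _) (i4.const_mul _))
      (i5.const_mul _)),
    integral_add i1 i2, integral_add (iadd (i3.const_mul _) (i4.const_mul _)) (i5.const_mul _),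
    integral_add (i3.const_mul _) (i4.const_mul _)] at le
  simp only [integral_const_mul] at le
  have m1 : (A ^ 2)⁻¹ * ∫ x, h x ^ 6 ≤ (A ^ 2)⁻¹ * (400 * A ^ 4 * Q) := by gcongr
  have m2 : (A ^ 2)⁻¹ * ∫ x, f x ^ 6 ≤ (A ^ 2)⁻¹ * (400 * A ^ 4 * Q) := by gcongr
  have m3 : A ^ 2 * ∫ x, (ρ x)⁻¹ ^ 2 * k x ^ 2 ≤ A ^ 2 * Q := by gcongr
  have e : (A ^ 2)⁻¹ * (400 * A ^ 4 * Q) = 400 * A ^ 2 * Q := by field_simp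
  rw [e] at m1 m2
  have : 0 ≤ A ^ 2 * Q := by positivity
  linarith

end gn
end WaveGE

namespace WaveGE

/-! ### Trilinear estimates with scaled derivatives -/

variable {ρ : ℝ × ℝ → ℝ} {K : Set (ℝ × ℝ)}

/-- Sums of `N` trilinear terms carrying `n` scaled derivatives in total. -/
inductive TS (ρ : ℝ × ℝ → ℝ) (v : Fin 2 → ℝ × ℝ → ℝ) : ℕ → ℕ → (ℝ × ℝ → ℝ) → Prop
  | term (J1 J2 J3 : List (Fin 2)) (i j k : Fin 2) :
      TS ρ v (J1.length + J2.length + J3.length) 1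
        (fun x => DW ρ J1 (v i) x * (DW ρ J2 (v j) x * DW ρ J3 (v k) x))
  | add {n N M : ℕ} {F G : ℝ × ℝ → ℝ} : TS ρ v n N F → TS ρ v n M G →
      TS ρ v n (N + M) (fun x => F x + G x)

section
variable (hρ : Wt ρ) (hK : IsCompact K) {v : Fin 2 → ℝ × ℝ → ℝ} (hv : ∀ i, SC K (v i))
include hρ hK hv

lemma TS.sc {n N : ℕ} {F : ℝ × ℝ → ℝ} (h : TS ρ v n N F) : SC K F ∧ 1 ≤ N := by
  induction h with
  | term J1 J2 J3 i j k =>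
    have h1 := (hv i).DW hρ hK J1
    have h2 := (hv j).DW hρ hK J2
    have h3 := (hv k).DW hρ hK J3
    exact ⟨⟨h1.sm.mul (h2.sm.mul h3.sm), fun x hx => by simp [h1.z x hx]⟩, le_rfl⟩
  | add h1 h2 i1 i2 =>
    exact ⟨⟨i1.1.sm.add i2.1.sm, fun x hx => by simp [i1.1.z x hx, i2.1.z x hx]⟩, by omega⟩

lemma TS.D {n N : ℕ} {F : ℝ × ℝ → ℝ} (h : TS ρ v n N F) (a : Fin 2) :
    TS ρ v (n + 1) (3 * N) (D ρ a F) := by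
  induction h with
  | term J1 J2 J3 i j k =>
    have h1 := (hv i).DW hρ hK J1
    have h2 := (hv j).DW hρ hK J2
    have h3 := (hv k).DW hρ hK J3
    have t1 := TS.term (ρ := ρ) (v := v) (a :: J1) J2 J3 i j k
    have t2 := TS.term (ρ := ρ) (v := v) J1 (a :: J2) J3 i j k
    have t3 := TS.term (ρ := ρ) (v := v) J1 J2 (a :: J3) i j k
    simp only [List.length_cons] at t1 t2 t3
    rw [show J1.length + 1 + J2.length + J3.length = J1.length + J2.length + J3.length + 1 by ring]
      at t1
    rw [show J1.length + (J2.length + 1) + J3.length = J1.length + J2.length + J3.length + 1 by ring]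
      at t2
    rw [show J1.length + J2.length + (J3.length + 1) = J1.length + J2.length + J3.length + 1 by ring]
      at t3
    have t := (t1.add t2).add t3
    convert t using 1
    ext x
    simp only [WaveGE.D, WaveGE.DW]
    rw [pd_mul h1.sm (h2.sm.mul h3.sm), pd_mul h2.sm h3.sm]
    ring
  | @add n N M F G h1 h2 i1 i2 =>
    have t := i1.add i2
    rw [← mul_add] at t
    convert t using 1
    ext x
    simp only [WaveGE.D]
    rw [pd_add (h1.sc hρ hK hv).1.sm (h2.sc hρ hK hv).1.sm]
    ring

lemma TS.DW {n N : ℕ} {F : ℝ × ℝ → ℝ} (h : TS ρ v n N F) (I : List (Fin 2)) :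
    TS ρ v (n + I.length) (3 ^ I.length * N) (DW ρ I F) := by
  induction I with
  | nil => simpa [WaveGE.DW] using h
  | cons a I ih =>
    have := ih.D hρ hK hv a
    rw [show 3 ^ (a :: I).length * N = 3 * (3 ^ I.length * N) by
      simp [pow_succ]; ring]
    exact this

variable {A Q : ℝ} (hA0 : 0 < A) (hA : ∀ i x, ρ x * v i x ^ 2 ≤ A ^ 2)
  (hQ : ∀ i, ∀ I : List (Fin 2), I.length ≤ 3 → ∫ x, (ρ x)⁻¹ ^ 2 * WaveGE.DW ρ I (v i) x ^ 2 ≤ Q)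
include hA0 hA hQ

lemma tri0 (i j k : Fin 2) (J : List (Fin 2)) (hJ : J.length ≤ 3) :
    ∫ x, (v i x * (v j x * WaveGE.DW ρ J (v k) x)) ^ 2 ≤ 1000 * A ^ 4 * Q := by
  have h1 := hv i
  have h2 := hv j
  have h3 := (hv k).DW hρ hK J
  have c1 := hρ.ism.cont
  have c2 := h1.sm.cont
  have c3 := h2.sm.cont
  have c4 := h3.sm.cont
  have le : ∫ x, (v i x * (v j x * WaveGE.DW ρ J (v k) x)) ^ 2 ≤
      ∫ x, A ^ 4 * ((ρ x)⁻¹ ^ 2 * WaveGE.DW ρ J (v k) x ^ 2) := by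
    apply int_le hK (by fun_prop) (by fun_prop)
    · intro x hx; simp [h3.z x hx]
    · intro x hx; simp [h3.z x hx]
    · intro x
      have p := hρ.pos x
      have q : ∀ i, v i x ^ 2 ≤ A ^ 2 * (ρ x)⁻¹ := by
        intro i
        rw [← div_eq_mul_inv, le_div_iff₀ p]; linarith [hA i x]
      calc (v i x * (v j x * WaveGE.DW ρ J (v k) x)) ^ 2
          = v i x ^ 2 * v j x ^ 2 * WaveGE.DW ρ J (v k) x ^ 2 := by ring
        _ ≤ (A ^ 2 * (ρ x)⁻¹) * (A ^ 2 * (ρ x)⁻¹) * WaveGE.DW ρ J (v k) x ^ 2 := by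
            gcongr <;> apply q
        _ = _ := by ring
  rw [integral_const_mul] at le
  have Q0 : 0 ≤ Q := le_trans (integral_nonneg fun x => by positivity) (hQ k J hJ)
  have : A ^ 4 * ∫ x, (ρ x)⁻¹ ^ 2 * WaveGE.DW ρ J (v k) x ^ 2 ≤ A ^ 4 * Q := by
    gcongr; exact hQ k J hJ
  have : 0 ≤ A ^ 4 * Q := by positivity
  linarith

lemma tri1 (i j k : Fin 2) (a b c : Fin 2) :
    ∫ x, (v i x * (D ρ a (v j) x * D ρ b (D ρ c (v k)) x)) ^ 2 ≤ 1000 * A ^ 4 * Q := by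
  have h1 := hv i
  have h2 := (hv j).D hρ hK a
  have h3 := ((hv k).D hρ hK c).D hρ hK b
  have c1 := hρ.ism.cont
  have c2 := h1.sm.cont
  have c3 := h2.sm.cont
  have c4 := h3.sm.cont
  have le : ∫ x, (v i x * (D ρ a (v j) x * D ρ b (D ρ c (v k)) x)) ^ 2 ≤
      ∫ x, A ^ 2 * ((ρ x)⁻¹ * (D ρ a (v j) x ^ 2 * D ρ b (D ρ c (v k)) x ^ 2)) := by
    apply int_le hK (by fun_prop) (by fun_prop)
    · intro x hx; simp [h3.z x hx]
    · intro x hx; simp [h3.z x hx]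
    · intro x
      have p := hρ.pos x
      have q : v i x ^ 2 ≤ A ^ 2 * (ρ x)⁻¹ := by
        rw [← div_eq_mul_inv, le_div_iff₀ p]; linarith [hA i x]
      calc _ = v i x ^ 2 * (D ρ a (v j) x ^ 2 * D ρ b (D ρ c (v k)) x ^ 2) := by ring
        _ ≤ (A ^ 2 * (ρ x)⁻¹) * (D ρ a (v j) x ^ 2 * D ρ b (D ρ c (v k)) x ^ 2) := by
            gcongr
        _ = _ := by ring
  rw [integral_const_mul] at le
  have J := gn_J hρ hK (hv j) (hv k) hA0 (hA j) (hA k) a b c (hQ j) (hQ k)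
  have := mul_le_mul_of_nonneg_left J (sq_nonneg A)
  linarith

lemma tri2 (i j k : Fin 2) (a b : Fin 2) :
    ∫ x, (v i x * (D ρ a (v j) x * D ρ b (v k) x)) ^ 2 ≤ 1000 * A ^ 4 * Q := by
  have h1 := hv i
  have h2 := (hv j).D hρ hK a
  have h3 := (hv k).D hρ hK b
  have c1 := hρ.ism.cont
  have c2 := h1.sm.cont
  have c3 := h2.sm.cont
  have c4 := h3.sm.cont
  have le : ∫ x, (v i x * (D ρ a (v j) x * D ρ b (v k) x)) ^ 2 ≤
      ∫ x, (A ^ 2 * ((ρ x)⁻¹ * D ρ a (v j) x ^ 4) + A ^ 2 * ((ρ x)⁻¹ * D ρ b (v k) x ^ 4)) := by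
    apply int_le hK (by fun_prop) (by fun_prop)
    · intro x hx; simp [h3.z x hx]
    · intro x hx; simp [h3.z x hx, h2.z x hx]
    · intro x
      have p := hρ.pos x
      have p' : 0 < (ρ x)⁻¹ := inv_pos.2 p
      have q : v i x ^ 2 ≤ A ^ 2 * (ρ x)⁻¹ := by
        rw [← div_eq_mul_inv, le_div_iff₀ p]; linarith [hA i x]
      calc _ = v i x ^ 2 * (D ρ a (v j) x ^ 2 * D ρ b (v k) x ^ 2) := by ring
        _ ≤ (A ^ 2 * (ρ x)⁻¹) * (D ρ a (v j) x ^ 4 + D ρ b (v k) x ^ 4) := by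
            gcongr
            nlinarith [sq_nonneg (D ρ a (v j) x ^ 2 - D ρ b (v k) x ^ 2),
              sq_nonneg (D ρ a (v j) x ^ 2), sq_nonneg (D ρ b (v k) x ^ 2)]
        _ = _ := by ring
  have i1 : Integrable fun x => (ρ x)⁻¹ * D ρ a (v j) x ^ 4 :=
    intK hK (by fun_prop) (fun x hx => by simp [h2.z x hx])
  have i2 : Integrable fun x => (ρ x)⁻¹ * D ρ b (v k) x ^ 4 :=
    intK hK (by fun_prop) (fun x hx => by simp [h3.z x hx])
  rw [integral_add (i1.const_mul _) (i2.const_mul _)] at le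
  simp only [integral_const_mul] at le
  have f1 := gn_four hρ hK (hv j) (hA j) a
  have f2 := gn_four hρ hK (hv k) (hA k) b
  have q1 := hQ j [a, a] (by simp)
  have q2 := hQ k [b, b] (by simp)
  have Q0 : 0 ≤ Q := le_trans (integral_nonneg fun x => by positivity) q1
  have m1 : ∫ x, (ρ x)⁻¹ * D ρ a (v j) x ^ 4 ≤ 9 * A ^ 2 * Q := f1.trans (by gcongr; exact q1)
  have m2 : ∫ x, (ρ x)⁻¹ * D ρ b (v k) x ^ 4 ≤ 9 * A ^ 2 * Q := f2.trans (by gcongr; exact q2)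
  have n1 := mul_le_mul_of_nonneg_left m1 (sq_nonneg A)
  have n2 := mul_le_mul_of_nonneg_left m2 (sq_nonneg A)
  have : 0 ≤ A ^ 4 * Q := by positivity
  linarith

lemma tri3 (i j k : Fin 2) (a b c : Fin 2) :
    ∫ x, (D ρ a (v i) x * (D ρ b (v j) x * D ρ c (v k) x)) ^ 2 ≤ 1200 * A ^ 4 * Q := by
  have h1 := (hv i).D hρ hK a
  have h2 := (hv j).D hρ hK b
  have h3 := (hv k).D hρ hK c
  have c2 := h1.sm.cont
  have c3 := h2.sm.cont
  have c4 := h3.sm.cont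
  have le : ∫ x, (D ρ a (v i) x * (D ρ b (v j) x * D ρ c (v k) x)) ^ 2 ≤
      ∫ x, (D ρ a (v i) x ^ 6 + (D ρ b (v j) x ^ 6 + D ρ c (v k) x ^ 6)) := by
    apply int_le hK (by fun_prop) (by fun_prop)
    · intro x hx; simp [h3.z x hx]
    · intro x hx; simp [h3.z x hx, h2.z x hx, h1.z x hx]
    · intro x
      have gen : ∀ p q r : ℝ, 0 ≤ p → 0 ≤ q → 0 ≤ r → p * (q * r) ≤ p ^ 3 + (q ^ 3 + r ^ 3) := by
        intro p q r hp hq hr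
        nlinarith [mul_nonneg (add_nonneg (add_nonneg hp hq) hr) (sq_nonneg (p - q)),
          mul_nonneg (add_nonneg (add_nonneg hp hq) hr) (sq_nonneg (p - r)),
          mul_nonneg (add_nonneg (add_nonneg hp hq) hr) (sq_nonneg (q - r)),
          pow_nonneg hp 3, pow_nonneg hq 3, pow_nonneg hr 3]
      have := gen _ _ _ (sq_nonneg (D ρ a (v i) x)) (sq_nonneg (D ρ b (v j) x))
        (sq_nonneg (D ρ c (v k) x))
      calc _ = D ρ a (v i) x ^ 2 * (D ρ b (v j) x ^ 2 * D ρ c (v k) x ^ 2) := by ring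
        _ ≤ _ := this
        _ = _ := by ring
  have i0 : Integrable fun x => D ρ a (v i) x ^ 6 :=
    intK hK (by fun_prop) (fun x hx => by simp [h1.z x hx])
  have i1 : Integrable fun x => D ρ b (v j) x ^ 6 :=
    intK hK (by fun_prop) (fun x hx => by simp [h2.z x hx])
  have i2 : Integrable fun x => D ρ c (v k) x ^ 6 :=
    intK hK (by fun_prop) (fun x hx => by simp [h3.z x hx])
  rw [integral_add i0 (iadd i1 i2), integral_add i1 i2] at le
  have f0 := gn_six hρ hK (hv i) hA0 (hA i) a (hQ i [a, a] (by simp)) (hQ i [a, a, a] (by simp))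
  have f1 := gn_six hρ hK (hv j) hA0 (hA j) b (hQ j [b, b] (by simp)) (hQ j [b, b, b] (by simp))
  have f2 := gn_six hρ hK (hv k) hA0 (hA k) c (hQ k [c, c] (by simp)) (hQ k [c, c, c] (by simp))
  linarith

/-- Any product of scaled derivatives of three components, of total order at most three. -/
lemma tri (J1 J2 J3 : List (Fin 2)) (i j k : Fin 2) (hJ : J1.length + J2.length + J3.length ≤ 3) :
    ∫ x, (WaveGE.DW ρ J1 (v i) x * (WaveGE.DW ρ J2 (v j) x * WaveGE.DW ρ J3 (v k) x)) ^ 2 ≤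
      1200 * A ^ 4 * Q := by
  have Q0 : 0 ≤ Q := le_trans (integral_nonneg fun x => by positivity) (hQ i [] (by simp))
  have h0 : 1000 * A ^ 4 * Q ≤ 1200 * A ^ 4 * Q := by gcongr; norm_num
  have T0 := tri0 hρ hK hv hA0 hA hQ
  have T1 := tri1 hρ hK hv hA0 hA hQ
  have T2 := tri2 hρ hK hv hA0 hA hQ
  have T3 := tri3 hρ hK hv hA0 hA hQ
  have s12 : ∀ f g h : ℝ × ℝ → ℝ, ∫ x, (f x * (g x * h x)) ^ 2 ≤ 1200 * A ^ 4 * Q →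
      ∫ x, (g x * (f x * h x)) ^ 2 ≤ 1200 * A ^ 4 * Q := by
    intro f g h H
    simpa only [mul_left_comm] using H
  have s23 : ∀ f g h : ℝ × ℝ → ℝ, ∫ x, (f x * (g x * h x)) ^ 2 ≤ 1200 * A ^ 4 * Q →
      ∫ x, (f x * (h x * g x)) ^ 2 ≤ 1200 * A ^ 4 * Q := by
    intro f g h H
    have : ∀ x, f x * (h x * g x) = f x * (g x * h x) := fun x => by ring
    simpa only [this] using H
  have S : ∀ (J1 J2 J3 : List (Fin 2)) (i j k : Fin 2),
      J1.length + J2.length + J3.length ≤ 3 → J1.length ≤ J2.length → J2.length ≤ J3.length →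
      ∫ x, (WaveGE.DW ρ J1 (v i) x * (WaveGE.DW ρ J2 (v j) x * WaveGE.DW ρ J3 (v k) x)) ^ 2 ≤
      1200 * A ^ 4 * Q := by
    intro J1 J2 J3 i j k hJ h12 h23
    match J1, J2, J3, hJ, h12, h23 with
    | [], [], J3, hJ, _, _ => exact (T0 i j k J3 (by simpa using hJ)).trans h0
    | [], [a], [b], _, _, _ => exact (T2 i j k a b).trans h0
    | [], [a], [b, c], _, _, _ => exact (T1 i j k a b c).trans h0
    | [a], [b], [c], _, _, _ => exact T3 i j k a b c
    | [], [a], [], _, _, h => simp at h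
    | [], [a], b :: c :: d :: L, h, _, _ => simp at h; omega
    | [], a :: b :: L, L', h, _, h' => simp at h h'; omega
    | [a], [], L', h, h'', h' => simp at h''
    | [a], [b], [], h, _, h' => simp at h'
    | [a], [b], c :: d :: L, h, _, h' => simp at h; omega
    | [a], b :: c :: L, L', h, _, h' => simp at h h'; omega
    | a :: b :: L, L', L'', h, h', h'' => simp at h h'; omega
  rcases le_total J1.length J2.length with h12 | h12 <;>
  rcases le_total J2.length J3.length with h23 | h23 <;>
  rcases le_total J1.length J3.length with h13 | h13
  · exact S _ _ _ _ _ _ hJ h12 h23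
  · exact S _ _ _ _ _ _ hJ h12 h23
  · exact s23 _ _ _ (S J1 J3 J2 i k j (by omega) h13 h23)
  · exact s23 _ _ _ (s12 _ _ _ (S J3 J1 J2 k i j (by omega) h13 h12))
  · exact s12 _ _ _ (S J2 J1 J3 j i k (by omega) h12 h13)
  · exact s12 _ _ _ (s23 _ _ _ (S J2 J3 J1 j k i (by omega) h23 h13))
  · exact s12 _ _ _ (s23 _ _ _ (s12 _ _ _ (S J3 J2 J1 k j i (by omega) h23 h12)))
  · exact s12 _ _ _ (s23 _ _ _ (s12 _ _ _ (S J3 J2 J1 k j i (by omega) h23 h12)))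

lemma TS.bound {n N : ℕ} {F : ℝ × ℝ → ℝ} (h : TS ρ v n N F) (hn : n ≤ 3) :
    ∫ x, F x ^ 2 ≤ N ^ 2 * (1200 * A ^ 4 * Q) := by
  induction h with
  | term J1 J2 J3 i j k => simpa using tri hρ hK hv hA0 hA hQ J1 J2 J3 i j k hn
  | @add n N M F G h1 h2 i1 i2 =>
    obtain ⟨s1, n1⟩ := h1.sc hρ hK hv
    obtain ⟨s2, n2⟩ := h2.sc hρ hK hv
    have p1 : (0 : ℝ) < N := by exact_mod_cast n1
    have p2 : (0 : ℝ) < M := by exact_mod_cast n2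
    have c1 := s1.sm.cont
    have c2 := s2.sm.cont
    have le : ∫ x, (F x + G x) ^ 2 ≤
        ∫ x, ((N + M) / (N : ℝ) * F x ^ 2 + (N + M) / (M : ℝ) * G x ^ 2) := by
      apply int_le hK (by fun_prop) (by fun_prop)
      · intro x hx; simp [s1.z x hx, s2.z x hx]
      · intro x hx; simp [s1.z x hx, s2.z x hx]
      · intro x
        have : (N + M) / (N : ℝ) * F x ^ 2 + (N + M) / (M : ℝ) * G x ^ 2 - (F x + G x) ^ 2 =
            (M * F x - N * G x) ^ 2 / (N * M) := by field_simp; ring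
        have : 0 ≤ (M * F x - N * G x) ^ 2 / (N * M) := by positivity
        linarith
    have i3 : Integrable fun x => F x ^ 2 := intK hK (by fun_prop) (fun x hx => by simp [s1.z x hx])
    have i4 : Integrable fun x => G x ^ 2 := intK hK (by fun_prop) (fun x hx => by simp [s2.z x hx])
    rw [integral_add (i3.const_mul _) (i4.const_mul _), integral_const_mul,
      integral_const_mul] at le
    have m1 := mul_le_mul_of_nonneg_left (i1 hn) (show 0 ≤ (N + M) / (N : ℝ) by positivity)
    have m2 := mul_le_mul_of_nonneg_left (i2 hn) (show 0 ≤ (N + M) / (M : ℝ) by positivity)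
    have e : (N + M) / (N : ℝ) * (N ^ 2 * (1200 * A ^ 4 * Q)) +
      (N + M) / (M : ℝ) * (M ^ 2 * (1200 * A ^ 4 * Q)) =
      ((N + M : ℕ) : ℝ) ^ 2 * (1200 * A ^ 4 * Q) := by push_cast; field_simp
    linarith

/-- Scaled derivatives of a cubic term: with `ρ v_i² ≤ A²`, no derivative is lost and only the
top-order norm enters. -/
lemma cubic_bound (i j k : Fin 2) (I : List (Fin 2)) (hI : I.length ≤ 3) :
    ∫ x, WaveGE.DW ρ I (fun x => v i x * (v j x * v k x)) x ^ 2 ≤ 10 ^ 6 * A ^ 4 * Q := by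
  have t : TS ρ v 0 1 (fun x => v i x * (v j x * v k x)) := TS.term [] [] [] i j k
  have b := (t.DW hρ hK hv I).bound hρ hK hv hA0 hA hQ (by simpa using hI)
  have Q0 : 0 ≤ Q := le_trans (integral_nonneg fun x => by positivity) (hQ i [] (by simp))
  have h3 : ((3 ^ I.length * 1 : ℕ) : ℝ) ≤ 27 := by
    have : 3 ^ I.length * 1 ≤ 27 := by
      calc 3 ^ I.length * 1 ≤ 3 ^ 3 * 1 := by gcongr; norm_num
        _ = 27 := by norm_num
    exact_mod_cast this
  have : 0 ≤ A ^ 4 * Q := by positivity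
  calc _ ≤ _ := b
    _ ≤ 27 ^ 2 * (1200 * A ^ 4 * Q) := by gcongr
    _ ≤ _ := by nlinarith

end

/-! ### Sobolev inequality on a weighted plane -/

lemma abs_le_int_deriv {φ : ℝ → ℝ} (h : ContDiff ℝ 1 φ) (hc : HasCompactSupport φ) (x : ℝ) :
    |φ x| ≤ ∫ y, |deriv φ y| := by
  rw [← HasCompactSupport.integral_Iic_deriv_eq h hc x]
  have hi : Integrable (deriv φ) :=
    (h.continuous_deriv le_rfl).integrable_of_hasCompactSupport hc.deriv
  calc |∫ y in Set.Iic x, deriv φ y| ≤ ∫ y in Set.Iic x, |deriv φ y| :=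
        abs_integral_le_integral_abs
    _ ≤ ∫ y, |deriv φ y| := setIntegral_le_integral hi.abs (ae_of_all _ fun y => abs_nonneg _)

lemma sup_le_int {g : ℝ × ℝ → ℝ} (hK : IsCompact K) (hg : SC K g) (x : ℝ × ℝ) :
    |g x| ≤ ∫ z, |pd (bv 1) (pd (bv 0) g) z| := by
  have cK1 : IsCompact (Prod.fst '' K) := hK.image continuous_fst
  have cK2 : IsCompact (Prod.snd '' K) := hK.image continuous_snd
  have z1 := pd_zero hK.isClosed hg.z (bv 0)
  have z2 := pd_zero hK.isClosed z1 (bv 1)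
  have s1 := hg.sm.pd (bv 0)
  have s2 := s1.pd (bv 1)
  have d1 : ∀ b y, HasDerivAt (fun y => g (y, b)) (pd (bv 0) g (y, b)) y := by
    intro b y
    have h1 : HasDerivAt (fun y : ℝ => (y, b)) (bv 0) y := by
      simpa [bv] using (hasDerivAt_id y).prodMk (hasDerivAt_const y b)
    exact (hg.sm.da (y, b)).hasFDerivAt.comp_hasDerivAt y h1
  have d2 : ∀ a y, HasDerivAt (fun y => pd (bv 0) g (a, y)) (pd (bv 1) (pd (bv 0) g) (a, y)) y := by
    intro a y
    have h1 : HasDerivAt (fun y : ℝ => (a, y)) (bv 1) y := by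
      simpa [bv] using (hasDerivAt_const y a).prodMk (hasDerivAt_id y)
    exact (s1.da (a, y)).hasFDerivAt.comp_hasDerivAt y h1
  have a1 : |g x| ≤ ∫ y, |pd (bv 0) g (y, x.2)| := by
    have := abs_le_int_deriv (φ := fun y => g (y, x.2))
      ((hg.sm.cd.comp (contDiff_id.prodMk contDiff_const)).of_le (by simp))
      (HasCompactSupport.intro cK1 (fun y hy => hg.z _ (fun h => hy ⟨_, h, rfl⟩))) x.1
    simpa only [(d1 x.2 _).deriv] using this
  have a2 : ∀ y, |pd (bv 0) g (y, x.2)| ≤ ∫ z, |pd (bv 1) (pd (bv 0) g) (y, z)| := by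
    intro y
    have := abs_le_int_deriv (φ := fun z => pd (bv 0) g (y, z))
      ((s1.cd.comp (contDiff_const.prodMk contDiff_id)).of_le (by simp))
      (HasCompactSupport.intro cK2 (fun z hz => z1 _ (fun h => hz ⟨_, h, rfl⟩))) x.2
    simpa only [(d2 y _).deriv] using this
  have i2 : Integrable (fun z => |pd (bv 1) (pd (bv 0) g) z|) (volume : Measure (ℝ × ℝ)) :=
    intK hK s2.cont.abs (fun x hx => by simp [z2 x hx])
  calc |g x| ≤ _ := a1
    _ ≤ ∫ y, ∫ z, |pd (bv 1) (pd (bv 0) g) (y, z)| := by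
      apply integral_mono
      · have : Continuous fun y => |pd (bv 0) g (y, x.2)| := by
          have := s1.cont; fun_prop
        exact this.integrable_of_hasCompactSupport
          (HasCompactSupport.intro cK1 (fun y hy => by simp [z1 (y, x.2) (fun h => hy ⟨_, h, rfl⟩)]))
      · exact Integrable.integral_prod_left i2
      · exact a2
    _ = _ := (integral_prod _ i2).symm

/-- Pointwise bound by weighted `L²` norms of scaled derivatives of order at most two. -/
lemma sobolev (hρ : Wt ρ) (hK : IsCompact K) {f : ℝ × ℝ → ℝ} (hf : SC K f) {Q : ℝ}
    (hQ : ∀ I : List (Fin 2), I.length ≤ 2 → ∫ x, (ρ x)⁻¹ ^ 2 * DW ρ I f x ^ 2 ≤ Q) (x : ℝ × ℝ) :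
    f x ^ 2 ≤ 6 * Q := by
  have h0 := hf.D hρ hK 0
  have h1 := hf.D hρ hK 1
  have h10 := h0.D hρ hK 1
  have q := hQ [] (by simp)
  have q0 := hQ [0] (by simp)
  have q1 := hQ [1] (by simp)
  have q10 := hQ [1, 0] (by simp)
  simp only [DW] at q q0 q1 q10
  have m := sup_le_int hK (g := fun x => f x ^ 2)
    ⟨hf.sm.pow 2, fun x hx => by simp [hf.z x hx]⟩ x
  have c1 := hρ.ism.cont
  have c2 := hf.sm.cont
  have c3 := h0.sm.cont
  have c4 := h1.sm.cont
  have c5 := h10.sm.cont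
  have z1 : ∀ x ∉ K, pd (bv 1) (pd (bv 0) (fun x => f x ^ 2)) x = 0 :=
    pd_zero hK.isClosed (pd_zero hK.isClosed (fun x hx => by simp [hf.z x hx]) _) _
  have le : ∫ z, |pd (bv 1) (pd (bv 0) (fun x => f x ^ 2)) z| ≤
      ∫ z, ((2 * ((ρ z)⁻¹ ^ 2 * f z ^ 2) + 2 * ((ρ z)⁻¹ ^ 2 * D ρ 0 f z ^ 2)) +
        (((ρ z)⁻¹ ^ 2 * D ρ 1 f z ^ 2) + (ρ z)⁻¹ ^ 2 * D ρ 1 (D ρ 0 f) z ^ 2)) := by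
    apply int_le hK (((hf.sm.pow 2).pd _).pd _).cont.abs (by fun_prop)
    · intro x hx; simp [z1 x hx]
    · intro x hx; simp [hf.z x hx, h0.z x hx, h1.z x hx, h10.z x hx]
    · intro z
      have e1 : pd (bv 0) (fun x => f x ^ 2) = fun x => 2 * f x * pd (bv 0) f x := by
        ext y; rw [pd_pow hf.sm]; norm_num
      have e2 : pd (bv 1) (pd (bv 0) (fun x => f x ^ 2)) z =
          2 * (pd (bv 1) f z * pd (bv 0) f z + f z * pd (bv 1) (pd (bv 0) f) z) := by
        rw [e1, pd_mul ((Sm.const 2).mul hf.sm) (hf.sm.pd _), pd_cmul hf.sm]; ring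
      have r0 := hρ.ne z
      have p := inv_pos.2 (hρ.pos z)
      have e3 : pd (bv 0) f z = (ρ z)⁻¹ * D ρ 0 f z := by simp only [D]; field_simp
      have e4 : pd (bv 1) f z = (ρ z)⁻¹ * D ρ 1 f z := by simp only [D]; field_simp
      have e5 : pd (bv 1) (pd (bv 0) f) z =
          (ρ z)⁻¹ ^ 2 * (D ρ 1 (D ρ 0 f) z - pd (bv 1) ρ z * D ρ 0 f z) := by
        have : D ρ 1 (D ρ 0 f) z = ρ z * (ρ z * pd (bv 1) (pd (bv 0) f) z +
            pd (bv 1) ρ z * pd (bv 0) f z) := by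
          show ρ z * pd (bv 1) (fun y => ρ y * pd (bv 0) f y) z = _
          rw [pd_mul hρ.sm (hf.sm.pd _)]
        rw [this]; simp only [D]; field_simp; ring
      rw [e2, e3, e4, e5]
      have d := abs_le.1 (hρ.d1 1 z)
      have d2 : pd (bv 1) ρ z ^ 2 ≤ 1 := by nlinarith
      set r := (ρ z)⁻¹
      set m := pd (bv 1) ρ z
      set F := f z
      set G := D ρ 0 f z
      set H := D ρ 1 f z
      set J := D ρ 1 (D ρ 0 f) z
      have e : 2 * (r * H * (r * G) + F * (r ^ 2 * (J - m * G))) =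
        r ^ 2 * (2 * (H * G + F * (J - m * G))) := by ring
      rw [e, abs_mul, abs_of_nonneg (sq_nonneg r)]
      have : |2 * (H * G + F * (J - m * G))| ≤ 2 * F ^ 2 + 2 * G ^ 2 + (H ^ 2 + J ^ 2) := by
        have w : (m * F) ^ 2 ≤ F ^ 2 := by nlinarith [sq_nonneg F]
        rw [abs_le]; constructor
        · nlinarith [sq_nonneg (H + G), sq_nonneg (F + J), sq_nonneg (m * F - G)]
        · nlinarith [sq_nonneg (H - G), sq_nonneg (F - J), sq_nonneg (m * F + G)]
      calc _ ≤ r ^ 2 * (2 * F ^ 2 + 2 * G ^ 2 + (H ^ 2 + J ^ 2)) := by gcongr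
        _ = _ := by ring
  have i1 : Integrable fun x => (ρ x)⁻¹ ^ 2 * f x ^ 2 :=
    intK hK (by fun_prop) (fun x hx => by simp [hf.z x hx])
  have i2 : Integrable fun x => (ρ x)⁻¹ ^ 2 * D ρ 0 f x ^ 2 :=
    intK hK (by fun_prop) (fun x hx => by simp [h0.z x hx])
  have i3 : Integrable fun x => (ρ x)⁻¹ ^ 2 * D ρ 1 f x ^ 2 :=
    intK hK (by fun_prop) (fun x hx => by simp [h1.z x hx])
  have i4 : Integrable fun x => (ρ x)⁻¹ ^ 2 * D ρ 1 (D ρ 0 f) x ^ 2 :=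
    intK hK (by fun_prop) (fun x hx => by simp [h10.z x hx])
  rw [integral_add (iadd (i1.const_mul _) (i2.const_mul _)) (iadd i3 i4),
    integral_add (i1.const_mul _) (i2.const_mul _), integral_add i3 i4,
    integral_const_mul, integral_const_mul] at le
  rw [abs_of_nonneg (sq_nonneg (f x))] at m
  linarith

end WaveGE

namespace WaveGE

/-! ### Space-time calculus, boosts and hyperboloids -/

/-- Space-time `ℝ × ℝ²`, with time as first coordinate. -/
abbrev P := ℝ × ℝ × ℝ

/-- The `a`-th coordinate of a point of the plane. -/
def xa (a : Fin 2) (x : ℝ × ℝ) : ℝ := if a = 0 then x.1 else x.2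

/-- Time derivative. -/
def dt (u : P → ℝ) : P → ℝ := pd ((1, 0) : P) u

/-- Space derivatives. -/
def dx (a : Fin 2) (u : P → ℝ) : P → ℝ := pd ((0, bv a) : P) u

/-- The Lorentz boost `L_a = t ∂_a + x_a ∂_t`. -/
def Lb (a : Fin 2) (u : P → ℝ) (p : P) : ℝ := p.1 * dx a u p + xa a p.2 * dt u p

/-- The d'Alembertian on functions of a space-time point. -/
def Box (u : P → ℝ) (p : P) : ℝ := dt (dt u) p - dx 0 (dx 0 u) p - dx 1 (dx 1 u) p

/-- Iterated boosts along a word. -/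
def LW : List (Fin 2) → (P → ℝ) → P → ℝ
  | [], u => u
  | a :: I, u => Lb a (LW I u)

lemma xa_zero (x : ℝ × ℝ) : xa 0 x = x.1 := by simp [xa]
lemma xa_one (x : ℝ × ℝ) : xa 1 x = x.2 := by simp [xa]

lemma fin2 {p : Fin 2 → Prop} (h0 : p 0) (h1 : p 1) (a : Fin 2) : p a := by
  fin_cases a
  · exact h0
  · exact h1

lemma sm_xa (a : Fin 2) : Sm (xa a) := by
  revert a; apply fin2
  · have : xa 0 = Prod.fst := by ext x; simp [xa]
    rw [this]; exact contDiff_fst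
  · have : xa 1 = Prod.snd := by ext x; simp [xa]
    rw [this]; exact contDiff_snd

lemma sm_t : Sm (fun p : P => p.1) := contDiff_fst
lemma sm_x (a : Fin 2) : Sm (fun p : P => xa a p.2) := (sm_xa a).cd.comp contDiff_snd

lemma Sm.dt {u : P → ℝ} (hu : Sm u) : Sm (dt u) := hu.pd _
lemma Sm.dx {u : P → ℝ} (hu : Sm u) (a : Fin 2) : Sm (dx a u) := hu.pd _
lemma Sm.Lb {u : P → ℝ} (hu : Sm u) (a : Fin 2) : Sm (Lb a u) :=
  (sm_t.mul (hu.dx a)).add ((sm_x a).mul hu.dt)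
lemma Sm.LW {u : P → ℝ} (hu : Sm u) (I : List (Fin 2)) : Sm (LW I u) := by
  induction I with
  | nil => exact hu
  | cons a I ih => exact ih.Lb a
lemma Sm.Box {u : P → ℝ} (hu : Sm u) : Sm (Box u) :=
  (hu.dt.dt.sub ((hu.dx 0).dx 0)).sub ((hu.dx 1).dx 1)

lemma dt_t (p : P) : dt (fun p : P => p.1) p = 1 := by
  simp [dt, pd, fderiv_fst]
lemma dx_t (a : Fin 2) (p : P) : dx a (fun p : P => p.1) p = 0 := by
  simp [dx, pd, fderiv_fst]
lemma pd_xa (a b : Fin 2) (x : ℝ × ℝ) : pd (bv b) (xa a) x = if a = b then 1 else 0 := by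
  have h0 : xa 0 = Prod.fst := by ext x; simp [xa]
  have h1 : xa 1 = Prod.snd := by ext x; simp [xa]
  revert a b
  apply fin2 <;> apply fin2 <;> simp [h0, h1, pd, bv, fderiv_fst, fderiv_snd]
lemma dx_x (a b : Fin 2) (p : P) : dx b (fun p : P => xa a p.2) p = if a = b then 1 else 0 := by
  have h := ((sm_xa a).da p.2).hasFDerivAt.comp p (hasFDerivAt_snd (𝕜 := ℝ) (p := p))
  have : fderiv ℝ (fun p : P => xa a p.2) p = _ := h.fderiv
  rw [← pd_xa a b p.2]
  simp [dx, pd, this]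
lemma dt_x (a : Fin 2) (p : P) : dt (fun p : P => xa a p.2) p = 0 := by
  have h := ((sm_xa a).da p.2).hasFDerivAt.comp p (hasFDerivAt_snd (𝕜 := ℝ) (p := p))
  have : fderiv ℝ (fun p : P => xa a p.2) p = _ := h.fderiv
  simp [dt, pd, this]

lemma Lb_mul {f g : P → ℝ} (hf : Sm f) (hg : Sm g) (a : Fin 2) (p : P) :
    Lb a (fun x => f x * g x) p = f p * Lb a g p + Lb a f p * g p := by
  simp only [Lb, dx, dt]; rw [pd_mul hf hg, pd_mul hf hg]; ring
lemma Lb_add {f g : P → ℝ} (hf : Sm f) (hg : Sm g) (a : Fin 2) (p : P) :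
    Lb a (fun x => f x + g x) p = Lb a f p + Lb a g p := by
  simp only [Lb, dx, dt]; rw [pd_add hf hg, pd_add hf hg]; ring
lemma Lb_neg {f : P → ℝ} (a : Fin 2) (p : P) :
    Lb a (fun x => - f x) p = - Lb a f p := by
  simp only [Lb, dx, dt]; rw [pd_neg, pd_neg]; ring
lemma Lb_cmul {f : P → ℝ} (hf : Sm f) (c : ℝ) (a : Fin 2) (p : P) :
    Lb a (fun x => c * f x) p = c * Lb a f p := by
  simp only [Lb, dx, dt]; rw [pd_cmul hf, pd_cmul hf]; ring

lemma dt_Lb {u : P → ℝ} (hu : Sm u) (a : Fin 2) (p : P) :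
    dt (Lb a u) p = Lb a (dt u) p + dx a u p := by
  show pd _ (fun p => p.1 * dx a u p + xa a p.2 * dt u p) p = _
  rw [pd_add (sm_t.mul (hu.dx a)) ((sm_x a).mul hu.dt), pd_mul sm_t (hu.dx a),
    pd_mul (sm_x a) hu.dt]
  have h1 := dt_t p
  have h2 := dt_x a p
  have h3 : pd (1, 0) (dx a u) p = dx a (dt u) p := pd_comm hu _ _ _
  simp only [dt] at h1 h2
  rw [h1, h2, h3]
  simp only [Lb, dt]; ring

lemma dx_Lb {u : P → ℝ} (hu : Sm u) (a b : Fin 2) (p : P) :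
    dx b (Lb a u) p = Lb a (dx b u) p + if a = b then dt u p else 0 := by
  show pd _ (fun p => p.1 * dx a u p + xa a p.2 * dt u p) p = _
  rw [pd_add (sm_t.mul (hu.dx a)) ((sm_x a).mul hu.dt), pd_mul sm_t (hu.dx a),
    pd_mul (sm_x a) hu.dt]
  have h1 := dx_t b p
  have h2 := dx_x a b p
  have h3 : pd (0, bv b) (dx a u) p = dx a (dx b u) p := pd_comm hu _ _ _
  have h4 : pd (0, bv b) (dt u) p = dt (dx b u) p := pd_comm hu _ _ _
  simp only [dx] at h1 h2
  rw [h1, h2, h3, h4]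
  simp only [Lb]; split_ifs <;> ring

lemma Box_Lb {u : P → ℝ} (hu : Sm u) (a : Fin 2) (p : P) : Box (Lb a u) p = Lb a (Box u) p := by
  have e1 : dt (dt (Lb a u)) p = Lb a (dt (dt u)) p + 2 * dx a (dt u) p := by
    have : dt (Lb a u) = fun p => Lb a (dt u) p + dx a u p := by ext q; exact dt_Lb hu a q
    rw [this]
    have h2 : dt (dx a u) p = dx a (dt u) p := pd_comm hu _ _ _
    have h1 : dt (fun p => Lb a (dt u) p + dx a u p) p = dt (Lb a (dt u)) p + dt (dx a u) p :=
      pd_add (hu.dt.Lb a) (hu.dx a) _ _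
    rw [h1, dt_Lb hu.dt, h2]; ring
  have e2 : ∀ b, dx b (dx b (Lb a u)) p = Lb a (dx b (dx b u)) p +
      if a = b then 2 * dx a (dt u) p else 0 := by
    intro b
    have : dx b (Lb a u) = fun p => Lb a (dx b u) p + (if a = b then (1 : ℝ) else 0) * dt u p := by
      ext q; rw [dx_Lb hu a b q]; split_ifs <;> simp
    rw [this]
    have h1 : dx b (fun p => Lb a (dx b u) p + (if a = b then (1 : ℝ) else 0) * dt u p) p =
        dx b (Lb a (dx b u)) p + (if a = b then (1 : ℝ) else 0) * dx b (dt u) p := by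
      have := pd_add ((hu.dx b).Lb a) ((Sm.const (if a = b then (1 : ℝ) else 0)).mul hu.dt)
        ((0, bv b) : P) p
      rw [pd_cmul hu.dt] at this
      exact this
    have h2 : dt (dx b u) p = dx b (dt u) p := pd_comm hu _ _ _
    rw [h1, dx_Lb (hu.dx b), h2]
    by_cases h : a = b
    · subst h; simp; ring
    · simp [h]
  have e3 : Lb a (Box u) p = Lb a (dt (dt u)) p - Lb a (dx 0 (dx 0 u)) p -
      Lb a (dx 1 (dx 1 u)) p := by
    simp only [Lb]
    have := fun v => pd_sub (hu.dt.dt.sub ((hu.dx 0).dx 0)) ((hu.dx 1).dx 1) v p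
    have h2 := fun v => pd_sub hu.dt.dt ((hu.dx 0).dx 0) v p
    have h3 : ∀ v, pd v (Box u) p = pd v (dt (dt u)) p - pd v (dx 0 (dx 0 u)) p
        - pd v (dx 1 (dx 1 u)) p := by
      intro v; rw [← h2, ← this]; rfl
    simp only [show ∀ f, dt f p = pd (1, 0) f p from fun _ => rfl,
      show ∀ a f, dx a f p = pd (0, bv a) f p from fun _ _ => rfl, h3]; ring
  rw [Box, e1, e2, e2, e3]
  clear e1 e2 e3
  revert a; apply fin2
  · simp
  · simp; ring

lemma Box_LW {u : P → ℝ} (hu : Sm u) (I : List (Fin 2)) : Box (LW I u) = LW I (Box u) := by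
  induction I with
  | nil => rfl
  | cons a I ih =>
    ext p
    show Box (Lb a (LW I u)) p = _
    rw [Box_Lb (hu.LW I), ih]; rfl

/-! ### Hyperboloids -/

/-- The time at which the hyperboloid of radius `s` lies over `x`. -/
def tt (s : ℝ) (x : ℝ × ℝ) : ℝ := √(s ^ 2 + (x.1 ^ 2 + x.2 ^ 2))

/-- Restriction of a function to the hyperboloid of radius `s`. -/
def sl (s : ℝ) (u : P → ℝ) (x : ℝ × ℝ) : ℝ := u (tt s x, x)

section
variable {s : ℝ} (hs : 0 < s)
include hs

lemma tt_arg_pos (x : ℝ × ℝ) : 0 < s ^ 2 + (x.1 ^ 2 + x.2 ^ 2) := by positivity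
lemma tt_pos (x : ℝ × ℝ) : 0 < tt s x := Real.sqrt_pos.2 (tt_arg_pos hs x)
lemma tt_sq (x : ℝ × ℝ) : tt s x ^ 2 = s ^ 2 + (x.1 ^ 2 + x.2 ^ 2) :=
  Real.sq_sqrt (tt_arg_pos hs x).le
lemma le_tt (x : ℝ × ℝ) : s ≤ tt s x := by
  apply Real.le_sqrt_of_sq_le; nlinarith [sq_nonneg x.1, sq_nonneg x.2]
lemma sm_tt : Sm (tt s) := by
  apply ContDiff.sqrt
  · exact contDiff_const.add ((contDiff_fst.pow 2).add (contDiff_snd.pow 2))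
  · intro x; exact (tt_arg_pos hs x).ne'

lemma pd_tt (a : Fin 2) (x : ℝ × ℝ) : pd (bv a) (tt s) x = xa a x / tt s x := by
  have h : (fun x => tt s x ^ 2) = fun x => s ^ 2 + (xa 0 x ^ 2 + xa 1 x ^ 2) := by
    ext x; rw [tt_sq hs]; simp [xa]
  have h1 : pd (bv a) (fun x => tt s x ^ 2) x = 2 * xa a x := by
    rw [h, pd_add (Sm.const _) (((sm_xa 0).pow 2).add ((sm_xa 1).pow 2)),
      pd_add ((sm_xa 0).pow 2) ((sm_xa 1).pow 2), pd_pow (sm_xa 0), pd_pow (sm_xa 1), pd_const,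
      pd_xa, pd_xa]
    revert a; apply fin2 <;> simp
  rw [pd_pow (sm_tt hs)] at h1
  have := tt_pos hs x
  norm_num at h1
  field_simp; linarith

lemma xa_le_tt (a : Fin 2) (x : ℝ × ℝ) : |xa a x| ≤ tt s x := by
  apply Real.le_sqrt_of_sq_le
  rw [sq_abs]
  have h1 := sq_nonneg x.1
  have h2 := sq_nonneg x.2
  have h3 := sq_nonneg s
  revert a; apply fin2
  · simp only [xa_zero]; linarith
  · simp only [xa_one]; linarith

lemma wt_tt : Wt (tt s) where
  sm := sm_tt hs
  pos := tt_pos hs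
  d1 a x := by
    rw [pd_tt hs, abs_div, abs_of_pos (tt_pos hs x)]
    exact div_le_one_of_le₀ (xa_le_tt hs a x) (tt_pos hs x).le

lemma sm_sl {u : P → ℝ} (hu : Sm u) : Sm (sl s u) :=
  hu.cd.comp ((sm_tt hs).cd.prodMk contDiff_id)

lemma pd_sl {u : P → ℝ} (hu : Sm u) (a : Fin 2) (x : ℝ × ℝ) :
    pd (bv a) (sl s u) x = sl s (dx a u) x + xa a x / tt s x * sl s (dt u) x := by
  have h := HasFDerivAt.comp (g := u) (f := fun y => ((tt s y, y) : P)) x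
    (hu.da (tt s x, x)).hasFDerivAt
    (((sm_tt hs).da x).hasFDerivAt.prodMk (hasFDerivAt_id x))
  have h' : fderiv ℝ (sl s u) x = _ := h.fderiv
  rw [pd, h', ← pd_tt hs a x]
  simp only [sl, dx, dt, pd]
  have : ((fderiv ℝ (tt s) x).prod (ContinuousLinearMap.id ℝ (ℝ × ℝ))) (bv a) =
      ((0, bv a) : P) + (fderiv ℝ (tt s) x (bv a)) • ((1, 0) : P) := by
    ext <;> simp
  rw [ContinuousLinearMap.comp_apply, this, map_add, map_smul]
  simp

lemma D_sl {u : P → ℝ} (hu : Sm u) (a : Fin 2) : D (tt s) a (sl s u) = sl s (Lb a u) := by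
  ext x
  rw [D, pd_sl hs hu]
  have := tt_pos hs x
  simp only [sl, Lb]
  field_simp

lemma DW_sl {u : P → ℝ} (hu : Sm u) (I : List (Fin 2)) : DW (tt s) I (sl s u) = sl s (LW I u) := by
  induction I with
  | nil => rfl
  | cons a I ih =>
    show D (tt s) a (DW (tt s) I (sl s u)) = _
    rw [ih, D_sl hs (hu.LW I)]; rfl

lemma hasDerivAt_tt (x : ℝ × ℝ) : HasDerivAt (fun s => tt s x) (s / tt s x) s := by
  have h : HasDerivAt (fun s : ℝ => s ^ 2 + (x.1 ^ 2 + x.2 ^ 2)) (2 * s) s := by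
    simpa using (hasDerivAt_pow 2 s).add_const (x.1 ^ 2 + x.2 ^ 2)
  have h2 := h.sqrt (tt_arg_pos hs x).ne'
  rw [mul_div_mul_left _ _ (by norm_num : (2 : ℝ) ≠ 0)] at h2
  exact h2

lemma hasDerivAt_sl {u : P → ℝ} (hu : Sm u) (x : ℝ × ℝ) :
    HasDerivAt (fun s => sl s u x) (s / tt s x * sl s (dt u) x) s := by
  have h := HasFDerivAt.comp_hasDerivAt (l := u) (f := fun r => ((tt r x, x) : P)) s
    (hu.da (tt s x, x)).hasFDerivAt
    ((hasDerivAt_tt hs x).prodMk (hasDerivAt_const s x))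
  have e : ((s / tt s x, 0) : P) = (s / tt s x) • ((1, 0) : P) := by ext <;> simp
  rw [e, map_smul] at h
  exact h

end

/-- Differentiation under the integral for integrands with locally uniform compact support. -/
lemma hasDerivAt_int {h h' : ℝ → ℝ × ℝ → ℝ} {s δ : ℝ} (hδ : 0 < δ) {K : Set (ℝ × ℝ)}
    (hK : IsCompact K) (hd : ∀ r ∈ Metric.ball s δ, ∀ x, HasDerivAt (fun r => h r x) (h' r x) r)
    (hc : ∀ r ∈ Metric.ball s δ, Continuous (h r))
    (hc' : ContinuousOn (fun q : ℝ × ℝ × ℝ => h' q.1 q.2) (Metric.ball s δ ×ˢ Set.univ))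
    (hz : ∀ r ∈ Metric.ball s δ, ∀ x ∉ K, h r x = 0) :
    HasDerivAt (fun r => ∫ x, h r x) (∫ x, h' s x) s := by
  have z' : ∀ r ∈ Metric.ball s δ, ∀ x ∉ K, h' r x = 0 := by
    intro r hr x hx
    have e : (fun r => h r x) =ᶠ[𝓝 r] fun _ => 0 := by
      filter_upwards [Metric.isOpen_ball.mem_nhds hr] with r' hr' using hz r' hr' x hx
    exact (hd r hr x).unique ((hasDerivAt_const r (0 : ℝ)).congr_of_eventuallyEq e)
  have hss : s ∈ Metric.ball s δ := Metric.mem_ball_self hδ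
  have hcont : ∀ r ∈ Metric.ball s δ, Continuous (h' r) := by
    intro r hr
    have : Continuous fun x : ℝ × ℝ => ((r, x) : ℝ × ℝ × ℝ) := by fun_prop
    exact hc'.comp_continuous this (fun x => ⟨hr, Set.mem_univ _⟩)
  have hsub : Metric.closedBall s (δ / 2) ⊆ Metric.ball s δ :=
    Metric.closedBall_subset_ball (by linarith)
  obtain ⟨C, hC⟩ := ((isCompact_closedBall s (δ / 2)).prod hK).exists_bound_of_continuousOn
    (hc'.mono (Set.prod_mono hsub (Set.subset_univ K)))
  have := hasDerivAt_integral_of_dominated_loc_of_deriv_le (μ := (volume : Measure (ℝ × ℝ)))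
    (F := h) (F' := h') (x₀ := s) (s := Metric.ball s (δ / 2)) (bound := K.indicator fun _ => C)
    (Metric.ball_mem_nhds s (by linarith)) ?_ ?_ ?_ ?_ ?_ ?_
  · exact this.2
  · filter_upwards [Metric.ball_mem_nhds s hδ] with r hr using (hc r hr).aestronglyMeasurable
  · exact intK hK (hc s hss) (hz s hss)
  · exact (hcont s hss).aestronglyMeasurable
  · refine ae_of_all _ fun x r hr => ?_
    by_cases hx : x ∈ K
    · rw [Set.indicator_of_mem hx]
      exact hC (r, x) ⟨Metric.ball_subset_closedBall hr, hx⟩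
    · rw [Set.indicator_of_notMem hx, z' r (hsub (Metric.ball_subset_closedBall hr)) x hx]; simp
  · rw [integrable_indicator_iff hK.measurableSet]
    exact integrableOn_const hK.measure_lt_top.ne
  · exact ae_of_all _ fun x r hr => hd r (hsub (Metric.ball_subset_closedBall hr)) x

end WaveGE

namespace WaveGE

/-! ### The hyperboloidal energy -/

/-- Density of the hyperboloidal energy. -/
def ed (s : ℝ) (φ : P → ℝ) (x : ℝ × ℝ) : ℝ :=
  (tt s x)⁻¹ ^ 2 * (s ^ 2 * sl s (dt φ) x ^ 2 + (sl s (Lb 0 φ) x ^ 2 + sl s (Lb 1 φ) x ^ 2))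

/-- Energy of `φ` on the hyperboloid of radius `s`. -/
def En (s : ℝ) (φ : P → ℝ) : ℝ := ∫ x, ed s φ x

lemma ed_nonneg (s : ℝ) (φ : P → ℝ) (x : ℝ × ℝ) : 0 ≤ ed s φ x := by unfold ed; positivity
lemma En_nonneg (s : ℝ) (φ : P → ℝ) : 0 ≤ En s φ := integral_nonneg fun x => ed_nonneg s φ x

lemma ed_eq {s : ℝ} (hs : 0 < s) (φ : P → ℝ) (x : ℝ × ℝ) :
    ed s φ x = (sl s (dt φ) x ^ 2 + sl s (dx 0 φ) x ^ 2 + sl s (dx 1 φ) x ^ 2) +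
      ((tt s x)⁻¹ * (xa 0 x * (2 * (sl s (dt φ) x * sl s (dx 0 φ) x))) +
        (tt s x)⁻¹ * (xa 1 x * (2 * (sl s (dt φ) x * sl s (dx 1 φ) x)))) := by
  have h1 := tt_pos hs x
  have h2 := tt_sq hs x
  simp only [ed, sl, Lb, xa_zero, xa_one]
  field_simp
  set t := tt s x
  have h3 : s ^ 2 = t ^ 2 - (x.1 ^ 2 + x.2 ^ 2) := by linarith
  rw [h3]; ring

lemma ed_grad {s : ℝ} (hs : 0 < s) (φ : P → ℝ) (x : ℝ × ℝ) :
    (tt s x)⁻¹ ^ 2 * (sl s (dt φ) x ^ 2 + sl s (dx 0 φ) x ^ 2 + sl s (dx 1 φ) x ^ 2) ≤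
      5 * (s⁻¹ ^ 2 * ed s φ x) := by
  have h1 := tt_pos hs x
  have h2 := tt_sq hs x
  have h3 := le_tt hs x
  simp only [ed, sl, Lb, xa_zero, xa_one]
  set t := tt s x
  set a := dt φ (t, x)
  set b := dx 0 φ (t, x)
  set c := dx 1 φ (t, x)
  have key : s ^ 2 * (a ^ 2 + b ^ 2 + c ^ 2) ≤
      5 * (s ^ 2 * a ^ 2 + ((t * b + x.1 * a) ^ 2 + (t * c + x.2 * a) ^ 2)) := by
    have hst : s ^ 2 ≤ t ^ 2 := by gcongr
    have hx1 : x.1 ^ 2 ≤ t ^ 2 := by nlinarith [sq_nonneg x.2, sq_nonneg s]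
    have hx2 : x.2 ^ 2 ≤ t ^ 2 := by nlinarith [sq_nonneg x.1, sq_nonneg s]
    have aux : ∀ y d : ℝ, y ^ 2 ≤ t ^ 2 →
        s ^ 2 * d ^ 2 ≤ 2 * (t * d + y * a) ^ 2 + 2 * (s ^ 2 * a ^ 2) := by
      intro y d hy
      have e : t ^ 2 * (s ^ 2 * d ^ 2) ≤
          2 * (s ^ 2 * (t * d + y * a) ^ 2) + 2 * (s ^ 2 * (y ^ 2 * a ^ 2)) := by
        nlinarith [mul_nonneg (sq_nonneg s) (sq_nonneg (t * d + 2 * (y * a)))]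
      have e2 : s ^ 2 * (t * d + y * a) ^ 2 ≤ t ^ 2 * (t * d + y * a) ^ 2 := by gcongr
      have e3 : s ^ 2 * (y ^ 2 * a ^ 2) ≤ s ^ 2 * (t ^ 2 * a ^ 2) := by gcongr
      have : t ^ 2 * (s ^ 2 * d ^ 2) ≤
        t ^ 2 * (2 * (t * d + y * a) ^ 2 + 2 * (s ^ 2 * a ^ 2)) := by linarith
      exact le_of_mul_le_mul_left this (by positivity)
    have := aux _ b hx1
    have := aux _ c hx2
    nlinarith [sq_nonneg (t * b + x.1 * a), sq_nonneg (t * c + x.2 * a)]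
  field_simp
  linarith [key]

lemma intpd {K : Set (ℝ × ℝ)} (hK : IsCompact K) {g : ℝ × ℝ → ℝ} (hg : SC K g) (v : ℝ × ℝ) :
    ∫ x, pd v g x = 0 := by
  have := ibp (μ := (volume : Measure (ℝ × ℝ))) hK (Sm.const 1) hg.sm hg.z v
  simpa [pd_const] using this

/-- The energy identity on hyperboloids. -/
lemma En_deriv {φ : P → ℝ} (hφ : Sm φ) {s δ : ℝ} (hδ : 0 < δ) (hsδ : δ < s) {K : Set (ℝ × ℝ)}
    (hK : IsCompact K)
    (hz : ∀ r ∈ Metric.ball s δ, ∀ x ∉ K, dt φ (tt r x, x) = 0 ∧ ∀ a, dx a φ (tt r x, x) = 0) :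
    HasDerivAt (fun r => En r φ) (∫ x, 2 * (s / tt s x * (sl s (dt φ) x * sl s (Box φ) x))) s := by
  have hpos : ∀ r ∈ Metric.ball s δ, 0 < r := by
    intro r hr
    have := abs_lt.1 (Metric.mem_ball.1 hr)
    linarith [this.1]
  have hs : 0 < s := by linarith
  let e0 : P → ℝ := fun p => dt φ p ^ 2 + dx 0 φ p ^ 2 + dx 1 φ p ^ 2
  let j : Fin 2 → P → ℝ := fun a p => 2 * (dt φ p * dx a φ p)
  have se0 : Sm e0 := ((hφ.dt.pow 2).add ((hφ.dx 0).pow 2)).add ((hφ.dx 1).pow 2)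
  have sj : ∀ a, Sm (j a) := fun a => (Sm.const 2).mul (hφ.dt.mul (hφ.dx a))
  let h : ℝ → ℝ × ℝ → ℝ := fun r x => sl r e0 x +
    ((tt r x)⁻¹ * (xa 0 x * sl r (j 0) x) + (tt r x)⁻¹ * (xa 1 x * sl r (j 1) x))
  let h' : ℝ → ℝ × ℝ → ℝ := fun r x => r / tt r x * sl r (dt e0) x +
    ((-(r / tt r x) / tt r x ^ 2 * (xa 0 x * sl r (j 0) x) +
      (tt r x)⁻¹ * (xa 0 x * (r / tt r x * sl r (dt (j 0)) x))) +
     (-(r / tt r x) / tt r x ^ 2 * (xa 1 x * sl r (j 1) x) +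
      (tt r x)⁻¹ * (xa 1 x * (r / tt r x * sl r (dt (j 1)) x))))
  have hhe : ∀ r, 0 < r → ∀ x, ed r φ x = h r x := by
    intro r hr x; rw [ed_eq hr]; rfl
  have H := hasDerivAt_int (s := s) (h := h) (h' := h') hδ hK ?_ ?_ ?_ ?_
  · have e1 : (∫ x, h' s x) = ∫ x, 2 * (s / tt s x * (sl s (dt φ) x * sl s (Box φ) x)) := by
      let G : Fin 2 → ℝ × ℝ → ℝ := fun a x => (s * (tt s x)⁻¹) * sl s (j a) x
      have sti : Sm fun x => (tt s x)⁻¹ := (sm_tt hs).inv fun x => (tt_pos hs x).ne'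
      have hG : ∀ a, SC K (G a) := fun a => ⟨((Sm.const s).mul sti).mul (sm_sl hs (sj a)), by
        intro x hx
        have := (hz s (Metric.mem_ball_self hδ) x hx).1
        simp [G, sl, j, this]⟩
      have pw : ∀ x, h' s x = 2 * (s / tt s x * (sl s (dt φ) x * sl s (Box φ) x)) +
          (pd (bv 0) (G 0) x + pd (bv 1) (G 1) x) := by
        intro x
        have ht := tt_pos hs x
        have pG : ∀ a, pd (bv a) (G a) x = s * (tt s x)⁻¹ * (sl s (dx a (j a)) x +
            xa a x / tt s x * sl s (dt (j a)) x) -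
            s * ((tt s x)⁻¹ ^ 2 * (xa a x / tt s x)) * sl s (j a) x := by
          intro a
          have e1 := pd_mul ((Sm.const s).mul sti) (sm_sl hs (sj a)) (bv a) x
          have e2 := pd_cmul sti s (bv a) x
          have e3 := pd_inv (sm_tt hs) (fun x => (tt_pos hs x).ne') (bv a) x
          have e4 := pd_sl hs (sj a) a x
          have e5 := pd_tt hs a x
          show pd (bv a) (fun x => (s * (tt s x)⁻¹) * sl s (j a) x) x = _
          rw [e1, e2, e3, e4, e5]; ring
        rw [pG, pG]
        have d0 : dt e0 (tt s x, x) = 2 * dt φ (tt s x, x) * dt (dt φ) (tt s x, x) +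
            2 * dx 0 φ (tt s x, x) * dt (dx 0 φ) (tt s x, x) +
            2 * dx 1 φ (tt s x, x) * dt (dx 1 φ) (tt s x, x) := by
          show pd _ e0 _ = _
          have a1 := pd_add ((hφ.dt.pow 2).add ((hφ.dx 0).pow 2)) ((hφ.dx 1).pow 2)
            ((1, 0) : P) (tt s x, x)
          have a2 := pd_add (hφ.dt.pow 2) ((hφ.dx 0).pow 2) ((1, 0) : P) (tt s x, x)
          have a3 := pd_pow hφ.dt 2 ((1, 0) : P) (tt s x, x)
          have a4 := fun a => pd_pow (hφ.dx a) 2 ((1, 0) : P) (tt s x, x)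
          simp only [a2, a3, a4] at a1
          norm_num at a1
          exact a1
        have dj : ∀ a, dx a (j a) (tt s x, x) = 2 * (dt φ (tt s x, x) * dx a (dx a φ) (tt s x, x) +
            dt (dx a φ) (tt s x, x) * dx a φ (tt s x, x)) := by
          intro a
          have a1 := pd_cmul (hφ.dt.mul (hφ.dx a)) 2 ((0, bv a) : P) (tt s x, x)
          have a2 := pd_mul hφ.dt (hφ.dx a) ((0, bv a) : P) (tt s x, x)
          have a3 : pd ((0, bv a) : P) (dt φ) (tt s x, x) = dt (dx a φ) (tt s x, x) :=
            pd_comm hφ _ _ _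
          rw [a3] at a2
          rw [a2] at a1
          exact a1
        show s / tt s x * dt e0 (tt s x, x) + _ = _
        simp only [sl, d0, dj, Box]
        have hb : ∀ a, j a (tt s x, x) = 2 * (dt φ (tt s x, x) * dx a φ (tt s x, x)) :=
          fun a => rfl
        rw [hb, hb]
        field_simp
        ring
      have cB : Continuous fun x => 2 * (s / tt s x * (sl s (dt φ) x * sl s (Box φ) x)) := by
        have := (sm_sl hs hφ.dt).cont
        have := (sm_sl hs hφ.Box).cont
        have h3 := sti.cont
        simp only [div_eq_mul_inv]
        fun_prop
      have i1 : Integrable fun x => 2 * (s / tt s x * (sl s (dt φ) x * sl s (Box φ) x)) := by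
        refine intK hK cB fun x hx => ?_
        simp [sl, (hz s (Metric.mem_ball_self hδ) x hx).1]
      have ip : ∀ a, Integrable (pd (bv a) (G a)) := fun a =>
        intK hK ((hG a).sm.pd _).cont (pd_zero hK.isClosed (hG a).z _)
      simp only [pw]
      rw [integral_add i1 (iadd (ip 0) (ip 1)), integral_add (ip 0) (ip 1), intpd hK (hG 0),
        intpd hK (hG 1)]
      simp
    rw [← e1]
    refine H.congr_of_eventuallyEq ?_
    filter_upwards [Metric.ball_mem_nhds s hδ] with r hr
    exact integral_congr_ae (ae_of_all _ fun x => hhe r (hpos r hr) x)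
  · intro r hr x
    have hr := hpos r hr
    have d0 := hasDerivAt_sl hr se0 x
    have dj := fun a => hasDerivAt_sl hr (sj a) x
    have di := (hasDerivAt_tt hr x).inv (tt_pos hr x).ne'
    exact d0.add ((di.mul ((dj 0).const_mul _)).add (di.mul ((dj 1).const_mul _)))
  · intro r hr
    have hr := hpos r hr
    have c0 := (sm_sl hr se0).cont
    have cj := fun a => (sm_sl hr (sj a)).cont
    have c0' := cj 0
    have c1' := cj 1
    have ci := ((sm_tt hr).inv fun x => (tt_pos hr x).ne').cont
    have x0 := (sm_xa 0).cont
    have x1 := (sm_xa 1).cont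
    show Continuous fun x => h r x
    simp only [h]
    fun_prop
  · have ct : Continuous fun q : ℝ × ℝ × ℝ => tt q.1 q.2 := by
      unfold tt; fun_prop
    have csl : ∀ u : P → ℝ, Sm u → Continuous fun q : ℝ × ℝ × ℝ => sl q.1 u q.2 := by
      intro u hu; exact hu.cont.comp (ct.prodMk continuous_snd)
    have ce := csl _ se0.dt
    have cj0 := csl _ (sj 0)
    have cj1 := csl _ (sj 1)
    have cd0 := csl _ (sj 0).dt
    have cd1 := csl _ (sj 1).dt
    have x0 : Continuous fun q : ℝ × ℝ × ℝ => xa 0 q.2 := (sm_xa 0).cont.comp continuous_snd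
    have x1 : Continuous fun q : ℝ × ℝ × ℝ => xa 1 q.2 := (sm_xa 1).cont.comp continuous_snd
    have ne : ∀ q ∈ Metric.ball s δ ×ˢ (Set.univ : Set (ℝ × ℝ)), tt q.1 q.2 ≠ 0 :=
      fun q hq => (tt_pos (hpos _ hq.1) _).ne'
    have ci : ContinuousOn (fun q : ℝ × ℝ × ℝ => (tt q.1 q.2)⁻¹)
      (Metric.ball s δ ×ˢ (Set.univ : Set (ℝ × ℝ))) := ct.continuousOn.inv₀ ne
    have cq : ContinuousOn (fun q : ℝ × ℝ × ℝ => q.1) (Metric.ball s δ ×ˢ (Set.univ : Set (ℝ × ℝ))) :=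
      continuous_fst.continuousOn
    have cs := cq.mul ci
    have A0 := (cs.neg.mul (ci.pow 2)).mul (x0.mul cj0).continuousOn
    have A1 := (cs.neg.mul (ci.pow 2)).mul (x1.mul cj1).continuousOn
    have B0 := ci.mul (x0.continuousOn.mul (cs.mul cd0.continuousOn))
    have B1 := ci.mul (x1.continuousOn.mul (cs.mul cd1.continuousOn))
    refine ((cs.mul ce.continuousOn).add ((A0.add B0).add (A1.add B1))).congr fun q hq => ?_
    simp [h', div_eq_mul_inv]
  · intro r hr x hx
    obtain ⟨z0, z1⟩ := hz r hr x hx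
    simp [h, sl, e0, j, z0, z1]

end WaveGE

namespace WaveGE

/-! ### Energy growth for the cut-off system -/

/-- Smooth solutions of the system with the cubic term damped by `ϑ ^ 3`, supported in a light cone
for times after `T0`. -/
structure MSol (T0 μ : ℝ) (ϑ : P → ℝ) (w : Fin 2 → P → ℝ) : Prop where
  sm : ∀ i, Sm (w i)
  eq : ∀ i, Box (w i) = fun p => -μ * ((ϑ p * dt (w (1 - i)) p) *
    ((ϑ p * dt (w (1 - i)) p) * (ϑ p * dt (w i) p)))
  supp : ∀ i p, T0 < p.1 → (p.1 - 1) ^ 2 < p.2.1 ^ 2 + p.2.2 ^ 2 → w i p = 0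

/-- The closed set off which solutions vanish. -/
def Kc (T0 : ℝ) : Set P := {p | p.1 ≤ T0 ∨ p.2.1 ^ 2 + p.2.2 ^ 2 ≤ (p.1 - 1) ^ 2}

lemma Kc_closed (T0 : ℝ) : IsClosed (Kc T0) := by
  have h1 : IsClosed {p : P | p.1 ≤ T0} := isClosed_le (by fun_prop) (by fun_prop)
  have h2 : IsClosed {p : P | p.2.1 ^ 2 + p.2.2 ^ 2 ≤ (p.1 - 1) ^ 2} :=
    isClosed_le (by fun_prop) (by fun_prop)
  exact h1.union h2

/-- Vanishing off the cone. -/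
def Zc (T0 : ℝ) (f : P → ℝ) : Prop := ∀ p ∉ Kc T0, f p = 0

lemma Zc.pd {T0 : ℝ} {f : P → ℝ} (h : Zc T0 f) (v : P) : Zc T0 (pd v f) :=
  pd_zero (Kc_closed T0) h v
lemma Zc.dt {T0 : ℝ} {f : P → ℝ} (h : Zc T0 f) : Zc T0 (dt f) := h.pd _
lemma Zc.dx {T0 : ℝ} {f : P → ℝ} (h : Zc T0 f) (a : Fin 2) : Zc T0 (dx a f) := h.pd _
lemma Zc.Lb {T0 : ℝ} {f : P → ℝ} (h : Zc T0 f) (a : Fin 2) : Zc T0 (Lb a f) := fun p hp => by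
  simp [WaveGE.Lb, h.dt p hp, h.dx a p hp]
lemma Zc.LW {T0 : ℝ} {f : P → ℝ} (h : Zc T0 f) (I : List (Fin 2)) : Zc T0 (LW I f) := by
  induction I with
  | nil => exact h
  | cons a I ih => exact ih.Lb a
lemma MSol.zc {T0 μ : ℝ} {ϑ : P → ℝ} {w : Fin 2 → P → ℝ} (h : MSol T0 μ ϑ w) (i : Fin 2) :
    Zc T0 (w i) := fun p hp => by
  simp only [Kc, Set.mem_setOf_eq, not_or, not_le] at hp
  exact h.supp i p hp.1 hp.2

/-- Spatial box containing the cone part of the hyperboloids of radius at most `s`. -/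
def Kb (s : ℝ) : Set (ℝ × ℝ) := Metric.closedBall 0 (s ^ 2 + 1)
lemma Kb_compact (s : ℝ) : IsCompact (Kb s) := isCompact_closedBall _ _

lemma Kb_out {T0 s r : ℝ} (hT : 0 < T0) (hr : T0 < r) (hrs : r ≤ s) {x : ℝ × ℝ} (hx : x ∉ Kb s) :
    (tt r x, x) ∉ Kc T0 := by
  have r0 : 0 < r := by linarith
  have h1 : s ^ 2 + 1 < tt r x := by
    simp only [Kb, Metric.mem_closedBall, dist_zero_right, not_le, Prod.norm_def, lt_max_iff] at hx
    have a0 := xa_le_tt r0 0 x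
    have a1 := xa_le_tt r0 1 x
    rw [xa_zero] at a0
    rw [xa_one] at a1
    rcases hx with h | h
    · exact lt_of_lt_of_le h a0
    · exact lt_of_lt_of_le h a1
  have h2 := tt_sq r0 x
  have h3 := le_tt r0 x
  simp only [Kc, Set.mem_setOf_eq, not_or, not_le]
  constructor
  · linarith
  · nlinarith

lemma Zc.sc {T0 s r : ℝ} (hT : 0 < T0) (hr : T0 < r) (hrs : r ≤ s) {f : P → ℝ} (hf : Sm f)
    (h : Zc T0 f) : SC (Kb s) (sl r f) :=
  ⟨sm_sl (by linarith) hf, fun _ hx => h _ (Kb_out hT hr hrs hx)⟩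

/-- Words of length at most three. -/
def W3 : Finset (List (Fin 2)) := (List.finite_length_le (Fin 2) 3).toFinset
lemma mem_W3 {I : List (Fin 2)} : I ∈ W3 ↔ I.length ≤ 3 := by simp [W3]

/-- Total energy density of the boosted fields. -/
def Yd (s : ℝ) (w : Fin 2 → P → ℝ) (x : ℝ × ℝ) : ℝ := ∑ i, ∑ I ∈ W3, ed s (LW I (w i)) x
/-- Total energy of the boosted fields. -/
def Y (s : ℝ) (w : Fin 2 → P → ℝ) : ℝ := ∑ i, ∑ I ∈ W3, En s (LW I (w i))

lemma ed_le_Yd (s : ℝ) (w : Fin 2 → P → ℝ) (i : Fin 2) {I : List (Fin 2)} (hI : I.length ≤ 3)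
    (x : ℝ × ℝ) : ed s (LW I (w i)) x ≤ Yd s w x := by
  have h1 : ed s (LW I (w i)) x ≤ ∑ I ∈ W3, ed s (LW I (w i)) x :=
    Finset.single_le_sum (f := fun I => ed s (LW I (w i)) x) (fun I _ => ed_nonneg _ _ _)
      (mem_W3.2 hI)
  exact h1.trans (Finset.single_le_sum (f := fun i => ∑ I ∈ W3, ed s (LW I (w i)) x)
    (fun i _ => Finset.sum_nonneg fun I _ => ed_nonneg _ _ _) (Finset.mem_univ i))

lemma Y_nonneg (s : ℝ) (w : Fin 2 → P → ℝ) : 0 ≤ Y s w :=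
  Finset.sum_nonneg fun _ _ => Finset.sum_nonneg fun _ _ => En_nonneg _ _

lemma Yd_nonneg (s : ℝ) (w : Fin 2 → P → ℝ) (x : ℝ × ℝ) : 0 ≤ Yd s w x :=
  Finset.sum_nonneg fun _ _ => Finset.sum_nonneg fun _ _ => ed_nonneg _ _ _

lemma En_le_Y (s : ℝ) (w : Fin 2 → P → ℝ) (i : Fin 2) {I : List (Fin 2)} (hI : I.length ≤ 3) :
    En s (LW I (w i)) ≤ Y s w := by
  have h1 : En s (LW I (w i)) ≤ ∑ I ∈ W3, En s (LW I (w i)) :=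
    Finset.single_le_sum (f := fun I => En s (LW I (w i))) (fun I _ => En_nonneg _ _)
      (mem_W3.2 hI)
  exact h1.trans (Finset.single_le_sum (f := fun i => ∑ I ∈ W3, En s (LW I (w i)))
    (fun i _ => Finset.sum_nonneg fun I _ => En_nonneg _ _) (Finset.mem_univ i))

lemma ed_cont {s : ℝ} (hs : 0 < s) {φ : P → ℝ} (hφ : Sm φ) : Continuous (ed s φ) := by
  have h0 := (sm_sl hs hφ.dt).cont
  have h1 := (sm_sl hs (hφ.Lb 0)).cont
  have h2 := (sm_sl hs (hφ.Lb 1)).cont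
  have h3 := ((sm_tt hs).inv fun x => (tt_pos hs x).ne').cont
  unfold ed; fun_prop

lemma ed_zero {T0 s r : ℝ} (hT : 0 < T0) (hr : T0 < r) (hrs : r ≤ s) {φ : P → ℝ} (h : Zc T0 φ)
    {x : ℝ × ℝ} (hx : x ∉ Kb s) : ed r φ x = 0 := by
  have := Kb_out hT hr hrs hx
  simp [ed, sl, h.dt _ this, h.Lb _ _ this]

/-- Functions obtained by applying at most `n` boosts to `ϑ ∂_t u`: sums of at most `N` products of
a boosted cut-off and a first derivative of a boosted field. -/
inductive BT (ϑ u : P → ℝ) (n : ℕ) : ℕ → (P → ℝ) → Prop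
  | zero (N : ℕ) : BT ϑ u n N (fun _ => 0)
  | time (J1 J2 : List (Fin 2)) (h : J1.length + J2.length ≤ n) :
      BT ϑ u n 1 (fun p => LW J1 ϑ p * dt (LW J2 u) p)
  | space (J1 J2 : List (Fin 2)) (a : Fin 2) (h : J1.length + J2.length ≤ n) :
      BT ϑ u n 1 (fun p => LW J1 ϑ p * dx a (LW J2 u) p)
  | neg {N F} : BT ϑ u n N F → BT ϑ u n N (fun p => - F p)
  | add {N M F G} : BT ϑ u n N F → BT ϑ u n M G → BT ϑ u n (N + M) (fun p => F p + G p)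

section BTsec
variable {ϑ u : P → ℝ} (hϑ : Sm ϑ) (hu : Sm u)
include hϑ hu

lemma BT.sm {n N F} (h : BT ϑ u n N F) : Sm F := by
  induction h with
  | zero => exact Sm.const 0
  | time J1 J2 => exact (hϑ.LW J1).mul (hu.LW J2).dt
  | space J1 J2 a => exact (hϑ.LW J1).mul ((hu.LW J2).dx a)
  | neg h ih => exact ih.neg
  | add h1 h2 i1 i2 => exact i1.add i2

lemma BT.Lb {n N F} (h : BT ϑ u n N F) (b : Fin 2) : BT ϑ u (n + 1) (3 * N) (Lb b F) := by
  induction h with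
  | zero =>
    have : WaveGE.Lb b (fun _ : P => (0 : ℝ)) = fun _ => 0 := by
      ext p; simp [WaveGE.Lb, WaveGE.dx, WaveGE.dt, pd_const]
    rw [this]; exact BT.zero _
  | time J1 J2 h =>
    have t1 := BT.time (ϑ := ϑ) (u := u) (n := n + 1) J1 (b :: J2) (by simp; omega)
    have t2 := (BT.space (ϑ := ϑ) (u := u) (n := n + 1) J1 J2 b (by omega)).neg
    have t3 := BT.time (ϑ := ϑ) (u := u) (n := n + 1) (b :: J1) J2 (by simp; omega)
    convert (t1.add t2).add t3 using 1
    ext p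
    rw [Lb_mul (hϑ.LW J1) (hu.LW J2).dt]
    have := dt_Lb (hu.LW J2) b p
    show _ = LW J1 ϑ p * WaveGE.dt (WaveGE.Lb b (LW J2 u)) p + _ + WaveGE.Lb b (LW J1 ϑ) p * _
    rw [this]; ring
  | space J1 J2 a h =>
    have t1 := BT.space (ϑ := ϑ) (u := u) (n := n + 1) J1 (b :: J2) a (by simp; omega)
    have t3 := BT.space (ϑ := ϑ) (u := u) (n := n + 1) (b :: J1) J2 a (by simp; omega)
    have key : ∀ p, WaveGE.Lb b (fun p => LW J1 ϑ p * WaveGE.dx a (LW J2 u) p) p =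
        (LW J1 ϑ p * WaveGE.dx a (LW (b :: J2) u) p +
          -(if b = a then LW J1 ϑ p * WaveGE.dt (LW J2 u) p else 0)) +
          LW (b :: J1) ϑ p * WaveGE.dx a (LW J2 u) p := by
      intro p
      rw [Lb_mul (hϑ.LW J1) ((hu.LW J2).dx a)]
      have := dx_Lb (hu.LW J2) b a p
      show _ = LW J1 ϑ p * WaveGE.dx a (WaveGE.Lb b (LW J2 u)) p + _ +
        WaveGE.Lb b (LW J1 ϑ) p * _
      rw [this]; split_ifs <;> ring
    by_cases hab : b = a
    · have t2 := (BT.time (ϑ := ϑ) (u := u) (n := n + 1) J1 J2 (by omega)).neg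
      convert (t1.add t2).add t3 using 1
      ext p; rw [key, if_pos hab]
    · have t2 := (BT.zero (ϑ := ϑ) (u := u) (n := n + 1) 1).neg
      convert (t1.add t2).add t3 using 1
      ext p; rw [key, if_neg hab]
  | neg h ih =>
    convert ih.neg using 1
    ext p; exact Lb_neg b p
  | @add N M F G h1 h2 i1 i2 =>
    have := i1.add i2
    rw [← mul_add] at this
    convert this using 1
    ext p; exact Lb_add (h1.sm hϑ hu) (h2.sm hϑ hu) b p

lemma BT.LW {n N F} (h : BT ϑ u n N F) (I : List (Fin 2)) :
    BT ϑ u (n + I.length) (3 ^ I.length * N) (LW I F) := by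
  induction I with
  | nil => simpa [WaveGE.LW] using h
  | cons a I ih =>
    have := ih.Lb hϑ hu a
    rw [show 3 ^ (a :: I).length * N = 3 * (3 ^ I.length * N) by
      rw [List.length_cons, pow_succ]; ring]
    exact this

omit hϑ hu in
lemma BT.bound {n N F} (h : BT ϑ u n N F) (hn : n ≤ 3) {p : P} {Cθ S : ℝ}
    (hC : ∀ J, J.length ≤ 3 → |WaveGE.LW J ϑ p| ≤ Cθ)
    (hS0 : 0 ≤ S) (hS : ∀ J, J.length ≤ 3 → |WaveGE.dt (WaveGE.LW J u) p| ≤ S ∧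
      ∀ a, |WaveGE.dx a (WaveGE.LW J u) p| ≤ S) : |F p| ≤ N * (Cθ * S) := by
  have hC0 : 0 ≤ Cθ := (abs_nonneg _).trans (hC [] (by simp))
  induction h with
  | zero => simp; positivity
  | time J1 J2 h =>
    rw [abs_mul]
    have := hC J1 (by omega)
    have := (hS J2 (by omega)).1
    simp; gcongr
  | space J1 J2 a h =>
    rw [abs_mul]
    have := hC J1 (by omega)
    have := (hS J2 (by omega)).2 a
    simp; gcongr
  | neg h ih => rw [abs_neg]; exact ih
  | add h1 h2 i1 i2 =>
    refine (abs_add_le _ _).trans ?_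
    push_cast; linarith

end BTsec

/-- Boosts of `ϑ ∂_t w` are controlled pointwise by the energy density. -/
lemma LW_vt_bound {ϑ : P → ℝ} {w : Fin 2 → P → ℝ} (hϑ : Sm ϑ) (hw : ∀ i, Sm (w i)) {s : ℝ}
    (hs : 0 < s) (x : ℝ × ℝ) {Cθ : ℝ} (hC : ∀ J, J.length ≤ 3 → |LW J ϑ (tt s x, x)| ≤ Cθ)
    (i : Fin 2) (I : List (Fin 2)) (hI : I.length ≤ 3) :
    (tt s x)⁻¹ ^ 2 * sl s (LW I (fun p => ϑ p * dt (w i) p)) x ^ 2 ≤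
      4000 * Cθ ^ 2 * s⁻¹ ^ 2 * Yd s w x := by
  have ht := tt_pos hs x
  have h0 : BT ϑ (w i) 0 1 (fun p => LW [] ϑ p * dt (LW [] (w i)) p) := BT.time [] [] le_rfl
  have h1 := h0.LW hϑ (hw i) I
  have hC0 : 0 ≤ Cθ := (abs_nonneg _).trans (hC [] (by simp))
  have hY := Yd_nonneg s w x
  set S2 := 5 * (tt s x ^ 2 * (s⁻¹ ^ 2 * Yd s w x)) with hS2
  have h2 : ∀ J : List (Fin 2), J.length ≤ 3 → (sl s (dt (LW J (w i))) x ^ 2 +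
      sl s (dx 0 (LW J (w i))) x ^ 2 + sl s (dx 1 (LW J (w i))) x ^ 2) ≤ S2 := by
    intro J hJ
    have a := ed_grad hs (LW J (w i)) x
    have b := ed_le_Yd s w i hJ x
    have c : (tt s x)⁻¹ ^ 2 * (sl s (dt (LW J (w i))) x ^ 2 +
      sl s (dx 0 (LW J (w i))) x ^ 2 + sl s (dx 1 (LW J (w i))) x ^ 2) ≤
      5 * (s⁻¹ ^ 2 * Yd s w x) := a.trans (by gcongr)
    rw [inv_pow, inv_mul_le_iff₀ (by positivity)] at c
    rw [hS2]; linarith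
  have hb := h1.bound (by simpa using hI) hC (Real.sqrt_nonneg S2) (fun J hJ => by
    have := h2 J hJ
    refine ⟨Real.abs_le_sqrt ?_, fun a => Real.abs_le_sqrt ?_⟩
    · exact le_trans (by
        show sl s (dt (LW J (w i))) x ^ 2 ≤ _
        have := sq_nonneg (sl s (dx 0 (LW J (w i))) x)
        have := sq_nonneg (sl s (dx 1 (LW J (w i))) x)
        linarith) this
    · refine le_trans ?_ this
      show sl s (dx a (LW J (w i))) x ^ 2 ≤ _
      have := sq_nonneg (sl s (dt (LW J (w i))) x)
      have := sq_nonneg (sl s (dx 0 (LW J (w i))) x)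
      have := sq_nonneg (sl s (dx 1 (LW J (w i))) x)
      revert a; apply fin2 <;> linarith)
  have hN : ((3 ^ I.length * 1 : ℕ) : ℝ) ≤ 27 := by
    have : 3 ^ I.length * 1 ≤ 27 := by
      rw [mul_one]; exact Nat.pow_le_pow_right (by norm_num) hI
    exact_mod_cast this
  have hb2 : |LW I (fun p => ϑ p * dt (w i) p) (tt s x, x)| ≤ 27 * (Cθ * √S2) :=
    hb.trans (by gcongr)
  have hS0 : 0 ≤ S2 := by positivity
  have hb3 : sl s (LW I (fun p => ϑ p * dt (w i) p)) x ^ 2 ≤ (27 * (Cθ * √S2)) ^ 2 := by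
    rw [← sq_abs]; exact pow_le_pow_left₀ (abs_nonneg _) hb2 2
  rw [mul_pow, mul_pow, Real.sq_sqrt hS0, hS2] at hb3
  rw [inv_pow, inv_mul_le_iff₀ (by positivity)]
  refine hb3.trans ?_
  have : 0 ≤ Cθ ^ 2 * (tt s x ^ 2 * (s⁻¹ ^ 2 * Yd s w x)) := by positivity
  nlinarith

end WaveGE

namespace WaveGE

/-! ### Boosted energy inequality and pointwise bounds -/

lemma LW_cmul {f : P → ℝ} (hf : Sm f) (c : ℝ) (I : List (Fin 2)) :
    LW I (fun p => c * f p) = fun p => c * LW I f p := by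
  induction I with
  | nil => rfl
  | cons a I ih =>
    show Lb a (LW I fun p => c * f p) = _
    rw [ih]; ext p; exact Lb_cmul (hf.LW I) c a p

lemma LW_append (I J : List (Fin 2)) (f : P → ℝ) : LW I (LW J f) = LW (I ++ J) f := by
  induction I with
  | nil => rfl
  | cons a I ih =>
    show Lb a (LW I (LW J f)) = Lb a (LW (I ++ J) f)
    rw [ih]

lemma LW_one (J : List (Fin 2)) (p : P) : |LW J (fun _ => (1 : ℝ)) p| ≤ 1 := by
  have h : J = [] ∨ LW J (fun _ : P => (1 : ℝ)) = fun _ => 0 := by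
    induction J with
    | nil => left; rfl
    | cons a I ih =>
      right
      show Lb a (LW I fun _ => (1 : ℝ)) = _
      rcases ih with h | h
      · subst h; ext p; simp [LW, Lb, dx, dt, pd_const]
      · rw [h]; ext p; simp [Lb, dx, dt, pd_const]
  rcases h with h | h
  · subst h; simp [LW]
  · rw [h]; simp

/-- The growth constant of the boosted energy. -/
def CY (Cθ : ℝ) : ℝ := 1 + 2 * W3.card * (4 * 10 ^ 9 * Cθ ^ 2)

lemma CY_pos (Cθ : ℝ) : 0 < CY Cθ := by unfold CY; positivity

section
variable {T0 μ κ A Cθ : ℝ} {ϑ : P → ℝ} {w : Fin 2 → P → ℝ} (hT : 0 < T0) (hϑ : Sm ϑ)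
  (hw : MSol T0 μ ϑ w)
include hT hϑ hw

omit hϑ in
lemma int_Yd {s : ℝ} (hs : T0 < s) : Integrable (Yd s w) ∧ ∫ x, Yd s w x = Y s w := by
  have hi : ∀ i, ∀ I, Integrable (fun x => ed s (LW I (w i)) x) := fun i I =>
    intK (Kb_compact s) (ed_cont (by linarith) ((hw.sm i).LW I))
      (fun x hx => ed_zero hT hs le_rfl ((hw.zc i).LW I) hx)
  have h2 : ∀ i, Integrable (fun x => ∑ I ∈ W3, ed s (LW I (w i)) x) := fun i =>
    integrable_finset_sum _ fun I _ => hi i I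
  refine ⟨integrable_finset_sum _ fun i _ => h2 i, ?_⟩
  simp only [Yd, Y, En]
  rw [integral_finset_sum _ fun i _ => h2 i]
  refine Finset.sum_congr rfl fun i _ => ?_
  rw [integral_finset_sum _ fun I _ => hi i I]

lemma int_LW_vt {s : ℝ} (hs : T0 < s)
    (hC : ∀ J, J.length ≤ 3 → ∀ p : P, T0 < p.1 → p.2.1 ^ 2 + p.2.2 ^ 2 ≤ p.1 ^ 2 →
      |LW J ϑ p| ≤ Cθ) (i : Fin 2) (I : List (Fin 2)) (hI : I.length ≤ 3) :
    ∫ x, (tt s x)⁻¹ ^ 2 * sl s (LW I (fun p => ϑ p * dt (w i) p)) x ^ 2 ≤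
      4000 * Cθ ^ 2 * s⁻¹ ^ 2 * Y s w := by
  have hs0 : 0 < s := by linarith
  obtain ⟨h1, h2⟩ := int_Yd hT hw hs
  rw [← h2, ← integral_const_mul]
  have z : Zc T0 (LW I (fun p => ϑ p * dt (w i) p)) := by
    apply Zc.LW
    intro p hp
    simp [(hw.zc i).dt p hp]
  have sm : Sm (LW I (fun p => ϑ p * dt (w i) p)) := (hϑ.mul (hw.sm i).dt).LW I
  refine integral_mono (intK (Kb_compact s) ?_ fun x hx => ?_) (h1.const_mul _) fun x => ?_
  · have a := (sm_sl hs0 sm).cont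
    have b := ((sm_tt hs0).inv fun x => (tt_pos hs0 x).ne').cont
    fun_prop
  · have := z _ (Kb_out hT hs le_rfl hx)
    simp [sl, this]
  · apply LW_vt_bound hϑ hw.sm hs0 x (fun J hJ => ?_) i I hI
    apply hC J hJ
    · exact lt_of_lt_of_le hs (le_tt hs0 x)
    · have := tt_sq hs0 x
      simp only; nlinarith [sq_nonneg s]

/-- The damped cubic term acts on the boosted energy with strength `κ / s` only, since `ϑ ∂ₜw` decays
like `t^(-1/2)` by assumption. -/
lemma Y_deriv (hμ : 0 ≤ μ) (hκ : 0 < κ) (hA0 : 0 < A) (hκA : μ * A ^ 2 ≤ κ)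
    (hC : ∀ J, J.length ≤ 3 → ∀ p : P, T0 < p.1 → p.2.1 ^ 2 + p.2.2 ^ 2 ≤ p.1 ^ 2 →
      |LW J ϑ p| ≤ Cθ)
    (hA : ∀ i (p : P), T0 < p.1 → p.1 * (ϑ p * dt (w i) p) ^ 2 ≤ A ^ 2)
    {s : ℝ} (hs : T0 + 1 ≤ s) :
    ∃ Y', HasDerivAt (fun r => Y r w) Y' s ∧ Y' ≤ CY Cθ * κ / s * Y s w := by
  have hs0 : 0 < s := by linarith
  have hsT : T0 < s := by linarith
  have hd : ∀ i, ∀ I ∈ W3, HasDerivAt (fun r => En r (LW I (w i)))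
      (∫ x, 2 * (s / tt s x * (sl s (dt (LW I (w i))) x * sl s (Box (LW I (w i))) x))) s := by
    intro i I _
    refine En_deriv ((hw.sm i).LW I) zero_lt_one (by linarith) (Kb_compact (s + 1))
      fun r hr x hx => ?_
    have := abs_lt.1 (Metric.mem_ball.1 hr)
    have z := Kb_out hT (r := r) (s := s + 1) (by linarith) (by linarith) hx
    exact ⟨((hw.zc i).LW I).dt _ z, fun a => ((hw.zc i).LW I).dx a _ z⟩
  refine ⟨_, HasDerivAt.fun_sum fun i _ => HasDerivAt.fun_sum fun I hI => hd i I hI, ?_⟩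
  set v : Fin 2 → ℝ × ℝ → ℝ := fun i => sl s (fun p => ϑ p * dt (w i) p) with hvd
  have svt : ∀ i, Sm (fun p => ϑ p * dt (w i) p) := fun i => hϑ.mul (hw.sm i).dt
  have zvt : ∀ i, Zc T0 (fun p => ϑ p * dt (w i) p) := fun i p hp => by
    simp [(hw.zc i).dt p hp]
  have hv : ∀ i, SC (Kb s) (v i) := fun i => (zvt i).sc hT hsT le_rfl (svt i)
  have hAv : ∀ i x, tt s x * v i x ^ 2 ≤ A ^ 2 := fun i x =>
    hA i (tt s x, x) (lt_of_lt_of_le hsT (le_tt hs0 x))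
  have hQ : ∀ i (I : List (Fin 2)), I.length ≤ 3 → ∫ x, (tt s x)⁻¹ ^ 2 * DW (tt s) I (v i) x ^ 2 ≤
      4000 * Cθ ^ 2 * s⁻¹ ^ 2 * Y s w := by
    intro i I hI
    rw [hvd]; simp only
    rw [DW_sl hs0 (svt i)]
    exact int_LW_vt hT hϑ hw hsT hC i I hI
  have Y0 := Y_nonneg s w
  have key : ∀ i, ∀ I ∈ W3,
      ∫ x, 2 * (s / tt s x * (sl s (dt (LW I (w i))) x * sl s (Box (LW I (w i))) x)) ≤
      κ / s * En s (LW I (w i)) + κ / s * (4 * 10 ^ 9 * Cθ ^ 2 * Y s w) := by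
    intro i I hI
    have hI := mem_W3.1 hI
    let N : P → ℝ := fun p => (ϑ p * dt (w (1 - i)) p) *
      ((ϑ p * dt (w (1 - i)) p) * (ϑ p * dt (w i) p))
    have sN : Sm N := (svt _).mul ((svt _).mul (svt _))
    have eB : Box (LW I (w i)) = fun p => -μ * LW I N p := by
      rw [Box_LW (hw.sm i), hw.eq i]; exact LW_cmul sN (-μ) I
    have cb := cubic_bound (wt_tt hs0) (Kb_compact s) hv hA0 hAv hQ (1 - i) (1 - i) i I hI
    have eN : DW (tt s) I (fun x => v (1 - i) x * (v (1 - i) x * v i x)) = sl s (LW I N) :=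
      DW_sl hs0 sN I
    rw [eN] at cb
    have zN : Zc T0 (LW I N) := Zc.LW (fun p hp => by simp [N, (hw.zc i).dt p hp]) I
    have cN := (sm_sl hs0 (sN.LW I)).cont
    have cφ := (sm_sl hs0 ((hw.sm i).LW I).dt).cont
    have ct := ((sm_tt hs0).inv fun x => (tt_pos hs0 x).ne').cont
    have iN : Integrable fun x => s / κ * μ ^ 2 * sl s (LW I N) x ^ 2 :=
      intK (Kb_compact s) (by fun_prop) fun x hx => by
        simp [sl, zN _ (Kb_out hT hsT le_rfl hx)]
    have ie : Integrable fun x => κ / s * ed s (LW I (w i)) x :=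
      (intK (Kb_compact s) (ed_cont hs0 ((hw.sm i).LW I))
        (fun x hx => ed_zero hT hsT le_rfl ((hw.zc i).LW I) hx)).const_mul _
    have il : Integrable fun x => 2 * (s / tt s x * (sl s (dt (LW I (w i))) x *
        sl s (Box (LW I (w i))) x)) := by
      rw [eB]
      refine intK (Kb_compact s) ?_ fun x hx => ?_
      · simp only [div_eq_mul_inv]
        have : Continuous (sl s fun p => -μ * LW I N p) := continuous_const.mul cN
        fun_prop
      · simp [sl, zN _ (Kb_out hT hsT le_rfl hx)]
    calc _ ≤ ∫ x, (κ / s * ed s (LW I (w i)) x + s / κ * μ ^ 2 * sl s (LW I N) x ^ 2) := by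
          refine integral_mono il (ie.add iN) fun x => ?_
          rw [eB]
          have ht := tt_pos hs0 x
          simp only [sl, ed]
          set a := dt (LW I (w i)) (tt s x, x)
          set b := LW I N (tt s x, x)
          set c0 := Lb 0 (LW I (w i)) (tt s x, x)
          set c1 := Lb 1 (LW I (w i)) (tt s x, x)
          set t := tt s x
          have e1 : 0 ≤ κ / s * (s / t * a + s / κ * μ * b) ^ 2 := by positivity
          have e2 : 0 ≤ κ / s * (t⁻¹ ^ 2 * (c0 ^ 2 + c1 ^ 2)) := by positivity
          have e3 : κ / s * (s / t * a + s / κ * μ * b) ^ 2 = κ / s * (t⁻¹ ^ 2 * (s ^ 2 * a ^ 2)) +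
            s / κ * μ ^ 2 * b ^ 2 - 2 * (s / t * (a * (-μ * b))) := by
            field_simp; ring
          have e4 : κ / s * (t⁻¹ ^ 2 * (s ^ 2 * a ^ 2 + (c0 ^ 2 + c1 ^ 2))) =
            κ / s * (t⁻¹ ^ 2 * (s ^ 2 * a ^ 2)) + κ / s * (t⁻¹ ^ 2 * (c0 ^ 2 + c1 ^ 2)) := by ring
          rw [e4]; linarith
      _ = κ / s * En s (LW I (w i)) + s / κ * μ ^ 2 * ∫ x, sl s (LW I N) x ^ 2 := by
          rw [integral_add ie iN, integral_const_mul, integral_const_mul]; rfl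
      _ ≤ κ / s * En s (LW I (w i)) + s / κ * μ ^ 2 * (10 ^ 6 * A ^ 4 *
            (4000 * Cθ ^ 2 * s⁻¹ ^ 2 * Y s w)) := by gcongr
      _ = κ / s * En s (LW I (w i)) + (μ * A ^ 2) ^ 2 * ((s * κ)⁻¹ *
            (4 * 10 ^ 9 * Cθ ^ 2 * Y s w)) := by
          field_simp; ring
      _ ≤ κ / s * En s (LW I (w i)) + κ ^ 2 * ((s * κ)⁻¹ * (4 * 10 ^ 9 * Cθ ^ 2 * Y s w)) := by
          gcongr
      _ = _ := by field_simp
  calc _ ≤ ∑ i : Fin 2, ∑ I ∈ W3,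
        (κ / s * En s (LW I (w i)) + κ / s * (4 * 10 ^ 9 * Cθ ^ 2 * Y s w)) :=
        Finset.sum_le_sum fun i _ => Finset.sum_le_sum fun I hI => key i I hI
    _ = CY Cθ * κ / s * Y s w := by
        simp only [Finset.sum_add_distrib, ← Finset.mul_sum, Finset.sum_const, CY]
        have : ∑ i : Fin 2, ∑ I ∈ W3, En s (LW I (w i)) = Y s w := rfl
        rw [this]
        simp only [nsmul_eq_mul, Finset.card_univ, Fintype.card_fin]
        push_cast; ring

/-- Grönwall: the exponent of growth is proportional to the a priori bound `κ` for `μ A²`, so it is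
at most `1/2` for small `κ`. -/
lemma Y_growth (hμ : 0 ≤ μ) (hκ : 0 < κ) (hA0 : 0 < A) (hκA : μ * A ^ 2 ≤ κ)
    (hC : ∀ J, J.length ≤ 3 → ∀ p : P, T0 < p.1 → p.2.1 ^ 2 + p.2.2 ^ 2 ≤ p.1 ^ 2 →
      |LW J ϑ p| ≤ Cθ)
    (hA : ∀ i (p : P), T0 < p.1 → p.1 * (ϑ p * dt (w i) p) ^ 2 ≤ A ^ 2)
    {s : ℝ} (hs : T0 + 1 ≤ s) :
    Y s w ≤ Y (T0 + 1) w * (s / (T0 + 1)) ^ (CY Cθ * κ) := by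
  set c := CY Cθ * κ with hc
  have hd := fun s hs => Y_deriv hT hϑ hw hμ hκ hA0 hκA hC hA (s := s) hs
  have pos : ∀ s ∈ Set.Ici (T0 + 1), 0 < s := fun s hs => by
    have : T0 + 1 ≤ s := hs
    linarith
  have hder : ∀ s ∈ Set.Ici (T0 + 1), ∃ Z', HasDerivAt (fun r => Y r w * r ^ (-c)) Z' s ∧ Z' ≤ 0 := by
    intro s hs
    obtain ⟨Y', h1, h2⟩ := hd s hs
    have hs0 := pos s hs
    have h3 := h1.mul (Real.hasDerivAt_rpow_const (x := s) (p := -c) (Or.inl hs0.ne'))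
    refine ⟨_, h3, ?_⟩
    have e : s ^ (-c) = s ^ (-c - 1) * s := by
      rw [← Real.rpow_add_one hs0.ne']; ring_nf
    have p := Real.rpow_pos_of_pos hs0 (-c - 1)
    rw [e]
    have : Y' * s ≤ c * Y s w := by
      rw [div_mul_eq_mul_div, le_div_iff₀ hs0] at h2; exact h2
    nlinarith
  have anti : AntitoneOn (fun r => Y r w * r ^ (-c)) (Set.Ici (T0 + 1)) := by
    refine antitoneOn_of_deriv_nonpos (convex_Ici _) ?_ ?_ ?_
    · intro s hs
      obtain ⟨_, h, _⟩ := hder s hs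
      exact h.continuousAt.continuousWithinAt
    · intro s hs
      obtain ⟨_, h, _⟩ := hder s (interior_subset hs)
      exact h.differentiableAt.differentiableWithinAt
    · intro s hs
      obtain ⟨_, h, h2⟩ := hder s (interior_subset hs)
      rw [h.deriv]; exact h2
  have h := anti (Set.mem_Ici.2 le_rfl) (Set.mem_Ici.2 hs) hs
  simp only at h
  have hs0 := pos s hs
  have hT1 := pos _ (Set.mem_Ici.2 (le_refl (T0 + 1)))
  rw [Real.div_rpow hs0.le hT1.le]
  rw [Real.rpow_neg hs0.le, Real.rpow_neg hT1.le] at h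
  have p1 := Real.rpow_pos_of_pos hs0 c
  have p2 := Real.rpow_pos_of_pos hT1 c
  field_simp at h ⊢
  linarith

omit hϑ in
/-- Pointwise bounds from the boosted energy. -/
lemma pointwise_LW {s : ℝ} (hs : T0 < s) (i a : Fin 2) (J : List (Fin 2)) (hJ : J.length ≤ 1)
    (x : ℝ × ℝ) : sl s (LW (a :: J) (w i)) x ^ 2 ≤ 6 * Y s w := by
  have hs0 : 0 < s := by linarith
  refine sobolev (wt_tt hs0) (Kb_compact s)
    (((hw.zc i).LW (a :: J)).sc hT hs le_rfl ((hw.sm i).LW (a :: J))) (fun I hI => ?_) x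
  rw [DW_sl hs0 ((hw.sm i).LW (a :: J)), LW_append]
  obtain ⟨b, I', hb, hl⟩ : ∃ b I', I ++ a :: J = b :: I' ∧ I'.length ≤ 3 := by
    cases I with
    | nil => exact ⟨a, J, rfl, by omega⟩
    | cons b I' => exact ⟨b, I' ++ a :: J, rfl, by simp at hI ⊢; omega⟩
  rw [hb]
  refine le_trans ?_ (En_le_Y s w i hl)
  have c1 := (sm_sl hs0 ((hw.sm i).LW (b :: I'))).cont
  have ct := ((sm_tt hs0).inv fun x => (tt_pos hs0 x).ne').cont
  refine int_le (Kb_compact s) (by fun_prop) (ed_cont hs0 ((hw.sm i).LW I')) (fun x hx => ?_)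
    (fun x hx => ed_zero hT hs le_rfl ((hw.zc i).LW I') hx) fun x => ?_
  · simp [sl, (hw.zc i).LW (b :: I') _ (Kb_out hT hs le_rfl hx)]
  · unfold ed
    have h1 : sl s (LW (b :: I') (w i)) x = sl s (Lb b (LW I' (w i))) x := rfl
    rw [h1]
    gcongr
    have := sq_nonneg (sl s (Lb 0 (LW I' (w i))) x)
    have := sq_nonneg (sl s (Lb 1 (LW I' (w i))) x)
    have : 0 ≤ s ^ 2 * sl s (dt (LW I' (w i))) x ^ 2 := by positivity
    revert b; apply fin2 <;> intros <;> linarith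

omit hϑ in
/-- Pointwise decay of `∂ₜw` in the radius `s` of the hyperboloid. Near the cone `s` is small compared with
the time, and the bound is weak there. -/
lemma pointwise_dt {s : ℝ} (hs : T0 < s) (i : Fin 2) (x : ℝ × ℝ) :
    sl s (dt (w i)) x ^ 2 ≤ 24000 * s⁻¹ ^ 2 * Y s w := by
  have hs0 : 0 < s := by linarith
  obtain ⟨h1, h2⟩ := int_Yd hT hw hs
  have e : (fun p => (fun _ => (1 : ℝ)) p * dt (w i) p) = dt (w i) := by ext p; simp
  have := sobolev (wt_tt hs0) (Kb_compact s)
    ((hw.zc i).dt.sc hT hs le_rfl (hw.sm i).dt) (Q := 4000 * 1 ^ 2 * s⁻¹ ^ 2 * Y s w)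
    (fun I hI => ?_) x
  · linarith
  rw [DW_sl hs0 (hw.sm i).dt, ← h2, ← integral_const_mul]
  have z : Zc T0 (LW I (dt (w i))) := (hw.zc i).dt.LW I
  have sm : Sm (LW I (dt (w i))) := (hw.sm i).dt.LW I
  refine integral_mono (intK (Kb_compact s) ?_ fun x hx => ?_) (h1.const_mul _) fun x => ?_
  · have a := (sm_sl hs0 sm).cont
    have b := ((sm_tt hs0).inv fun x => (tt_pos hs0 x).ne').cont
    fun_prop
  · have := z _ (Kb_out hT hs le_rfl hx)
    simp [sl, this]
  · have := LW_vt_bound (Sm.const 1) hw.sm hs0 x (fun J hJ => LW_one J _) i I (by omega)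
    rw [e] at this
    exact this

end

end WaveGE

namespace WaveGE

/-! ### Energy on the initial hyperboloid -/

/-- The time up to which the initial hyperboloid stays in the cone. -/
def Tone (T0 : ℝ) : ℝ := ((T0 + 1) ^ 2 + 1) / 2

/-- The first hyperboloid meets the cone before the time `Tone T0`, so bounds on that slab control its energy. -/
lemma Y_first {T0 μ K : ℝ} {ϑ : P → ℝ} {w : Fin 2 → P → ℝ} (hT : 0 < T0) (hw : MSol T0 μ ϑ w)
    (hK : ∀ i (I : List (Fin 2)), I.length ≤ 3 → ∀ p : P, T0 ≤ p.1 → p.1 ≤ Tone T0 →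
      |dt (LW I (w i)) p| ≤ K ∧ ∀ a, |dx a (LW I (w i)) p| ≤ K) :
    Y (T0 + 1) w ≤ 2 * W3.card * (7 * K ^ 2 * volume.real (Kb (T0 + 1))) := by
  have hs0 : 0 < T0 + 1 := by linarith
  have key : ∀ i, ∀ I ∈ W3, En (T0 + 1) (LW I (w i)) ≤
      7 * K ^ 2 * volume.real (Kb (T0 + 1)) := by
    intro i I hI
    have hz : ∀ x ∉ Kb (T0 + 1), ed (T0 + 1) (LW I (w i)) x = 0 := fun x hx =>
      ed_zero hT (by linarith) le_rfl ((hw.zc i).LW I) hx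
    have hb : ∀ x, ed (T0 + 1) (LW I (w i)) x ≤ 7 * K ^ 2 := by
      intro x
      by_cases hx : (tt (T0 + 1) x, x) ∈ Kc T0
      · have h1 := le_tt hs0 x
        have h2 := tt_sq hs0 x
        have ht : tt (T0 + 1) x ≤ Tone T0 := by
          rcases hx with h | h
          · simp only at h; linarith
          · simp only at h; unfold Tone; nlinarith
        obtain ⟨k0, ka⟩ := hK i I (mem_W3.1 hI) (tt (T0 + 1) x, x) (by simp only; linarith) ht
        have k1 := ka 0
        have k2 := ka 1
        have K0 : 0 ≤ K := (abs_nonneg _).trans k0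
        have tp := tt_pos hs0 x
        have cross : ∀ a, (tt (T0 + 1) x)⁻¹ * (xa a x * (2 * (dt (LW I (w i)) (tt (T0 + 1) x, x) *
            dx a (LW I (w i)) (tt (T0 + 1) x, x)))) ≤ 2 * K ^ 2 := by
          intro a
          refine (le_abs_self _).trans ?_
          rw [abs_mul, abs_mul, abs_mul, abs_mul, abs_inv, abs_of_pos tp, inv_mul_le_iff₀ tp,
            abs_of_pos (zero_lt_two' ℝ), sq]
          have := xa_le_tt hs0 a x
          have := ka a
          gcongr
        rw [ed_eq hs0]
        simp only [sl]
        have c0 := cross 0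
        have c1 := cross 1
        have := sq_le_sq' (abs_le.1 k0).1 (abs_le.1 k0).2
        have := sq_le_sq' (abs_le.1 k1).1 (abs_le.1 k1).2
        have := sq_le_sq' (abs_le.1 k2).1 (abs_le.1 k2).2
        linarith
      · have : ed (T0 + 1) (LW I (w i)) x = 0 := by
          simp [ed, sl, ((hw.zc i).LW I).dt _ hx, ((hw.zc i).LW I).Lb _ _ hx]
        rw [this]; positivity
    unfold En
    rw [← setIntegral_eq_integral_of_forall_compl_eq_zero hz]
    have hi : IntegrableOn (ed (T0 + 1) (LW I (w i))) (Kb (T0 + 1)) :=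
      (ed_cont hs0 ((hw.sm i).LW I)).continuousOn.integrableOn_compact (Kb_compact _)
    calc ∫ x in Kb (T0 + 1), ed (T0 + 1) (LW I (w i)) x
        ≤ ∫ x in Kb (T0 + 1), 7 * K ^ 2 :=
          setIntegral_mono hi (integrableOn_const (Kb_compact _).measure_lt_top.ne) hb
      _ = _ := by rw [setIntegral_const, smul_eq_mul]; ring
  calc Y (T0 + 1) w ≤ ∑ i : Fin 2, ∑ I ∈ W3, 7 * K ^ 2 * volume.real (Kb (T0 + 1)) :=
        Finset.sum_le_sum fun i _ => Finset.sum_le_sum fun I hI => key i I hI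
    _ = _ := by simp; ring

/-! ### The cut-off -/

/-- The time cut-off: equal to one on `[T0, T]`, vanishing before `T0 - 1` and after `2 T`. -/
def chi (T0 T t : ℝ) : ℝ := smoothTransition (t - T0 + 1) * smoothTransition (2 - t / T)

/-- The cut-off as a function on space-time. -/
def th (T0 T : ℝ) (p : P) : ℝ := chi T0 T p.1

lemma chi_nonneg (T0 T t : ℝ) : 0 ≤ chi T0 T t :=
  mul_nonneg (smoothTransition.nonneg _) (smoothTransition.nonneg _)
lemma chi_le_one (T0 T t : ℝ) : chi T0 T t ≤ 1 :=
  mul_le_one₀ (smoothTransition.le_one _) (smoothTransition.nonneg _) (smoothTransition.le_one _)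
lemma chi_one {T0 T t : ℝ} (hT : 0 < T) (h0 : T0 ≤ t) (h1 : t ≤ T) : chi T0 T t = 1 := by
  rw [chi, smoothTransition.one_of_one_le (by linarith), smoothTransition.one_of_one_le, one_mul]
  have : t / T ≤ 1 := by rwa [div_le_one hT]
  linarith
lemma chi_after {T0 T t : ℝ} (hT : 0 < T) (h : 2 * T ≤ t) : chi T0 T t = 0 := by
  rw [chi, smoothTransition.zero_of_nonpos (x := 2 - t / T), mul_zero]
  have : 2 ≤ t / T := by rwa [le_div_iff₀ hT]
  linarith
lemma chi_before {T0 T t : ℝ} (h : t ≤ T0 - 1) : chi T0 T t = 0 := by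
  rw [chi, smoothTransition.zero_of_nonpos (x := t - T0 + 1) (by linarith), zero_mul]
lemma chi_smooth (T0 T : ℝ) : ContDiff ℝ (⊤ : ℕ∞) (chi T0 T) := by
  unfold chi
  have h : ContDiff ℝ (⊤ : ℕ∞) smoothTransition := smoothTransition.contDiff
  exact (h.comp ((contDiff_id.sub contDiff_const).add contDiff_const)).mul
    (h.comp (contDiff_const.sub (contDiff_id.div_const T)))
lemma sm_th (T0 T : ℝ) : Sm (th T0 T) := (chi_smooth T0 T).comp contDiff_fst

lemma LW_scale {f : P → ℝ} (hf : Sm f) (c : ℝ) (J : List (Fin 2)) :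
    LW J (fun p => f (c • p)) = fun p => LW J f (c • p) := by
  induction J with
  | nil => rfl
  | cons a I ih =>
    show Lb a (LW I _) = _
    rw [ih]; ext p
    have e : ∀ v, pd v (fun p => LW I f (c • p)) p = c * pd v (LW I f) (c • p) := by
      intro v
      have h1 : HasFDerivAt (fun p : P => c • p) (c • ContinuousLinearMap.id ℝ P) p :=
        (hasFDerivAt_id p).const_smul c
      have h := HasFDerivAt.comp (g := LW I f) (f := fun p : P => c • p) p
        ((hf.LW I).da (c • p)).hasFDerivAt h1
      have h' : fderiv ℝ (fun p => LW I f (c • p)) p = _ := h.fderiv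
      rw [pd, h']
      simp [pd]
    show p.1 * pd _ (fun p => LW I f (c • p)) p + xa a p.2 * pd _ (fun p => LW I f (c • p)) p =
      Lb a (LW I f) (c • p)
    rw [e, e]
    have : xa a (c • p).2 = c * xa a p.2 := by
      revert a; apply fin2 <;> intros <;> simp [xa]
    simp only [Lb, dx, dt, this]
    simp; ring

lemma LW_eqOn {U : Set P} (hU : IsOpen U) {f g : P → ℝ} (h : ∀ p ∈ U, f p = g p)
    (J : List (Fin 2)) : ∀ p ∈ U, LW J f p = LW J g p := by
  induction J with
  | nil => exact h
  | cons a I ih =>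
    intro p hp
    have e : LW I f =ᶠ[𝓝 p] LW I g := by
      filter_upwards [hU.mem_nhds hp] with q hq using ih q hq
    show Lb a (LW I f) p = Lb a (LW I g) p
    simp only [Lb, dx, dt, pd_congr e]

/-- Boosts of the cut-off are bounded inside the cone, uniformly in `T`, by scaling. -/
lemma th_bound : ∃ Cθ : ℝ, 0 < Cθ ∧ ∀ T0 T : ℝ, 0 < T0 → 0 < T → ∀ J : List (Fin 2), J.length ≤ 3 →
    ∀ p : P, T0 < p.1 → p.2.1 ^ 2 + p.2.2 ^ 2 ≤ p.1 ^ 2 → |LW J (th T0 T) p| ≤ Cθ := by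
  let G : P → ℝ := fun p => smoothTransition (2 - p.1)
  have sG : Sm G := by
    have h : ContDiff ℝ (⊤ : ℕ∞) smoothTransition := smoothTransition.contDiff
    exact h.comp (contDiff_const.sub contDiff_fst)
  have hb : ∀ J : List (Fin 2), ∃ C, ∀ p ∈ Metric.closedBall (0 : P) 2, ‖LW J G p‖ ≤ C := fun J =>
    (isCompact_closedBall (0 : P) 2).exists_bound_of_continuousOn (sG.LW J).cont.continuousOn
  choose C hC using hb
  have hC0 : ∀ J, 0 ≤ C J := fun J => (norm_nonneg _).trans (hC J 0 (by simp))
  refine ⟨1 + ∑ J ∈ W3, C J, ?_, ?_⟩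
  · have := Finset.sum_nonneg fun J (_ : J ∈ W3) => hC0 J
    linarith
  intro T0 T hT0 hT J hJ p hp hx
  have e1 : LW J (th T0 T) p = LW J G (T⁻¹ • p) := by
    have hU : IsOpen {p : P | T0 < p.1} := isOpen_lt (by fun_prop) (by fun_prop)
    have h := LW_eqOn hU (f := th T0 T) (g := fun p => G (T⁻¹ • p)) ?_ J p hp
    · rw [h, LW_scale sG]
    · intro q hq
      have hq : T0 < q.1 := hq
      simp only [th, chi, G]
      rw [smoothTransition.one_of_one_le (by linarith), one_mul]
      simp [div_eq_inv_mul]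
  rw [e1]
  have hC1 : C J ≤ 1 + ∑ J ∈ W3, C J := by
    have := Finset.single_le_sum (f := C) (fun J _ => hC0 J) (mem_W3.2 hJ)
    linarith
  refine le_trans ?_ hC1
  have hq0 : 0 < T⁻¹ * p.1 := by have := inv_pos.2 hT; have : 0 < p.1 := by linarith
                                 positivity
  by_cases h2 : T⁻¹ * p.1 ≤ 2
  · apply hC J
    have hc : ∀ y : ℝ, y ^ 2 ≤ p.1 ^ 2 → |T⁻¹ * y| ≤ 2 := by
      intro y hy
      have : |y| ≤ p.1 := abs_le_of_sq_le_sq hy (by linarith)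
      rw [abs_mul, abs_inv, abs_of_pos hT]
      refine le_trans ?_ h2
      gcongr
    simp only [Metric.mem_closedBall, dist_zero_right, Prod.norm_def, Prod.smul_fst, Prod.smul_snd,
      smul_eq_mul, Real.norm_eq_abs, max_le_iff]
    exact ⟨hc _ le_rfl, hc _ (by nlinarith [sq_nonneg p.2.2]), hc _ (by nlinarith [sq_nonneg p.2.1])⟩
  · have hU : IsOpen {p : P | 2 < p.1} := isOpen_lt (by fun_prop) (by fun_prop)
    have h := LW_eqOn hU (f := G) (g := fun _ => 0) (fun q hq => by
      have hq : 2 < q.1 := hq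
      simp only [G]
      exact smoothTransition.zero_of_nonpos (by linarith)) J (T⁻¹ • p) (by
        simpa using h2)
    have z : LW J (fun _ : P => (0 : ℝ)) = fun _ => 0 := by
      clear h hC1 hJ e1
      induction J with
      | nil => rfl
      | cons a I ih =>
        show Lb a (LW I fun _ => (0 : ℝ)) = _
        rw [ih]; ext p; simp [Lb, dx, dt, pd_const]
    rw [h, z]; simpa using hC0 J

end WaveGE

namespace WaveGE

/-! ### Integration along outgoing rays -/

/-- The incoming null derivative `w_t - ω · ∇w`. -/
def Qn (o0 o1 : ℝ) (w : P → ℝ) (p : P) : ℝ := dt w p - o0 * dx 0 w p - o1 * dx 1 w p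

/-- The angular second derivative appearing in `□` along a ray, in terms of double boosts and lower order
terms; this gains the factor `t⁻²`. -/
lemma perp_eq {w : P → ℝ} (hw : Sm w) {o0 o1 : ℝ} (ho : o0 ^ 2 + o1 ^ 2 = 1) (t r : ℝ) :
    o1 ^ 2 * LW [0, 0] w (t, r * o0, r * o1) - o0 * o1 * LW [0, 1] w (t, r * o0, r * o1)
      - o0 * o1 * LW [1, 0] w (t, r * o0, r * o1) + o0 ^ 2 * LW [1, 1] w (t, r * o0, r * o1)
    = t ^ 2 * (o1 ^ 2 * dx 0 (dx 0 w) (t, r * o0, r * o1)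
        - 2 * (o0 * o1) * dx 0 (dx 1 w) (t, r * o0, r * o1)
        + o0 ^ 2 * dx 1 (dx 1 w) (t, r * o0, r * o1)) + t * dt w (t, r * o0, r * o1) := by
  set p : P := (t, r * o0, r * o1) with hp
  have e : ∀ a b, LW [a, b] w p = t * (t * dx b (dx a w) p + xa b p.2 * dt (dx a w) p +
      if b = a then dt w p else 0) + xa a p.2 * (t * dx b (dt w) p + xa b p.2 * dt (dt w) p
        + dx b w p) := by
    intro a b
    show p.1 * dx a (Lb b w) p + xa a p.2 * dt (Lb b w) p = _
    rw [dx_Lb hw, dt_Lb hw]; rfl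
  rw [e, e, e, e]
  have c1 : dx 1 (dx 0 w) p = dx 0 (dx 1 w) p := pd_comm hw _ _ _
  have c2 : ∀ a, dt (dx a w) p = dx a (dt w) p := fun a => pd_comm hw _ _ _
  rw [c1, c2, c2]
  simp only [xa_zero, xa_one, hp]
  norm_num
  linear_combination (t * dt w (t, r * o0, r * o1)) * ho

/-- Along an outgoing ray the incoming derivative is driven by `□w` and the angular second derivative. -/
lemma Qn_ray {w : P → ℝ} (hw : Sm w) {o0 o1 : ℝ} (ho : o0 ^ 2 + o1 ^ 2 = 1) (σ t : ℝ) :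
    HasDerivAt (fun t => Qn o0 o1 w (t, (t - σ) * o0, (t - σ) * o1))
      (Box w (t, (t - σ) * o0, (t - σ) * o1) +
        (o1 ^ 2 * dx 0 (dx 0 w) (t, (t - σ) * o0, (t - σ) * o1)
        - 2 * (o0 * o1) * dx 0 (dx 1 w) (t, (t - σ) * o0, (t - σ) * o1)
        + o0 ^ 2 * dx 1 (dx 1 w) (t, (t - σ) * o0, (t - σ) * o1))) t := by
  have hγ : HasDerivAt (fun t : ℝ => ((t, (t - σ) * o0, (t - σ) * o1) : P)) (1, o0, o1) t := by
    have h1 : ∀ c : ℝ, HasDerivAt (fun t : ℝ => (t - σ) * c) c t := fun c => by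
      simpa using ((hasDerivAt_id t).sub_const σ).mul_const c
    exact (hasDerivAt_id t).prodMk ((h1 o0).prodMk (h1 o1))
  have hc : ∀ {f : P → ℝ}, Sm f → HasDerivAt (fun t => f (t, (t - σ) * o0, (t - σ) * o1))
      (dt f (t, (t - σ) * o0, (t - σ) * o1) + o0 * dx 0 f (t, (t - σ) * o0, (t - σ) * o1)
        + o1 * dx 1 f (t, (t - σ) * o0, (t - σ) * o1)) t := by
    intro f hf
    have h := HasFDerivAt.comp_hasDerivAt (l := f)
      (f := fun t : ℝ => ((t, (t - σ) * o0, (t - σ) * o1) : P)) t (hf.da _).hasFDerivAt hγ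
    have e : ((1, o0, o1) : P) = ((1, 0) : P) + o0 • ((0, bv 0) : P) + o1 • ((0, bv 1) : P) := by
      ext <;> simp [bv]
    rw [e, map_add, map_add, map_smul, map_smul] at h
    exact h
  set p : P := (t, (t - σ) * o0, (t - σ) * o1)
  have h := ((hc hw.dt).sub ((hc (hw.dx 0)).const_mul o0)).sub ((hc (hw.dx 1)).const_mul o1)
  refine h.congr_deriv ?_
  have c1 : dx 1 (dx 0 w) p = dx 0 (dx 1 w) p := pd_comm hw _ _ _
  have c2 : ∀ a, dt (dx a w) p = dx a (dt w) p := fun a => pd_comm hw _ _ _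
  rw [c1, c2, c2, Box]
  linear_combination (-dx 0 (dx 0 w) p - dx 1 (dx 1 w) p) * ho

/-- The outgoing combination `w_t + ω · ∇w` in terms of boosts. -/
lemma out_eq {w : P → ℝ} {o0 o1 : ℝ} (ho : o0 ^ 2 + o1 ^ 2 = 1) {t : ℝ} (ht : t ≠ 0) (r : ℝ) :
    2 * dt w (t, r * o0, r * o1) - Qn o0 o1 w (t, r * o0, r * o1) =
      (o0 * Lb 0 w (t, r * o0, r * o1) + o1 * Lb 1 w (t, r * o0, r * o1)
        + (t - r) * dt w (t, r * o0, r * o1)) / t := by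
  rw [eq_div_iff ht]
  simp only [Qn, Lb, xa_zero, xa_one]
  linear_combination (-r * dt w (t, r * o0, r * o1)) * ho

/-- With the weight `√r`, the first order part of the angular operator cancels up to boosts divided by `t²`. -/
lemma ray_deriv {w : P → ℝ} (hw : Sm w) {o0 o1 : ℝ} (ho : o0 ^ 2 + o1 ^ 2 = 1) {σ t : ℝ}
    (ht : 0 < t) (hr : 0 < t - σ) :
    HasDerivAt (fun t => √(t - σ) * Qn o0 o1 w (t, (t - σ) * o0, (t - σ) * o1))
      (√(t - σ) * Box w (t, (t - σ) * o0, (t - σ) * o1)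
        + (σ * dt w (t, (t - σ) * o0, (t - σ) * o1)
          - (o0 * Lb 0 w (t, (t - σ) * o0, (t - σ) * o1)
            + o1 * Lb 1 w (t, (t - σ) * o0, (t - σ) * o1))) / (2 * t * √(t - σ))
        + √(t - σ) / t ^ 2 * (o1 ^ 2 * LW [0, 0] w (t, (t - σ) * o0, (t - σ) * o1)
          - o0 * o1 * LW [0, 1] w (t, (t - σ) * o0, (t - σ) * o1)
          - o0 * o1 * LW [1, 0] w (t, (t - σ) * o0, (t - σ) * o1)
          + o0 ^ 2 * LW [1, 1] w (t, (t - σ) * o0, (t - σ) * o1))) t := by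
  have h1 := ((hasDerivAt_id t).sub_const σ).sqrt hr.ne'
  refine (h1.mul (Qn_ray hw ho σ t)).congr_deriv ?_
  rw [perp_eq hw ho]
  have h2 := out_eq (w := w) ho ht.ne' (t - σ)
  rw [eq_div_iff ht.ne'] at h2
  have h3 := Real.sq_sqrt hr.le
  have h4 := Real.sqrt_pos.2 hr
  simp only [id]
  set p : P := (t, (t - σ) * o0, (t - σ) * o1)
  set q := √(t - σ)
  set X := o1 ^ 2 * dx 0 (dx 0 w) p - 2 * (o0 * o1) * dx 0 (dx 1 w) p
    + o0 ^ 2 * dx 1 (dx 1 w) p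
  field_simp
  linear_combination (-1) * h2 - (2 * dt w p) * h3

/-- A transport equation with damping `a ≥ 0` keeps `|Z|` bounded, up to one, by its initial value and the integral of
the forcing; the square root regularizes `|Z|`. -/
lemma ray_gronwall {Z a b B : ℝ → ℝ} {t0 t1 : ℝ} (h01 : t0 ≤ t1)
    {β : ℝ → ℝ} (hZ : ∀ t ∈ Set.Icc t0 t1, HasDerivAt Z (-a t * Z t + b t) t)
    (ha : ∀ t ∈ Set.Icc t0 t1, 0 ≤ a t) (hb : ∀ t ∈ Set.Icc t0 t1, |b t| ≤ β t)
    (hB : ∀ t ∈ Set.Icc t0 t1, HasDerivAt B (β t) t) :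
    |Z t1| ≤ |Z t0| + 1 + (B t1 - B t0) := by
  have hd : ∀ t ∈ Set.Icc t0 t1, HasDerivAt (fun t => √(Z t ^ 2 + 1) - B t)
      (2 * Z t * (-a t * Z t + b t) / (2 * √(Z t ^ 2 + 1)) - β t) t := by
    intro t ht
    have h := (((hZ t ht).pow 2).add_const 1).sqrt (by have := sq_nonneg (Z t); simp only [Pi.pow_apply]; linarith)
    refine (h.sub (hB t ht)).congr_deriv ?_
    norm_num
  have hanti : AntitoneOn (fun t => √(Z t ^ 2 + 1) - B t) (Set.Icc t0 t1) := by
    apply antitoneOn_of_deriv_nonpos (convex_Icc _ _)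
    · exact fun t ht => (hd t ht).continuousAt.continuousWithinAt
    · exact fun t ht => (hd t (interior_subset ht)).differentiableAt.differentiableWithinAt
    · intro t ht
      have ht := interior_subset ht
      rw [(hd t ht).deriv, sub_nonpos]
      have hpos : 0 < √(Z t ^ 2 + 1) := by positivity
      rw [div_le_iff₀ (by positivity)]
      have h1 : |Z t| ≤ √(Z t ^ 2 + 1) := Real.abs_le_sqrt (by linarith)
      have h2 : Z t * b t ≤ |Z t| * |b t| := by rw [← abs_mul]; exact le_abs_self _
      have h3 : |Z t| * |b t| ≤ √(Z t ^ 2 + 1) * β t :=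
        mul_le_mul h1 (hb t ht) (abs_nonneg _) hpos.le
      nlinarith [mul_nonneg (ha t ht) (sq_nonneg (Z t))]
  have := hanti (Set.left_mem_Icc.2 h01) (Set.right_mem_Icc.2 h01) h01
  simp only at this
  have h1 : |Z t1| ≤ √(Z t1 ^ 2 + 1) := Real.abs_le_sqrt (by linarith)
  have h2 : √(Z t0 ^ 2 + 1) ≤ |Z t0| + 1 := by
    apply Real.sqrt_le_iff.2 ⟨by positivity, ?_⟩
    nlinarith [abs_nonneg (Z t0), sq_abs (Z t0)]
  linarith

end WaveGE

namespace WaveGE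

lemma cone_bounds {T0 μ M : ℝ} {ϑ : P → ℝ} {w : Fin 2 → P → ℝ} (hT : 1 ≤ T0)
    (hw : MSol T0 μ ϑ w) (hM : 0 ≤ M) (hY : ∀ s, T0 + 1 ≤ s → Y s w ≤ M * s ^ (1 / 2 : ℝ))
    {t s : ℝ} {x : ℝ × ℝ} (ht : 0 < t) (hs : T0 + 1 ≤ s) (hst : s ^ 2 + (x.1 ^ 2 + x.2 ^ 2) = t ^ 2)
    (i : Fin 2) :
    |dt (w i) (t, x)| * s ≤ √(24000 * M) * t ^ (1 / 4 : ℝ) ∧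
    (∀ a, |Lb a (w i) (t, x)| ≤ √(24000 * M) * t ^ (1 / 4 : ℝ)) ∧
    (∀ a b, |LW [a, b] (w i) (t, x)| ≤ √(24000 * M) * t ^ (1 / 4 : ℝ)) := by
  have hT' : 0 < T0 := by linarith
  have hs0 : 0 < s := by linarith
  have hsT : T0 < s := by linarith
  have e : tt s x = t := by
    rw [tt, hst, Real.sqrt_sq ht.le]
  have hst' : s ≤ t := by rw [← e]; exact le_tt hs0 x
  have hq : s ^ (1 / 2 : ℝ) ≤ (t ^ (1 / 4 : ℝ)) ^ 2 := by
    rw [← Real.rpow_natCast, ← Real.rpow_mul ht.le]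
    norm_num
    exact Real.rpow_le_rpow hs0.le hst' (by norm_num)
  have hY' : 24000 * Y s w ≤ (√(24000 * M) * t ^ (1 / 4 : ℝ)) ^ 2 := by
    rw [mul_pow, Real.sq_sqrt (by positivity)]
    have := (hY s hs).trans (mul_le_mul_of_nonneg_left hq hM)
    linarith
  have hn : 0 ≤ √(24000 * M) * t ^ (1 / 4 : ℝ) := by positivity
  have hsl : ∀ u : P → ℝ, sl s u x = u (t, x) := fun u => by rw [sl, e]
  have hL : ∀ a J, J.length ≤ 1 → |LW (a :: J) (w i) (t, x)| ≤ √(24000 * M) * t ^ (1 / 4 : ℝ) := by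
    intro a J hJ
    refine abs_le_of_sq_le_sq ?_ hn
    have := pointwise_LW hT' hw hsT i a J hJ x
    rw [hsl] at this
    have h0 : 0 ≤ Y s w := by nlinarith [sq_nonneg (LW (a :: J) (w i) (t, x))]
    linarith
  refine ⟨?_, fun a => hL a [] (by simp), fun a b => hL a [b] (by simp)⟩
  rw [show |dt (w i) (t, x)| * s = |dt (w i) (t, x) * s| by rw [abs_mul, abs_of_pos hs0]]
  refine abs_le_of_sq_le_sq ?_ hn
  have := pointwise_dt hT' hw hsT i x
  rw [hsl] at this
  have h2 : (dt (w i) (t, x) * s) ^ 2 ≤ 24000 * Y s w := by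
    rw [mul_pow]
    have h3 := mul_le_mul_of_nonneg_right this (sq_nonneg s)
    have : 24000 * s⁻¹ ^ 2 * Y s w * s ^ 2 = 24000 * Y s w := by field_simp
    linarith
  linarith

lemma abs_dir {o0 o1 : ℝ} (ho : o0 ^ 2 + o1 ^ 2 = 1) : |o0| ≤ 1 ∧ |o1| ≤ 1 :=
  ⟨abs_le_of_sq_le_sq (by nlinarith [sq_nonneg o1]) one_pos.le,
    abs_le_of_sq_le_sq (by nlinarith [sq_nonneg o0]) one_pos.le⟩

/-- The outgoing derivative decays like `1/t` near the light cone. -/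
lemma out_bound {w : P → ℝ} {o0 o1 n s t r : ℝ} (ho : o0 ^ 2 + o1 ^ 2 = 1) (ht : 0 < t)
    (hr : 0 ≤ r) (hσ : 0 ≤ t - r) (hs : 0 < s) (hst : s ^ 2 + r ^ 2 = t ^ 2)
    (h1 : |dt w (t, r * o0, r * o1)| * s ≤ n)
    (h2 : ∀ a, |Lb a w (t, r * o0, r * o1)| ≤ n) :
    |o0 * Lb 0 w (t, r * o0, r * o1) + o1 * Lb 1 w (t, r * o0, r * o1)| ≤ 2 * n ∧
    |(t - r) * dt w (t, r * o0, r * o1)| ≤ n ∧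
    |2 * dt w (t, r * o0, r * o1) - Qn o0 o1 w (t, r * o0, r * o1)| ≤ 3 * n / t := by
  obtain ⟨hb0, hb1⟩ := abs_dir ho
  rw [out_eq ho ht.ne' r]
  set p : P := (t, r * o0, r * o1)
  have hσs : t - r ≤ s := by
    apply le_of_sq_le_sq _ hs.le
    nlinarith
  have g1 : |(t - r) * dt w p| ≤ n := by
    rw [abs_mul, abs_of_nonneg hσ]
    nlinarith [abs_nonneg (dt w p), mul_le_mul_of_nonneg_right hσs (abs_nonneg (dt w p))]
  have g2 : |o0 * Lb 0 w p + o1 * Lb 1 w p| ≤ 2 * n := by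
    refine (abs_add_le _ _).trans ?_
    rw [abs_mul, abs_mul]
    have := mul_le_mul hb0 (h2 0) (abs_nonneg _) one_pos.le
    have := mul_le_mul hb1 (h2 1) (abs_nonneg _) one_pos.le
    linarith
  refine ⟨g2, g1, ?_⟩
  rw [abs_div, abs_of_pos ht]
  refine div_le_div_of_nonneg_right ?_ ht.le
  refine (abs_add_le _ _).trans ?_
  linarith

end WaveGE

namespace WaveGE

lemma quad_bound {o0 o1 n a b c d : ℝ} (ho : o0 ^ 2 + o1 ^ 2 = 1) (ha : |a| ≤ n) (hb : |b| ≤ n)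
    (hc : |c| ≤ n) (hd : |d| ≤ n) :
    |o1 ^ 2 * a - o0 * o1 * b - o0 * o1 * c + o0 ^ 2 * d| ≤ 4 * n := by
  have hh : ∀ c : ℝ, |c| ≤ 1 → ∀ y : ℝ, |y| ≤ n → |c * y| ≤ n := fun c hc y hy => by
    rw [abs_mul]; nlinarith [abs_nonneg c, abs_nonneg y]
  obtain ⟨hb0, hb1⟩ := abs_dir ho
  have c1 : |o1 ^ 2| ≤ 1 := by rw [abs_of_nonneg (sq_nonneg _)]; nlinarith [sq_nonneg o0]
  have c0 : |o0 ^ 2| ≤ 1 := by rw [abs_of_nonneg (sq_nonneg _)]; nlinarith [sq_nonneg o1]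
  have c2 : |o0 * o1| ≤ 1 := by rw [abs_mul]; nlinarith [abs_nonneg o0, abs_nonneg o1]
  have k1 := abs_le.1 (hh _ c1 _ ha)
  have k2 := abs_le.1 (hh _ c2 _ hb)
  have k3 := abs_le.1 (hh _ c2 _ hc)
  have k4 := abs_le.1 (hh _ c0 _ hd)
  rw [abs_le]
  constructor <;> linarith [k1.1, k1.2, k2.1, k2.2, k3.1, k3.2, k4.1, k4.2]

set_option maxHeartbeats 1000000 in
/-- The cubic term has the damping sign for the weighted incoming derivative, up to errors from the outgoing
derivative which are integrable in time; the bound therefore does not deteriorate as `t → ∞`. -/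
lemma ray_Z {T0 μ N σ o0 o1 : ℝ} {ϑ : P → ℝ} {w : Fin 2 → P → ℝ} (hT : 1 ≤ T0)
    (hw : MSol T0 μ ϑ w) (hμ : 0 ≤ μ) (ho : o0 ^ 2 + o1 ^ 2 = 1) (hN : 0 ≤ N)
    (hϑ0 : ∀ p, 0 ≤ ϑ p) (hϑ1 : ∀ p, ϑ p ≤ 1)
    (hA : ∀ i (p : P), T0 < p.1 → μ * (p.1 * (ϑ p * dt (w i) p) ^ 2) ≤ 1)
    {t0 t1 : ℝ} (h01 : t0 ≤ t1) (ht0 : T0 < t0) (hσ : 1 ≤ σ) (hσt : 2 * σ ≤ t0)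
    (hb : ∀ t, t0 ≤ t → ∀ i,
      |dt (w i) (t, (t - σ) * o0, (t - σ) * o1)| * √(t ^ 2 - (t - σ) ^ 2) ≤ N * t ^ (1 / 4 : ℝ) ∧
      (∀ a, |Lb a (w i) (t, (t - σ) * o0, (t - σ) * o1)| ≤ N * t ^ (1 / 4 : ℝ)) ∧
      (∀ a b, |LW [a, b] (w i) (t, (t - σ) * o0, (t - σ) * o1)| ≤ N * t ^ (1 / 4 : ℝ)))
    (i : Fin 2) :
    √(t1 - σ) * |Qn o0 o1 (w i) (t1, (t1 - σ) * o0, (t1 - σ) * o1)| ≤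
      √(t0 - σ) * |Qn o0 o1 (w i) (t0, (t0 - σ) * o0, (t0 - σ) * o1)| + 1 + 44 * N := by
  obtain ⟨hb0, hb1⟩ := abs_dir ho
  set γ : ℝ → P := fun t => (t, (t - σ) * o0, (t - σ) * o1) with hγ
  set Z : ℝ → ℝ := fun t => √(t - σ) * Qn o0 o1 (w i) (γ t) with hZ
  set a : ℝ → ℝ := fun t => 1 / 2 * μ * ϑ (γ t) * (ϑ (γ t) * dt (w (1 - i)) (γ t)) ^ 2 with ha
  set G : ℝ → ℝ := fun t => 2 * dt (w i) (γ t) - Qn o0 o1 (w i) (γ t) with hG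
  set lin : ℝ → ℝ := fun t => o0 * Lb 0 (w i) (γ t) + o1 * Lb 1 (w i) (γ t) with hlin
  set qd : ℝ → ℝ := fun t => o1 ^ 2 * LW [0, 0] (w i) (γ t)
          - o0 * o1 * LW [0, 1] (w i) (γ t) - o0 * o1 * LW [1, 0] (w i) (γ t)
          + o0 ^ 2 * LW [1, 1] (w i) (γ t) with hqd
  set b : ℝ → ℝ := fun t => -(a t * (√(t - σ) * G t))
      + (σ * dt (w i) (γ t) - lin t) / (2 * t * √(t - σ)) + √(t - σ) / t ^ 2 * qd t with hbdef
  have key := ray_gronwall (Z := Z) (a := a) (b := b) (β := fun t => 11 * N * t ^ (-(5 / 4) : ℝ))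
    (B := fun t => -44 * N * t ^ (-(1 / 4) : ℝ)) h01 ?_ ?_ ?_ ?_
  · simp only [hZ, abs_mul, abs_of_nonneg (Real.sqrt_nonneg _)] at key
    have p1 : 0 ≤ t1 ^ (-(1 / 4) : ℝ) := Real.rpow_nonneg (by linarith) _
    have p2 : t0 ^ (-(1 / 4) : ℝ) ≤ 1 := Real.rpow_le_one_of_one_le_of_nonpos (by linarith)
      (by norm_num)
    nlinarith [mul_nonneg hN p1, mul_nonneg hN (sub_nonneg.2 p2)]
  · intro t ht
    have htp : 0 < t := by linarith [ht.1]
    have hr : 0 < t - σ := by linarith [ht.1]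
    refine (ray_deriv (hw.sm i) ho htp hr).congr_deriv ?_
    rw [hw.eq i]
    simp only [hb, hbdef, ha, hZ, hG, hlin, hqd]
    simp only [hγ]
    ring
  · intro t ht
    have := hϑ0 (γ t)
    simp only [ha]
    positivity
  · intro t ht
    have htp : 0 < t := by linarith [ht.1]
    have hr : 0 < t - σ := by linarith [ht.1]
    have hrt : t / 2 ≤ t - σ := by linarith [ht.1]
    obtain ⟨h1, h2, h3⟩ := hb t ht.1 i
    set n := N * t ^ (1 / 4 : ℝ) with hn
    have hn0 : 0 ≤ n := by positivity
    have hspos : 0 < t ^ 2 - (t - σ) ^ 2 := by nlinarith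
    obtain ⟨g1, g2, g3⟩ := out_bound ho htp hr.le (by linarith) (Real.sqrt_pos.2 hspos)
      (by rw [Real.sq_sqrt hspos.le]; ring) h1 h2
    have hst := Real.sq_sqrt htp.le
    have hsr := Real.sq_sqrt hr.le
    have hst0 := Real.sqrt_pos.2 htp
    have hsr0 := Real.sqrt_pos.2 hr
    have hsrt : √(t - σ) ≤ √t := Real.sqrt_le_sqrt (by linarith)
    have hsrt' : √t ≤ 2 * √(t - σ) := by
      apply le_of_sq_le_sq _ (by positivity)
      rw [mul_pow, hst, hsr]; linarith
    have hbeta : N * t ^ (-(5 / 4) : ℝ) = n / (t * √t) := by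
      rw [hn, Real.sqrt_eq_rpow, eq_div_iff (by positivity), ← Real.rpow_one_add' htp.le (by norm_num),
        mul_assoc, ← Real.rpow_add htp]
      norm_num
    have ea : a t ≤ 1 / (2 * t) := by
      rw [le_div_iff₀ (by positivity)]
      have := hA (1 - i) (γ t) (by simp only [hγ]; linarith [ht.1])
      simp only [ha]
      have h4 := mul_le_mul_of_nonneg_right (hϑ1 (γ t)) (le_trans (by
        simp only [hγ]; positivity) le_rfl : 0 ≤ μ * (t * (ϑ (γ t) * dt (w (1 - i)) (γ t)) ^ 2))
      have h5 : (γ t).1 = t := rfl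
      rw [h5] at this
      linarith
    have ea0 : 0 ≤ a t := by
      have := hϑ0 (γ t)
      simp only [ha]
      positivity
    have e1 : |a t * (√(t - σ) * G t)| ≤ 2 * (n / (t * √t)) := by
      rw [abs_mul (a t), abs_mul (√(t - σ)), abs_of_nonneg ea0, abs_of_pos hsr0]
      have : a t * (√(t - σ) * |G t|) ≤ 1 / (2 * t) * (√t * (3 * n / t)) := by
        apply mul_le_mul ea _ (by positivity) (by positivity)
        exact mul_le_mul hsrt g3 (abs_nonneg _) hst0.le
      refine this.trans ?_
      have h6 : 1 / (2 * t) * (√t * (3 * n / t)) = 3 / 2 * (n / (t * √t)) := by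
        field_simp
        rw [hst]
      rw [h6]
      have : 0 ≤ n / (t * √t) := by positivity
      linarith
    have e2 : |(σ * dt (w i) (γ t) - lin t) / (2 * t * √(t - σ))| ≤ 3 * (n / (t * √t)) := by
      have gl : |σ * dt (w i) (γ t) - lin t| ≤ 3 * n := by
        have g2' : |σ * dt (w i) (γ t)| ≤ n := by
          have : t - (t - σ) = σ := by ring
          rw [this] at g2; exact g2
        have g1' : |lin t| ≤ 2 * n := g1
        calc _ ≤ |σ * dt (w i) (γ t)| + |lin t| := abs_sub _ _
          _ ≤ _ := by linarith
      rw [abs_div, abs_of_pos (by positivity : 0 < 2 * t * √(t - σ)), ← mul_div_assoc]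
      apply div_le_div₀ (by positivity) gl (by positivity)
      nlinarith
    have e3 : |√(t - σ) / t ^ 2 * qd t| ≤ 4 * (n / (t * √t)) := by
      have gq : |qd t| ≤ 4 * n := quad_bound ho (h3 0 0) (h3 0 1) (h3 1 0) (h3 1 1)
      rw [abs_mul (√(t - σ) / t ^ 2), abs_of_pos (by positivity : 0 < √(t - σ) / t ^ 2)]
      have : √(t - σ) / t ^ 2 * |qd t| ≤ √t / t ^ 2 * (4 * n) :=
        mul_le_mul (div_le_div_of_nonneg_right hsrt (by positivity)) gq (abs_nonneg _)
          (by positivity)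
      refine this.trans (le_of_eq ?_)
      field_simp
      rw [hst]
    show |b t| ≤ 11 * N * t ^ (-(5 / 4) : ℝ)
    rw [mul_assoc, hbeta]
    have hp : 0 ≤ n / (t * √t) := by positivity
    calc |b t| ≤ |-(a t * (√(t - σ) * G t))| + |(σ * dt (w i) (γ t) - lin t) / (2 * t * √(t - σ))|
          + |√(t - σ) / t ^ 2 * qd t| := abs_add_three _ _ _
      _ ≤ _ := by rw [abs_neg]; linarith
  · intro t ht
    have htp : 0 < t := by linarith [ht.1]
    have := (Real.hasDerivAt_rpow_const (p := (-(1 / 4) : ℝ)) (Or.inl htp.ne')).const_mul (-44 * N)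
    refine this.congr_deriv ?_
    norm_num
    ring

end WaveGE

namespace WaveGE

/-! ### The decay estimate -/

set_option maxHeartbeats 1000000 in
lemma ray_apriori0 {T0 μ M K : ℝ} {ϑ : P → ℝ} {w : Fin 2 → P → ℝ} (hT : 1 ≤ T0)
    (hw : MSol T0 μ ϑ w) (hμ : 0 ≤ μ) (hM : 0 ≤ M)
    (hY : ∀ s, T0 + 1 ≤ s → Y s w ≤ M * s ^ (1 / 2 : ℝ))
    (hϑ0 : ∀ p, 0 ≤ ϑ p) (hϑ1 : ∀ p, ϑ p ≤ 1)
    (hA : ∀ i (p : P), T0 < p.1 → μ * (p.1 * (ϑ p * dt (w i) p) ^ 2) ≤ 1)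
    (hK : ∀ i (p : P), T0 ≤ p.1 → p.1 ≤ Tone T0 →
      |dt (w i) p| ≤ K ∧ ∀ a, |dx a (w i) p| ≤ K) (i : Fin 2) (p : P) (hp : T0 ≤ p.1) :
    √p.1 * |dt (w i) p| ≤ 60 * √(24000 * M) + 3 * √(Tone T0) * K + 2 := by
  obtain ⟨t, x⟩ := p
  simp only at hp
  set N := √(24000 * M) with hN
  have hN0 : 0 ≤ N := Real.sqrt_nonneg _
  have htp : 0 < t := by linarith
  have hT1 : 2 ≤ Tone T0 := by rw [Tone]; nlinarith
  have hK0 : 0 ≤ K := (abs_nonneg _).trans (hK 0 (T0, 0, 0) le_rfl (by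
    simp only [Tone]; nlinarith)).1
  have hsT := Real.sqrt_nonneg (Tone T0)
  by_cases h1 : t ≤ Tone T0
  · have := (hK i (t, x) hp h1).1
    have h2 : √t ≤ √(Tone T0) := Real.sqrt_le_sqrt h1
    have h3 := mul_le_mul h2 this (abs_nonneg _) hsT
    simp only
    nlinarith [mul_nonneg hsT hK0]
  push Not at h1
  set r := √(x.1 ^ 2 + x.2 ^ 2) with hr
  have hr0 : 0 ≤ r := Real.sqrt_nonneg _
  have hr2 : r ^ 2 = x.1 ^ 2 + x.2 ^ 2 := Real.sq_sqrt (by positivity)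
  by_cases h2 : t - r < 1
  · have : dt (w i) (t, x) = 0 := by
      apply (hw.zc i).dt
      simp only [Kc, Set.mem_setOf_eq, not_or, not_le]
      refine ⟨by rw [Tone] at h1; nlinarith, ?_⟩
      rw [← hr2]; nlinarith
    simp only [this, abs_zero, mul_zero]
    positivity
  push Not at h2
  have hq : ∀ t : ℝ, 1 ≤ t → t ^ (1 / 4 : ℝ) ≤ √t := fun t ht => by
    rw [Real.sqrt_eq_rpow]; exact Real.rpow_le_rpow_of_exponent_le ht (by norm_num)
  -- admissible points lie above the initial hyperboloid
  have hadm : ∀ t ρ : ℝ, Tone T0 ≤ t → 0 ≤ ρ → ρ ≤ t - 1 → T0 + 1 ≤ √(t ^ 2 - ρ ^ 2) ∧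
      0 ≤ t ^ 2 - ρ ^ 2 := by
    intro t ρ ht hρ hρt
    have : (T0 + 1) ^ 2 ≤ t ^ 2 - ρ ^ 2 := by rw [Tone] at ht; nlinarith
    exact ⟨Real.le_sqrt_of_sq_le this, (sq_nonneg _).trans this⟩
  by_cases h3 : r < t / 2
  · obtain ⟨ha, hb⟩ := hadm t r h1.le hr0 (by linarith)
    obtain ⟨k, -, -⟩ := cone_bounds hT hw hM hY htp ha (x := x)
      (by rw [Real.sq_sqrt hb, hr2]; ring) i
    have h4 : t / 2 ≤ √(t ^ 2 - r ^ 2) := by apply Real.le_sqrt_of_sq_le; nlinarith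
    have h5 : |dt (w i) (t, x)| * (t / 2) ≤ N * √t :=
      (mul_le_mul_of_nonneg_left h4 (abs_nonneg _)).trans (k.trans
        (mul_le_mul_of_nonneg_left (hq t (by linarith)) hN0))
    have hst := Real.sq_sqrt htp.le
    have hst0 := Real.sqrt_pos.2 htp
    have h6 : √t * |dt (w i) (t, x)| ≤ 2 * N := by
      have : (√t * |dt (w i) (t, x)|) * √t ≤ (2 * N) * √t := by
        have : (√t * |dt (w i) (t, x)|) * √t = |dt (w i) (t, x)| * t := by
          rw [← hst]; simp only [Real.sqrt_sq hst0.le]; ring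
        rw [this]; linarith
      exact le_of_mul_le_mul_right this hst0
    simp only
    nlinarith [mul_nonneg hsT hK0]
  push Not at h3
  have hrp : 0 < r := by linarith
  set σ := t - r with hσ
  obtain ⟨o0, o1, ho, hx⟩ : ∃ o0 o1 : ℝ, o0 ^ 2 + o1 ^ 2 = 1 ∧ x = (r * o0, r * o1) := by
    refine ⟨x.1 / r, x.2 / r, ?_, ?_⟩
    · rw [div_pow, div_pow, ← add_div, ← hr2, div_self (by positivity)]
    · ext <;> field_simp
  have hrσ : r = t - σ := by rw [hσ]; ring
  set t0 := max (2 * σ) (Tone T0) with ht0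
  have ht00 : t0 ≤ t := max_le (by linarith) h1.le
  have ht0a : 2 * σ ≤ t0 := le_max_left _ _
  have ht0b : Tone T0 ≤ t0 := le_max_right _ _
  have hb : ∀ t, t0 ≤ t → ∀ i,
      |dt (w i) (t, (t - σ) * o0, (t - σ) * o1)| * √(t ^ 2 - (t - σ) ^ 2) ≤ N * t ^ (1 / 4 : ℝ) ∧
      (∀ a, |Lb a (w i) (t, (t - σ) * o0, (t - σ) * o1)| ≤ N * t ^ (1 / 4 : ℝ)) ∧
      (∀ a b, |LW [a, b] (w i) (t, (t - σ) * o0, (t - σ) * o1)| ≤ N * t ^ (1 / 4 : ℝ)) := by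
    intro t ht i
    obtain ⟨ha, hb⟩ := hadm t (t - σ) (ht0b.trans ht) (by linarith) (by linarith)
    refine cone_bounds hT hw hM hY (by linarith) ha ?_ i
    rw [Real.sq_sqrt hb]
    simp only
    linear_combination ((t - σ) ^ 2) * ho
  have hT0t0 : T0 < t0 := by
    refine lt_of_lt_of_le ?_ ht0b
    rw [Tone]; nlinarith
  have hZ := ray_Z hT hw hμ ho hN0 hϑ0 hϑ1 hA ht00 hT0t0 h2 ht0a hb i
  -- the value at the start of the ray
  have hZ0 : √(t0 - σ) * |Qn o0 o1 (w i) (t0, (t0 - σ) * o0, (t0 - σ) * o1)| ≤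
      7 * N + 3 * √(Tone T0) * K := by
    have ht0p : 0 < t0 := by linarith
    have hs1 : √(t0 - σ) ≤ √t0 := Real.sqrt_le_sqrt (by linarith)
    obtain ⟨hb0, hb1⟩ := abs_dir ho
    rcases le_total (2 * σ) (Tone T0) with h5 | h5
    · have e : t0 = Tone T0 := max_eq_right h5
      rw [e] at hs1 ⊢
      obtain ⟨k1, k2⟩ := hK i (Tone T0, (Tone T0 - σ) * o0, (Tone T0 - σ) * o1)
        (by linarith) le_rfl
      have : |Qn o0 o1 (w i) (Tone T0, (Tone T0 - σ) * o0, (Tone T0 - σ) * o1)| ≤ 3 * K := by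
        rw [Qn]
        refine (abs_sub _ _).trans ?_
        have l1 := (abs_sub (dt (w i) (Tone T0, (Tone T0 - σ) * o0, (Tone T0 - σ) * o1))
          (o0 * dx 0 (w i) (Tone T0, (Tone T0 - σ) * o0, (Tone T0 - σ) * o1)))
        rw [abs_mul] at l1 ⊢
        have := mul_le_mul hb0 (k2 0) (abs_nonneg _) one_pos.le
        have := mul_le_mul hb1 (k2 1) (abs_nonneg _) one_pos.le
        linarith
      have := mul_le_mul hs1 this (abs_nonneg _) hsT
      linarith
    · have e : t0 = 2 * σ := max_eq_left h5
      obtain ⟨k1, k2, -⟩ := hb t0 le_rfl i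
      have hspos : 0 < t0 ^ 2 - (t0 - σ) ^ 2 := by
        have : t0 ^ 2 - (t0 - σ) ^ 2 = σ * (2 * t0 - σ) := by ring
        rw [this]; exact mul_pos (by linarith) (by linarith)
      obtain ⟨-, -, g3⟩ := out_bound ho ht0p (by linarith) (by linarith) (Real.sqrt_pos.2 hspos)
        (by rw [Real.sq_sqrt hspos.le]; ring) k1 k2
      have hsσ : t0 / 2 ≤ √(t0 ^ 2 - (t0 - σ) ^ 2) := by
        apply Real.le_sqrt_of_sq_le; rw [e]; nlinarith [sq_nonneg σ]
      have hN1 : N * t0 ^ (1 / 4 : ℝ) ≤ N * √t0 :=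
        mul_le_mul_of_nonneg_left (hq t0 (by linarith)) hN0
      have hst := Real.sq_sqrt ht0p.le
      have hst0 := Real.sqrt_pos.2 ht0p
      have hv := (mul_le_mul_of_nonneg_left hsσ (abs_nonneg _)).trans (k1.trans hN1)
      have hG := g3.trans (div_le_div_of_nonneg_right (by linarith :
        3 * (N * t0 ^ (1 / 4 : ℝ)) ≤ 3 * (N * √t0)) ht0p.le)
      set p : P := (t0, (t0 - σ) * o0, (t0 - σ) * o1)
      have hv' : |dt (w i) p| ≤ 2 * (N * √t0) / t0 := by
        rw [le_div_iff₀ ht0p]; linarith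
      have hQ : |Qn o0 o1 (w i) p| ≤ 7 * (N * √t0) / t0 := by
        have e2 : Qn o0 o1 (w i) p = 2 * dt (w i) p - (2 * dt (w i) p - Qn o0 o1 (w i) p) := by ring
        rw [e2]
        refine (abs_sub _ _).trans ?_
        rw [abs_mul, abs_two]
        have : 7 * (N * √t0) / t0 = 2 * (2 * (N * √t0) / t0) + 3 * (N * √t0) / t0 := by ring
        linarith
      have := mul_le_mul hs1 hQ (abs_nonneg _) hst0.le
      have e3 : √t0 * (7 * (N * √t0) / t0) = 7 * N := by
        rw [mul_div_assoc', div_eq_iff ht0p.ne']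
        linear_combination 7 * N * hst
      have : 0 ≤ 3 * √(Tone T0) * K := by positivity
      linarith
  -- recover the time derivative
  obtain ⟨k1, k2, -⟩ := hb t ht00 i
  have hspos : 0 < t ^ 2 - (t - σ) ^ 2 := by nlinarith
  obtain ⟨-, -, g3⟩ := out_bound ho htp (by linarith) (by linarith) (Real.sqrt_pos.2 hspos)
    (by rw [Real.sq_sqrt hspos.le]; ring) k1 k2
  have hN1 : N * t ^ (1 / 4 : ℝ) ≤ N * √t :=
    mul_le_mul_of_nonneg_left (hq t (by linarith)) hN0
  have hG := g3.trans (div_le_div_of_nonneg_right (by linarith :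
        3 * (N * t ^ (1 / 4 : ℝ)) ≤ 3 * (N * √t)) htp.le)
  rw [← hrσ] at hG hZ
  rw [hx]
  set p : P := (t, r * o0, r * o1)
  have hst := Real.sq_sqrt htp.le
  have hst0 := Real.sqrt_pos.2 htp
  have hrt : √t ≤ 2 * √r := by
    apply le_of_sq_le_sq _ (by positivity)
    rw [mul_pow, hst, Real.sq_sqrt hr0]; linarith
  have e4 : √t * |Qn o0 o1 (w i) p| ≤ 2 * (51 * N + 3 * √(Tone T0) * K + 1) := by
    have := mul_le_mul_of_nonneg_right hrt (abs_nonneg (Qn o0 o1 (w i) p))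
    nlinarith
  have e5 : √t * |2 * dt (w i) p - Qn o0 o1 (w i) p| ≤ 3 * N := by
    have := mul_le_mul_of_nonneg_left hG hst0.le
    have e3 : √t * (3 * (N * √t) / t) = 3 * N := by
      rw [mul_div_assoc', div_eq_iff htp.ne']
      linear_combination 3 * N * hst
    linarith
  have e6 : 2 * |dt (w i) p| ≤ |Qn o0 o1 (w i) p| + |2 * dt (w i) p - Qn o0 o1 (w i) p| := by
    have : 2 * |dt (w i) p| = |Qn o0 o1 (w i) p + (2 * dt (w i) p - Qn o0 o1 (w i) p)| := by
      rw [add_sub_cancel, abs_mul, abs_two]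
    rw [this]; exact abs_add_le _ _
  have e7 := mul_le_mul_of_nonneg_left e6 hst0.le
  show √t * |dt (w i) p| ≤ _
  linarith

/-- The decay estimate: as long as `√t |∂ₜw|` stays below a bound that may be as large as `μ^(-1/2)`,
it is controlled by a constant depending only on the solution near the initial time. -/
theorem ray_apriori {T0 K : ℝ} (hT : 1 ≤ T0) (hK0 : 0 ≤ K) : ∃ κ0 A0 : ℝ, 0 < κ0 ∧ 0 < A0 ∧
    ∀ T μ A : ℝ, 0 < T → 0 ≤ μ → 0 < A → μ * A ^ 2 ≤ κ0 → ∀ w : Fin 2 → P → ℝ,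
    MSol T0 μ (th T0 T) w →
    (∀ i (p : P), T0 < p.1 → p.1 * (th T0 T p * dt (w i) p) ^ 2 ≤ A ^ 2) →
    (∀ i (I : List (Fin 2)), I.length ≤ 3 → ∀ p : P, T0 ≤ p.1 → p.1 ≤ Tone T0 →
      |dt (LW I (w i)) p| ≤ K ∧ ∀ a, |dx a (LW I (w i)) p| ≤ K) →
    ∀ i (p : P), T0 ≤ p.1 → √p.1 * |dt (w i) p| ≤ A0 := by
  obtain ⟨Cθ, hCθ, hth⟩ := th_bound
  have hCY := CY_pos Cθ
  set M := 2 * W3.card * (7 * K ^ 2 * volume.real (Kb (T0 + 1))) with hM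
  have hM0 : 0 ≤ M := by positivity
  refine ⟨min 1 (1 / (2 * CY Cθ)), 60 * √(24000 * M) + 3 * √(Tone T0) * K + 2,
    lt_min one_pos (by positivity), by positivity, ?_⟩
  intro T μ A hTp hμ hA hκ w hw hAw hK i p hp
  have hT0 : 0 < T0 := by linarith
  refine ray_apriori0 hT hw hμ hM0 ?_ (fun p => chi_nonneg _ _ _) (fun p => chi_le_one _ _ _) ?_ ?_
    i p hp
  · intro s hs
    have hs0 : 0 < s := by linarith
    have := Y_growth hT0 (sm_th T0 T) hw hμ (κ := min 1 (1 / (2 * CY Cθ)))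
      (lt_min one_pos (by positivity)) hA hκ
      (fun J hJ p h1 h2 => hth T0 T hT0 hTp J hJ p h1 h2) hAw hs
    refine this.trans ?_
    apply mul_le_mul (Y_first hT0 hw hK) _ (by positivity) hM0
    have h1 : 1 ≤ s / (T0 + 1) := by rwa [le_div_iff₀ (by linarith), one_mul]
    calc (s / (T0 + 1)) ^ (CY Cθ * min 1 (1 / (2 * CY Cθ))) ≤ (s / (T0 + 1)) ^ (1 / 2 : ℝ) := by
          apply Real.rpow_le_rpow_of_exponent_le h1
          calc CY Cθ * min 1 (1 / (2 * CY Cθ)) ≤ CY Cθ * (1 / (2 * CY Cθ)) :=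
                mul_le_mul_of_nonneg_left (min_le_right _ _) hCY.le
            _ = 1 / 2 := by have := hCY.ne'; field_simp
      _ ≤ s ^ (1 / 2 : ℝ) := by
          apply Real.rpow_le_rpow (by positivity) _ (by norm_num)
          exact div_le_self hs0.le (by linarith)
  · intro i p h
    have := mul_le_mul_of_nonneg_left (hAw i p h) hμ
    exact this.trans (hκ.trans (min_le_left _ _))
  · exact fun i p h1 h2 => hK i [] (by simp) p h1 h2

end WaveGE

namespace WaveGE

/-! ### Slices and the flat energy -/

lemma pd_slice {u : P → ℝ} (hu : Sm u) (t : ℝ) (a : Fin 2) (x : ℝ × ℝ) :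
    pd (bv a) (fun x => u (t, x)) x = dx a u (t, x) := by
  have h := HasFDerivAt.comp (g := u) (f := fun y : ℝ × ℝ => ((t, y) : P)) x
    (hu.da (t, x)).hasFDerivAt ((hasFDerivAt_const t x).prodMk (hasFDerivAt_id x))
  have h' : fderiv ℝ (fun x => u (t, x)) x = _ := h.fderiv
  rw [pd, h']
  simp [dx, pd]

lemma sm_slice {u : P → ℝ} (hu : Sm u) (t : ℝ) : Sm (fun x : ℝ × ℝ => u (t, x)) :=
  hu.cd.comp (contDiff_const.prodMk contDiff_id)

lemma hasDerivAt_slice {u : P → ℝ} (hu : Sm u) (t : ℝ) (x : ℝ × ℝ) :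
    HasDerivAt (fun t => u (t, x)) (dt u (t, x)) t :=
  HasFDerivAt.comp_hasDerivAt (l := u) (f := fun r => ((r, x) : P)) t
    (hu.da (t, x)).hasFDerivAt ((hasDerivAt_id t).prodMk (hasDerivAt_const t x))

/-- Energy density of a scalar function. -/
def en (φ : P → ℝ) (p : P) : ℝ := dt φ p ^ 2 + dx 0 φ p ^ 2 + dx 1 φ p ^ 2

lemma Sm.en {φ : P → ℝ} (hφ : Sm φ) : Sm (en φ) :=
  ((hφ.dt.pow 2).add ((hφ.dx 0).pow 2)).add ((hφ.dx 1).pow 2)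

lemma en_nonneg (φ : P → ℝ) (p : P) : 0 ≤ en φ p := by unfold en; positivity

/-- Weighted energy inequality: a weight which is nonincreasing in time, with space-like or null level sets,
contributes with a favourable sign. -/
lemma energy_deriv {φ Z : P → ℝ} (hφ : Sm φ) (hZ : Sm Z) {s δ : ℝ} (hδ : 0 < δ)
    {K : Set (ℝ × ℝ)} (hK : IsCompact K)
    (hz : ∀ r ∈ Metric.ball s δ, ∀ x ∉ K, Z (r, x) = 0 ∨ (dt φ (r, x) = 0 ∧ ∀ a, dx a φ (r, x) = 0))
    (h1 : ∀ x, dt Z (s, x) ≤ 0)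
    (h2 : ∀ x, dx 0 Z (s, x) ^ 2 + dx 1 Z (s, x) ^ 2 ≤ dt Z (s, x) ^ 2) :
    ∃ F', HasDerivAt (fun r => ∫ x, en φ (r, x) * Z (r, x)) F' s ∧
      F' ≤ 2 * ∫ x, dt φ (s, x) * Box φ (s, x) * Z (s, x) := by
  set q : P → ℝ := fun p => en φ p * Z p with hq
  have sq : Sm q := hφ.en.mul hZ
  set G : Fin 2 → P → ℝ := fun a p => dt φ p * dx a φ p * Z p with hG
  have sG : ∀ a, Sm (G a) := fun a => (hφ.dt.mul (hφ.dx a)).mul hZ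
  have zq : ∀ r ∈ Metric.ball s δ, ∀ x ∉ K, q (r, x) = 0 := by
    intro r hr x hx
    rcases hz r hr x hx with h | h
    · simp [hq, h]
    · simp [hq, en, h.1, h.2]
  have zG : ∀ a, ∀ r ∈ Metric.ball s δ, ∀ x ∉ K, G a (r, x) = 0 := by
    intro a r hr x hx
    rcases hz r hr x hx with h | h
    · simp [hG, h]
    · simp [hG, h.1]
  have hs : s ∈ Metric.ball s δ := Metric.mem_ball_self hδ
  have hd := hasDerivAt_int (h := fun r x => q (r, x)) (h' := fun r x => dt q (r, x)) hδ hK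
    (fun r _ x => hasDerivAt_slice sq r x) (fun r _ => (sm_slice sq r).cont)
    sq.dt.cont.continuousOn zq
  have nb : ∀ f : P → ℝ, (∀ r ∈ Metric.ball s δ, ∀ x ∉ K, f (r, x) = 0) → ∀ v, ∀ x ∉ K,
      pd v f (s, x) = 0 := by
    intro f hf v x hx
    have : f =ᶠ[𝓝 ((s, x) : P)] fun _ => 0 := by
      have := prod_mem_nhds (Metric.ball_mem_nhds s hδ) (hK.isClosed.isOpen_compl.mem_nhds hx)
      filter_upwards [this] with p hp using hf p.1 hp.1 p.2 hp.2
    rw [pd_congr this, pd_const]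
  have iG : ∀ a, ∫ x, dx a (G a) (s, x) = 0 := by
    intro a
    have := ibp (μ := volume) hK (Sm.const (1 : ℝ)) (sm_slice (sG a) s)
      (fun x hx => zG a s hs x hx) (bv a)
    simp only [one_mul, pd_const, zero_mul, integral_zero, neg_zero, pd_slice (sG a)] at this
    exact this
  refine ⟨_, hd, ?_⟩
  have c1 : Continuous fun x : ℝ × ℝ => dt q (s, x) := (sm_slice sq.dt s).cont
  have sB : Sm fun p => dt φ p * Box φ p * Z p := (hφ.dt.mul hφ.Box).mul hZ
  have c2 : Continuous fun x : ℝ × ℝ => dt φ (s, x) * Box φ (s, x) * Z (s, x) :=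
    (sm_slice sB s).cont
  have i1 : Integrable fun x : ℝ × ℝ => dt q (s, x) := intK hK c1 (nb q zq _)
  have i2 : Integrable fun x : ℝ × ℝ => dt φ (s, x) * Box φ (s, x) * Z (s, x) := by
    refine intK hK c2 fun x hx => ?_
    rcases hz s hs x hx with h | h
    · simp [h]
    · simp [h.1]
  have i3 : ∀ a, Integrable fun x : ℝ × ℝ => dx a (G a) (s, x) := fun a =>
    intK hK (sm_slice ((sG a).dx a) s).cont (nb _ (zG a) _)
  have key : ∫ x, dt q (s, x) ≤ ∫ x, (2 * (dt φ (s, x) * Box φ (s, x) * Z (s, x)) +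
      (2 * dx 0 (G 0) (s, x) + 2 * dx 1 (G 1) (s, x))) := by
    refine integral_mono i1 ((i2.const_mul 2).add (((i3 0).const_mul 2).add ((i3 1).const_mul 2))) ?_
    intro x
    show dt q (s, x) ≤ _
    set p : P := (s, x)
    have e1 : dt q p = (2 * dt φ p * dt (dt φ) p + 2 * dx 0 φ p * dt (dx 0 φ) p +
        2 * dx 1 φ p * dt (dx 1 φ) p) * Z p + en φ p * dt Z p := by
      have e : dt (en φ) p = 2 * dt φ p * dt (dt φ) p + 2 * dx 0 φ p * dt (dx 0 φ) p +
        2 * dx 1 φ p * dt (dx 1 φ) p := by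
        show pd (1, 0) (fun p => dt φ p ^ 2 + dx 0 φ p ^ 2 + dx 1 φ p ^ 2) p = _
        rw [pd_add (((hφ.dt).pow 2).add ((hφ.dx 0).pow 2)) ((hφ.dx 1).pow 2),
          pd_add ((hφ.dt).pow 2) ((hφ.dx 0).pow 2), pd_pow hφ.dt, pd_pow (hφ.dx 0),
          pd_pow (hφ.dx 1)]
        simp [dt]
      rw [show dt q p = _ from pd_mul hφ.en hZ _ p]
      change en φ p * dt Z p + dt (en φ) p * Z p = _
      rw [e]; ring
    have e2 : ∀ a, dx a (G a) p = (dx a (dt φ) p * dx a φ p + dt φ p * dx a (dx a φ) p) * Z p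
        + dt φ p * dx a φ p * dx a Z p := by
      intro a
      rw [show dx a (G a) p = _ from pd_mul (hφ.dt.mul (hφ.dx a)) hZ _ p,
        show pd _ (fun p => dt φ p * dx a φ p) p = _ from pd_mul hφ.dt (hφ.dx a) _ p]
      show dt φ p * dx a φ p * dx a Z p + (dt φ p * dx a (dx a φ) p + dx a (dt φ) p * dx a φ p) * Z p = _
      ring
    have e3 : ∀ a, dt (dx a φ) p = dx a (dt φ) p := fun a => pd_comm hφ _ _ p
    have r : en φ p * dt Z p ≤ 2 * (dt φ p * dx 0 φ p * dx 0 Z p + dt φ p * dx 1 φ p * dx 1 Z p) := by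
      have h1' := h1 x
      have h2' := h2 x
      change dt Z p ≤ 0 at h1'
      change dx 0 Z p ^ 2 + dx 1 Z p ^ 2 ≤ dt Z p ^ 2 at h2'
      unfold en
      set A := dt φ p
      set B := dx 0 φ p
      set C := dx 1 φ p
      set z := dt Z p
      set y := dx 0 Z p
      set w := dx 1 Z p
      have cs : (B * y + C * w) ^ 2 ≤ (B ^ 2 + C ^ 2) * z ^ 2 := by
        have : (B ^ 2 + C ^ 2) * (y ^ 2 + w ^ 2) ≤ (B ^ 2 + C ^ 2) * z ^ 2 := by gcongr
        nlinarith [sq_nonneg (B * w - C * y)]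
      have h3 : (2 * (A * (B * y + C * w))) ^ 2 ≤ ((A ^ 2 + B ^ 2 + C ^ 2) * -z) ^ 2 := by
        have t1 : A ^ 2 * (B * y + C * w) ^ 2 ≤ A ^ 2 * ((B ^ 2 + C ^ 2) * z ^ 2) := by gcongr
        have t2 : 0 ≤ (A ^ 2 - (B ^ 2 + C ^ 2)) ^ 2 * z ^ 2 := by positivity
        nlinarith
      have h4 : 0 ≤ (A ^ 2 + B ^ 2 + C ^ 2) * -z := mul_nonneg (by positivity) (by linarith)
      have h5 := neg_le_of_abs_le (abs_le_of_sq_le_sq h3 h4)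
      nlinarith
    show dt q p ≤ 2 * (dt φ p * Box φ p * Z p) + (2 * dx 0 (G 0) p + 2 * dx 1 (G 1) p)
    rw [e1, e2, e2, e3, e3]
    unfold Box
    nlinarith
  refine key.trans (le_of_eq ?_)
  rw [integral_add (i2.const_mul 2) (iadd ((i3 0).const_mul 2) ((i3 1).const_mul 2)),
    integral_add ((i3 0).const_mul 2) ((i3 1).const_mul 2), integral_const_mul, integral_const_mul,
    integral_const_mul, iG, iG]
  ring

end WaveGE

namespace WaveGE

/-! ### Finite speed of propagation -/

/-- The phase `c - t - √(κ²+|x-x₀|²)`. -/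
def mph (κ c : ℝ) (x0 : ℝ × ℝ) (p : P) : ℝ := c - p.1 - tt κ (p.2 - x0)

/-- Smooth weight supported in the backward cone `|x-x₀| < c-t`. -/
def Zf (κ c : ℝ) (x0 : ℝ × ℝ) (p : P) : ℝ := expNegInvGlue (mph κ c x0 p)

section
variable {κ c : ℝ} (hκ : 0 < κ) (x0 : ℝ × ℝ)
include hκ

lemma sm_mph : Sm (mph κ c x0) :=
  (((Sm.const c).sub sm_t).sub ((sm_tt hκ).cd.comp (contDiff_snd.sub contDiff_const)))

lemma sm_Zf : Sm (Zf κ c x0) := expNegInvGlue.contDiff.comp (sm_mph hκ x0).cd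

lemma pd_Zf (v : P) (p : P) :
    pd v (Zf κ c x0) p = deriv expNegInvGlue (mph κ c x0 p) * pd v (mph κ c x0) p := by
  have h1 : DifferentiableAt ℝ expNegInvGlue (mph κ c x0 p) :=
    (expNegInvGlue.contDiff (n := 1)).differentiable (by norm_num) _
  have h := h1.hasDerivAt.comp_hasFDerivAt p ((sm_mph hκ x0).da p).hasFDerivAt
  have h' : fderiv ℝ (Zf κ c x0) p = _ := h.fderiv
  rw [pd, h']; simp [pd]

lemma dt_mph (p : P) : dt (mph κ c x0) p = -1 := by
  obtain ⟨t, x⟩ := p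
  refine (hasDerivAt_slice (sm_mph hκ x0) t x).unique ?_
  have := ((hasDerivAt_id t).const_sub c).sub_const (tt κ (x - x0))
  exact this

lemma dx_mph (a : Fin 2) (p : P) :
    dx a (mph κ c x0) p = -(xa a (p.2 - x0) / tt κ (p.2 - x0)) := by
  obtain ⟨t, x⟩ := p
  rw [← pd_slice (sm_mph hκ x0)]
  show pd (bv a) (fun x => c - t - tt κ (x - x0)) x = _
  have hsm : Sm fun x : ℝ × ℝ => tt κ (x - x0) :=
    (sm_tt hκ).cd.comp (contDiff_id.sub contDiff_const)
  rw [pd_sub (Sm.const _) hsm, pd_const, zero_sub]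
  congr 1
  have : pd (bv a) (fun x => tt κ (x - x0)) x = pd (bv a) (tt κ) (x - x0) := by
    simp only [pd]; rw [fderiv_comp_sub]
  rw [this, pd_tt hκ]

lemma Zf_nonneg (p : P) : 0 ≤ Zf κ c x0 p := expNegInvGlue.nonneg _

lemma dt_Zf (p : P) : dt (Zf κ c x0) p ≤ 0 := by
  have h := pd_Zf (c := c) hκ x0 (1, 0) p
  have h2 := dt_mph (c := c) hκ x0 p
  have h3 : 0 ≤ deriv expNegInvGlue (mph κ c x0 p) := expNegInvGlue.monotone.deriv_nonneg
  unfold dt at *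
  rw [h, h2]; linarith

lemma dx_Zf (p : P) : dx 0 (Zf κ c x0) p ^ 2 + dx 1 (Zf κ c x0) p ^ 2 ≤ dt (Zf κ c x0) p ^ 2 := by
  have h := pd_Zf (c := c) hκ x0 (1, 0) p
  have h2 := dt_mph (c := c) hκ x0 p
  have e : ∀ a, dx a (Zf κ c x0) p = deriv expNegInvGlue (mph κ c x0 p) * -(xa a (p.2 - x0) / tt κ (p.2 - x0)) := by
    intro a; rw [← dx_mph hκ]; exact pd_Zf hκ x0 _ p
  have e2 : dt (Zf κ c x0) p = deriv expNegInvGlue (mph κ c x0 p) * -1 := by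
    rw [← dt_mph (c := c) hκ x0 p]; exact pd_Zf hκ x0 _ p
  rw [e, e, e2]
  have hp := tt_pos hκ (p.2 - x0)
  have hq := tt_sq hκ (p.2 - x0)
  set d := deriv expNegInvGlue (mph κ c x0 p)
  set T := tt κ (p.2 - x0)
  rw [xa_zero, xa_one]
  have : (d * -((p.2 - x0).1 / T)) ^ 2 + (d * -((p.2 - x0).2 / T)) ^ 2 =
     d ^ 2 * (((p.2 - x0).1 ^ 2 + (p.2 - x0).2 ^ 2) / T ^ 2) := by field_simp
  rw [this]
  have : ((p.2 - x0).1 ^ 2 + (p.2 - x0).2 ^ 2) / T ^ 2 ≤ 1 := by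
    rw [div_le_one (by positivity), hq]; nlinarith
  nlinarith [sq_nonneg d]

lemma Zf_zero {p : P} (h : c - p.1 ≤ tt κ (p.2 - x0)) : Zf κ c x0 p = 0 :=
  expNegInvGlue.zero_of_nonpos (by unfold mph; linarith)

lemma Zf_ne {p : P} (h : Zf κ c x0 p ≠ 0) : tt κ (p.2 - x0) < c - p.1 := by
  by_contra h2; exact h (Zf_zero hκ x0 (not_lt.1 h2))

lemma Zf_pos {p : P} (h : tt κ (p.2 - x0) < c - p.1) : 0 < Zf κ c x0 p :=
  expNegInvGlue.pos_of_pos (by unfold mph; linarith)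
end

/-- Euclidean square norm in the plane. -/
def n2 (x : ℝ × ℝ) : ℝ := x.1 ^ 2 + x.2 ^ 2

lemma n2_lt_of_tt {κ : ℝ} (hκ : 0 < κ) {x : ℝ × ℝ} {r : ℝ} (h : tt κ x < r) : n2 x < r ^ 2 := by
  have h0 := tt_pos hκ x
  have h1 := tt_sq hκ x
  have h2 : tt κ x ^ 2 < r ^ 2 := by gcongr
  unfold n2; nlinarith [sq_pos_of_pos hκ]

set_option maxHeartbeats 1000000 in
/-- Finite speed of propagation for differential inequalities `|□w| ≤ C |∂ₜw|` in a cone. -/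
lemma fspeed {w : Fin 2 → P → ℝ} (hw : ∀ i, Sm (w i)) {a c C : ℝ} {x0 : ℝ × ℝ} (hC : 0 ≤ C)
    (hB : ∀ i, ∀ p : P, a < p.1 → p.1 < c → n2 (p.2 - x0) < (c - p.1) ^ 2 →
      |Box (w i) p| ≤ C * (|dt (w 0) p| + |dt (w 1) p|))
    (h0 : ∀ i, ∀ x, n2 (x - x0) < (c - a) ^ 2 → w i (a, x) = 0 ∧ dt (w i) (a, x) = 0)
    (i : Fin 2) (p : P) (hpa : a ≤ p.1) (hpc : p.1 < c) (hp : n2 (p.2 - x0) < (c - p.1) ^ 2) :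
    w i p = 0 := by
  obtain ⟨κ, hκ, hk⟩ : ∃ κ > 0, tt κ (p.2 - x0) < c - p.1 := by
    refine ⟨√(((c - p.1) ^ 2 - n2 (p.2 - x0)) / 2), Real.sqrt_pos.2 (by linarith), ?_⟩
    unfold tt
    rw [Real.sqrt_lt' (by linarith), Real.sq_sqrt (by linarith)]
    unfold n2 at *; linarith
  set Z := Zf κ c x0
  have sZ : Sm Z := sm_Zf hκ x0
  set E : ℝ → ℝ := fun r => ∑ i, ∫ x, en (w i) (r, x) * Z (r, x) with hE
  have comp : ∀ s, ∃ K : Set (ℝ × ℝ), IsCompact K ∧ ∀ r ∈ Metric.ball s 1, ∀ x ∉ K, Z (r, x) = 0 := by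
    intro s
    refine ⟨Metric.closedBall x0 (|c| + |s| + 1), isCompact_closedBall _ _, ?_⟩
    intro r hr x hx
    apply Zf_zero hκ
    rw [Metric.mem_closedBall, not_le, dist_eq_norm, Prod.norm_def, lt_max_iff] at hx
    rw [Metric.mem_ball, Real.dist_eq] at hr
    have hr2 : c - r ≤ |c| + |s| + 1 := by
      have := neg_le_of_abs_le hr.le
      have := le_abs_self c
      have := neg_le_abs s
      linarith
    have x1 := xa_le_tt hκ 0 (x - x0)
    have x2 := xa_le_tt hκ 1 (x - x0)
    rw [xa_zero] at x1; rw [xa_one] at x2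
    rw [Real.norm_eq_abs, Real.norm_eq_abs] at hx
    rcases hx with hx | hx <;> linarith
  have hder : ∀ s, ∃ E', HasDerivAt E E' s ∧
      E' ≤ ∑ i, 2 * ∫ x, dt (w i) (s, x) * Box (w i) (s, x) * Z (s, x) := by
    intro s
    obtain ⟨K, hK, hKz⟩ := comp s
    choose F hF1 hF2 using fun i => energy_deriv (hw i) sZ one_pos hK
      (fun r hr x hx => Or.inl (hKz r hr x hx)) (fun x => dt_Zf hκ x0 (s, x))
      (fun x => dx_Zf hκ x0 (s, x))
    exact ⟨∑ i, F i, HasDerivAt.fun_sum (fun i _ => hF1 i), Finset.sum_le_sum fun i _ => hF2 i⟩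
  have intf : ∀ s, ∀ f : P → ℝ, Continuous f → Integrable fun x : ℝ × ℝ => f (s, x) * Z (s, x) := by
    intro s f hf
    obtain ⟨K, hK, hKz⟩ := comp s
    refine intK hK ((hf.comp (by fun_prop)).mul (sm_slice sZ s).cont) fun x hx => ?_
    rw [hKz s (Metric.mem_ball_self one_pos) x hx, mul_zero]
  have hE' : ∀ s, a < s → ∃ E', HasDerivAt E E' s ∧ E' ≤ 4 * C * E s := by
    intro s hs
    obtain ⟨E', h1, h2⟩ := hder s
    refine ⟨E', h1, h2.trans ?_⟩
    rw [Fin.sum_univ_two]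
    have I1 : ∀ i, Integrable fun x : ℝ × ℝ => dt (w i) (s, x) * Box (w i) (s, x) * Z (s, x) :=
      fun i => intf s (fun p => dt (w i) p * Box (w i) p) ((hw i).dt.cont.mul (hw i).Box.cont)
    have I2 : ∀ i, Integrable fun x : ℝ × ℝ => en (w i) (s, x) * Z (s, x) :=
      fun i => intf s _ (hw i).en.cont
    rw [← integral_const_mul, ← integral_const_mul, ← integral_add ((I1 0).const_mul _) ((I1 1).const_mul _), hE]
    show _ ≤ 4 * C * ∑ i, _
    rw [Fin.sum_univ_two, ← integral_add (I2 0) (I2 1), ← integral_const_mul]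
    refine integral_mono (iadd ((I1 0).const_mul _) ((I1 1).const_mul _)) ((iadd (I2 0) (I2 1)).const_mul _) ?_
    intro x
    simp only
    have zn : 0 ≤ Z (s, x) := Zf_nonneg hκ x0 _
    by_cases hZ : Z (s, x) = 0
    · simp [hZ]
    have hin := Zf_ne hκ x0 hZ
    have hn := n2_lt_of_tt hκ hin
    have hsc : s < c := by have := tt_pos hκ (x - x0); simp only at hin; linarith
    have b0 := hB 0 (s, x) hs hsc hn
    have b1 := hB 1 (s, x) hs hsc hn
    have q : ∀ i, dt (w i) (s, x) * Box (w i) (s, x) ≤ |dt (w i) (s, x)| * (C * (|dt (w 0) (s, x)| + |dt (w 1) (s, x)|)) := by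
      intro i
      refine (le_abs_self _).trans ?_
      rw [abs_mul]
      refine mul_le_mul_of_nonneg_left ?_ (abs_nonneg _)
      exact hB i (s, x) hs hsc hn
    have e1 : ∀ i, |dt (w i) (s, x)| ^ 2 ≤ en (w i) (s, x) := by
      intro i; rw [sq_abs]; unfold en; nlinarith [sq_nonneg (dx 0 (w i) (s, x)), sq_nonneg (dx 1 (w i) (s, x))]
    have q0 := q 0
    have q1 := q 1
    have e0 := e1 0
    have e1 := e1 1
    have key : 2 * (dt (w 0) (s, x) * Box (w 0) (s, x)) + 2 * (dt (w 1) (s, x) * Box (w 1) (s, x)) ≤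
        4 * C * (en (w 0) (s, x) + en (w 1) (s, x)) := by
      set A := |dt (w 0) (s, x)|
      set B := |dt (w 1) (s, x)|
      have t : C * (A + B) ^ 2 ≤ C * (2 * (en (w 0) (s, x) + en (w 1) (s, x))) := by
        gcongr; nlinarith [sq_nonneg (A - B)]
      nlinarith
    nlinarith [mul_le_mul_of_nonneg_right key zn]
  have Ecd : ∀ s, ∃ E', HasDerivAt E E' s := fun s => let ⟨E', h, _⟩ := hder s; ⟨E', h⟩
  have Ea : E a = 0 := by
    apply Finset.sum_eq_zero
    intro i _
    have : ∀ x, en (w i) (a, x) * Z (a, x) = 0 := by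
      intro x
      by_cases hZ : Z (a, x) = 0
      · simp [hZ]
      have hin := Zf_ne hκ x0 hZ
      have hn := n2_lt_of_tt hκ hin
      have hop : IsOpen {y : ℝ × ℝ | n2 (y - x0) < (c - a) ^ 2} :=
        isOpen_lt (by unfold n2; fun_prop) continuous_const
      have hev : (fun y => w i (a, y)) =ᶠ[𝓝 x] fun _ => 0 := by
        filter_upwards [hop.mem_nhds hn] with y hy using (h0 i y hy).1
      have d : ∀ b, dx b (w i) (a, x) = 0 := by
        intro b; rw [← pd_slice (hw i), pd_congr hev, pd_const]
      have := (h0 i x hn).2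
      simp [en, d, this]
    simp [this]
  have En : ∀ s, 0 ≤ E s := fun s => Finset.sum_nonneg fun i _ =>
    integral_nonneg fun x => mul_nonneg (en_nonneg _ _) (Zf_nonneg hκ x0 _)
  have E0 : ∀ s, a ≤ s → E s = 0 := by
    intro s hs
    refine le_antisymm ?_ (En s)
    choose E1 hE1 using Ecd
    have hd : ∀ r, HasDerivAt (fun r => Real.exp (-(4 * C * r)) * E r)
        (Real.exp (-(4 * C * r)) * (-(4 * C)) * E r + Real.exp (-(4 * C * r)) * E1 r) r := by
      intro r
      have h1 : HasDerivAt (fun r : ℝ => -(4 * C * r)) (-(4 * C)) r := by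
        simpa using (hasDerivAt_id r).const_mul (-(4 * C))
      exact h1.exp.mul (hE1 r)
    have anti : AntitoneOn (fun r => Real.exp (-(4 * C * r)) * E r) (Set.Ici a) := by
      apply antitoneOn_of_deriv_nonpos (convex_Ici a)
      · exact fun r _ => (hd r).continuousAt.continuousWithinAt
      · exact fun r _ => (hd r).differentiableAt.differentiableWithinAt
      · intro r hr
        rw [interior_Ici] at hr
        rw [(hd r).deriv]
        obtain ⟨E', h1, h2⟩ := hE' r hr
        rw [(hE1 r).unique h1]
        nlinarith [Real.exp_pos (-(4 * C * r))]
    have := anti (Set.self_mem_Ici) hs hs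
    simp only [Ea, mul_zero] at this
    by_contra hcon
    have := mul_pos (Real.exp_pos (-(4 * C * s))) (not_le.1 hcon)
    linarith
  have dz : ∀ s, a ≤ s → ∀ x, Z (s, x) ≠ 0 → dt (w i) (s, x) = 0 := by
    intro s hs x hx
    have hn : ∀ j, 0 ≤ ∫ x, en (w j) (s, x) * Z (s, x) := fun j =>
      integral_nonneg fun x => mul_nonneg (en_nonneg _ _) (Zf_nonneg hκ x0 _)
    have h1 : ∫ x, en (w i) (s, x) * Z (s, x) = 0 :=
      (Finset.sum_eq_zero_iff_of_nonneg (fun j _ => hn j)).1 (E0 s hs) i (Finset.mem_univ _)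
    have cont : Continuous fun x => en (w i) (s, x) * Z (s, x) :=
      (sm_slice ((hw i).en.mul sZ) s).cont
    have h2 := (integral_eq_zero_iff_of_nonneg
      (fun x => mul_nonneg (en_nonneg _ _) (Zf_nonneg hκ x0 _)) (intf s _ (hw i).en.cont)).1 h1
    have h3 := congrFun (Continuous.ae_eq_iff_eq volume cont continuous_zero |>.1 h2) x
    simp only [Pi.zero_apply, mul_eq_zero] at h3
    rcases h3 with h3 | h3
    · unfold en at h3
      have := sq_nonneg (dt (w i) (s, x))
      have := sq_nonneg (dx 0 (w i) (s, x))
      have := sq_nonneg (dx 1 (w i) (s, x))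
      exact pow_eq_zero_iff (two_ne_zero) |>.1 (by linarith)
    · exact absurd h3 hx
  obtain ⟨t, x⟩ := p
  simp only at hpa hpc hp hk
  have := constant_of_derivWithin_zero (f := fun r => w i (r, x)) (a := a) (b := t)
    (fun r _ => (hasDerivAt_slice (hw i) r x).differentiableAt.differentiableWithinAt)
    (fun r hr => by
      rw [(hasDerivAt_slice (hw i) r x).hasDerivWithinAt.derivWithin
        (uniqueDiffOn_Icc (lt_of_le_of_lt hr.1 hr.2) r ⟨hr.1, hr.2.le⟩)]
      apply dz r hr.1
      apply (Zf_pos hκ x0 _).ne'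
      have := hr.2
      simp only; linarith) t ⟨hpa, le_rfl⟩
  rw [this]
  refine (h0 i x ?_).1
  have : (c - t) ^ 2 ≤ (c - a) ^ 2 := by
    apply pow_le_pow_left₀ <;> linarith
  linarith

end WaveGE

namespace WaveGE

/-! ### Uniqueness and support in the cone -/

/-- The right-hand side `-μ (ϑ ∂ₜw_{1-i})² ϑ ∂ₜw_i`. -/
def NL (μ : ℝ) (ϑ : P → ℝ) (w : Fin 2 → P → ℝ) (i : Fin 2) (p : P) : ℝ :=
  -μ * ((ϑ p * dt (w (1 - i)) p) * ((ϑ p * dt (w (1 - i)) p) * (ϑ p * dt (w i) p)))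

lemma dt_sub' {f g : P → ℝ} (hf : Sm f) (hg : Sm g) (p : P) :
    dt (fun p => f p - g p) p = dt f p - dt g p := pd_sub hf hg _ p
lemma dx_sub' {f g : P → ℝ} (hf : Sm f) (hg : Sm g) (a : Fin 2) (p : P) :
    dx a (fun p => f p - g p) p = dx a f p - dx a g p := pd_sub hf hg _ p

lemma Box_sub {f g : P → ℝ} (hf : Sm f) (hg : Sm g) (p : P) :
    Box (fun p => f p - g p) p = Box f p - Box g p := by
  have e1 : dt (fun p => f p - g p) = fun p => dt f p - dt g p := funext (dt_sub' hf hg)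
  have e2 : ∀ a, dx a (fun p => f p - g p) = fun p => dx a f p - dx a g p :=
    fun a => funext (dx_sub' hf hg a)
  unfold Box
  rw [e1, e2, e2, dt_sub' hf.dt hg.dt, dx_sub' (hf.dx 0) (hg.dx 0), dx_sub' (hf.dx 1) (hg.dx 1)]
  ring

lemma nl_diff {M μ θ a a' b b' : ℝ} (hM : 0 ≤ M) (hθ : |θ| ≤ M) (ha : |a| ≤ M) (ha' : |a'| ≤ M)
    (hb : |b| ≤ M) : |-μ * ((θ * a) * ((θ * a) * (θ * b))) - -μ * ((θ * a') * ((θ * a') * (θ * b')))| ≤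
      2 * |μ| * M ^ 5 * (|a - a'| + |b - b'|) := by
  have e : -μ * ((θ * a) * ((θ * a) * (θ * b))) - -μ * ((θ * a') * ((θ * a') * (θ * b'))) =
     -(μ * θ ^ 3 * ((a + a') * b * (a - a') + a' ^ 2 * (b - b'))) := by ring
  rw [e, abs_neg, abs_mul, abs_mul, abs_pow]
  have h1 : |(a + a') * b * (a - a') + a' ^ 2 * (b - b')| ≤ 2 * M ^ 2 * (|a - a'| + |b - b'|) := by
    refine (abs_add_le _ _).trans ?_
    rw [abs_mul, abs_mul, abs_mul, abs_pow]
    have h2 : |a + a'| * |b| ≤ (2 * M) * M := by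
      gcongr; exact (abs_add_le _ _).trans (by linarith)
    have h3 : |a'| ^ 2 ≤ M ^ 2 := by gcongr
    have := mul_le_mul_of_nonneg_right h2 (abs_nonneg (a - a'))
    have := mul_le_mul_of_nonneg_right h3 (abs_nonneg (b - b'))
    have : 0 ≤ M ^ 2 * |b - b'| := by positivity
    nlinarith
  have h4 : |μ| * |θ| ^ 3 ≤ |μ| * M ^ 3 := by gcongr
  calc _ ≤ (|μ| * M ^ 3) * (2 * M ^ 2 * (|a - a'| + |b - b'|)) := by gcongr
    _ = _ := by ring

/-- Uniqueness for the nonlinear system, with finite speed of propagation. -/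
lemma uniq {w w' : Fin 2 → P → ℝ} (hw : ∀ i, Sm (w i)) (hw' : ∀ i, Sm (w' i)) {ϑ : P → ℝ}
    (hϑ : Continuous ϑ) {a η μ : ℝ} (p : P) (hpa : a ≤ p.1) (hη : 0 < η)
    (h1 : ∀ i q, a < q.1 → q.1 < p.1 + η → Box (w i) q = NL μ ϑ w i q)
    (h2 : ∀ i q, a < q.1 → q.1 < p.1 + η → Box (w' i) q = NL μ ϑ w' i q)
    (h0 : ∀ i x, n2 (x - p.2) < (p.1 + η - a) ^ 2 →
      w i (a, x) = w' i (a, x) ∧ dt (w i) (a, x) = dt (w' i) (a, x)) (i : Fin 2) :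
    w i p = w' i p := by
  set S : Set P := Set.Icc a (p.1 + η) ×ˢ Metric.closedBall p.2 (p.1 + η - a)
  have hS : IsCompact S := isCompact_Icc.prod (isCompact_closedBall _ _)
  obtain ⟨M, hM0, hM⟩ : ∃ M, 0 ≤ M ∧ ∀ q ∈ S, |ϑ q| ≤ M ∧ ∀ i, |dt (w i) q| ≤ M ∧ |dt (w' i) q| ≤ M := by
    obtain ⟨M, hM⟩ := hS.exists_bound_of_continuousOn (f := fun q => |ϑ q| + ((|dt (w 0) q| + |dt (w' 0) q|) + (|dt (w 1) q| + |dt (w' 1) q|)))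
      (Continuous.continuousOn (hϑ.abs.add (((hw 0).dt.cont.abs.add (hw' 0).dt.cont.abs).add
        ((hw 1).dt.cont.abs.add (hw' 1).dt.cont.abs))))
    refine ⟨|M|, abs_nonneg _, fun q hq => ?_⟩
    have h := (le_abs_self _).trans ((hM q hq).trans (le_abs_self M))
    have := abs_nonneg (ϑ q)
    have := abs_nonneg (dt (w 0) q)
    have := abs_nonneg (dt (w 1) q)
    have := abs_nonneg (dt (w' 0) q)
    have := abs_nonneg (dt (w' 1) q)
    exact ⟨by linarith, fin2 ⟨by linarith, by linarith⟩ ⟨by linarith, by linarith⟩⟩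
  have := fspeed (w := fun i p => w i p - w' i p) (fun i => (hw i).sub (hw' i)) (a := a)
    (c := p.1 + η) (C := 2 * |μ| * M ^ 5) (x0 := p.2) (by positivity) ?_ ?_ i p hpa (by linarith)
    (by simp [n2]; positivity)
  · linarith
  · intro i q hq1 hq2 hq3
    have hqS : q ∈ S := by
      refine ⟨⟨hq1.le, hq2.le⟩, ?_⟩
      rw [Metric.mem_closedBall, dist_eq_norm, Prod.norm_def]
      unfold n2 at hq3
      apply max_le
      · rw [Real.norm_eq_abs]
        refine (abs_le_of_sq_le_sq (b := p.1 + η - q.1) ?_ (by linarith)).trans (by linarith)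
        nlinarith [sq_nonneg (q.2 - p.2).2]
      · rw [Real.norm_eq_abs]
        refine (abs_le_of_sq_le_sq (b := p.1 + η - q.1) ?_ (by linarith)).trans (by linarith)
        nlinarith [sq_nonneg (q.2 - p.2).1]
    obtain ⟨m1, m2⟩ := hM q hqS
    rw [Box_sub (hw i) (hw' i), h1 i q hq1 hq2, h2 i q hq1 hq2, dt_sub' (hw 0) (hw' 0), dt_sub' (hw 1) (hw' 1)]
    have := nl_diff (μ := μ) (b' := dt (w' i) q) hM0 m1 (m2 (1 - i)).1 (m2 (1 - i)).2 (m2 i).1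
    refine this.trans (le_of_eq ?_)
    clear this
    revert i; apply fin2
    · rw [show (1 : Fin 2) - 0 = 1 from rfl]; ring
    · rw [show (1 : Fin 2) - 1 = 0 from rfl]
  · intro i x hx
    rw [dt_sub' (hw i) (hw' i), (h0 i x hx).1, (h0 i x hx).2]; simp

/-- Support in the cone for data supported in `|x| ≤ T0 - 1`. -/
lemma supp_cone {w : Fin 2 → P → ℝ} (hw : ∀ i, Sm (w i)) {ϑ : P → ℝ}
    (hϑ : Continuous ϑ) {T0 μ : ℝ} (hT : 1 ≤ T0)
    (h1 : ∀ i q, Box (w i) q = NL μ ϑ w i q)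
    (h0 : ∀ i x, (T0 - 1) ^ 2 < n2 x → w i (T0, x) = 0 ∧ dt (w i) (T0, x) = 0)
    (i : Fin 2) (p : P) (hp : T0 ≤ p.1) (hx : (p.1 - 1) ^ 2 < p.2.1 ^ 2 + p.2.2 ^ 2) : w i p = 0 := by
  set r := √(n2 p.2)
  have hr0 : 0 ≤ r := Real.sqrt_nonneg _
  have hr : r ^ 2 = n2 p.2 := Real.sq_sqrt (by unfold n2; positivity)
  have hr1 : p.1 - 1 < r := by
    apply lt_of_pow_lt_pow_left₀ 2 hr0; rw [hr]; exact hx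
  have z1 : ∀ p : P, Box (fun _ : P => (0 : ℝ)) p = 0 := by
    intro p
    have e1 : ∀ v, pd v (fun _ : P => (0 : ℝ)) = fun _ => 0 := fun v => funext fun x => pd_const _ _ _
    simp [Box, dt, dx, e1]
  have z2 : ∀ p : P, dt (fun _ : P => (0 : ℝ)) p = 0 := fun p => pd_const _ _ _
  refine uniq hw (w' := fun _ _ => 0) (fun _ => Sm.const 0) hϑ (a := T0) (η := (r - (p.1 - 1)) / 2)
    (μ := μ) p hp (by linarith) (fun i q _ _ => h1 i q) (fun i q _ _ => ?_) (fun i x hx => ?_) i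
  · simp [z1, NL, z2]
  · rw [z2]
    apply h0
    set d := p.1 + (r - (p.1 - 1)) / 2 - T0 with hd
    have hd0 : 0 ≤ d := by linarith
    by_contra hcon
    push Not at hcon
    -- triangle inequality: `r ≤ |x| + |x - p.2| < (T0 - 1) + d`
    have hcs : (x.1 * (p.2 - x).1 + x.2 * (p.2 - x).2) ^ 2 ≤ n2 x * n2 (x - p.2) := by
      unfold n2; simp only [Prod.fst_sub, Prod.snd_sub]
      nlinarith [sq_nonneg (x.1 * (p.2.2 - x.2) - x.2 * (p.2.1 - x.1))]
    have hcs2 : (x.1 * (p.2 - x).1 + x.2 * (p.2 - x).2) ^ 2 ≤ ((T0 - 1) * d) ^ 2 := by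
      refine hcs.trans ?_
      rw [mul_pow]
      have : 0 ≤ n2 (x - p.2) := by unfold n2; positivity
      gcongr
    have hcs3 := (le_abs_self _).trans (abs_le_of_sq_le_sq hcs2 (mul_nonneg (by linarith) hd0))
    have e : n2 p.2 = n2 x + n2 (x - p.2) + 2 * (x.1 * (p.2 - x).1 + x.2 * (p.2 - x).2) := by
      unfold n2; simp only [Prod.fst_sub, Prod.snd_sub]; ring
    have : r ^ 2 ≤ (T0 - 1 + d) ^ 2 := by rw [hr, e]; nlinarith
    have := abs_le_of_sq_le_sq this (by linarith)
    rw [abs_of_nonneg hr0] at this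
    linarith

end WaveGE

namespace WaveGE

/-! ### Growth of the flat energy -/

/-- Iterated spatial derivatives `∂^I`. -/
def XW : List (Fin 2) → (P → ℝ) → P → ℝ
  | [], u => u
  | a :: I, u => dx a (XW I u)

/-- Iterated derivatives of functions of the space variable. -/
abbrev DS (I : List (Fin 2)) (f : ℝ × ℝ → ℝ) : ℝ × ℝ → ℝ := DW (fun _ => 1) I f

lemma Sm.XW {u : P → ℝ} (hu : Sm u) (I : List (Fin 2)) : Sm (XW I u) := by
  induction I with
  | nil => exact hu
  | cons a I ih => exact ih.dx a

lemma Zc.XW {T0 : ℝ} {f : P → ℝ} (h : Zc T0 f) (I : List (Fin 2)) : Zc T0 (XW I f) := by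
  induction I with
  | nil => exact h
  | cons a I ih => exact ih.dx a

lemma wt_one : Wt (fun _ => (1 : ℝ)) where
  sm := Sm.const 1
  pos _ := one_pos
  d1 a x := by rw [pd_const]; simp

lemma DS_slice {u : P → ℝ} (hu : Sm u) (t : ℝ) (I : List (Fin 2)) :
    DS I (fun x => u (t, x)) = fun x => XW I u (t, x) := by
  induction I with
  | nil => rfl
  | cons a I ih =>
    show D (fun _ => 1) a (DS I _) = _
    rw [ih]
    ext x
    rw [D, pd_slice (hu.XW I), one_mul]; rfl

lemma dx_dx {u : P → ℝ} (hu : Sm u) (a b : Fin 2) : dx a (dx b u) = dx b (dx a u) :=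
  funext fun p => pd_comm hu _ _ p
lemma dt_dx {u : P → ℝ} (hu : Sm u) (a : Fin 2) : dt (dx a u) = dx a (dt u) :=
  funext fun p => pd_comm hu _ _ p

lemma dt_XW {u : P → ℝ} (hu : Sm u) (I : List (Fin 2)) : dt (XW I u) = XW I (dt u) := by
  induction I with
  | nil => rfl
  | cons a I ih =>
    show dt (dx a (XW I u)) = dx a (XW I (dt u))
    rw [dt_dx (hu.XW I), ih]

lemma Box_dx {u : P → ℝ} (hu : Sm u) (a : Fin 2) : Box (dx a u) = dx a (Box u) := by
  have h1 : dx a (Box u) = fun p => dx a (dt (dt u)) p - dx a (dx 0 (dx 0 u)) p - dx a (dx 1 (dx 1 u)) p := by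
    funext p
    show dx a (fun p => dt (dt u) p - dx 0 (dx 0 u) p - dx 1 (dx 1 u) p) p = _
    rw [dx_sub' (f := fun p => dt (dt u) p - dx 0 (dx 0 u) p) (hu.dt.dt.sub ((hu.dx 0).dx 0)) ((hu.dx 1).dx 1),
      dx_sub' hu.dt.dt ((hu.dx 0).dx 0)]
  rw [h1]
  funext p
  unfold Box
  rw [dt_dx hu, dt_dx hu.dt, dx_dx hu 0 a, dx_dx hu 1 a, dx_dx (hu.dx 0) 0 a, dx_dx (hu.dx 1) 1 a]

lemma Box_XW {u : P → ℝ} (hu : Sm u) (I : List (Fin 2)) : Box (XW I u) = XW I (Box u) := by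
  induction I with
  | nil => rfl
  | cons a I ih =>
    show Box (dx a (XW I u)) = dx a (XW I (Box u))
    rw [Box_dx (hu.XW I), ih]

lemma XW_cmul {u : P → ℝ} (hu : Sm u) (c : ℝ) (I : List (Fin 2)) :
    XW I (fun p => c * u p) = fun p => c * XW I u p := by
  induction I with
  | nil => rfl
  | cons a I ih =>
    show dx a (XW I fun p => c * u p) = fun p => c * dx a (XW I u) p
    rw [ih]; funext p; exact pd_cmul (hu.XW I) c _ p

lemma DS_cmul {f : ℝ × ℝ → ℝ} (hf : Sm f) (c : ℝ) (I : List (Fin 2)) :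
    DS I (fun x => c * f x) = fun x => c * DS I f x := by
  have hu : Sm fun p : P => f p.2 := hf.cd.comp contDiff_snd
  have h1 := DS_slice hu 0 I
  have h2 := DS_slice ((Sm.const c).mul hu) 0 I
  simp only at h1 h2
  rw [h2, h1, XW_cmul hu]

/-- Energy constant. -/
def CE : ℝ := 10 ^ 3 * (1 + 2 * W3.card)

/-- Flat energy of the initial data, including derivatives up to order three. -/
def Ed0 (f g : Fin 2 → ℝ × ℝ → ℝ) : ℝ :=
  ∑ i, ∑ I ∈ W3, ∫ x, (DS I (g i) x ^ 2 + DS (0 :: I) (f i) x ^ 2 + DS (1 :: I) (f i) x ^ 2)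

lemma cone_out {T0 T1 r : ℝ} (hT : 1 ≤ T0) (hr : T0 < r) (hrs : r ≤ T1) {x : ℝ × ℝ}
    (hx : x ∉ Metric.closedBall (0 : ℝ × ℝ) T1) : (r, x) ∉ Kc T0 := by
  rw [Metric.mem_closedBall, dist_zero_right, not_le, Prod.norm_def, lt_max_iff] at hx
  simp only [Kc, Set.mem_setOf_eq, not_or, not_le]
  refine ⟨hr, ?_⟩
  rw [Real.norm_eq_abs, Real.norm_eq_abs] at hx
  rcases hx with hx | hx
  · have : (r - 1) ^ 2 < |x.1| ^ 2 := pow_lt_pow_left₀ (by linarith) (by linarith) two_ne_zero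
    rw [sq_abs] at this; nlinarith [sq_nonneg x.2]
  · have : (r - 1) ^ 2 < |x.2| ^ 2 := pow_lt_pow_left₀ (by linarith) (by linarith) two_ne_zero
    rw [sq_abs] at this; nlinarith [sq_nonneg x.1]

lemma cone_out' {T0 T1 r : ℝ} (hT : 1 ≤ T0) (hr : T0 ≤ r) (hrs : r < T1) {f : P → ℝ}
    (hf : Continuous f) (hz : Zc T0 f) {x : ℝ × ℝ}
    (hx : x ∉ Metric.closedBall (0 : ℝ × ℝ) T1) : f (r, x) = 0 := by
  have hc : ContinuousWithinAt (fun s => f (s, x)) (Set.Ioi r) r :=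
    (hf.comp (by fun_prop : Continuous fun s : ℝ => ((s, x) : P))).continuousWithinAt
  have h1 : Tendsto (fun s => f (s, x)) (𝓝[>] r) (𝓝 0) := by
    refine tendsto_const_nhds.congr' ?_
    filter_upwards [Ioo_mem_nhdsGT hrs] with s hs
    exact (hz _ (cone_out hT (hr.trans_lt hs.1) hs.2.le hx)).symm
  exact tendsto_nhds_unique hc h1

set_option maxHeartbeats 1000000 in
/-- Growth of the flat third order energy, up to a time `T1`. -/
lemma flat_energy {T0 T T1 μ A : ℝ} {w : Fin 2 → P → ℝ} {f g : Fin 2 → ℝ × ℝ → ℝ} (hT : 1 ≤ T0)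
    (hw : MSol T0 μ (th T0 T) w) (hf : ∀ i x, w i (T0, x) = f i x)
    (hg : ∀ i x, dt (w i) (T0, x) = g i x) (hμ : 0 ≤ μ) (hA0 : 0 < A)
    (hA : ∀ i p, T0 < p.1 → p.1 < T1 → |th T0 T p * dt (w i) p| ≤ A)
    {t : ℝ} (ht0 : T0 ≤ t) (ht1 : t ≤ T1) (i : Fin 2) {I : List (Fin 2)} (hI : I.length ≤ 3) :
    ∫ x, XW I (dt (w i)) (t, x) ^ 2 ≤ Ed0 f g * Real.exp (CE * μ * A ^ 2 * (t - T0)) := by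
  set K := Metric.closedBall (0 : ℝ × ℝ) (T1 + 1)
  have hK : IsCompact K := isCompact_closedBall _ _
  set φ : Fin 2 → List (Fin 2) → P → ℝ := fun i I => XW I (w i) with hφ
  have sφ : ∀ i I, Sm (φ i I) := fun i I => (hw.sm i).XW I
  have zφ : ∀ i I, Zc T0 (φ i I) := fun i I => (hw.zc i).XW I
  have zen : ∀ i I, Zc T0 (en (φ i I)) := fun i I p hp => by
    simp [en, (zφ i I).dt p hp, (zφ i I).dx _ p hp]
  set E : ℝ → ℝ := fun r => ∑ i, ∑ I ∈ W3, ∫ x in K, en (φ i I) (r, x) with hE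
  have Ec : Continuous E := by
    refine continuous_finset_sum _ fun i _ => continuous_finset_sum _ fun I _ => ?_
    exact continuous_parametric_integral_of_continuous (f := fun r x => en (φ i I) (r, x))
      (sφ i I).en.cont hK
  have full : ∀ r, T0 ≤ r → r ≤ T1 → ∀ u : P → ℝ, Continuous u → Zc T0 u →
      ∫ x in K, u (r, x) = ∫ x, u (r, x) := by
    intro r h1 h2 u hu hz
    refine setIntegral_eq_integral_of_forall_compl_eq_zero fun x hx => ?_
    exact cone_out' hT h1 (by linarith) hu hz hx
  have Efull : ∀ r, T0 ≤ r → r ≤ T1 → E r = ∑ i, ∑ I ∈ W3, ∫ x, en (φ i I) (r, x) := by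
    intro r h1 h2
    simp only [hE]
    exact Finset.sum_congr rfl fun i _ => Finset.sum_congr rfl fun I _ =>
      full r h1 h2 _ (sφ i I).en.cont (zen i I)
  have En : ∀ r, 0 ≤ E r := fun r => Finset.sum_nonneg fun i _ => Finset.sum_nonneg fun I _ =>
    integral_nonneg fun x => en_nonneg _ _
  have intz : ∀ r, T0 ≤ r → r ≤ T1 → ∀ u : P → ℝ, Continuous u → Zc T0 u →
      Integrable fun x : ℝ × ℝ => u (r, x) := fun r h1 h2 u hu hz =>
    intK hK (hu.comp (by fun_prop)) fun x hx => cone_out' hT h1 (by linarith) hu hz hx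
  have term : ∀ r, T0 ≤ r → r ≤ T1 → ∀ i, ∀ I ∈ W3, ∫ x, en (φ i I) (r, x) ≤ E r := by
    intro r h1 h2 i I hI
    rw [Efull r h1 h2]
    have n1 : ∀ i I, 0 ≤ ∫ x, en (φ i I) (r, x) := fun i I => integral_nonneg fun x => en_nonneg _ _
    exact (Finset.single_le_sum (f := fun I => ∫ x, en (φ i I) (r, x)) (fun I _ => n1 i I) hI).trans
      (Finset.single_le_sum (f := fun i => ∑ I ∈ W3, ∫ x, en (φ i I) (r, x))
        (fun i _ => Finset.sum_nonneg fun I _ => n1 i I) (Finset.mem_univ i))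
  have sqterm : ∀ r, T0 ≤ r → r ≤ T1 → ∀ i, ∀ I ∈ W3, ∫ x, XW I (dt (w i)) (r, x) ^ 2 ≤ E r := by
    intro r h1 h2 i I hI
    refine le_trans ?_ (term r h1 h2 i I hI)
    refine integral_mono (intz r h1 h2 (fun p => XW I (dt (w i)) p ^ 2)
      (((hw.sm i).dt.XW I).cont.pow 2) fun p hp => by simp [(hw.zc i).dt.XW I p hp])
      (intz r h1 h2 _ (sφ i I).en.cont (zen i I)) fun x => ?_
    show XW I (dt (w i)) (r, x) ^ 2 ≤ dt (φ i I) (r, x) ^ 2 + _ + _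
    rw [hφ, dt_XW (hw.sm i)]
    have := sq_nonneg (dx 0 (XW I (w i)) (r, x))
    have := sq_nonneg (dx 1 (XW I (w i)) (r, x))
    simp only; linarith
  have der : ∀ s ∈ Set.Ioo T0 T1, ∃ E', HasDerivAt E E' s ∧ E' ≤ CE * μ * A ^ 2 * E s := by
    intro s hs
    obtain ⟨hs1, hs2⟩ := hs
    set δ := min (s - T0) (T1 - s)
    have hδ : 0 < δ := lt_min (by linarith) (by linarith)
    have hball : ∀ r ∈ Metric.ball s δ, T0 < r ∧ r < T1 := by
      intro r hr
      rw [Metric.mem_ball, Real.dist_eq, lt_min_iff] at hr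
      have a1 := neg_lt_of_abs_lt hr.1
      have a2 := (le_abs_self _).trans_lt hr.2
      constructor <;> linarith
    choose F hF1 hF2 using fun i I => energy_deriv (sφ i I) (Sm.const (1 : ℝ)) (Z := fun _ => 1) hδ hK
      (fun r hr x hx => Or.inr (by
        have h := cone_out (T1 := T1 + 1) hT (hball r hr).1 (by linarith [(hball r hr).2]) hx
        exact ⟨(zφ i I).dt _ h, fun a => (zφ i I).dx a _ h⟩))
      (fun x => (pd_const _ _ _).le)
      (fun x => by
        have : ∀ v, pd v (fun _ : P => (1 : ℝ)) (s, x) = 0 := fun v => pd_const _ _ _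
        simp [dx, dt, this])
    simp only [mul_one] at hF1 hF2
    refine ⟨∑ i, ∑ I ∈ W3, F i I, ?_, ?_⟩
    · have h := HasDerivAt.fun_sum (u := Finset.univ) fun (i : Fin 2) _ =>
        HasDerivAt.fun_sum (u := W3) fun I _ => hF1 i I
      refine h.congr_of_eventuallyEq ?_
      filter_upwards [Metric.ball_mem_nhds s hδ] with r hr
      exact Efull r (hball r hr).1.le (hball r hr).2.le
    · set c := chi T0 T s
      have c0 : 0 ≤ c := chi_nonneg _ _ _
      have c1 : c ≤ 1 := chi_le_one _ _ _
      set v : Fin 2 → ℝ × ℝ → ℝ := fun i x => c * dt (w i) (s, x) with hv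
      have sv : ∀ i, Sm (v i) := fun i => (Sm.const c).mul (sm_slice (hw.sm i).dt s)
      have svK : ∀ i, SC K (v i) := fun i => ⟨sv i, fun x hx => by
        have h := cone_out (T1 := T1 + 1) hT hs1 (by linarith) hx
        simp [hv, (hw.zc i).dt _ h]⟩
      have hAv : ∀ i x, (fun _ => (1 : ℝ)) x * v i x ^ 2 ≤ A ^ 2 := by
        intro i x
        have := hA i (s, x) hs1 hs2
        have e : th T0 T (s, x) * dt (w i) (s, x) = v i x := rfl
        rw [e] at this
        simp only [one_mul]
        rw [← sq_abs]; gcongr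
      have hQ : ∀ i (I : List (Fin 2)), I.length ≤ 3 → ∫ x, DS I (v i) x ^ 2 ≤ E s := by
        intro i I hI
        have e : DS I (v i) = fun x => c * XW I (dt (w i)) (s, x) := by
          rw [hv, DS_cmul (sm_slice (hw.sm i).dt s), DS_slice (hw.sm i).dt]
        rw [e]
        simp only [mul_pow]
        rw [integral_const_mul]
        have h1 := sqterm s hs1.le hs2.le i I (mem_W3.2 hI)
        have h2 : 0 ≤ ∫ x, XW I (dt (w i)) (s, x) ^ 2 := integral_nonneg fun x => sq_nonneg _
        have h3 : c ^ 2 ≤ 1 := pow_le_one₀ c0 c1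
        nlinarith
      have tb : ∀ i, ∀ I ∈ W3, F i I ≤ μ * (10 ^ 3 * A ^ 2) * (∫ x, en (φ i I) (s, x)) +
          μ * (10 ^ 3 * A ^ 2) * E s := by
        intro i I hI
        refine (hF2 i I).trans ?_
        have cb := cubic_bound wt_one hK svK hA0 hAv (Q := E s)
          (by intro i I hI; simpa using hQ i I hI) (1 - i) (1 - i) i I (mem_W3.1 hI)
        set G : P → ℝ := fun p => th T0 T p * dt (w (1 - i)) p * (th T0 T p * dt (w (1 - i)) p * (th T0 T p * dt (w i) p))
        have sth : Sm (th T0 T) := sm_th T0 T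
        have sG : Sm G := (sth.mul (hw.sm _).dt).mul ((sth.mul (hw.sm _).dt).mul (sth.mul (hw.sm _).dt))
        have zG : Zc T0 G := fun p hp => by simp [G, (hw.zc i).dt p hp]
        have eG : DS I (fun x => v (1 - i) x * (v (1 - i) x * v i x)) = fun x => XW I G (s, x) :=
          DS_slice sG s I
        change ∫ x, DS I _ x ^ 2 ≤ _ at cb
        rw [eG] at cb
        have eB : Box (φ i I) = fun p => -μ * XW I G p := by
          rw [hφ, Box_XW (hw.sm i), hw.eq i]; exact XW_cmul sG (-μ) I
        rw [eB, ← integral_const_mul]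
        have ik : Integrable fun x => (10 ^ 3 * A ^ 2) * en (φ i I) (s, x) :=
          (intz s hs1.le hs2.le _ (sφ i I).en.cont (zen i I)).const_mul _
        have iG : Integrable fun x => (10 ^ 3 * A ^ 2)⁻¹ * XW I G (s, x) ^ 2 :=
          (intz s hs1.le hs2.le (fun p => XW I G p ^ 2) ((sG.XW I).cont.pow 2)
            (fun p hp => by simp [zG.XW I p hp])).const_mul _
        have il : Integrable fun x => 2 * (dt (φ i I) (s, x) * (-μ * XW I G (s, x))) :=
          (intz s hs1.le hs2.le (fun p => dt (φ i I) p * (-μ * XW I G p))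
            ((sφ i I).dt.cont.mul (continuous_const.mul (sG.XW I).cont))
            (fun p hp => by simp [zG.XW I p hp])).const_mul _
        have kpos : 0 < 10 ^ 3 * A ^ 2 := by positivity
        calc _ ≤ ∫ x, μ * ((10 ^ 3 * A ^ 2) * en (φ i I) (s, x) + (10 ^ 3 * A ^ 2)⁻¹ * XW I G (s, x) ^ 2) := by
              refine integral_mono il ((ik.add iG).const_mul _) fun x => ?_
              simp only
              set k := 10 ^ 3 * A ^ 2
              set a := dt (φ i I) (s, x)
              set b := XW I G (s, x)
              have e1 : a ^ 2 ≤ en (φ i I) (s, x) := by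
                unfold en
                nlinarith [sq_nonneg (dx 0 (φ i I) (s, x)), sq_nonneg (dx 1 (φ i I) (s, x))]
              have e2 : 0 ≤ k⁻¹ * (k * a + b) ^ 2 := by positivity
              have e3 : k⁻¹ * (k * a + b) ^ 2 = k * a ^ 2 + k⁻¹ * b ^ 2 + 2 * (a * b) := by
                field_simp; ring
              have e4 : k * a ^ 2 ≤ k * en (φ i I) (s, x) := by gcongr
              nlinarith
          _ = μ * (10 ^ 3 * A ^ 2) * (∫ x, en (φ i I) (s, x)) + μ * ((10 ^ 3 * A ^ 2)⁻¹ * ∫ x, XW I G (s, x) ^ 2) := by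
              rw [integral_const_mul, integral_add ik iG, integral_const_mul, integral_const_mul]; ring
          _ ≤ μ * (10 ^ 3 * A ^ 2) * (∫ x, en (φ i I) (s, x)) + μ * ((10 ^ 3 * A ^ 2)⁻¹ * (10 ^ 6 * A ^ 4 * E s)) := by
              gcongr
          _ = _ := by
              have : (10 ^ 3 * A ^ 2)⁻¹ * (10 ^ 6 * A ^ 4 * E s) = 10 ^ 3 * A ^ 2 * E s := by
                field_simp
              rw [this]; ring
      calc ∑ i, ∑ I ∈ W3, F i I ≤ ∑ i, ∑ I ∈ W3, (μ * (10 ^ 3 * A ^ 2) * (∫ x, en (φ i I) (s, x)) +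
          μ * (10 ^ 3 * A ^ 2) * E s) := Finset.sum_le_sum fun i _ => Finset.sum_le_sum fun I hI => tb i I hI
        _ = μ * (10 ^ 3 * A ^ 2) * E s + 2 * W3.card * (μ * (10 ^ 3 * A ^ 2) * E s) := by
            rw [Efull s hs1.le hs2.le]
            simp only [Finset.sum_add_distrib, Finset.sum_const, ← Finset.mul_sum, Finset.card_univ, Fintype.card_fin,
              nsmul_eq_mul]
            push_cast; ring
        _ = _ := by unfold CE; ring
  have Est0 : T0 ≤ T1 → E T0 = Ed0 f g := by
    intro h
    rw [Efull T0 le_rfl h]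
    unfold Ed0
    refine Finset.sum_congr rfl fun i _ => Finset.sum_congr rfl fun I _ => ?_
    have ef : f i = fun x => w i (T0, x) := funext fun x => (hf i x).symm
    have eg : g i = fun x => dt (w i) (T0, x) := funext fun x => (hg i x).symm
    rw [ef, eg, DS_slice (hw.sm i), DS_slice (hw.sm i), DS_slice (hw.sm i).dt]
    simp only [en, hφ, dt_XW (hw.sm i)]
    rfl
  refine (sqterm t ht0 ht1 i I (mem_W3.2 hI)).trans ?_
  set k := CE * μ * A ^ 2
  choose! E' hE' using der
  have hd : ∀ r ∈ Set.Ioo T0 T1, HasDerivAt (fun r => Real.exp (-k * (r - T0)) * E r)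
      (Real.exp (-k * (r - T0)) * (-k) * E r + Real.exp (-k * (r - T0)) * E' r) r := by
    intro r hr
    have h1 : HasDerivAt (fun r : ℝ => -k * (r - T0)) (-k) r := by
      simpa using ((hasDerivAt_id r).sub_const T0).const_mul (-k)
    exact h1.exp.mul (hE' r hr).1
  have anti : AntitoneOn (fun r => Real.exp (-k * (r - T0)) * E r) (Set.Icc T0 T1) := by
    apply antitoneOn_of_deriv_nonpos (convex_Icc _ _)
    · exact Continuous.continuousOn (by fun_prop)
    · rw [interior_Icc]
      exact fun r hr => (hd r hr).differentiableAt.differentiableWithinAt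
    · rw [interior_Icc]
      intro r hr
      rw [(hd r hr).deriv]
      nlinarith [Real.exp_pos (-k * (r - T0)), (hE' r hr).2]
  have := anti ⟨le_rfl, ht0.trans ht1⟩ ⟨ht0, ht1⟩ ht0
  simp only [sub_self, mul_zero, Real.exp_zero, one_mul, Est0 (ht0.trans ht1)] at this
  have h2 : Real.exp (-k * (t - T0)) * Real.exp (k * (t - T0)) = 1 := by
    rw [← Real.exp_add]; simp
  calc E t = (Real.exp (-k * (t - T0)) * E t) * Real.exp (k * (t - T0)) := by
        rw [mul_right_comm, h2, one_mul]
    _ ≤ _ := by gcongr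

end WaveGE

namespace WaveGE

/-! ### Families on the frequency side -/

/-- The frequency space. -/
abbrev X := EuclideanSpace ℝ (Fin 2)

/-- The weight `1 + |ξ|` on the frequency space. -/
def br (ξ : X) : ℝ := 1 + ‖ξ‖

lemma br_one (ξ : X) : 1 ≤ br ξ := by unfold br; linarith [norm_nonneg ξ]
lemma br_pos (ξ : X) : 0 < br ξ := zero_lt_one.trans_le (br_one ξ)
lemma br_cont : Continuous br := by unfold br; fun_prop
lemma br_neg (ξ : X) : br (-ξ) = br ξ := by simp [br]
lemma br_pow_one (ξ : X) (k : ℕ) : 1 ≤ br ξ ^ k := one_le_pow₀ (br_one ξ)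

lemma br_split (ξ η : X) (k : ℕ) : br ξ ^ k ≤ 2 ^ k * (br η ^ k + br (ξ - η) ^ k) := by
  have h : br ξ ≤ br η + br (ξ - η) := by
    have : ‖ξ‖ ≤ ‖η‖ + ‖ξ - η‖ := by simpa using norm_add_le η (ξ - η)
    unfold br; linarith
  have p1 := br_pos η
  have p2 := br_pos (ξ - η)
  rcases le_total (br η) (br (ξ - η)) with h1 | h1
  · calc br ξ ^ k ≤ (2 * br (ξ - η)) ^ k := pow_le_pow_left₀ (br_pos ξ).le (by linarith) k
      _ = 2 ^ k * br (ξ - η) ^ k := mul_pow _ _ _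
      _ ≤ _ := by gcongr; linarith [pow_pos p1 k]
  · calc br ξ ^ k ≤ (2 * br η) ^ k := pow_le_pow_left₀ (br_pos ξ).le (by linarith) k
      _ = 2 ^ k * br η ^ k := mul_pow _ _ _
      _ ≤ _ := by gcongr; linarith [pow_pos p2 k]

lemma br_int : Integrable fun ξ : X => (br ξ ^ 3)⁻¹ := by
  have h := integrable_one_add_norm (E := X) (μ := volume) (r := 3) (by simp; norm_num)
  refine h.congr (Eventually.of_forall fun ξ => ?_)
  simp only [br]
  rw [Real.rpow_neg (by positivity)]
  norm_cast

lemma br_int' (ξ : X) : Integrable fun η : X => (br (ξ - η) ^ 3)⁻¹ :=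
  br_int.comp_sub_left ξ

/-- The mass of the weight `(1 + |ξ|)⁻³`. -/
def I0 : ℝ := ∫ ξ : X, (br ξ ^ 3)⁻¹

lemma I0_nonneg : 0 ≤ I0 := integral_nonneg fun ξ => by have := br_pos ξ; positivity

/-- Convolution on the frequency space. -/
def cv (A B : X → ℂ) (ξ : X) : ℂ := ∫ η, A η * B (ξ - η)

lemma div_br {ξ : X} {z : ℂ} {a : ℝ} {k : ℕ} (h : ‖z‖ * br ξ ^ k ≤ a) : ‖z‖ ≤ a * (br ξ ^ k)⁻¹ := by
  rw [← div_eq_mul_inv, le_div_iff₀ (pow_pos (br_pos ξ) k)]; exact h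

lemma norm_of_br {ξ : X} {z : ℂ} {a : ℝ} {k : ℕ} (h : ‖z‖ * br ξ ^ k ≤ a) : ‖z‖ ≤ a := by
  refine le_trans ?_ h
  exact le_mul_of_one_le_right (norm_nonneg _) (br_pow_one ξ k)

lemma nn_of_br {ξ : X} {z : ℂ} {a : ℝ} {k : ℕ} (h : ‖z‖ * br ξ ^ k ≤ a) : 0 ≤ a :=
  (norm_nonneg z).trans (norm_of_br h)

lemma cv_bound {A B : X → ℂ} {a b ak bk : ℝ} (k : ℕ) (hA : ∀ ξ, ‖A ξ‖ * br ξ ^ 3 ≤ a)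
    (hB : ∀ ξ, ‖B ξ‖ * br ξ ^ 3 ≤ b) (hAk : ∀ ξ, ‖A ξ‖ * br ξ ^ k ≤ ak)
    (hBk : ∀ ξ, ‖B ξ‖ * br ξ ^ k ≤ bk) (ξ : X) :
    ‖cv A B ξ‖ * br ξ ^ k ≤ 2 ^ k * I0 * (ak * b + a * bk) := by
  have a0 := nn_of_br (hA 0)
  have b0 := nn_of_br (hB 0)
  have ak0 := nn_of_br (hAk 0)
  have bk0 := nn_of_br (hBk 0)
  have e : ‖cv A B ξ‖ * br ξ ^ k = ‖∫ η, A η * B (ξ - η) * ((br ξ ^ k : ℝ) : ℂ)‖ := by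
    rw [integral_mul_const, norm_mul, Complex.norm_real, Real.norm_of_nonneg (pow_pos (br_pos ξ) k).le]; rfl
  rw [e]
  refine (norm_integral_le_of_norm_le (g := fun η => 2 ^ k * (ak * b) * (br (ξ - η) ^ 3)⁻¹ +
    2 ^ k * (a * bk) * (br η ^ 3)⁻¹) (((br_int' ξ).const_mul _).add (br_int.const_mul _))
    (Eventually.of_forall fun η => ?_)).trans ?_
  · rw [norm_mul, norm_mul, Complex.norm_real, Real.norm_of_nonneg (pow_pos (br_pos ξ) k).le]
    have h1 := div_br (hA η)
    have h2 := div_br (hB (ξ - η))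
    have n1 := norm_nonneg (A η)
    have n2 := norm_nonneg (B (ξ - η))
    calc ‖A η‖ * ‖B (ξ - η)‖ * br ξ ^ k
        ≤ ‖A η‖ * ‖B (ξ - η)‖ * (2 ^ k * (br η ^ k + br (ξ - η) ^ k)) := by
          gcongr; exact br_split ξ η k
      _ = 2 ^ k * ((‖A η‖ * br η ^ k) * ‖B (ξ - η)‖) + 2 ^ k * (‖A η‖ * (‖B (ξ - η)‖ * br (ξ - η) ^ k)) := by
          ring
      _ ≤ 2 ^ k * (ak * (b * (br (ξ - η) ^ 3)⁻¹)) + 2 ^ k * ((a * (br η ^ 3)⁻¹) * bk) := by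
          have := br_pos η
          gcongr
          · exact hAk η
          · exact mul_nonneg n2 (pow_pos (br_pos _) _).le
          · exact hBk _
      _ = _ := by ring
  · rw [integral_add ((br_int' ξ).const_mul _) (br_int.const_mul _), integral_const_mul, integral_const_mul,
      integral_sub_left_eq_self (fun η : X => (br η ^ 3)⁻¹) volume ξ]
    show _ * I0 + _ * I0 ≤ _
    apply le_of_eq; ring

/-- Families `A i t ξ` of continuous functions which, uniformly in the index `i` and locally uniformly
in the time `t`, decay in `ξ` faster than any power. -/
structure RD {ι : Type} (A : ι → ℝ → X → ℂ) : Prop where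
  cont : ∀ i, Continuous fun q : ℝ × X => A i q.1 q.2
  bd : ∀ (k : ℕ) (R : ℝ), ∃ B, ∀ i t ξ, |t| ≤ R → ‖A i t ξ‖ * br ξ ^ k ≤ B

variable {ι : Type} {A B : ι → ℝ → X → ℂ}

lemma RD.slice (h : RD A) (i : ι) (t : ℝ) : Continuous (A i t) :=
  (h.cont i).comp (by fun_prop : Continuous fun ξ : X => (t, ξ))

lemma RD.tcont (h : RD A) (i : ι) (ξ : X) : Continuous fun t => A i t ξ :=
  (h.cont i).comp (by fun_prop : Continuous fun t : ℝ => (t, ξ))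

lemma RD.int (h : RD A) (i : ι) (t : ℝ) : Integrable (A i t) := by
  obtain ⟨C, hC⟩ := h.bd 3 |t|
  exact (br_int.const_mul C).mono' (h.slice i t).aestronglyMeasurable
    (Eventually.of_forall fun ξ => div_br (hC i t ξ le_rfl))

lemma RD.add (hA : RD A) (hB : RD B) : RD fun i t ξ => A i t ξ + B i t ξ := by
  refine ⟨fun i => (hA.cont i).add (hB.cont i), fun k R => ?_⟩
  obtain ⟨a, ha⟩ := hA.bd k R
  obtain ⟨b, hb⟩ := hB.bd k R
  refine ⟨a + b, fun i t ξ ht => ?_⟩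
  have := pow_pos (br_pos ξ) k
  calc _ ≤ (‖A i t ξ‖ + ‖B i t ξ‖) * br ξ ^ k := by gcongr; exact norm_add_le _ _
    _ ≤ _ := by linarith [ha i t ξ ht, hb i t ξ ht]

/-- Multipliers of polynomial growth. -/
def PG (m : X → ℂ) : Prop := Continuous m ∧ ∃ C j, ∀ ξ, ‖m ξ‖ ≤ C * br ξ ^ j

lemma RD.mulp (hA : RD A) {m : X → ℂ} (hm : PG m) : RD fun i t ξ => m ξ * A i t ξ := by
  obtain ⟨mc, C, j, hC⟩ := hm
  refine ⟨fun i => (mc.comp continuous_snd).mul (hA.cont i), fun k R => ?_⟩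
  obtain ⟨a, ha⟩ := hA.bd (j + k) R
  refine ⟨C * a, fun i t ξ ht => ?_⟩
  have := pow_pos (br_pos ξ) k
  have hj := pow_pos (br_pos ξ) j
  have C0 : 0 ≤ C := by
    have := (norm_nonneg _).trans (hC ξ)
    exact nonneg_of_mul_nonneg_left this hj
  rw [norm_mul]
  calc _ ≤ (C * br ξ ^ j) * ‖A i t ξ‖ * br ξ ^ k := by gcongr; exact hC ξ
    _ = C * (‖A i t ξ‖ * br ξ ^ (j + k)) := by rw [pow_add]; ring
    _ ≤ _ := by gcongr; exact ha i t ξ ht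

lemma RD.time (hA : RD A) {c : ι → ℝ → ℝ} (hc : ∀ i, Continuous (c i))
    (hb : ∀ R, ∃ C, ∀ i t, |t| ≤ R → |c i t| ≤ C) : RD fun i t ξ => (c i t : ℂ) * A i t ξ := by
  refine ⟨fun i => (Complex.continuous_ofReal.comp ((hc i).comp continuous_fst)).mul (hA.cont i), fun k R => ?_⟩
  obtain ⟨a, ha⟩ := hA.bd k R
  obtain ⟨C, hC⟩ := hb R
  refine ⟨C * a, fun i t ξ ht => ?_⟩
  have := pow_pos (br_pos ξ) k
  have C0 := (abs_nonneg _).trans (hC i t ht)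
  rw [norm_mul, Complex.norm_real, Real.norm_eq_abs, mul_assoc]
  gcongr
  · exact hC i t ht
  · exact ha i t ξ ht

lemma cv_cont {a b : ℝ → ℝ} {A B : ℝ → X → ℂ} (cA : Continuous fun q : ℝ × X => A q.1 q.2)
    (cB : Continuous fun q : ℝ × X => B q.1 q.2)
    (hA : ∀ R t ξ, |t| ≤ R → ‖A t ξ‖ * br ξ ^ 3 ≤ a R) (hB : ∀ R t ξ, |t| ≤ R → ‖B t ξ‖ * br ξ ^ 3 ≤ b R) :
    Continuous fun q : ℝ × X => cv (A q.1) (B q.1) q.2 := by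
  rw [continuous_iff_continuousAt]
  intro q
  refine continuousAt_of_dominated (F := fun (q : ℝ × X) η => A q.1 η * B q.1 (q.2 - η))
    (bound := fun η => a (|q.1| + 1) * b (|q.1| + 1) * (br η ^ 3)⁻¹) ?_ ?_ (br_int.const_mul _) ?_
  · refine Eventually.of_forall fun r => Continuous.aestronglyMeasurable ?_
    exact (cA.comp (by fun_prop : Continuous fun η : X => (r.1, η))).mul
      (cB.comp (by fun_prop : Continuous fun η : X => (r.1, r.2 - η)))
  · have h1 : ∀ᶠ r : ℝ × X in 𝓝 q, |r.1| < |q.1| + 1 :=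
      (by fun_prop : Continuous fun r : ℝ × X => |r.1|).continuousAt.eventually_lt continuousAt_const (by linarith)
    filter_upwards [h1] with r hr
    refine Eventually.of_forall fun η => ?_
    have e1 := div_br (hA _ r.1 η hr.le)
    have e2 := norm_of_br (hB _ r.1 (r.2 - η) hr.le)
    have e3 := (norm_nonneg _).trans e1
    rw [norm_mul]
    calc _ ≤ (a (|q.1| + 1) * (br η ^ 3)⁻¹) * b (|q.1| + 1) := by gcongr
      _ = _ := by ring
  · refine Eventually.of_forall fun η => Continuous.continuousAt ?_
    exact (cA.comp (by fun_prop : Continuous fun r : ℝ × X => (r.1, η))).mul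
      (cB.comp (by fun_prop : Continuous fun r : ℝ × X => (r.1, r.2 - η)))

lemma RD.cv (hA : RD A) (hB : RD B) : RD fun i t => cv (A i t) (B i t) := by
  refine ⟨fun i => ?_, fun k R => ?_⟩
  · choose a ha using hA.bd 3
    choose b hb using hB.bd 3
    exact cv_cont (hA.cont i) (hB.cont i) (fun R t ξ h => ha R i t ξ h) (fun R t ξ h => hb R i t ξ h)
  · obtain ⟨a, ha⟩ := hA.bd 3 R
    obtain ⟨b, hb⟩ := hB.bd 3 R
    obtain ⟨a', ha'⟩ := hA.bd k R
    obtain ⟨b', hb'⟩ := hB.bd k R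
    exact ⟨_, fun i t ξ h => cv_bound k (fun ξ => ha i t ξ h) (fun ξ => hb i t ξ h)
      (fun ξ => ha' i t ξ h) (fun ξ => hb' i t ξ h) ξ⟩

lemma RD.cv_int (hA : RD A) (hB : RD B) (i j : ι) (s t : ℝ) (ξ : X) :
    Integrable fun η => A i s η * B j t (ξ - η) := by
  obtain ⟨b, hb⟩ := hB.bd 3 |t|
  exact (hA.int i s).mul_bdd (c := b) ((hB.slice j t).comp (by fun_prop)).aestronglyMeasurable
    (Eventually.of_forall fun η => norm_of_br (hb j t _ le_rfl))

lemma cv_deriv {A' B' : ι → ℝ → X → ℂ} (hA : RD A) (hB : RD B) (hA' : RD A') (hB' : RD B')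
    (dA : ∀ i t ξ, HasDerivAt (fun s => A i s ξ) (A' i t ξ) t)
    (dB : ∀ i t ξ, HasDerivAt (fun s => B i s ξ) (B' i t ξ) t) (i : ι) (t : ℝ) (ξ : X) :
    HasDerivAt (fun s => WaveGE.cv (A i s) (B i s) ξ)
      (WaveGE.cv (A' i t) (B i t) ξ + WaveGE.cv (A i t) (B' i t) ξ) t := by
  have e : WaveGE.cv (A' i t) (B i t) ξ + WaveGE.cv (A i t) (B' i t) ξ =
      ∫ η, (A' i t η * B i t (ξ - η) + A i t η * B' i t (ξ - η)) :=
    (integral_add (hA'.cv_int hB i i t t ξ) (hA.cv_int hB' i i t t ξ)).symm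
  rw [e]
  obtain ⟨a, ha⟩ := hA.bd 3 (|t| + 1)
  obtain ⟨b, hb⟩ := hB.bd 3 (|t| + 1)
  obtain ⟨a', ha'⟩ := hA'.bd 3 (|t| + 1)
  obtain ⟨b', hb'⟩ := hB'.bd 3 (|t| + 1)
  refine (hasDerivAt_integral_of_dominated_loc_of_deriv_le (F := fun s η => A i s η * B i s (ξ - η))
    (F' := fun s η => A' i s η * B i s (ξ - η) + A i s η * B' i s (ξ - η))
    (bound := fun η => (a' * b + a * b') * (br η ^ 3)⁻¹) (Metric.ball_mem_nhds t one_pos)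
    (Eventually.of_forall fun s => (hA.cv_int hB i i s s ξ).aestronglyMeasurable) (hA.cv_int hB i i t t ξ)
    ((hA'.cv_int hB i i t t ξ).add (hA.cv_int hB' i i t t ξ)).aestronglyMeasurable ?_ (br_int.const_mul _) ?_).2
  · refine Eventually.of_forall fun η s hs => ?_
    have hs' : |s| ≤ |t| + 1 := by
      rw [Metric.mem_ball, Real.dist_eq] at hs
      have := abs_sub_abs_le_abs_sub s t
      linarith
    have e1 := div_br (ha i s η hs')
    have e2 := div_br (ha' i s η hs')
    have e3 := norm_of_br (hb i s (ξ - η) hs')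
    have e4 := norm_of_br (hb' i s (ξ - η) hs')
    have n1 := (norm_nonneg _).trans e1
    have n2 := (norm_nonneg _).trans e2
    refine (norm_add_le _ _).trans ?_
    rw [norm_mul, norm_mul]
    calc _ ≤ (a' * (br η ^ 3)⁻¹) * b + (a * (br η ^ 3)⁻¹) * b' := by gcongr
      _ = _ := by ring
  · exact Eventually.of_forall fun η s _ => (dA i s η).mul (dB i s (ξ - η))

/-- Families with `n` time derivatives of class `RD`. -/
def RN : ℕ → (ι → ℝ → X → ℂ) → Prop
  | 0, A => RD A
  | n + 1, A => RD A ∧ ∃ A', (∀ i t ξ, HasDerivAt (fun s => A i s ξ) (A' i t ξ) t) ∧ RN n A'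

lemma RN.rd : ∀ {n : ℕ} {A : ι → ℝ → X → ℂ}, RN n A → RD A
  | 0, _, h => h
  | _ + 1, _, h => h.1

lemma RN.down : ∀ {n : ℕ} {A : ι → ℝ → X → ℂ}, RN (n + 1) A → RN n A
  | 0, _, h => h.1
  | n + 1, _, ⟨h, A', h1, h2⟩ => ⟨h, A', h1, h2.down⟩

lemma RN.add : ∀ {n : ℕ} {A B : ι → ℝ → X → ℂ}, RN n A → RN n B → RN n fun i t ξ => A i t ξ + B i t ξ
  | 0, _, _, h, h' => RD.add h h'
  | n + 1, _, _, ⟨h, A', h1, h2⟩, ⟨g, B', g1, g2⟩ =>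
    ⟨h.add g, _, fun i t ξ => (h1 i t ξ).add (g1 i t ξ), h2.add g2⟩

lemma RN.mulp {m : X → ℂ} (hm : PG m) : ∀ {n : ℕ} {A : ι → ℝ → X → ℂ}, RN n A →
    RN n fun i t ξ => m ξ * A i t ξ
  | 0, _, h => RD.mulp h hm
  | n + 1, _, ⟨h, A', h1, h2⟩ => ⟨h.mulp hm, _, fun i t ξ => (h1 i t ξ).const_mul _, h2.mulp hm⟩

lemma RN.cmul {c : ι → ℝ} (hb : ∃ C, ∀ i, |c i| ≤ C) : ∀ {n : ℕ} {A : ι → ℝ → X → ℂ}, RN n A →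
    RN n fun i t ξ => (c i : ℂ) * A i t ξ
  | 0, _, h => RD.time (c := fun i _ => c i) h (fun i => continuous_const) fun _ => hb.imp fun C h i _ _ => h i
  | n + 1, _, ⟨h, A', h1, h2⟩ => ⟨RD.time (c := fun i _ => c i) h (fun i => continuous_const)
      fun _ => hb.imp fun C h i _ _ => h i, _, fun i t ξ => (h1 i t ξ).const_mul _, h2.cmul hb⟩

lemma cbd {c : ℝ → ℝ} (hc : Continuous c) (R : ℝ) : ∃ C, ∀ (i : ι) t, |t| ≤ R → |c t| ≤ C := by
  obtain ⟨C, hC⟩ := (isCompact_Icc (a := -R) (b := R)).exists_bound_of_continuousOn hc.continuousOn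
  exact ⟨C, fun i t ht => hC t (abs_le.1 ht)⟩

lemma RN.time : ∀ {n : ℕ} {A : ι → ℝ → X → ℂ} {c : ℝ → ℝ}, ContDiff ℝ (⊤ : ℕ∞) c → RN n A →
    RN n fun i t ξ => (c t : ℂ) * A i t ξ
  | 0, _, c, hc, h => RD.time (c := fun i => c) h (fun i => hc.continuous) (cbd hc.continuous)
  | n + 1, A, c, hc, ⟨h, A', h1, h2⟩ => by
    have hd : ContDiff ℝ (⊤ : ℕ∞) (deriv c) := (contDiff_infty_iff_deriv.1 hc).2
    refine ⟨RD.time (c := fun i => c) h (fun i => hc.continuous) (cbd hc.continuous),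
      fun i t ξ => ((deriv c t : ℝ) : ℂ) * A i t ξ + (c t : ℂ) * A' i t ξ, fun i t ξ => ?_,
      RN.add (RN.time hd (RN.down ⟨h, A', h1, h2⟩)) (RN.time hc h2)⟩
    have h3 : HasDerivAt c (deriv c t) t := (hc.differentiable (by simp) t).hasDerivAt
    exact h3.ofReal_comp.mul (h1 i t ξ)

lemma RN.cv : ∀ {n : ℕ} {A B : ι → ℝ → X → ℂ}, RN n A → RN n B → RN n fun i t => WaveGE.cv (A i t) (B i t)
  | 0, _, _, h, h' => RD.cv h h'
  | n + 1, A, B, ⟨h, A', h1, h2⟩, ⟨g, B', g1, g2⟩ =>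
    ⟨h.cv g, _, cv_deriv h g h2.rd g2.rd h1 g1,
      (RN.cv h2 (RN.down ⟨g, B', g1, g2⟩)).add (RN.cv (RN.down ⟨h, A', h1, h2⟩) g2)⟩

end WaveGE

namespace WaveGE

/-! ### Synthesis of space-time functions -/

/-- The exponential kernel of the Fourier transform. -/
def ck (ξ : X) (x : ℝ × ℝ) : ℂ := Complex.exp (((-(2 * π * (ξ 0 * x.1 + ξ 1 * x.2)) : ℝ) : ℂ) * Complex.I)

lemma ck_norm (ξ : X) (x : ℝ × ℝ) : ‖ck ξ x‖ = 1 := Complex.norm_exp_ofReal_mul_I _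

lemma ck_cont : Continuous fun q : X × (ℝ × ℝ) => ck q.1 q.2 := by
  unfold ck; fun_prop

/-- The Fourier transform, as a function on the physical plane. -/
def II (A : X → ℂ) (x : ℝ × ℝ) : ℂ := ∫ ξ, ck ξ x * A ξ

lemma II_int {A : X → ℂ} (hA : Integrable A) (x : ℝ × ℝ) : Integrable fun ξ => ck ξ x * A ξ :=
  hA.bdd_mul (c := 1) (ck_cont.comp (by fun_prop : Continuous fun ξ : X => (ξ, x))).aestronglyMeasurable
    (Eventually.of_forall fun ξ => (ck_norm ξ x).le)

variable {ι : Type} {A B : ι → ℝ → X → ℂ}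

/-- The space-time function synthesized from a frequency family. -/
def JC (A : ι → ℝ → X → ℂ) (i : ι) (p : P) : ℂ := II (A i p.1) p.2

/-- The symbol of `∂_a`. -/
def sy (a : Fin 2) (ξ : X) : ℂ := ((-(2 * π * ξ a) : ℝ) : ℂ) * Complex.I

lemma coord_le (ξ : X) (a : Fin 2) : |ξ a| ≤ ‖ξ‖ := by
  have := PiLp.norm_apply_le ξ a
  simpa using this

lemma sy_PG (a : Fin 2) : PG (sy a) := by
  refine ⟨by unfold sy; fun_prop, 2 * π, 1, fun ξ => ?_⟩
  have h1 := coord_le ξ a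
  have h2 := Real.pi_pos
  simp only [sy, norm_mul, Complex.norm_I, Complex.norm_real, mul_one, norm_neg, pow_one, Real.norm_eq_abs,
    abs_of_pos h2, abs_two]
  unfold br
  gcongr; linarith

lemma JC_cont (hA : RD A) (i : ι) : Continuous (JC A i) := by
  rw [continuous_iff_continuousAt]
  intro q
  obtain ⟨a, ha⟩ := hA.bd 3 (|q.1| + 1)
  refine continuousAt_of_dominated (F := fun (q : P) ξ => ck ξ q.2 * A i q.1 ξ)
    (bound := fun ξ => a * (br ξ ^ 3)⁻¹) ?_ ?_ (br_int.const_mul _) ?_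
  · exact Eventually.of_forall fun r => (II_int (hA.int i r.1) r.2).aestronglyMeasurable
  · have h1 : ∀ᶠ r : P in 𝓝 q, |r.1| < |q.1| + 1 :=
      (by fun_prop : Continuous fun r : P => |r.1|).continuousAt.eventually_lt continuousAt_const (by linarith)
    filter_upwards [h1] with r hr
    refine Eventually.of_forall fun η => ?_
    rw [norm_mul, ck_norm, one_mul]
    exact div_br (ha i r.1 η hr.le)
  · refine Eventually.of_forall fun η => Continuous.continuousAt ?_
    exact (ck_cont.comp (by fun_prop : Continuous fun r : P => (η, r.2))).mul
      ((hA.cont i).comp (by fun_prop : Continuous fun r : P => (r.1, η)))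

/-- The linear map sending a complex number `z` to the differential `l · z`. -/
def SR (l : P →L[ℝ] ℝ) : ℂ →L[ℝ] (P →L[ℝ] ℂ) := ContinuousLinearMap.smulRightL ℝ P ℂ l

lemma SR_apply (l : P →L[ℝ] ℝ) (z : ℂ) (v : P) : SR l z v = (l v : ℂ) * z := by
  simp [SR, ContinuousLinearMap.smulRightL]

/-- The time coordinate. -/
def lt' : P →L[ℝ] ℝ := ContinuousLinearMap.fst ℝ ℝ (ℝ × ℝ)
/-- The first space coordinate. -/
def l0' : P →L[ℝ] ℝ := (ContinuousLinearMap.fst ℝ ℝ ℝ).comp (ContinuousLinearMap.snd ℝ ℝ (ℝ × ℝ))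
/-- The second space coordinate. -/
def l1' : P →L[ℝ] ℝ := (ContinuousLinearMap.snd ℝ ℝ ℝ).comp (ContinuousLinearMap.snd ℝ ℝ (ℝ × ℝ))

lemma ck_deriv (ξ : X) {f : ℝ → ℂ} {f' : ℂ} (p : P) (h : HasDerivAt f f' p.1) :
    HasFDerivAt (fun q : P => ck ξ q.2 * f q.1)
      (SR lt' (ck ξ p.2 * f') + SR l0' (ck ξ p.2 * (sy 0 ξ * f p.1)) + SR l1' (ck ξ p.2 * (sy 1 ξ * f p.1))) p := by
  have h1 : HasFDerivAt (fun q : P => ck ξ q.2) (ck ξ p.2 • (SR l0' (sy 0 ξ) + SR l1' (sy 1 ξ))) p := by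
    have e : (fun q : P => ck ξ q.2) = fun q => Complex.exp ((SR l0' (sy 0 ξ) + SR l1' (sy 1 ξ)) q) := by
      funext q
      simp only [ck, ContinuousLinearMap.add_apply, SR_apply, sy, l0', l1']
      congr 1
      simp; ring
    have e2 : ck ξ p.2 = Complex.exp ((SR l0' (sy 0 ξ) + SR l1' (sy 1 ξ)) p) := congrFun e p
    rw [e, e2]
    exact (ContinuousLinearMap.hasFDerivAt _).cexp
  have h2 : HasFDerivAt (fun q : P => f q.1) (SR lt' f') p := by
    have := h.hasFDerivAt.comp p (hasFDerivAt_fst (𝕜 := ℝ) (E := ℝ) (F := ℝ × ℝ) (p := p))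
    refine this.congr_fderiv ?_
    ext <;> simp [SR_apply, lt']
  refine (h1.mul h2).congr_fderiv ?_
  refine ContinuousLinearMap.ext fun v => ?_
  simp only [ContinuousLinearMap.add_apply, ContinuousLinearMap.smul_apply, SR_apply, smul_eq_mul]
  ring

lemma JC_deriv {A' : ι → ℝ → X → ℂ} (hA : RD A) (hA' : RD A')
    (dA : ∀ i t ξ, HasDerivAt (fun s => A i s ξ) (A' i t ξ) t) (i : ι) (p : P) :
    HasFDerivAt (JC A i) (SR lt' (JC A' i p) + SR l0' (JC (fun i t ξ => sy 0 ξ * A i t ξ) i p) +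
      SR l1' (JC (fun i t ξ => sy 1 ξ * A i t ξ) i p)) p := by
  have h0 := hA.mulp (sy_PG 0)
  have h1 := hA.mulp (sy_PG 1)
  set F' : P → X → (P →L[ℝ] ℂ) := fun q ξ => SR lt' (ck ξ q.2 * A' i q.1 ξ) + SR l0' (ck ξ q.2 * (sy 0 ξ * A i q.1 ξ)) +
    SR l1' (ck ξ q.2 * (sy 1 ξ * A i q.1 ξ))
  have it := II_int (hA'.int i p.1) p.2
  have i0 := II_int (h0.int i p.1) p.2
  have i1 := II_int (h1.int i p.1) p.2
  have jt := (SR lt').integrable_comp it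
  have j0 := (SR l0').integrable_comp i0
  have j1 := (SR l1').integrable_comp i1
  have e : SR lt' (JC A' i p) + SR l0' (JC (fun i t ξ => sy 0 ξ * A i t ξ) i p) +
      SR l1' (JC (fun i t ξ => sy 1 ξ * A i t ξ) i p) = ∫ ξ, F' p ξ := by
    have e0 : ∫ ξ, F' p ξ = (∫ ξ, SR lt' (ck ξ p.2 * A' i p.1 ξ)) + (∫ ξ, SR l0' (ck ξ p.2 * (sy 0 ξ * A i p.1 ξ))) +
        ∫ ξ, SR l1' (ck ξ p.2 * (sy 1 ξ * A i p.1 ξ)) := by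
      exact (integral_add (jt.add j0) j1).trans (congrArg (fun z => z + _) (integral_add jt j0))
    rw [e0, (SR lt').integral_comp_comm it, (SR l0').integral_comp_comm i0, (SR l1').integral_comp_comm i1]
    rfl
  rw [e]
  obtain ⟨a, ha⟩ := hA'.bd 3 (|p.1| + 1)
  obtain ⟨b, hb⟩ := h0.bd 3 (|p.1| + 1)
  obtain ⟨c, hc⟩ := h1.bd 3 (|p.1| + 1)
  refine hasFDerivAt_integral_of_dominated_of_fderiv_le (F := fun (q : P) ξ => ck ξ q.2 * A i q.1 ξ) (F' := F')
    (bound := fun ξ => (‖SR lt'‖ * a + ‖SR l0'‖ * b + ‖SR l1'‖ * c) * (br ξ ^ 3)⁻¹) (Metric.ball_mem_nhds p one_pos)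
    (Eventually.of_forall fun q => (II_int (hA.int i q.1) q.2).aestronglyMeasurable) (II_int (hA.int i p.1) p.2)
    ((jt.add j0).add j1).aestronglyMeasurable ?_ (br_int.const_mul _) ?_
  · refine Eventually.of_forall fun ξ q hq => ?_
    have hs' : |q.1| ≤ |p.1| + 1 := by
      rw [Metric.mem_ball, dist_eq_norm] at hq
      have h1 := abs_sub_abs_le_abs_sub q.1 p.1
      have h2 := norm_fst_le (q - p)
      rw [Real.norm_eq_abs] at h2
      have : (q - p).1 = q.1 - p.1 := rfl
      rw [this] at h2
      linarith
    have key : ∀ (l : P →L[ℝ] ℝ) (z : ℂ) (a : ℝ), ‖z‖ * br ξ ^ 3 ≤ a →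
        ‖SR l (ck ξ q.2 * z)‖ ≤ ‖SR l‖ * a * (br ξ ^ 3)⁻¹ := by
      intro l z a h
      refine ((SR l).le_opNorm _).trans ?_
      rw [norm_mul, ck_norm, one_mul, mul_assoc]
      gcongr; exact div_br h
    refine (norm_add_le _ _).trans ((add_le_add (norm_add_le _ _) le_rfl).trans ?_)
    have k1 := key lt' _ _ (ha i q.1 ξ hs')
    have k2 := key l0' _ _ (hb i q.1 ξ hs')
    have k3 := key l1' _ _ (hc i q.1 ξ hs')
    calc _ ≤ _ := add_le_add (add_le_add k1 k2) k3
      _ = _ := by ring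
  · exact Eventually.of_forall fun ξ q _ => ck_deriv ξ q (dA i q.1 ξ)

/-- Families which are smooth in time with all time derivatives of class `RD`. -/
def RS (A : ι → ℝ → X → ℂ) : Prop := ∀ n, RN n A

lemma RS.rd (h : RS A) : RD A := h 0

lemma RS.der (h : RS A) : ∃ A', (∀ i t ξ, HasDerivAt (fun s => A i s ξ) (A' i t ξ) t) ∧ RS A' := by
  obtain ⟨h0, A', h1, h2⟩ := h 1
  refine ⟨A', h1, fun n => ?_⟩
  obtain ⟨_, A2, g1, g2⟩ := h (n + 1)
  have : A' = A2 := by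
    funext i t ξ; exact (h1 i t ξ).unique (g1 i t ξ)
  rw [this]; exact g2

lemma RS.mulp {m : X → ℂ} (hm : PG m) (h : RS A) : RS fun i t ξ => m ξ * A i t ξ := fun n => (h n).mulp hm
lemma RS.add (h : RS A) (h' : RS B) : RS fun i t ξ => A i t ξ + B i t ξ := fun n => (h n).add (h' n)
lemma RS.cv (h : RS A) (h' : RS B) : RS fun i t => WaveGE.cv (A i t) (B i t) := fun n => (h n).cv (h' n)

lemma JC_smooth_aux (n : ℕ) : ∀ {A : ι → ℝ → X → ℂ}, RS A → ∀ i, ContDiff ℝ n (JC A i) := by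
  induction n with
  | zero => intro A hA i; exact contDiff_zero.2 (JC_cont hA.rd i)
  | succ n ih =>
    intro A hA i
    obtain ⟨A', h1, h2⟩ := hA.der
    have hd := JC_deriv hA.rd h2.rd h1 i
    have := (contDiff_succ_iff_fderiv (𝕜 := ℝ) (n := (n : WithTop ℕ∞)) (f := JC A i)).2
      ⟨fun p => (hd p).differentiableAt, by simp, ?_⟩
    · exact_mod_cast this
    have e : fderiv ℝ (JC A i) = fun p => SR lt' (JC A' i p) + SR l0' (JC (fun i t ξ => sy 0 ξ * A i t ξ) i p) +
      SR l1' (JC (fun i t ξ => sy 1 ξ * A i t ξ) i p) := funext fun p => (hd p).fderiv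
    rw [e]
    exact (((SR lt').contDiff.comp (ih h2 i)).add ((SR l0').contDiff.comp (ih (hA.mulp (sy_PG 0)) i))).add
      ((SR l1').contDiff.comp (ih (hA.mulp (sy_PG 1)) i))

/-- The real part of the synthesized function. -/
def J (A : ι → ℝ → X → ℂ) (i : ι) (p : P) : ℝ := (JC A i p).re

lemma RS.sm (h : RS A) (i : ι) : Sm (J A i) := by
  have : ContDiff ℝ (⊤ : ℕ∞) (JC A i) := contDiff_infty.2 fun n => JC_smooth_aux n h i
  exact Complex.reCLM.contDiff.comp this

lemma J_fderiv {A' : ι → ℝ → X → ℂ} (hA : RS A) (hA' : RS A')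
    (dA : ∀ i t ξ, HasDerivAt (fun s => A i s ξ) (A' i t ξ) t) (i : ι) (p v : P) :
    pd v (J A i) p = v.1 * J A' i p + v.2.1 * J (fun i t ξ => sy 0 ξ * A i t ξ) i p +
      v.2.2 * J (fun i t ξ => sy 1 ξ * A i t ξ) i p := by
  have h := Complex.reCLM.hasFDerivAt.comp p (JC_deriv hA.rd hA'.rd dA i p)
  have e : fderiv ℝ (J A i) p = _ := h.fderiv
  rw [pd, e]
  simp [SR_apply, lt', l0', l1', J]

lemma J_dt {A' : ι → ℝ → X → ℂ} (hA : RS A) (hA' : RS A')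
    (dA : ∀ i t ξ, HasDerivAt (fun s => A i s ξ) (A' i t ξ) t) (i : ι) : dt (J A i) = J A' i := by
  funext p; rw [dt, J_fderiv hA hA' dA]; simp

lemma J_dx (hA : RS A) (i : ι) (a : Fin 2) : dx a (J A i) = J (fun i t ξ => sy a ξ * A i t ξ) i := by
  obtain ⟨A', h1, h2⟩ := hA.der
  funext p; rw [dx, J_fderiv hA h2 h1]
  revert a; apply fin2 <;> simp [bv]

/-- Families of functions bounded on bounded sets uniformly in the index, with `n` derivatives. -/
def UB : ℕ → (ι → P → ℝ) → Prop
  | 0, u => (∀ i, Sm (u i)) ∧ ∀ R, ∃ C, ∀ i p, ‖p‖ ≤ R → |u i p| ≤ C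
  | n + 1, u => ((∀ i, Sm (u i)) ∧ ∀ R, ∃ C, ∀ i p, ‖p‖ ≤ R → |u i p| ≤ C) ∧
      UB n (fun i => dt (u i)) ∧ ∀ a, UB n fun i => dx a (u i)

lemma UB.zero : ∀ {n : ℕ} {u : ι → P → ℝ}, UB n u → (∀ i, Sm (u i)) ∧ ∀ R, ∃ C, ∀ i p, ‖p‖ ≤ R → |u i p| ≤ C
  | 0, _, h => h
  | _ + 1, _, h => h.1

lemma UB.down : ∀ {n : ℕ} {u : ι → P → ℝ}, UB (n + 1) u → UB n u
  | 0, _, h => h.1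
  | _ + 1, _, h => ⟨h.1, h.2.1.down, fun a => (h.2.2 a).down⟩

lemma ub_add {u v : ι → P → ℝ} (h : (∀ i, Sm (u i)) ∧ ∀ R, ∃ C, ∀ i p, ‖p‖ ≤ R → |u i p| ≤ C)
    (g : (∀ i, Sm (v i)) ∧ ∀ R, ∃ C, ∀ i p, ‖p‖ ≤ R → |v i p| ≤ C) :
    (∀ i, Sm fun p => u i p + v i p) ∧ ∀ R, ∃ C, ∀ i p, ‖p‖ ≤ R → |u i p + v i p| ≤ C := by
  refine ⟨fun i => (h.1 i).add (g.1 i), fun R => ?_⟩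
  obtain ⟨a, ha⟩ := h.2 R
  obtain ⟨b, hb⟩ := g.2 R
  exact ⟨a + b, fun i p hp => (abs_add_le _ _).trans (add_le_add (ha i p hp) (hb i p hp))⟩

lemma ub_mul {u v : ι → P → ℝ} (h : (∀ i, Sm (u i)) ∧ ∀ R, ∃ C, ∀ i p, ‖p‖ ≤ R → |u i p| ≤ C)
    (g : (∀ i, Sm (v i)) ∧ ∀ R, ∃ C, ∀ i p, ‖p‖ ≤ R → |v i p| ≤ C) :
    (∀ i, Sm fun p => u i p * v i p) ∧ ∀ R, ∃ C, ∀ i p, ‖p‖ ≤ R → |u i p * v i p| ≤ C := by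
  refine ⟨fun i => (h.1 i).mul (g.1 i), fun R => ?_⟩
  obtain ⟨a, ha⟩ := h.2 R
  obtain ⟨b, hb⟩ := g.2 R
  refine ⟨a * b, fun i p hp => ?_⟩
  rw [abs_mul]
  have := (abs_nonneg _).trans (ha i p hp)
  exact mul_le_mul (ha i p hp) (hb i p hp) (abs_nonneg _) this

lemma UB.add : ∀ {n : ℕ} {u v : ι → P → ℝ}, UB n u → UB n v → UB n fun i p => u i p + v i p
  | 0, _, _, h, g => ub_add h g
  | n + 1, u, v, h, g => by
    have e : ∀ w i, pd w (fun p => u i p + v i p) = fun p => pd w (u i) p + pd w (v i) p := fun w i =>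
      funext fun p => pd_add (h.zero.1 i) (g.zero.1 i) w p
    refine ⟨ub_add h.1 g.1, ?_, fun a => ?_⟩
    · simp only [dt, e]; exact h.2.1.add g.2.1
    · simp only [dx, e]; exact (h.2.2 a).add (g.2.2 a)

lemma UB.mul : ∀ {n : ℕ} {u v : ι → P → ℝ}, UB n u → UB n v → UB n fun i p => u i p * v i p
  | 0, _, _, h, g => ub_mul h g
  | n + 1, u, v, h, g => by
    have e : ∀ w i, pd w (fun p => u i p * v i p) = fun p => u i p * pd w (v i) p + pd w (u i) p * v i p := fun w i =>
      funext fun p => pd_mul (h.zero.1 i) (g.zero.1 i) w p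
    refine ⟨ub_mul h.1 g.1, ?_, fun a => ?_⟩
    · simp only [dt, e]; exact (h.down.mul g.2.1).add (h.2.1.mul g.down)
    · simp only [dx, e]; exact (h.down.mul (g.2.2 a)).add ((h.2.2 a).mul g.down)

lemma UB.const (c : ℝ) : ∀ n, UB n fun (_ : ι) (_ : P) => c
  | 0 => ⟨fun i => Sm.const c, fun R => ⟨|c|, fun _ _ _ => le_rfl⟩⟩
  | n + 1 => by
    have e : ∀ w : P, pd w (fun _ : P => c) = fun _ => 0 := fun w => funext fun p => pd_const _ _ _
    refine ⟨⟨fun i => Sm.const c, fun R => ⟨|c|, fun _ _ _ => le_rfl⟩⟩, ?_, fun a => ?_⟩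
    · simp only [dt, e]; exact UB.const 0 n
    · simp only [dx, e]; exact UB.const 0 n

lemma UB.lin (l : P →L[ℝ] ℝ) (n : ℕ) : UB n fun (_ : ι) (p : P) => l p := by
  have e : ∀ w, pd w (fun p : P => l p) = fun _ => l w := fun w => by
    funext p; simp only [pd]; rw [show (fun p : P => l p) = l from rfl, l.fderiv]
  have b : (∀ i : ι, Sm fun p : P => l p) ∧ ∀ R, ∃ C, ∀ (i : ι) (p : P), ‖p‖ ≤ R → |l p| ≤ C :=
    ⟨fun i => l.contDiff, fun R => ⟨‖l‖ * R, fun i p hp => (l.le_opNorm p).trans (by gcongr)⟩⟩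
  cases n with
  | zero => exact b
  | succ n =>
    refine ⟨b, ?_, fun a => ?_⟩
    · simp only [dt, e]; exact UB.const _ n
    · simp only [dx, e]; exact UB.const _ n

lemma UB.LW {u : ι → P → ℝ} (h : ∀ n, UB n u) : ∀ (I : List (Fin 2)) (n : ℕ), UB n fun i => LW I (u i)
  | [], n => h n
  | a :: I, n => by
    have h1 := UB.LW h I (n + 1)
    have l : ∀ m, UB m fun (_ : ι) (p : P) => xa a p.2 := by
      intro m; revert a; apply fin2
      · simpa [xa, l0'] using UB.lin (ι := ι) l0' m
      · simpa [xa, l1'] using UB.lin (ι := ι) l1' m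
    exact ((UB.lin lt' n).mul (h1.2.2 a)).add ((l n).mul h1.2.1)

lemma RS.ub (n : ℕ) : ∀ {A : ι → ℝ → X → ℂ}, RS A → UB n (J A) := by
  have b : ∀ {A : ι → ℝ → X → ℂ}, RS A → (∀ i, Sm (J A i)) ∧ ∀ R, ∃ C, ∀ i p, ‖p‖ ≤ R → |J A i p| ≤ C := by
    intro A hA
    refine ⟨hA.sm, fun R => ?_⟩
    obtain ⟨a, ha⟩ := hA.rd.bd 3 R
    refine ⟨a * I0, fun i p hp => ?_⟩
    have h1 : |p.1| ≤ R := (norm_fst_le p).trans hp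
    refine (Complex.abs_re_le_norm _).trans ?_
    refine (norm_integral_le_of_norm_le (br_int.const_mul a) (Eventually.of_forall fun ξ => ?_)).trans_eq
      (integral_const_mul _ _)
    rw [norm_mul, ck_norm, one_mul]
    exact div_br (ha i p.1 ξ h1)
  induction n with
  | zero => intro A hA; exact b hA
  | succ n ih =>
    intro A hA
    obtain ⟨A', h1, h2⟩ := hA.der
    refine ⟨b hA, ?_, fun a => ?_⟩
    · simp only [J_dt hA h2 h1]; exact ih h2
    · simp only [J_dx hA]; exact ih (hA.mulp (sy_PG a))

end WaveGE

namespace WaveGE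

/-! ### Fourier inversion for the data -/

open FourierTransform

/-- The identification of the plane with the Euclidean plane. -/
def ee (x : ℝ × ℝ) : X := WithLp.toLp 2 ![x.1, x.2]

lemma ee_zero (x : ℝ × ℝ) : ee x 0 = x.1 := rfl
lemma ee_one (x : ℝ × ℝ) : ee x 1 = x.2 := rfl
lemma ee_eq (ξ : X) : ee (ξ 0, ξ 1) = ξ := by
  ext a; revert a; apply fin2 <;> rfl

lemma ee_mp : MeasurePreserving ee := by
  have h1 := PiLp.volume_preserving_toLp (Fin 2)
  have h2 := (volume_preserving_finTwoArrow ℝ).symm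
  have e : ee = WithLp.toLp 2 ∘ ⇑(MeasurableEquiv.finTwoArrow (α := ℝ)).symm := by
    funext x; ext a; revert a; apply fin2 <;> rfl
  rw [e]
  exact h1.comp h2

lemma ee_emb : MeasurableEmbedding ee := by
  have h1 := (MeasurableEquiv.toLp 2 (Fin 2 → ℝ)).measurableEmbedding
  have h2 := (MeasurableEquiv.finTwoArrow (α := ℝ)).symm.measurableEmbedding
  have e : ee = ⇑(MeasurableEquiv.toLp 2 (Fin 2 → ℝ)) ∘ ⇑(MeasurableEquiv.finTwoArrow (α := ℝ)).symm := by
    funext x; ext a; revert a; apply fin2 <;> rfl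
  rw [e]
  exact h1.comp h2

lemma II_eq (A : X → ℂ) (x : ℝ × ℝ) : II A x = 𝓕 A (ee x) := by
  rw [Real.fourier_eq']
  unfold II ck
  congr 1; funext ξ
  rw [smul_eq_mul, PiLp.inner_apply, Fin.sum_univ_two]
  congr 3
  simp [ee_zero, ee_one]; ring

lemma II_cv {A B : X → ℂ} (hA : Integrable A) (hB : Integrable B) (x : ℝ × ℝ) :
    II (cv A B) x = II A x * II B x := by
  rw [II_eq, II_eq, II_eq, ← Real.fourier_mul_convolution_eq hA hB]
  rfl

lemma inv_bound {A : X → ℂ} (hc : Continuous A) (hA : Integrable A) (hI : Integrable (II A)) (ξ : X) :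
    ‖A ξ‖ ≤ ∫ x, ‖II A x‖ := by
  have e : II A = 𝓕 A ∘ ee := funext fun x => II_eq A x
  have h1 : Integrable (𝓕 A) := by
    rw [e] at hI
    exact (ee_mp.integrable_comp_emb ee_emb).1 hI
  rw [show A ξ = 𝓕⁻ (𝓕 A) ξ by rw [hc.fourierInv_fourier_eq hA h1], Real.fourierInv_eq]
  refine (norm_integral_le_integral_norm _).trans_eq ?_
  simp only [Circle.norm_smul, e, Function.comp]
  exact (ee_mp.integral_comp ee_emb fun v => ‖𝓕 A v‖).symm

lemma conj_II {A : X → ℂ} (h : ∀ ξ, A (-ξ) = (starRingEnd ℂ) (A ξ)) (x : ℝ × ℝ) :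
    (starRingEnd ℂ) (II A x) = II A x := by
  have e : (starRingEnd ℂ) (II A x) = ∫ ξ, ck (-ξ) x * A (-ξ) := by
    unfold II
    rw [← integral_conj]
    congr 1; funext ξ
    rw [map_mul, h, ck, ck, ← Complex.exp_conj, map_mul, Complex.conj_ofReal, Complex.conj_I]
    congr 2
    simp; ring
  rw [e, integral_neg_eq_self (fun ξ : X => ck ξ x * A ξ)]
  rfl

lemma real_II {A : X → ℂ} (h : ∀ ξ, A (-ξ) = (starRingEnd ℂ) (A ξ)) (x : ℝ × ℝ) :
    II A x = ((II A x).re : ℂ) := (Complex.conj_eq_iff_re.1 (conj_II h x)).symm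

/-- Smooth compactly supported functions are Fourier transforms of rapidly decaying functions. -/
lemma data_inv {f : ℝ × ℝ → ℝ} (hf : Sm f) (hc : HasCompactSupport f) : ∃ F : X → ℂ, Continuous F ∧
    (∀ k : ℕ, ∃ C, ∀ ξ, ‖F ξ‖ * br ξ ^ k ≤ C) ∧ (∀ ξ, F (-ξ) = (starRingEnd ℂ) (F ξ)) ∧
    ∀ x, II F x = f x := by
  set g : X → ℂ := fun ξ => (f (ξ 0, ξ 1) : ℂ) with hg
  have gs : ContDiff ℝ (⊤ : ℕ∞) g := by
    have h1 : ContDiff ℝ (⊤ : ℕ∞) fun ξ : X => (ξ 0, ξ 1) := by fun_prop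
    exact Complex.ofRealCLM.contDiff.comp (hf.cd.comp h1)
  have gc : HasCompactSupport g := by
    have hK : IsCompact (ee '' tsupport f) := by
      refine hc.isCompact.image ?_
      unfold ee
      exact (PiLp.continuous_toLp 2 _).comp (by fun_prop)
    refine HasCompactSupport.intro hK fun ξ hξ => ?_
    have : (ξ 0, ξ 1) ∉ tsupport f := fun h => hξ ⟨_, h, ee_eq ξ⟩
    simp [hg, image_eq_zero_of_notMem_tsupport this]
  set G : SchwartzMap X ℂ := gc.toSchwartzMap gs
  have eG : ∀ ξ, (𝓕⁻ G) ξ = 𝓕⁻ g ξ := fun ξ => by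
    rw [SchwartzMap.fourierInv_coe]; rfl
  refine ⟨((𝓕⁻ G : SchwartzMap X ℂ) : X → ℂ), (𝓕⁻ G : SchwartzMap X ℂ).continuous, fun k => ?_, fun ξ => ?_, fun x => ?_⟩
  · refine ⟨2 ^ k * (Finset.Iic (k, 0)).sup (fun m => SchwartzMap.seminorm ℝ m.1 m.2) (𝓕⁻ G), fun ξ => ?_⟩
    have := SchwartzMap.one_add_le_sup_seminorm_apply (𝕜 := ℝ) (m := (k, 0)) (k := k) (n := 0) le_rfl le_rfl (𝓕⁻ G) ξ
    rw [norm_iteratedFDeriv_zero, mul_comm] at this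
    exact this
  · rw [eG, eG, Real.fourierInv_eq', Real.fourierInv_eq', ← integral_conj]
    congr 1; funext v
    rw [smul_eq_mul, smul_eq_mul, map_mul, ← Complex.exp_conj, map_mul, Complex.conj_ofReal, Complex.conj_I]
    simp [hg]
  · rw [II_eq]
    have h1 : 𝓕 (𝓕⁻ G) = G := FourierTransform.fourier_fourierInv_eq G
    have h2 : 𝓕 ((𝓕⁻ G : SchwartzMap X ℂ) : X → ℂ) = ((𝓕 (𝓕⁻ G) : SchwartzMap X ℂ) : X → ℂ) :=
      (SchwartzMap.fourier_coe _).symm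
    rw [h2, h1]
    rfl

end WaveGE

namespace WaveGE

/-! ### Truncated convolutions -/

/-- Radial truncation of a complex number at modulus `M`. -/
def clip (M : ℝ) (z : ℂ) : ℂ := ((M / max M ‖z‖ : ℝ) : ℂ) * z

section
variable {M : ℝ} (hM : 0 < M)
include hM

lemma mx_pos (z : ℂ) : 0 < max M ‖z‖ := lt_max_of_lt_left hM

lemma clip_norm (z : ℂ) : ‖clip M z‖ = M / max M ‖z‖ * ‖z‖ := by
  rw [clip, norm_mul, Complex.norm_real, Real.norm_of_nonneg (div_nonneg hM.le (mx_pos hM z).le)]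

lemma clip_le (z : ℂ) : ‖clip M z‖ ≤ ‖z‖ := by
  rw [clip_norm hM]
  exact mul_le_of_le_one_left (norm_nonneg z) ((div_le_one (mx_pos hM z)).2 (le_max_left _ _))

lemma clip_le' (z : ℂ) : ‖clip M z‖ ≤ M := by
  rw [clip_norm hM, div_mul_eq_mul_div, div_le_iff₀ (mx_pos hM z)]
  gcongr; exact le_max_right _ _

lemma clip_id {z : ℂ} (h : ‖z‖ ≤ M) : clip M z = z := by
  rw [clip, max_eq_left h, div_self hM.ne']; simp

lemma clip_cont : Continuous (clip M) := by
  unfold clip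
  refine (Complex.continuous_ofReal.comp (continuous_const.div (by fun_prop) fun z => (mx_pos hM z).ne')).mul continuous_id

lemma clip_lip (z w : ℂ) : ‖clip M z - clip M w‖ ≤ 2 * ‖z - w‖ := by
  have pz := mx_pos hM z
  have pw := mx_pos hM w
  set a := max M ‖z‖
  set b := max M ‖w‖
  have e : clip M z - clip M w = ((M / a : ℝ) : ℂ) * (z - w) + ((M / a - M / b : ℝ) : ℂ) * w := by
    simp only [clip]; push_cast; ring
  have h1 : |a - b| ≤ ‖z - w‖ := by
    have h := abs_max_sub_max_le_max M ‖z‖ M ‖w‖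
    refine h.trans ?_
    rw [sub_self, abs_zero, max_eq_right (abs_nonneg _)]
    exact abs_norm_sub_norm_le z w
  have h2 : |M / a - M / b| * ‖w‖ ≤ ‖z - w‖ := by
    have e2 : M / a - M / b = (M / a) * ((b - a) / b) := by field_simp
    rw [e2, abs_mul, abs_div, abs_div, abs_of_pos hM, abs_of_pos pz, abs_of_pos pw, abs_sub_comm]
    have q1 : M / a ≤ 1 := (div_le_one pz).2 (le_max_left _ _)
    have q2 : ‖w‖ / b ≤ 1 := (div_le_one pw).2 (le_max_right _ _)
    calc M / a * (|a - b| / b) * ‖w‖ = (M / a) * |a - b| * (‖w‖ / b) := by ring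
      _ ≤ 1 * |a - b| * 1 := by gcongr
      _ ≤ _ := by linarith
  rw [e]
  refine (norm_add_le _ _).trans ?_
  rw [norm_mul, norm_mul, Complex.norm_real, Complex.norm_real, Real.norm_eq_abs, Real.norm_eq_abs]
  have h3 : |M / a| ≤ 1 := by
    rw [abs_of_pos (div_pos hM pz)]; exact (div_le_one pz).2 (le_max_left _ _)
  have := mul_le_of_le_one_left (norm_nonneg (z - w)) h3
  linarith

omit hM in
lemma clip_conj (z : ℂ) : clip M ((starRingEnd ℂ) z) = (starRingEnd ℂ) (clip M z) := by
  simp [clip]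

end

/-- Truncation of a function on the frequency space relative to the weight `(1 + |ξ|)⁻³`. -/
def clV (M : ℝ) (A : X → ℂ) (ξ : X) : ℂ := ((br ξ ^ 3 : ℝ) : ℂ)⁻¹ * clip M (((br ξ ^ 3 : ℝ) : ℂ) * A ξ)

lemma br3_norm (ξ : X) : ‖((br ξ ^ 3 : ℝ) : ℂ)‖ = br ξ ^ 3 := by
  rw [Complex.norm_real, Real.norm_of_nonneg (pow_pos (br_pos ξ) 3).le]

lemma br3_ne (ξ : X) : ((br ξ ^ 3 : ℝ) : ℂ) ≠ 0 := by
  have := pow_pos (br_pos ξ) 3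
  exact_mod_cast this.ne'

section
variable {M : ℝ} (hM : 0 < M) {A B : X → ℂ}
include hM

lemma clV_norm (A : X → ℂ) (ξ : X) : ‖clV M A ξ‖ * br ξ ^ 3 = ‖clip M (((br ξ ^ 3 : ℝ) : ℂ) * A ξ)‖ := by
  have := pow_pos (br_pos ξ) 3
  rw [clV, norm_mul, norm_inv, br3_norm, mul_comm, mul_inv_cancel_left₀ this.ne']

lemma clV_le (A : X → ℂ) (ξ : X) : ‖clV M A ξ‖ ≤ ‖A ξ‖ := by
  have h := pow_pos (br_pos ξ) 3
  have h1 := clV_norm hM A ξ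
  have h2 := clip_le hM (((br ξ ^ 3 : ℝ) : ℂ) * A ξ)
  rw [norm_mul, br3_norm] at h2
  rw [← h1, mul_comm] at h2
  exact le_of_mul_le_mul_left h2 h

lemma clV_le' (A : X → ℂ) (ξ : X) : ‖clV M A ξ‖ * br ξ ^ 3 ≤ M := by
  rw [clV_norm hM]; exact clip_le' hM _

lemma clV_id (h : ∀ ξ, ‖A ξ‖ * br ξ ^ 3 ≤ M) : clV M A = A := by
  funext ξ
  rw [clV, clip_id hM, inv_mul_cancel_left₀ (br3_ne ξ)]
  rw [norm_mul, br3_norm, mul_comm]; exact h ξ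

lemma clV_lip {d : ℝ} {ξ : X} (h : ‖A ξ - B ξ‖ * br ξ ^ 3 ≤ d) :
    ‖clV M A ξ - clV M B ξ‖ * br ξ ^ 3 ≤ 2 * d := by
  have e : clV M A ξ - clV M B ξ = ((br ξ ^ 3 : ℝ) : ℂ)⁻¹ * (clip M (((br ξ ^ 3 : ℝ) : ℂ) * A ξ) -
    clip M (((br ξ ^ 3 : ℝ) : ℂ) * B ξ)) := by simp only [clV]; ring
  have h0 := pow_pos (br_pos ξ) 3
  have h1 := clip_lip hM (((br ξ ^ 3 : ℝ) : ℂ) * A ξ) (((br ξ ^ 3 : ℝ) : ℂ) * B ξ)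
  rw [← mul_sub, norm_mul, br3_norm] at h1
  rw [e, norm_mul, norm_inv, br3_norm, mul_comm, mul_inv_cancel_left₀ h0.ne']
  linarith

lemma clV_cont {A : ℝ → X → ℂ} (hA : Continuous fun q : ℝ × X => A q.1 q.2) :
    Continuous fun q : ℝ × X => clV M (A q.1) q.2 := by
  have h1 : Continuous fun q : ℝ × X => ((br q.2 ^ 3 : ℝ) : ℂ) :=
    Complex.continuous_ofReal.comp ((br_cont.comp continuous_snd).pow 3)
  unfold clV
  exact (h1.inv₀ fun q => br3_ne q.2).mul ((clip_cont hM).comp (h1.mul hA))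

end

/-- Hermitian symmetry. -/
def Herm (A : X → ℂ) : Prop := ∀ ξ, A (-ξ) = (starRingEnd ℂ) (A ξ)

lemma Herm.clV {A : X → ℂ} (h : Herm A) (M : ℝ) : Herm (clV M A) := by
  intro ξ
  rw [WaveGE.clV, WaveGE.clV, br_neg, h, map_mul, map_inv₀, Complex.conj_ofReal, ← clip_conj, map_mul, Complex.conj_ofReal]

lemma Herm.cv {A B : X → ℂ} (hA : Herm A) (hB : Herm B) : Herm (cv A B) := by
  intro ξ
  unfold WaveGE.cv
  rw [← integral_conj, ← integral_neg_eq_self (fun η : X => A η * B (-ξ - η))]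
  congr 1; funext η
  rw [map_mul, ← hA, ← hB]
  congr 2; abel

lemma cv_sub_left {A A' B : X → ℂ} (hA : Integrable fun p => A p) (hA' : Integrable A') (hB : Continuous B)
    {b : ℝ} (hb : ∀ ξ, ‖B ξ‖ ≤ b) (ξ : X) : cv A B ξ - cv A' B ξ = cv (fun ξ => A ξ - A' ξ) B ξ := by
  have m : AEStronglyMeasurable (fun η : X => B (ξ - η)) := (hB.comp (by fun_prop)).aestronglyMeasurable
  have h1 := hA.mul_bdd (c := b) m (Eventually.of_forall fun η => hb _)
  have h2 := hA'.mul_bdd (c := b) m (Eventually.of_forall fun η => hb _)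
  unfold cv
  rw [← integral_sub h1 h2]
  congr 1; funext η; ring

lemma cv_sub_right {A B B' : X → ℂ} (hA : Integrable A) (hB : Continuous B) (hB' : Continuous B')
    {b b' : ℝ} (hb : ∀ ξ, ‖B ξ‖ ≤ b) (hb' : ∀ ξ, ‖B' ξ‖ ≤ b') (ξ : X) :
    cv A B ξ - cv A B' ξ = cv A (fun ξ => B ξ - B' ξ) ξ := by
  have m : AEStronglyMeasurable (fun η : X => B (ξ - η)) := (hB.comp (by fun_prop)).aestronglyMeasurable
  have m2 : AEStronglyMeasurable (fun η : X => B' (ξ - η)) := (hB'.comp (by fun_prop)).aestronglyMeasurable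
  have h1 := hA.mul_bdd (c := b) m (Eventually.of_forall fun η => hb _)
  have h2 := hA.mul_bdd (c := b') m2 (Eventually.of_forall fun η => hb' _)
  unfold cv
  rw [← integral_sub h1 h2]
  congr 1; funext η; ring

/-- The trilinear convolution. -/
def cv3 (A B C : X → ℂ) : X → ℂ := cv A (cv B C)

/-- The trilinear constant for the weight of order three. -/
def c3 : ℝ := (16 * I0) ^ 2

lemma c3_nonneg : 0 ≤ c3 := sq_nonneg _

lemma cv_b3 {A B : X → ℂ} {a b : ℝ} (hA : ∀ ξ, ‖A ξ‖ * br ξ ^ 3 ≤ a) (hB : ∀ ξ, ‖B ξ‖ * br ξ ^ 3 ≤ b) (ξ : X) :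
    ‖cv A B ξ‖ * br ξ ^ 3 ≤ 16 * I0 * a * b := by
  refine (cv_bound 3 hA hB hA hB ξ).trans_eq ?_
  ring

lemma cv3_b3 {A B C : X → ℂ} {a b c : ℝ} (hA : ∀ ξ, ‖A ξ‖ * br ξ ^ 3 ≤ a) (hB : ∀ ξ, ‖B ξ‖ * br ξ ^ 3 ≤ b)
    (hC : ∀ ξ, ‖C ξ‖ * br ξ ^ 3 ≤ c) (ξ : X) : ‖cv3 A B C ξ‖ * br ξ ^ 3 ≤ c3 * a * b * c := by
  refine (cv_b3 hA (cv_b3 hB hC) ξ).trans_eq ?_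
  unfold c3; ring

/-- The trilinear constant for the weight of order `k`. -/
def ck3 (k : ℕ) : ℝ := 2 ^ k * I0 * (16 * I0 + 2 * (2 ^ k * I0))

lemma ck3_nonneg (k : ℕ) : 0 ≤ ck3 k := by unfold ck3; have := I0_nonneg; positivity

lemma cv3_bk {A B C : X → ℂ} {M b : ℝ} (k : ℕ) (hA : ∀ ξ, ‖A ξ‖ * br ξ ^ 3 ≤ M) (hB : ∀ ξ, ‖B ξ‖ * br ξ ^ 3 ≤ M)
    (hC : ∀ ξ, ‖C ξ‖ * br ξ ^ 3 ≤ M) (hA' : ∀ ξ, ‖A ξ‖ * br ξ ^ k ≤ b) (hB' : ∀ ξ, ‖B ξ‖ * br ξ ^ k ≤ b)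
    (hC' : ∀ ξ, ‖C ξ‖ * br ξ ^ k ≤ b) (ξ : X) : ‖cv3 A B C ξ‖ * br ξ ^ k ≤ ck3 k * M ^ 2 * b := by
  refine (cv_bound k hA (cv_b3 hB hC) hA' (cv_bound k hB hC hB' hC') ξ).trans_eq ?_
  unfold ck3; ring

/-- Continuity together with the cubic weight bound. -/
def CB (A : X → ℂ) (a : ℝ) : Prop := Continuous A ∧ ∀ ξ, ‖A ξ‖ * br ξ ^ 3 ≤ a

lemma CB.int {A : X → ℂ} {a : ℝ} (h : CB A a) : Integrable A :=
  (br_int.const_mul a).mono' h.1.aestronglyMeasurable (Eventually.of_forall fun ξ => div_br (h.2 ξ))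

lemma CB.le {A : X → ℂ} {a : ℝ} (h : CB A a) (ξ : X) : ‖A ξ‖ ≤ a := norm_of_br (h.2 ξ)

lemma CB.sub {A B : X → ℂ} {a b : ℝ} (h : CB A a) (g : CB B b) : CB (fun ξ => A ξ - B ξ) (a + b) := by
  refine ⟨h.1.sub g.1, fun ξ => ?_⟩
  have := pow_pos (br_pos ξ) 3
  have h1 := mul_le_mul_of_nonneg_right (norm_sub_le (A ξ) (B ξ)) this.le
  linarith [h.2 ξ, g.2 ξ]

lemma CB.cv {A B : X → ℂ} {a b : ℝ} (h : CB A a) (g : CB B b) : CB (cv A B) (16 * I0 * a * b) := by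
  refine ⟨?_, cv_b3 h.2 g.2⟩
  have := cv_cont (a := fun _ => a) (b := fun _ => b) (A := fun _ => A) (B := fun _ => B) (h.1.comp continuous_snd)
    (g.1.comp continuous_snd) (fun _ _ ξ _ => h.2 ξ) (fun _ _ ξ _ => g.2 ξ)
  exact this.comp (by fun_prop : Continuous fun ξ : X => ((0 : ℝ), ξ))

lemma cv3_lip {A B C A' B' C' : X → ℂ} {M d : ℝ} (hA : CB A M) (hB : CB B M) (hC : CB C M) (hA' : CB A' M)
    (hB' : CB B' M) (hC' : CB C' M) (dA : ∀ ξ, ‖A ξ - A' ξ‖ * br ξ ^ 3 ≤ d) (dB : ∀ ξ, ‖B ξ - B' ξ‖ * br ξ ^ 3 ≤ d)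
    (dC : ∀ ξ, ‖C ξ - C' ξ‖ * br ξ ^ 3 ≤ d) (ξ : X) :
    ‖cv3 A B C ξ - cv3 A' B' C' ξ‖ * br ξ ^ 3 ≤ 3 * c3 * M ^ 2 * d := by
  have e1 : cv3 A B C ξ - cv3 A' B C ξ = cv3 (fun ξ => A ξ - A' ξ) B C ξ :=
    cv_sub_left hA.int hA'.int (hB.cv hC).1 (hB.cv hC).le ξ
  have e2 : cv3 A' B C ξ - cv3 A' B' C ξ = cv3 A' (fun ξ => B ξ - B' ξ) C ξ := by
    have : cv (fun ξ => B ξ - B' ξ) C = fun ξ => cv B C ξ - cv B' C ξ :=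
      funext fun η => (cv_sub_left hB.int hB'.int hC.1 hC.le η).symm
    unfold cv3
    rw [this]
    exact cv_sub_right hA'.int (hB.cv hC).1 (hB'.cv hC).1 (hB.cv hC).le (hB'.cv hC).le ξ
  have e3 : cv3 A' B' C ξ - cv3 A' B' C' ξ = cv3 A' B' (fun ξ => C ξ - C' ξ) ξ := by
    have : cv B' (fun ξ => C ξ - C' ξ) = fun ξ => cv B' C ξ - cv B' C' ξ :=
      funext fun η => (cv_sub_right hB'.int hC.1 hC'.1 hC.le hC'.le η).symm
    unfold cv3
    rw [this]
    exact cv_sub_right hA'.int (hB'.cv hC).1 (hB'.cv hC').1 (hB'.cv hC).le (hB'.cv hC').le ξ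
  have e : cv3 A B C ξ - cv3 A' B' C' ξ = cv3 (fun ξ => A ξ - A' ξ) B C ξ + cv3 A' (fun ξ => B ξ - B' ξ) C ξ +
      cv3 A' B' (fun ξ => C ξ - C' ξ) ξ := by rw [← e1, ← e2, ← e3]; ring
  have b1 := cv3_b3 dA hB.2 hC.2 ξ
  have b2 := cv3_b3 hA'.2 dB hC.2 ξ
  have b3 := cv3_b3 hA'.2 hB'.2 dC ξ
  rw [e]
  have := pow_pos (br_pos ξ) 3
  calc _ ≤ (‖cv3 (fun ξ => A ξ - A' ξ) B C ξ‖ + ‖cv3 A' (fun ξ => B ξ - B' ξ) C ξ‖ +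
      ‖cv3 A' B' (fun ξ => C ξ - C' ξ) ξ‖) * br ξ ^ 3 := by gcongr; exact norm_add₃_le
    _ ≤ _ := by linarith

end WaveGE

namespace WaveGE

/-! ### The Duhamel fixed point -/

open BoundedContinuousFunction

lemma exp_int_le {l : ℝ} (hl : 0 < l) (t : ℝ) : |∫ τ in (0:ℝ)..t, Real.exp (l * |τ|)| ≤ Real.exp (l * |t|) / l := by
  have pos : ∀ s : ℝ, 0 ≤ s → |∫ τ in (0:ℝ)..s, Real.exp (l * |τ|)| ≤ Real.exp (l * |s|) / l := by
    intro s hs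
    have e : ∫ τ in (0:ℝ)..s, Real.exp (l * |τ|) = ∫ τ in (0:ℝ)..s, Real.exp (l * τ) := by
      refine intervalIntegral.integral_congr fun τ h => ?_
      rw [Set.uIcc_of_le hs] at h
      simp only [abs_of_nonneg h.1]
    have e2 : ∫ τ in (0:ℝ)..s, Real.exp (l * τ) = Real.exp (l * s) / l - Real.exp (l * 0) / l := by
      refine intervalIntegral.integral_eq_sub_of_hasDerivAt (f := fun τ => Real.exp (l * τ) / l) (fun τ _ => ?_)
        (Continuous.intervalIntegrable (by fun_prop) _ _)
      have := (((hasDerivAt_id τ).const_mul l).exp).div_const l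
      simpa [hl.ne'] using this
    rw [e, e2, abs_of_nonneg hs, mul_zero, Real.exp_zero, ← sub_div, abs_div, abs_of_pos hl]
    gcongr
    have := Real.one_le_exp (mul_nonneg hl.le hs)
    rw [abs_of_nonneg (by linarith)]; linarith
  rcases le_total 0 t with h | h
  · exact pos t h
  · have e : ∫ τ in (0:ℝ)..t, Real.exp (l * |τ|) = - ∫ τ in (0:ℝ)..(-t), Real.exp (l * |τ|) := by
      have := intervalIntegral.integral_comp_neg (a := 0) (b := -t) (fun τ => Real.exp (l * |τ|))
      simp only [abs_neg, neg_neg, neg_zero] at this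
      rw [this, intervalIntegral.integral_symm t 0]
    rw [e, abs_neg, ← abs_neg t]
    exact pos (-t) (by linarith)

/-- The dispersion relation of the wave equation, for the Fourier convention `exp (-2πi ξ·x)`. -/
def om (ξ : X) : ℝ := 2 * π * ‖ξ‖

lemma om_cont : Continuous om := by unfold om; fun_prop

section
variable (θ : ℝ → ℝ) (M : ℝ)

/-- The truncated cubic nonlinearity on the Fourier side; `V i` stands for the transform of `∂ₜuᵢ`. -/
def Nn (μ : ℝ) (V : Fin 2 → ℝ → X → ℂ) (i : Fin 2) (τ : ℝ) (ξ : X) : ℂ :=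
  ((-(μ * θ τ ^ 3) : ℝ) : ℂ) * cv3 (clV M (V (1 - i) τ)) (clV M (V (1 - i) τ)) (clV M (V i τ)) ξ

/-- The Duhamel term. -/
def Du (μ : ℝ) (V : Fin 2 → ℝ → X → ℂ) (i : Fin 2) (t : ℝ) (ξ : X) : ℂ :=
  ∫ τ in (0:ℝ)..t, ((Real.cos (om ξ * (t - τ)) : ℝ) : ℂ) * Nn θ M μ V i τ ξ

end

/-- Joint continuity of a family of functions of `(t, ξ)`. -/
def JCt (V : Fin 2 → ℝ → X → ℂ) : Prop := ∀ i, Continuous fun q : ℝ × X => V i q.1 q.2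

/-- Standing assumptions for the fixed point problem: `Fr` is the free evolution, `θ` the time cut-off,
`M` the truncation level. -/
structure HY (Fr : Fin 2 → ℝ → X → ℂ) (θ : ℝ → ℝ) (M C0 : ℝ) : Prop where
  m : 0 < M
  frc : JCt Fr
  fr3 : ∀ i t ξ, ‖Fr i t ξ‖ * br ξ ^ 3 ≤ C0
  tc : Continuous θ
  t0 : ∀ t, 0 ≤ θ t
  t1 : ∀ t, θ t ≤ 1

section
variable {Fr : Fin 2 → ℝ → X → ℂ} {θ : ℝ → ℝ} {M C0 μ : ℝ} {V V' : Fin 2 → ℝ → X → ℂ}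

lemma JCt.sl (h : JCt V) (i : Fin 2) (t : ℝ) : Continuous (V i t) :=
  (h i).comp (by fun_prop : Continuous fun ξ : X => (t, ξ))

lemma HY.th3 (h : HY Fr θ M C0) (τ : ℝ) : 0 ≤ θ τ ^ 3 ∧ θ τ ^ 3 ≤ 1 :=
  ⟨pow_nonneg (h.t0 τ) 3, pow_le_one₀ (h.t0 τ) (h.t1 τ)⟩

lemma HY.cb (h : HY Fr θ M C0) (hV : JCt V) (i : Fin 2) (τ : ℝ) : CB (clV M (V i τ)) M := by
  refine ⟨?_, clV_le' h.m _⟩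
  have h1 := (clV_cont h.m (hV i)).comp (by fun_prop : Continuous fun ξ : X => (τ, ξ))
  simp only [Function.comp_def] at h1
  exact h1

lemma HY.Nn_cont (h : HY Fr θ M C0) (μ : ℝ) (hV : JCt V) : JCt (Nn θ M μ V) := by
  intro i
  have c1 := clV_cont h.m (hV (1 - i))
  have c2 := clV_cont h.m (hV i)
  have d1 := cv_cont (A := fun t => clV M (V (1 - i) t)) (B := fun t => clV M (V i t)) (a := fun _ => M) (b := fun _ => M) c1 c2 (fun _ t ξ _ => clV_le' h.m _ ξ) (fun _ t ξ _ => clV_le' h.m _ ξ)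
  have d2 := cv_cont (A := fun t => clV M (V (1 - i) t)) (B := fun t => cv (clV M (V (1 - i) t)) (clV M (V i t))) (a := fun _ => M) (b := fun _ => 16 * I0 * M * M) c1 d1 (fun _ t ξ _ => clV_le' h.m _ ξ)
    (fun _ t ξ _ => cv_b3 (clV_le' h.m _) (clV_le' h.m _) ξ)
  have := h.tc
  exact (Complex.continuous_ofReal.comp (by fun_prop : Continuous fun q : ℝ × X => -(μ * θ q.1 ^ 3))).mul d2

lemma HY.Du_cont (h : HY Fr θ M C0) (μ : ℝ) (hV : JCt V) : JCt (Du θ M μ V) := by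
  intro i
  have hN := h.Nn_cont μ hV i
  refine intervalIntegral.continuous_parametric_intervalIntegral_of_continuous
    (f := fun (q : ℝ × X) τ => ((Real.cos (om q.2 * (q.1 - τ)) : ℝ) : ℂ) * Nn θ M μ V i τ q.2) ?_ continuous_fst
  refine (Complex.continuous_ofReal.comp (Real.continuous_cos.comp ((om_cont.comp (by fun_prop)).mul (by fun_prop)))).mul ?_
  exact hN.comp (by fun_prop : Continuous fun p : (ℝ × X) × ℝ => (p.2, p.1.2))

lemma Du_bd {w : ℝ} (hw : 0 ≤ w) {g : ℝ → ℝ} {i : Fin 2} {t : ℝ} {ξ : X} (hg : Continuous g)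
    (hb : ∀ τ ∈ Set.uIcc 0 t, ‖Nn θ M μ V i τ ξ‖ * w ≤ g τ) : ‖Du θ M μ V i t ξ‖ * w ≤ |∫ τ in (0:ℝ)..t, g τ| := by
  have e : ‖Du θ M μ V i t ξ‖ * w = ‖∫ τ in (0:ℝ)..t, ((w : ℝ) : ℂ) * (((Real.cos (om ξ * (t - τ)) : ℝ) : ℂ) * Nn θ M μ V i τ ξ)‖ := by
    rw [intervalIntegral.integral_const_mul, norm_mul, Complex.norm_real, Real.norm_of_nonneg hw, mul_comm]; rfl
  rw [e]
  refine intervalIntegral.norm_integral_le_abs_of_norm_le ?_ (hg.intervalIntegrable _ _)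
  filter_upwards [ae_restrict_mem measurableSet_uIoc] with τ hτ
  rw [norm_mul, norm_mul, Complex.norm_real, Complex.norm_real, Real.norm_of_nonneg hw, Real.norm_eq_abs]
  have h1 := Real.abs_cos_le_one (om ξ * (t - τ))
  calc w * (|Real.cos (om ξ * (t - τ))| * ‖Nn θ M μ V i τ ξ‖) ≤ w * (1 * ‖Nn θ M μ V i τ ξ‖) := by gcongr
    _ = ‖Nn θ M μ V i τ ξ‖ * w := by ring
    _ ≤ _ := hb τ (Set.uIoc_subset_uIcc hτ)

lemma HY.Nn_norm (h : HY Fr θ M C0) (hμ : 0 ≤ μ) (V : Fin 2 → ℝ → X → ℂ) (i : Fin 2) (τ : ℝ) (ξ : X) :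
    ‖Nn θ M μ V i τ ξ‖ = μ * θ τ ^ 3 * ‖cv3 (clV M (V (1 - i) τ)) (clV M (V (1 - i) τ)) (clV M (V i τ)) ξ‖ := by
  rw [Nn, norm_mul, Complex.norm_real, norm_neg, Real.norm_of_nonneg (mul_nonneg hμ (h.th3 τ).1)]

lemma HY.Nn_b3 (h : HY Fr θ M C0) (hμ : 0 ≤ μ) {b τ : ℝ} {i : Fin 2} (hb : ∀ j ξ, ‖V j τ ξ‖ * br ξ ^ 3 ≤ b) (ξ : X) :
    ‖Nn θ M μ V i τ ξ‖ * br ξ ^ 3 ≤ μ * (c3 * b ^ 3) * θ τ ^ 3 := by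
  have hc : ∀ j ξ, ‖clV M (V j τ) ξ‖ * br ξ ^ 3 ≤ b := fun j ξ =>
    (mul_le_mul_of_nonneg_right (clV_le h.m _ ξ) (pow_pos (br_pos ξ) 3).le).trans (hb j ξ)
  have h1 := cv3_b3 (hc (1 - i)) (hc (1 - i)) (hc i) ξ
  rw [h.Nn_norm hμ, mul_assoc]
  calc _ ≤ μ * θ τ ^ 3 * (c3 * b * b * b) := mul_le_mul_of_nonneg_left h1 (mul_nonneg hμ (h.th3 τ).1)
    _ = _ := by ring

lemma HY.Nn_bM (h : HY Fr θ M C0) (hμ : 0 ≤ μ) (V : Fin 2 → ℝ → X → ℂ) (i : Fin 2) (τ : ℝ) (ξ : X) :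
    ‖Nn θ M μ V i τ ξ‖ * br ξ ^ 3 ≤ μ * (c3 * M ^ 3) := by
  have h1 := cv3_b3 (clV_le' h.m (V (1 - i) τ)) (clV_le' h.m (V (1 - i) τ)) (clV_le' h.m (V i τ)) ξ
  have h2 := h.th3 τ
  have c0 := c3_nonneg
  have m0 := h.m
  rw [h.Nn_norm hμ, mul_assoc]
  calc _ ≤ μ * θ τ ^ 3 * (c3 * M * M * M) := mul_le_mul_of_nonneg_left h1 (mul_nonneg hμ h2.1)
    _ ≤ μ * 1 * (c3 * M * M * M) := by gcongr; exact h2.2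
    _ = _ := by ring

lemma HY.Nn_bk (h : HY Fr θ M C0) (hμ : 0 ≤ μ) (hμ1 : μ ≤ 1) {k : ℕ} {b τ : ℝ} {i : Fin 2} (hb : ∀ j ξ, ‖V j τ ξ‖ * br ξ ^ k ≤ b) (ξ : X) :
    ‖Nn θ M μ V i τ ξ‖ * br ξ ^ k ≤ ck3 k * M ^ 2 * b := by
  have hc : ∀ j ξ, ‖clV M (V j τ) ξ‖ * br ξ ^ k ≤ b := fun j ξ =>
    (mul_le_mul_of_nonneg_right (clV_le h.m _ ξ) (pow_pos (br_pos ξ) k).le).trans (hb j ξ)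
  have h1 := cv3_bk k (clV_le' h.m (V (1 - i) τ)) (clV_le' h.m (V (1 - i) τ)) (clV_le' h.m (V i τ)) (hc (1 - i)) (hc (1 - i)) (hc i) ξ
  have h2 := h.th3 τ
  rw [h.Nn_norm hμ, mul_assoc]
  refine le_trans ?_ h1
  exact mul_le_of_le_one_left (mul_nonneg (norm_nonneg _) (pow_pos (br_pos ξ) k).le) (mul_le_one₀ hμ1 h2.1 h2.2)

lemma HY.Nn_lip (h : HY Fr θ M C0) (hμ : 0 ≤ μ) (hμ1 : μ ≤ 1) (hV : JCt V) (hV' : JCt V') {d τ : ℝ} {i : Fin 2}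
    (hd : ∀ j ξ, ‖V j τ ξ - V' j τ ξ‖ * br ξ ^ 3 ≤ d) (ξ : X) :
    ‖Nn θ M μ V i τ ξ - Nn θ M μ V' i τ ξ‖ * br ξ ^ 3 ≤ 6 * c3 * M ^ 2 * d := by
  have hc : ∀ j ξ, ‖clV M (V j τ) ξ - clV M (V' j τ) ξ‖ * br ξ ^ 3 ≤ 2 * d := fun j ξ => clV_lip h.m (hd j ξ)
  have h1 := cv3_lip (h.cb hV (1 - i) τ) (h.cb hV (1 - i) τ) (h.cb hV i τ) (h.cb hV' (1 - i) τ) (h.cb hV' (1 - i) τ)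
    (h.cb hV' i τ) (hc (1 - i)) (hc (1 - i)) (hc i) ξ
  have h2 := h.th3 τ
  rw [Nn, Nn, ← mul_sub, norm_mul, Complex.norm_real, norm_neg, Real.norm_of_nonneg (mul_nonneg hμ h2.1), mul_assoc]
  refine (mul_le_of_le_one_left (mul_nonneg (norm_nonneg _) (pow_pos (br_pos ξ) 3).le) (mul_le_one₀ hμ1 h2.1 h2.2)).trans (h1.trans_eq ?_)
  ring

/-- The exponential rate of the weighted space in which the Duhamel map contracts. -/
def lam (M : ℝ) : ℝ := 12 * c3 * M ^ 2 + 1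

lemma lam_pos (M : ℝ) : 0 < lam M := by unfold lam; have := c3_nonneg; positivity

/-- The weight `exp (λ|t|) (1 + |ξ|)⁻³`. -/
def wt (M t : ℝ) (ξ : X) : ℝ := Real.exp (lam M * |t|) * (br ξ ^ 3)⁻¹

lemma wt_pos (M t : ℝ) (ξ : X) : 0 < wt M t ξ := by
  unfold wt; have := br_pos ξ; positivity

lemma wt_cont (M : ℝ) : Continuous fun q : ℝ × X => wt M q.1 q.2 := by
  unfold wt
  exact (by fun_prop : Continuous fun q : ℝ × X => Real.exp (lam M * |q.1|)).mul
    (((br_cont.comp continuous_snd).pow 3).inv₀ fun q => (pow_pos (br_pos q.2) 3).ne')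

/-- Bounded continuous functions, the space of weighted unknowns. -/
abbrev BC := BoundedContinuousFunction (ℝ × X) (Fin 2 → ℂ)

/-- The unknown `V` belonging to the weighted unknown `Z`. -/
def Vz (M : ℝ) (Z : BC) (i : Fin 2) (t : ℝ) (ξ : X) : ℂ := ((wt M t ξ : ℝ) : ℂ) * Z (t, ξ) i

lemma Vz_cont (M : ℝ) (Z : BC) : JCt (Vz M Z) := fun i =>
  (Complex.continuous_ofReal.comp (wt_cont M)).mul ((continuous_apply i).comp Z.continuous)

lemma Vz_br (M : ℝ) (Z : BC) (i : Fin 2) (t : ℝ) (ξ : X) :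
    ‖Vz M Z i t ξ‖ * br ξ ^ 3 = Real.exp (lam M * |t|) * ‖Z (t, ξ) i‖ := by
  rw [Vz, norm_mul, Complex.norm_real, Real.norm_of_nonneg (wt_pos M t ξ).le, wt]
  have := (pow_pos (br_pos ξ) 3).ne'
  calc _ = Real.exp (lam M * |t|) * ‖Z (t, ξ) i‖ * ((br ξ ^ 3)⁻¹ * br ξ ^ 3) := by ring
    _ = _ := by rw [inv_mul_cancel₀ this, mul_one]

lemma Vz_sub_br (M : ℝ) (Z Z' : BC) (i : Fin 2) (t : ℝ) (ξ : X) :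
    ‖Vz M Z i t ξ - Vz M Z' i t ξ‖ * br ξ ^ 3 ≤ Real.exp (lam M * |t|) * dist Z Z' := by
  have e : Vz M Z i t ξ - Vz M Z' i t ξ = Vz M (Z - Z') i t ξ := by
    simp only [Vz, BoundedContinuousFunction.coe_sub, Pi.sub_apply]; ring
  rw [e, Vz_br, dist_eq_norm]
  gcongr
  exact (norm_le_pi_norm _ i).trans (BoundedContinuousFunction.norm_coe_le_norm _ _)

lemma wt_inv_norm (M t : ℝ) (ξ : X) (z : ℂ) :
    ‖(((wt M t ξ : ℝ) : ℂ))⁻¹ * z‖ = Real.exp (-(lam M * |t|)) * (‖z‖ * br ξ ^ 3) := by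
  rw [norm_mul, norm_inv, Complex.norm_real, Real.norm_of_nonneg (wt_pos M t ξ).le, wt, mul_inv, inv_inv, Real.exp_neg]
  ring

lemma HY.map_bd (h : HY Fr θ M C0) (hμ : 0 ≤ μ) (V : Fin 2 → ℝ → X → ℂ) (q : ℝ × X) :
    ‖(fun i => (((wt M q.1 q.2 : ℝ) : ℂ))⁻¹ * (Fr i q.1 q.2 + Du θ M μ V i q.1 q.2) : Fin 2 → ℂ)‖ ≤
      C0 + μ * (c3 * M ^ 3) := by
  have C0n : 0 ≤ C0 := nn_of_br (h.fr3 0 0 0)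
  have c0 := c3_nonneg
  have m0 := h.m
  refine (pi_norm_le_iff_of_nonneg (by positivity)).2 fun i => ?_
  rw [wt_inv_norm]
  have h1 := h.fr3 i q.1 q.2
  have h2 := Du_bd (θ := θ) (M := M) (μ := μ) (V := V) (i := i) (t := q.1) (ξ := q.2) (w := br q.2 ^ 3) (pow_pos (br_pos _) 3).le
    (g := fun _ => μ * (c3 * M ^ 3)) continuous_const fun τ _ => h.Nn_bM hμ V i τ q.2
  rw [intervalIntegral.integral_const, sub_zero, smul_eq_mul, abs_mul, abs_of_nonneg (by positivity : 0 ≤ μ * (c3 * M ^ 3))] at h2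
  have e1 : Real.exp (-(lam M * |q.1|)) ≤ 1 := by
    rw [Real.exp_le_one_iff]; have := lam_pos M; have := abs_nonneg q.1; nlinarith [mul_nonneg (lam_pos M).le this]
  have e2 : Real.exp (-(lam M * |q.1|)) * |q.1| ≤ 1 := by
    rw [Real.exp_neg, inv_mul_le_iff₀ (Real.exp_pos _), mul_one]
    have l1 : 1 ≤ lam M := by unfold lam; have : 0 ≤ 12 * c3 * M ^ 2 := by positivity
                              linarith
    have := Real.add_one_le_exp (lam M * |q.1|)
    have := le_mul_of_one_le_left (abs_nonneg q.1) l1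
    linarith
  have hh : ‖Fr i q.1 q.2 + Du θ M μ V i q.1 q.2‖ * br q.2 ^ 3 ≤ C0 + |q.1| * (μ * (c3 * M ^ 3)) := by
    have := mul_le_mul_of_nonneg_right (norm_add_le (Fr i q.1 q.2) (Du θ M μ V i q.1 q.2)) (pow_pos (br_pos q.2) 3).le
    linarith
  calc _ ≤ Real.exp (-(lam M * |q.1|)) * (C0 + |q.1| * (μ * (c3 * M ^ 3))) := by gcongr
    _ = Real.exp (-(lam M * |q.1|)) * C0 + Real.exp (-(lam M * |q.1|)) * |q.1| * (μ * (c3 * M ^ 3)) := by ring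
    _ ≤ 1 * C0 + 1 * (μ * (c3 * M ^ 3)) := by gcongr
    _ = _ := by ring

/-- The Duhamel map on weighted unknowns. -/
def HY.Ph (h : HY Fr θ M C0) (μ : Set.Icc (0:ℝ) 1) (Z : BC) : BC :=
  BoundedContinuousFunction.ofNormedAddCommGroup
    (fun q i => (((wt M q.1 q.2 : ℝ) : ℂ))⁻¹ * (Fr i q.1 q.2 + Du θ M μ (Vz M Z) i q.1 q.2))
    (continuous_pi fun i => ((Complex.continuous_ofReal.comp (wt_cont M)).inv₀ fun q => by
      exact Complex.ofReal_ne_zero.2 (wt_pos M q.1 q.2).ne').mul ((h.frc i).add (h.Du_cont μ (Vz_cont M Z) i)))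
    (C0 + μ * (c3 * M ^ 3)) (h.map_bd μ.2.1 _)

lemma HY.Vz_Ph (h : HY Fr θ M C0) (μ : Set.Icc (0:ℝ) 1) (Z : BC) (i : Fin 2) (t : ℝ) (ξ : X) :
    Vz M (h.Ph μ Z) i t ξ = Fr i t ξ + Du θ M μ (Vz M Z) i t ξ := by
  have : ((wt M t ξ : ℝ) : ℂ) ≠ 0 := by exact_mod_cast (wt_pos M t ξ).ne'
  exact mul_inv_cancel_left₀ this _

lemma HY.Du_sub (h : HY Fr θ M C0) (μ μ' : ℝ) (hV : JCt V) (hV' : JCt V') {w : ℝ} (hw : 0 ≤ w) {g : ℝ → ℝ} {i : Fin 2} {t : ℝ} {ξ : X} (hg : Continuous g)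
    (hb : ∀ τ, ‖Nn θ M μ V i τ ξ - Nn θ M μ' V' i τ ξ‖ * w ≤ g τ) :
    ‖Du θ M μ V i t ξ - Du θ M μ' V' i t ξ‖ * w ≤ |∫ τ in (0:ℝ)..t, g τ| := by
  have k1 : Continuous fun τ => ((Real.cos (om ξ * (t - τ)) : ℝ) : ℂ) * Nn θ M μ V i τ ξ :=
    (by fun_prop : Continuous fun τ : ℝ => ((Real.cos (om ξ * (t - τ)) : ℝ) : ℂ)).mul
      ((h.Nn_cont μ hV i).comp (by fun_prop : Continuous fun τ : ℝ => (τ, ξ)))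
  have k2 : Continuous fun τ => ((Real.cos (om ξ * (t - τ)) : ℝ) : ℂ) * Nn θ M μ' V' i τ ξ :=
    (by fun_prop : Continuous fun τ : ℝ => ((Real.cos (om ξ * (t - τ)) : ℝ) : ℂ)).mul
      ((h.Nn_cont μ' hV' i).comp (by fun_prop : Continuous fun τ : ℝ => (τ, ξ)))
  have e : Du θ M μ V i t ξ - Du θ M μ' V' i t ξ =
      ∫ τ in (0:ℝ)..t, ((Real.cos (om ξ * (t - τ)) : ℝ) : ℂ) * (Nn θ M μ V i τ ξ - Nn θ M μ' V' i τ ξ) := by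
    unfold Du
    rw [← intervalIntegral.integral_sub (k1.intervalIntegrable _ _) (k2.intervalIntegrable _ _)]
    congr 1; funext τ; ring
  have e2 : ‖Du θ M μ V i t ξ - Du θ M μ' V' i t ξ‖ * w = ‖∫ τ in (0:ℝ)..t, ((w : ℝ) : ℂ) * (((Real.cos (om ξ * (t - τ)) : ℝ) : ℂ) * (Nn θ M μ V i τ ξ - Nn θ M μ' V' i τ ξ))‖ := by
    rw [intervalIntegral.integral_const_mul, norm_mul, Complex.norm_real, Real.norm_of_nonneg hw, mul_comm, e]
  rw [e2]
  refine intervalIntegral.norm_integral_le_abs_of_norm_le (Eventually.of_forall fun τ => ?_) (hg.intervalIntegrable _ _)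
  rw [norm_mul, norm_mul, Complex.norm_real, Complex.norm_real, Real.norm_of_nonneg hw, Real.norm_eq_abs]
  have h1 := Real.abs_cos_le_one (om ξ * (t - τ))
  calc w * (|Real.cos (om ξ * (t - τ))| * ‖Nn θ M μ V i τ ξ - Nn θ M μ' V' i τ ξ‖) ≤ w * (1 * ‖Nn θ M μ V i τ ξ - Nn θ M μ' V' i τ ξ‖) := by gcongr
    _ = ‖Nn θ M μ V i τ ξ - Nn θ M μ' V' i τ ξ‖ * w := by ring
    _ ≤ _ := hb τ

lemma HY.dist_Ph (h : HY Fr θ M C0) (μ μ' : Set.Icc (0:ℝ) 1) (Z Z' : BC) {c : ℝ} (hc : 0 ≤ c)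
    (hb : ∀ i τ ξ, ‖Nn θ M μ (Vz M Z) i τ ξ - Nn θ M μ' (Vz M Z') i τ ξ‖ * br ξ ^ 3 ≤ c * Real.exp (lam M * |τ|)) :
    dist (h.Ph μ Z) (h.Ph μ' Z') ≤ c / lam M := by
  have hl := lam_pos M
  refine (BoundedContinuousFunction.dist_le (by positivity)).2 fun q => ?_
  refine (dist_pi_le_iff (by positivity)).2 fun i => ?_
  rw [dist_eq_norm]
  have e : h.Ph μ Z q i - h.Ph μ' Z' q i = (((wt M q.1 q.2 : ℝ) : ℂ))⁻¹ *
      (Du θ M μ (Vz M Z) i q.1 q.2 - Du θ M μ' (Vz M Z') i q.1 q.2) := by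
    change (((wt M q.1 q.2 : ℝ) : ℂ))⁻¹ * _ - (((wt M q.1 q.2 : ℝ) : ℂ))⁻¹ * _ = _
    ring
  rw [e, wt_inv_norm]
  have h1 := h.Du_sub μ μ' (Vz_cont M Z) (Vz_cont M Z') (pow_pos (br_pos q.2) 3).le (t := q.1)
    (by fun_prop : Continuous fun τ : ℝ => c * Real.exp (lam M * |τ|)) fun τ => hb i τ q.2
  rw [intervalIntegral.integral_const_mul, abs_mul, abs_of_nonneg hc] at h1
  have h2 := exp_int_le hl q.1
  calc _ ≤ Real.exp (-(lam M * |q.1|)) * (c * (Real.exp (lam M * |q.1|) / lam M)) := by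
        exact mul_le_mul_of_nonneg_left (h1.trans (mul_le_mul_of_nonneg_left h2 hc)) (Real.exp_pos _).le
    _ = (Real.exp (-(lam M * |q.1|)) * Real.exp (lam M * |q.1|)) * (c / lam M) := by ring
    _ = _ := by rw [← Real.exp_add, neg_add_cancel, Real.exp_zero, one_mul]

lemma HY.contr (h : HY Fr θ M C0) (μ : Set.Icc (0:ℝ) 1) : ContractingWith (1 / 2) (h.Ph μ) := by
  have hl := lam_pos M
  have c0 := c3_nonneg
  refine ⟨by rw [← NNReal.coe_lt_coe]; norm_num, LipschitzWith.of_dist_le_mul fun Z Z' => ?_⟩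
  have hk : (0:ℝ) ≤ 6 * c3 * M ^ 2 * dist Z Z' := by positivity
  refine (h.dist_Ph μ μ Z Z' hk fun i τ ξ => ?_).trans ?_
  · refine (h.Nn_lip μ.2.1 μ.2.2 (Vz_cont M Z) (Vz_cont M Z') (fun j η => Vz_sub_br M Z Z' j τ η) ξ).trans_eq ?_
    ring
  · rw [div_le_iff₀ hl]
    push_cast
    have d0 : 0 ≤ dist Z Z' := dist_nonneg
    unfold lam
    nlinarith

/-- The solution of the truncated problem. -/
def HY.sol (h : HY Fr θ M C0) (μ : Set.Icc (0:ℝ) 1) : Fin 2 → ℝ → X → ℂ := Vz M ((h.contr μ).fixedPoint (h.Ph μ))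

lemma HY.sol_cont (h : HY Fr θ M C0) (μ : Set.Icc (0:ℝ) 1) : JCt (h.sol μ) := Vz_cont _ _

lemma HY.sol_eq (h : HY Fr θ M C0) (μ : Set.Icc (0:ℝ) 1) (i : Fin 2) (t : ℝ) (ξ : X) :
    h.sol μ i t ξ = Fr i t ξ + Du θ M μ (h.sol μ) i t ξ := by
  have := h.Vz_Ph μ ((h.contr μ).fixedPoint (h.Ph μ)) i t ξ
  rw [(h.contr μ).fixedPoint_isFixedPt] at this
  exact this

/-- A closed condition which holds at `0` and is preserved by the Duhamel map holds for the solution. -/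
lemma HY.sol_mem (h : HY Fr θ M C0) (μ : Set.Icc (0:ℝ) 1) {S : Set BC} (hS : IsClosed S) (h0 : (0 : BC) ∈ S)
    (hm : ∀ Z ∈ S, h.Ph μ Z ∈ S) : (h.contr μ).fixedPoint (h.Ph μ) ∈ S := by
  refine hS.mem_of_tendsto ((h.contr μ).tendsto_iterate_fixedPoint 0) (Eventually.of_forall fun n => ?_)
  induction n with
  | zero => exact h0
  | succ n ih => rw [Function.iterate_succ_apply']; exact hm _ ih

lemma Vz_ev (M : ℝ) (i : Fin 2) (t : ℝ) (ξ : X) : Continuous fun Z : BC => Vz M Z i t ξ :=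
  continuous_const.mul ((continuous_apply i).comp (continuous_eval_const (t, ξ)))

lemma HY.sol_bd (h : HY Fr θ M C0) (μ : Set.Icc (0:ℝ) 1) (D : Set ℝ) (k : ℕ) {b : ℝ → ℝ} (hb : ∀ t, 0 ≤ b t)
    (hm : ∀ V, JCt V → (∀ i, ∀ t ∈ D, ∀ ξ, ‖V i t ξ‖ * br ξ ^ k ≤ b t) →
      ∀ i, ∀ t ∈ D, ∀ ξ, ‖Fr i t ξ + Du θ M μ V i t ξ‖ * br ξ ^ k ≤ b t) :
    ∀ i, ∀ t ∈ D, ∀ ξ, ‖h.sol μ i t ξ‖ * br ξ ^ k ≤ b t := by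
  have hS : IsClosed {Z : BC | ∀ i, ∀ t ∈ D, ∀ ξ, ‖Vz M Z i t ξ‖ * br ξ ^ k ≤ b t} := by
    simp only [Set.setOf_forall]
    exact isClosed_iInter fun i => isClosed_iInter fun t => isClosed_iInter fun _ => isClosed_iInter fun ξ =>
      isClosed_le ((Vz_ev M i t ξ).norm.mul continuous_const) continuous_const
  refine h.sol_mem μ hS (fun i t _ ξ => ?_) fun Z hZ => ?_
  · simp only [Vz, BoundedContinuousFunction.coe_zero, Pi.zero_apply, mul_zero, norm_zero, zero_mul, hb t]
  · intro i t ht ξ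
    rw [h.Vz_Ph]
    exact hm _ (Vz_cont M Z) hZ i t ht ξ

end

end WaveGE

namespace WaveGE

/-! ### Bounds and dependence on the coupling -/

open BoundedContinuousFunction

section
variable {Fr : Fin 2 → ℝ → X → ℂ} {θ : ℝ → ℝ} {M C0 : ℝ}

lemma br_add (z w : ℂ) (ξ : X) (k : ℕ) : ‖z + w‖ * br ξ ^ k ≤ ‖z‖ * br ξ ^ k + ‖w‖ * br ξ ^ k := by
  have := mul_le_mul_of_nonneg_right (norm_add_le z w) (pow_pos (br_pos ξ) k).le
  linarith

/-- The weight of order `k` grows at most exponentially, with constants independent of `μ`. -/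
lemma HY.sol_bk (h : HY Fr θ M C0) {k : ℕ} {c : ℝ} (hc : ∀ i t ξ, ‖Fr i t ξ‖ * br ξ ^ k ≤ c) (μ : Set.Icc (0:ℝ) 1)
    (i : Fin 2) (t : ℝ) (ξ : X) :
    ‖h.sol μ i t ξ‖ * br ξ ^ k ≤ 2 * c * Real.exp ((2 * ck3 k * M ^ 2 + 1) * |t|) := by
  set K := 2 * ck3 k * M ^ 2 + 1 with hK
  have k0 := ck3_nonneg k
  have Kp : 0 < K := by positivity
  have c0 : 0 ≤ c := nn_of_br (hc 0 0 0)
  refine h.sol_bd μ Set.univ k (b := fun t => 2 * c * Real.exp (K * |t|)) (fun t => by positivity) ?_ i t trivial ξ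
  intro V hV hb i t _ ξ
  have h1 := Du_bd (θ := θ) (M := M) (μ := μ) (V := V) (i := i) (t := t) (ξ := ξ) (pow_pos (br_pos ξ) k).le
    (g := fun τ => ck3 k * M ^ 2 * (2 * c) * Real.exp (K * |τ|)) (by fun_prop) fun τ _ =>
      (h.Nn_bk μ.2.1 μ.2.2 (fun j η => hb j τ trivial η) ξ).trans_eq (by ring)
  rw [intervalIntegral.integral_const_mul, abs_mul, abs_of_nonneg (by positivity)] at h1
  have h2 := mul_le_mul_of_nonneg_left (exp_int_le Kp t) (by positivity : 0 ≤ ck3 k * M ^ 2 * (2 * c))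
  have h3 : ck3 k * M ^ 2 * (2 * c) * (Real.exp (K * |t|) / K) ≤ c * Real.exp (K * |t|) := by
    rw [← mul_div_assoc, div_le_iff₀ Kp]
    have e := Real.exp_pos (K * |t|)
    have : ck3 k * M ^ 2 * (2 * c) ≤ c * K := by rw [hK]; nlinarith
    nlinarith
  have h4 := Real.one_le_exp (mul_nonneg Kp.le (abs_nonneg t))
  have h5 := br_add (Fr i t ξ) (Du θ M μ V i t ξ) ξ k
  have h6 := hc i t ξ
  nlinarith

lemma Herm.cv3 {A B C : X → ℂ} (hA : Herm A) (hB : Herm B) (hC : Herm C) : Herm (cv3 A B C) := hA.cv (hB.cv hC)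

lemma om_neg (ξ : X) : om (-ξ) = om ξ := by simp [om]

lemma HY.sol_herm (h : HY Fr θ M C0) (hF : ∀ i t, Herm (Fr i t)) (μ : Set.Icc (0:ℝ) 1) (i : Fin 2) (t : ℝ) :
    Herm (h.sol μ i t) := by
  have hS : IsClosed {Z : BC | ∀ i t ξ, Vz M Z i t (-ξ) = (starRingEnd ℂ) (Vz M Z i t ξ)} := by
    simp only [Set.setOf_forall]
    exact isClosed_iInter fun i => isClosed_iInter fun t => isClosed_iInter fun ξ =>
      isClosed_eq (Vz_ev M i t (-ξ)) (Complex.continuous_conj.comp (Vz_ev M i t ξ))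
  refine h.sol_mem μ hS (fun i t ξ => ?_) (fun Z hZ => ?_) i t
  · simp only [Vz, BoundedContinuousFunction.coe_zero, Pi.zero_apply, mul_zero, map_zero]
  · intro i t ξ
    have hV : ∀ i t, Herm (Vz M Z i t) := fun i t ξ => hZ i t ξ
    rw [h.Vz_Ph, h.Vz_Ph, map_add, hF i t ξ]
    congr 1
    unfold Du
    rw [intervalIntegral.intervalIntegral_eq_integral_uIoc, intervalIntegral.intervalIntegral_eq_integral_uIoc, Complex.real_smul, Complex.real_smul,
      map_mul, Complex.conj_ofReal, ← integral_conj]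
    congr 2; funext τ
    have e : Herm (WaveGE.cv3 (WaveGE.clV M (Vz M Z (1 - i) τ)) (WaveGE.clV M (Vz M Z (1 - i) τ)) (WaveGE.clV M (Vz M Z i τ))) :=
      ((hV _ τ).clV M).cv3 ((hV _ τ).clV M) ((hV _ τ).clV M)
    unfold Nn
    rw [om_neg, e, map_mul, map_mul, Complex.conj_ofReal, Complex.conj_ofReal]

/-- Lipschitz dependence on the coupling constant. -/
lemma HY.sol_lip (h : HY Fr θ M C0) (μ μ' : Set.Icc (0:ℝ) 1) (i : Fin 2) (t : ℝ) (ξ : X) :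
    ‖h.sol μ i t ξ - h.sol μ' i t ξ‖ * br ξ ^ 3 ≤
      Real.exp (lam M * |t|) * (2 * (c3 * M ^ 3 / lam M) * |(μ : ℝ) - μ'|) := by
  have hl := lam_pos M
  have c0 := c3_nonneg
  have m0 := h.m
  refine (Vz_sub_br M _ _ i t ξ).trans ?_
  gcongr
  set Z := (h.contr μ).fixedPoint (h.Ph μ)
  set Z' := (h.contr μ').fixedPoint (h.Ph μ')
  have e1 : h.Ph μ Z = Z := (h.contr μ).fixedPoint_isFixedPt
  have e2 : h.Ph μ' Z' = Z' := (h.contr μ').fixedPoint_isFixedPt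
  have b1 : dist (h.Ph μ Z) (h.Ph μ Z') ≤ 1 / 2 * dist Z Z' := by
    have := (h.contr μ).2.dist_le_mul Z Z'
    push_cast at this; exact this
  have b2 : dist (h.Ph μ Z') (h.Ph μ' Z') ≤ c3 * M ^ 3 * |(μ : ℝ) - μ'| / lam M := by
    refine h.dist_Ph μ μ' Z' Z' (by positivity) fun i τ ξ => ?_
    have h1 := cv3_b3 (clV_le' h.m (Vz M Z' (1 - i) τ)) (clV_le' h.m (Vz M Z' (1 - i) τ)) (clV_le' h.m (Vz M Z' i τ)) ξ
    have h2 := h.th3 τ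
    rw [Nn, Nn, ← sub_mul, norm_mul, ← Complex.ofReal_sub, Complex.norm_real, Real.norm_eq_abs,
      show -((μ : ℝ) * θ τ ^ 3) - -((μ' : ℝ) * θ τ ^ 3) = -((μ : ℝ) - μ') * θ τ ^ 3 by ring, abs_mul, abs_neg, abs_of_nonneg h2.1]
    have h4 := Real.one_le_exp (mul_nonneg hl.le (abs_nonneg τ))
    calc _ = |(μ : ℝ) - μ'| * θ τ ^ 3 * (‖cv3 (clV M (Vz M Z' (1 - i) τ)) (clV M (Vz M Z' (1 - i) τ)) (clV M (Vz M Z' i τ)) ξ‖ * br ξ ^ 3) := by ring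
      _ ≤ |(μ : ℝ) - μ'| * 1 * (c3 * M * M * M) :=
          mul_le_mul (mul_le_mul_of_nonneg_left h2.2 (abs_nonneg _)) h1 (mul_nonneg (norm_nonneg _) (pow_pos (br_pos ξ) 3).le) (by positivity)
      _ = c3 * M ^ 3 * |(μ : ℝ) - μ'| * 1 := by ring
      _ ≤ _ := by gcongr
  have := dist_triangle (h.Ph μ Z) (h.Ph μ Z') (h.Ph μ' Z')
  rw [e1, e2] at this
  rw [e1] at b1
  rw [e2] at b2
  have e3 : c3 * M ^ 3 * |(μ : ℝ) - μ'| / lam M = c3 * M ^ 3 / lam M * |(μ : ℝ) - μ'| := by ring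
  linarith

/-- Smallness propagation: where the accumulated coupling is small the solution is at most twice the free bound. -/
lemma HY.sol_small (h : HY Fr θ M C0) (μ : Set.Icc (0:ℝ) 1) {D : Set ℝ} {R : ℝ} (hD : ∀ t ∈ D, ∀ τ ∈ Set.uIcc 0 t, τ ∈ D)
    (hR : ∀ t ∈ D, |∫ τ in (0:ℝ)..t, θ τ ^ 3| ≤ R) (hs : 8 * R * μ * c3 * C0 ^ 2 ≤ 1) (i : Fin 2) {t : ℝ} (ht : t ∈ D) (ξ : X) :
    ‖h.sol μ i t ξ‖ * br ξ ^ 3 ≤ 2 * C0 := by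
  have C0n : 0 ≤ C0 := nn_of_br (h.fr3 0 0 0)
  have c0 := c3_nonneg
  have m0 := μ.2.1
  refine h.sol_bd μ D 3 (b := fun t => 2 * C0) (fun t => by positivity) ?_ i t ht ξ
  intro V hV hb i t ht ξ
  have := h.tc
  have h1 := Du_bd (θ := θ) (M := M) (μ := μ) (V := V) (i := i) (t := t) (ξ := ξ) (pow_pos (br_pos ξ) 3).le
    (g := fun τ => μ * (c3 * (2 * C0) ^ 3) * θ τ ^ 3) (by fun_prop) fun τ hτ =>
      h.Nn_b3 μ.2.1 (fun j η => hb j τ (hD t ht τ hτ) η) ξ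
  rw [intervalIntegral.integral_const_mul, abs_mul, abs_of_nonneg (by positivity)] at h1
  have h2 := mul_le_mul_of_nonneg_left (hR t ht) (by positivity : 0 ≤ (μ : ℝ) * (c3 * (2 * C0) ^ 3))
  have h3 : (μ : ℝ) * (c3 * (2 * C0) ^ 3) * R ≤ C0 := by
    calc _ = (8 * R * μ * c3 * C0 ^ 2) * C0 := by ring
      _ ≤ 1 * C0 := by gcongr
      _ = C0 := one_mul _
  have h5 := br_add (Fr i t ξ) (Du θ M μ V i t ξ) ξ 3
  have h6 := h.fr3 i t ξ
  linarith

/-- After the nonlinearity has been switched off the solution stays bounded. -/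
lemma HY.sol_late (h : HY Fr θ M C0) (μ : Set.Icc (0:ℝ) 1) {R B : ℝ} (hR : 0 ≤ R) (hθ : ∀ t, R ≤ t → θ t = 0)
    (hB : ∀ i t ξ, 0 ≤ t → t ≤ R → ‖h.sol μ i t ξ‖ * br ξ ^ 3 ≤ B) (i : Fin 2) {t : ℝ} (ht : R ≤ t) (ξ : X) :
    ‖h.sol μ i t ξ‖ * br ξ ^ 3 ≤ C0 + μ * (c3 * B ^ 3) * R := by
  have c0 := c3_nonneg
  have m0 := μ.2.1
  have B0 : 0 ≤ B := nn_of_br (hB 0 0 0 le_rfl hR)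
  have := h.tc
  have h1 := Du_bd (θ := θ) (M := M) (μ := μ) (V := h.sol μ) (i := i) (t := t) (ξ := ξ) (pow_pos (br_pos ξ) 3).le
    (g := fun τ => μ * (c3 * B ^ 3) * θ τ ^ 3) (by fun_prop) fun τ hτ => by
      rw [Set.uIcc_of_le (hR.trans ht)] at hτ
      rcases le_total τ R with hr | hr
      · exact h.Nn_b3 m0 (fun j η => hB j τ η hτ.1 hr) ξ
      · simp only [Nn, hθ τ hr]; simp
  have e : ∫ τ in (0:ℝ)..t, θ τ ^ 3 = ∫ τ in (0:ℝ)..R, θ τ ^ 3 := by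
    have hi : ∀ a b, IntervalIntegrable (fun τ => θ τ ^ 3) volume a b := fun a b => (h.tc.pow 3).intervalIntegrable _ _
    rw [← intervalIntegral.integral_add_adjacent_intervals (hi 0 R) (hi R t), add_eq_left]
    refine (intervalIntegral.integral_congr (g := fun _ => (0:ℝ)) fun τ hτ => ?_).trans (by simp)
    rw [Set.uIcc_of_le ht] at hτ
    simp [hθ τ hτ.1]
  have h2 : |∫ τ in (0:ℝ)..R, θ τ ^ 3| ≤ R := by
    have := intervalIntegral.norm_integral_le_of_norm_le_const (a := 0) (b := R) (f := fun τ => θ τ ^ 3) (C := 1) fun τ _ => by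
      rw [Real.norm_of_nonneg (h.th3 τ).1]; exact (h.th3 τ).2
    rwa [one_mul, sub_zero, abs_of_nonneg hR] at this
  rw [intervalIntegral.integral_const_mul, abs_mul, abs_of_nonneg (by positivity), e] at h1
  have h3 := mul_le_mul_of_nonneg_left h2 (by positivity : 0 ≤ (μ : ℝ) * (c3 * B ^ 3))
  have h5 := br_add (Fr i t ξ) (Du θ M μ (h.sol μ) i t ξ) ξ 3
  have h6 := h.fr3 i t ξ
  rw [h.sol_eq]
  linarith

lemma HY.int_neg (h : HY Fr θ M C0) {r : ℝ} (hr : 0 ≤ r) (hθ : ∀ t, t ≤ -r → θ t = 0) {t : ℝ} (ht : t ≤ 0) :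
    |∫ τ in (0:ℝ)..t, θ τ ^ 3| ≤ r := by
  have hi : ∀ a b, IntervalIntegrable (fun τ => θ τ ^ 3) volume a b := fun a b => (h.tc.pow 3).intervalIntegrable _ _
  have nb : ∀ s, |∫ τ in (0:ℝ)..s, θ τ ^ 3| ≤ |s| := fun s => by
    have := intervalIntegral.norm_integral_le_of_norm_le_const (a := 0) (b := s) (f := fun τ => θ τ ^ 3) (C := 1) fun τ _ => by
      rw [Real.norm_of_nonneg (h.th3 τ).1]; exact (h.th3 τ).2
    rwa [one_mul, sub_zero] at this
  rcases le_total (-r) t with h1 | h1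
  · refine (nb t).trans ?_
    rw [abs_of_nonpos ht]; linarith
  · have e : ∫ τ in (0:ℝ)..t, θ τ ^ 3 = ∫ τ in (0:ℝ)..(-r), θ τ ^ 3 := by
      rw [← intervalIntegral.integral_add_adjacent_intervals (hi 0 (-r)) (hi (-r) t), add_eq_left]
      refine (intervalIntegral.integral_congr (g := fun _ => (0:ℝ)) fun τ hτ => ?_).trans (by simp)
      rw [Set.uIcc_of_ge h1] at hτ
      simp [hθ τ hτ.2]
    rw [e]
    refine (nb _).trans ?_
    rw [abs_neg, abs_of_nonneg hr]

lemma HY.int_pos (h : HY Fr θ M C0) {r : ℝ} (hr : 0 ≤ r) (hθ : ∀ t, r ≤ t → θ t = 0) {t : ℝ} (ht : 0 ≤ t) :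
    |∫ τ in (0:ℝ)..t, θ τ ^ 3| ≤ r := by
  have hi : ∀ a b, IntervalIntegrable (fun τ => θ τ ^ 3) volume a b := fun a b => (h.tc.pow 3).intervalIntegrable _ _
  have nb : ∀ s, |∫ τ in (0:ℝ)..s, θ τ ^ 3| ≤ |s| := fun s => by
    have := intervalIntegral.norm_integral_le_of_norm_le_const (a := 0) (b := s) (f := fun τ => θ τ ^ 3) (C := 1) fun τ _ => by
      rw [Real.norm_of_nonneg (h.th3 τ).1]; exact (h.th3 τ).2
    rwa [one_mul, sub_zero] at this
  rcases le_total t r with h1 | h1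
  · refine (nb t).trans ?_
    rwa [abs_of_nonneg ht]
  · have e : ∫ τ in (0:ℝ)..t, θ τ ^ 3 = ∫ τ in (0:ℝ)..r, θ τ ^ 3 := by
      rw [← intervalIntegral.integral_add_adjacent_intervals (hi 0 r) (hi r t), add_eq_left]
      refine (intervalIntegral.integral_congr (g := fun _ => (0:ℝ)) fun τ hτ => ?_).trans (by simp)
      rw [Set.uIcc_of_le h1] at hτ
      simp [hθ τ hτ.1]
    rw [e]
    refine (nb _).trans ?_
    rw [abs_of_nonneg hr]

end

/-- Fourier data: continuous, rapidly decreasing, transforms of real functions. -/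
structure Dat (U0 V0 : Fin 2 → X → ℂ) : Prop where
  cu : ∀ i, Continuous (U0 i)
  cv : ∀ i, Continuous (V0 i)
  bu : ∀ k : ℕ, ∃ C, ∀ i ξ, ‖U0 i ξ‖ * br ξ ^ k ≤ C
  bv : ∀ k : ℕ, ∃ C, ∀ i ξ, ‖V0 i ξ‖ * br ξ ^ k ≤ C
  hu : ∀ i, Herm (U0 i)
  hv : ∀ i, Herm (V0 i)

/-- The free evolution of the velocity. -/
def Fre (U0 V0 : Fin 2 → X → ℂ) (i : Fin 2) (t : ℝ) (ξ : X) : ℂ :=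
  ((Real.cos (om ξ * t) : ℝ) : ℂ) * V0 i ξ - ((om ξ * Real.sin (om ξ * t) : ℝ) : ℂ) * U0 i ξ

section
variable {U0 V0 : Fin 2 → X → ℂ}

lemma om_nonneg (ξ : X) : 0 ≤ om ξ := by unfold om; positivity

lemma om_le (ξ : X) : om ξ ≤ 2 * π * br ξ := by
  unfold om br; gcongr; linarith

lemma Dat.frc (d : Dat U0 V0) : JCt (Fre U0 V0) := by
  intro i
  have h1 : Continuous fun q : ℝ × X => om q.2 * q.1 := (om_cont.comp continuous_snd).mul continuous_fst
  exact ((Complex.continuous_ofReal.comp (Real.continuous_cos.comp h1)).mul ((d.cv i).comp continuous_snd)).sub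
    ((Complex.continuous_ofReal.comp ((om_cont.comp continuous_snd).mul (Real.continuous_sin.comp h1))).mul ((d.cu i).comp continuous_snd))

lemma Dat.frb (d : Dat U0 V0) (k : ℕ) : ∃ C, ∀ i t ξ, ‖Fre U0 V0 i t ξ‖ * br ξ ^ k ≤ C := by
  obtain ⟨a, ha⟩ := d.bu (k + 1)
  obtain ⟨b, hb⟩ := d.bv k
  refine ⟨b + 2 * π * a, fun i t ξ => ?_⟩
  have hp := pow_pos (br_pos ξ) k
  have h1 := mul_le_mul_of_nonneg_right (norm_sub_le (((Real.cos (om ξ * t) : ℝ) : ℂ) * V0 i ξ) (((om ξ * Real.sin (om ξ * t) : ℝ) : ℂ) * U0 i ξ)) hp.le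
  refine h1.trans ?_
  rw [norm_mul, norm_mul, Complex.norm_real, Complex.norm_real, Real.norm_eq_abs, Real.norm_eq_abs, abs_mul, abs_of_nonneg (om_nonneg ξ), add_mul]
  have c1 := Real.abs_cos_le_one (om ξ * t)
  have s1 := Real.abs_sin_le_one (om ξ * t)
  have o0 := om_nonneg ξ
  have o1 := om_le ξ
  have p0 := Real.pi_pos
  have b0 := br_pos ξ
  refine add_le_add ?_ ?_
  · calc _ ≤ 1 * ‖V0 i ξ‖ * br ξ ^ k := by gcongr
      _ ≤ _ := by rw [one_mul]; exact hb i ξ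
  · calc _ ≤ (2 * π * br ξ) * 1 * ‖U0 i ξ‖ * br ξ ^ k := by gcongr
      _ = 2 * π * (‖U0 i ξ‖ * br ξ ^ (k + 1)) := by ring
      _ ≤ _ := by gcongr; exact ha i ξ

lemma Dat.frh (d : Dat U0 V0) (i : Fin 2) (t : ℝ) : Herm (Fre U0 V0 i t) := by
  intro ξ
  simp only [Fre]
  rw [om_neg, d.hu, d.hv, map_sub, map_mul, map_mul, Complex.conj_ofReal, Complex.conj_ofReal]

end

end WaveGE

namespace WaveGE

/-! ### Smoothness in time -/

/-- The Duhamel formula for the velocity solves the oscillator equation. -/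
lemma osc {ω : ℝ} {u0 v0 : ℂ} {N v : ℝ → ℂ} (hN : Continuous N)
    (hv : ∀ t, v t = ((Real.cos (ω * t) : ℝ) : ℂ) * v0 - ((ω * Real.sin (ω * t) : ℝ) : ℂ) * u0 +
      ∫ τ in (0:ℝ)..t, ((Real.cos (ω * (t - τ)) : ℝ) : ℂ) * N τ) (hc : Continuous v) (t : ℝ) :
    HasDerivAt v (N t - ((ω ^ 2 : ℝ) : ℂ) * (u0 + ∫ τ in (0:ℝ)..t, v τ)) t := by
  have cc : Continuous fun τ : ℝ => ((Real.cos (ω * τ) : ℝ) : ℂ) := by fun_prop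
  have cs : Continuous fun τ : ℝ => ((Real.sin (ω * τ) : ℝ) : ℂ) := by fun_prop
  set P : ℝ → ℂ := fun t => ∫ τ in (0:ℝ)..t, ((Real.cos (ω * τ) : ℝ) : ℂ) * N τ with hP
  set Q : ℝ → ℂ := fun t => ∫ τ in (0:ℝ)..t, ((Real.sin (ω * τ) : ℝ) : ℂ) * N τ with hQ
  have dP : ∀ t, HasDerivAt P (((Real.cos (ω * t) : ℝ) : ℂ) * N t) t := fun t => ((cc.mul hN).integral_hasStrictDerivAt 0 t).hasDerivAt
  have dQ : ∀ t, HasDerivAt Q (((Real.sin (ω * t) : ℝ) : ℂ) * N t) t := fun t => ((cs.mul hN).integral_hasStrictDerivAt 0 t).hasDerivAt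
  have dC : ∀ t, HasDerivAt (fun t : ℝ => ((Real.cos (ω * t) : ℝ) : ℂ)) ((-(ω * Real.sin (ω * t)) : ℝ) : ℂ) t := fun t => by
    have := (((hasDerivAt_id t).const_mul ω).cos).ofReal_comp
    refine this.congr_deriv ?_
    simp; ring
  have dS : ∀ t, HasDerivAt (fun t : ℝ => ((Real.sin (ω * t) : ℝ) : ℂ)) ((ω * Real.cos (ω * t) : ℝ) : ℂ) t := fun t => by
    have := (((hasDerivAt_id t).const_mul ω).sin).ofReal_comp
    refine this.congr_deriv ?_
    simp; ring
  have ev : ∀ t, v t = ((Real.cos (ω * t) : ℝ) : ℂ) * (v0 + P t) + ((Real.sin (ω * t) : ℝ) : ℂ) * (Q t - ω * u0) := fun t => by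
    have e : ∫ τ in (0:ℝ)..t, ((Real.cos (ω * (t - τ)) : ℝ) : ℂ) * N τ =
        ((Real.cos (ω * t) : ℝ) : ℂ) * P t + ((Real.sin (ω * t) : ℝ) : ℂ) * Q t := by
      rw [hP, hQ]
      simp only
      have i1 : IntervalIntegrable (fun x => ((Real.cos (ω * t) : ℝ) : ℂ) * (((Real.cos (ω * x) : ℝ) : ℂ) * N x)) volume 0 t :=
        (continuous_const.mul (cc.mul hN)).intervalIntegrable _ _
      have i2 : IntervalIntegrable (fun x => ((Real.sin (ω * t) : ℝ) : ℂ) * (((Real.sin (ω * x) : ℝ) : ℂ) * N x)) volume 0 t :=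
        (continuous_const.mul (cs.mul hN)).intervalIntegrable _ _
      rw [← intervalIntegral.integral_const_mul, ← intervalIntegral.integral_const_mul, ← intervalIntegral.integral_add i1 i2]
      congr 1; funext τ
      rw [mul_sub, Real.cos_sub]; push_cast; ring
    rw [hv, e]; push_cast; ring
  have dv : ∀ t, HasDerivAt v (N t - (ω : ℂ) * (((Real.sin (ω * t) : ℝ) : ℂ) * (v0 + P t) - ((Real.cos (ω * t) : ℝ) : ℂ) * (Q t - ω * u0))) t := fun t => by
    have h1 := ((dC t).mul ((dP t).const_add v0)).add ((dS t).mul ((dQ t).sub_const (ω * u0)))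
    rw [funext ev]
    refine h1.congr_deriv ?_
    have := congrArg (fun x : ℝ => (x : ℂ)) (Real.sin_sq_add_cos_sq (ω * t))
    push_cast at this ⊢
    linear_combination N t * this
  have dE : ∀ t, HasDerivAt (fun t => (((Real.sin (ω * t) : ℝ) : ℂ) * (v0 + P t) - ((Real.cos (ω * t) : ℝ) : ℂ) * (Q t - ω * u0)) -
      (ω : ℂ) * (u0 + ∫ τ in (0:ℝ)..t, v τ)) 0 t := fun t => by
    have h1 := (((dS t).mul ((dP t).const_add v0)).sub ((dC t).mul ((dQ t).sub_const (ω * u0)))).sub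
      ((((hc.integral_hasStrictDerivAt 0 t).hasDerivAt).const_add u0).const_mul (ω : ℂ))
    refine h1.congr_deriv ?_
    rw [ev t]; push_cast; ring
  have hE : (((Real.sin (ω * t) : ℝ) : ℂ) * (v0 + P t) - ((Real.cos (ω * t) : ℝ) : ℂ) * (Q t - ω * u0)) =
      (ω : ℂ) * (u0 + ∫ τ in (0:ℝ)..t, v τ) := by
    have := is_const_of_deriv_eq_zero (fun s => (dE s).differentiableAt) (fun s => (dE s).deriv) t 0
    rw [← sub_eq_zero]
    refine this.trans ?_
    simp [hP, hQ]
  have := dv t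
  rw [hE] at this
  refine this.congr_deriv ?_
  push_cast; ring

section
variable {U0 V0 : Fin 2 → X → ℂ} {θ : ℝ → ℝ} {M C0 : ℝ}

/-- The position variable of the truncated problem. -/
def HY.un (h : HY (Fre U0 V0) θ M C0) (μ : Set.Icc (0:ℝ) 1) (i : Fin 2) (t : ℝ) (ξ : X) : ℂ :=
  U0 i ξ + ∫ τ in (0:ℝ)..t, h.sol μ i τ ξ

lemma HY.sol_t (h : HY (Fre U0 V0) θ M C0) (μ : Set.Icc (0:ℝ) 1) (i : Fin 2) (ξ : X) : Continuous fun t => h.sol μ i t ξ :=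
  (h.sol_cont μ i).comp (by fun_prop : Continuous fun τ : ℝ => (τ, ξ))

lemma HY.un_deriv (h : HY (Fre U0 V0) θ M C0) (μ : Set.Icc (0:ℝ) 1) (i : Fin 2) (t : ℝ) (ξ : X) :
    HasDerivAt (fun s => h.un μ i s ξ) (h.sol μ i t ξ) t :=
  ((((h.sol_t μ i ξ).integral_hasStrictDerivAt 0 t).hasDerivAt).const_add (U0 i ξ))

lemma HY.sol_deriv (h : HY (Fre U0 V0) θ M C0) (μ : Set.Icc (0:ℝ) 1) (i : Fin 2) (t : ℝ) (ξ : X) :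
    HasDerivAt (fun s => h.sol μ i s ξ) (Nn θ M μ (h.sol μ) i t ξ - ((om ξ ^ 2 : ℝ) : ℂ) * h.un μ i t ξ) t := by
  refine osc (u0 := U0 i ξ) (v0 := V0 i ξ) ((h.Nn_cont μ (h.sol_cont μ) i).comp (by fun_prop : Continuous fun τ : ℝ => (τ, ξ)))
    (fun t => ?_) (h.sol_t μ i ξ) t
  rw [h.sol_eq]; rfl

/-- The coupling constants for which the truncation is inactive. -/
def HY.UC (h : HY (Fre U0 V0) θ M C0) : Type := {μ : Set.Icc (0:ℝ) 1 // ∀ i t ξ, ‖h.sol μ i t ξ‖ * br ξ ^ 3 ≤ M}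

lemma RN.reix {ι κ : Type} (s : κ → ι) : ∀ {n : ℕ} {A : ι → ℝ → X → ℂ}, RN n A → RN n fun i => A (s i)
  | 0, _, h => ⟨fun i => h.1 (s i), fun k R => (h.2 k R).imp fun B hB i => hB (s i)⟩
  | n + 1, _, ⟨h, A', h1, h2⟩ => ⟨⟨fun i => h.1 (s i), fun k R => (h.2 k R).imp fun B hB i => hB (s i)⟩,
      _, fun i => h1 (s i), h2.reix s⟩

lemma RN.shift {ι : Type} (a : ℝ) : ∀ {n : ℕ} {A : ι → ℝ → X → ℂ}, RN n A → RN n fun i t => A i (t - a)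
  | 0, A, h => by
    refine ⟨fun i => (h.1 i).comp (by fun_prop : Continuous fun q : ℝ × X => (q.1 - a, q.2)), fun k R => ?_⟩
    obtain ⟨B, hB⟩ := h.2 k (R + |a|)
    exact ⟨B, fun i t ξ ht => hB i _ ξ ((abs_sub _ _).trans (by linarith))⟩
  | n + 1, A, ⟨h, A', h1, h2⟩ => by
    have h0 : RN 0 fun i t => A i (t - a) := RN.shift (n := 0) a h
    exact ⟨h0, fun i t => A' i (t - a), fun i t ξ => (h1 i (t - a) ξ).comp_sub_const t a, h2.shift a⟩

lemma om2_PG : PG fun ξ => ((-(om ξ ^ 2) : ℝ) : ℂ) := by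
  refine ⟨Complex.continuous_ofReal.comp ((om_cont.pow 2).neg), (2 * π) ^ 2, 2, fun ξ => ?_⟩
  rw [Complex.norm_real, norm_neg, Real.norm_of_nonneg (sq_nonneg _), ← mul_pow]
  exact pow_le_pow_left₀ (om_nonneg ξ) (om_le ξ) 2

/-- The unclipped nonlinearity for a family of solutions. -/
def NF (θ : ℝ → ℝ) (h : HY (Fre U0 V0) θ M C0) (j : h.UC × Fin 2) (t : ℝ) (ξ : X) : ℂ :=
  ((-(j.1.1 : ℝ) : ℝ) : ℂ) * (((θ t ^ 3 : ℝ) : ℂ) * cv (h.sol j.1.1 (1 - j.2) t) (cv (h.sol j.1.1 (1 - j.2) t) (h.sol j.1.1 j.2 t)) ξ)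

lemma HY.Nn_eq (h : HY (Fre U0 V0) θ M C0) (j : h.UC × Fin 2) (t : ℝ) (ξ : X) :
    Nn θ M j.1.1 (h.sol j.1.1) j.2 t ξ = NF θ h j t ξ := by
  unfold Nn NF cv3
  rw [clV_id h.m (j.1.2 _ t), clV_id h.m (j.1.2 _ t)]
  push_cast; ring

/-- All time derivatives of position and velocity decay rapidly, uniformly over the admissible couplings. -/
lemma HY.boot (h : HY (Fre U0 V0) θ M C0) (d : Dat U0 V0) (hθ : ContDiff ℝ (⊤ : ℕ∞) θ) : ∀ n : ℕ,
    RN n (fun (j : h.UC × Fin 2) t ξ => h.un j.1.1 j.2 t ξ) ∧ RN n (fun (j : h.UC × Fin 2) t ξ => h.sol j.1.1 j.2 t ξ)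
  | 0 => by
    have rV : RD (fun (j : h.UC × Fin 2) t ξ => h.sol j.1.1 j.2 t ξ) := by
      refine ⟨fun j => h.sol_cont j.1.1 j.2, fun k R => ?_⟩
      obtain ⟨c, hc⟩ := d.frb k
      refine ⟨2 * c * Real.exp ((2 * ck3 k * M ^ 2 + 1) * R), fun j t ξ ht => (h.sol_bk hc j.1.1 j.2 t ξ).trans ?_⟩
      have := ck3_nonneg k
      have c0 : 0 ≤ c := nn_of_br (hc 0 0 0)
      gcongr
    refine ⟨⟨fun j => ?_, fun k R => ?_⟩, rV⟩
    · refine ((d.cu j.2).comp continuous_snd).add ?_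
      exact intervalIntegral.continuous_parametric_intervalIntegral_of_continuous
        (f := fun (q : ℝ × X) τ => h.sol j.1.1 j.2 τ q.2) ((h.sol_cont j.1.1 j.2).comp
          (by fun_prop : Continuous fun p : (ℝ × X) × ℝ => (p.2, p.1.2))) continuous_fst
    · obtain ⟨a, ha⟩ := d.bu k
      obtain ⟨B, hB⟩ := rV.bd k R
      refine ⟨a + B * R, fun j t ξ ht => (br_add _ _ ξ k).trans (add_le_add (ha j.2 ξ) ?_)⟩
      have hp := pow_pos (br_pos ξ) k
      have h1 := intervalIntegral.norm_integral_le_of_norm_le_const (a := 0) (b := t) (f := fun τ => h.sol j.1.1 j.2 τ ξ)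
        (C := B * (br ξ ^ k)⁻¹) fun τ hτ => div_br (hB j τ ξ (by
          have := Set.uIoc_subset_uIcc hτ
          rcases le_total 0 t with h0 | h0
          · rw [Set.uIcc_of_le h0] at this; rw [abs_of_nonneg h0] at ht; rw [abs_of_nonneg this.1]; linarith [this.2]
          · rw [Set.uIcc_of_ge h0] at this; rw [abs_of_nonpos h0] at ht; rw [abs_of_nonpos this.2]; linarith [this.1]))
      rw [sub_zero] at h1
      have B0 : 0 ≤ B := nn_of_br (hB j t ξ ht)
      calc _ ≤ B * (br ξ ^ k)⁻¹ * |t| * br ξ ^ k := by gcongr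
        _ = B * |t| := by field_simp
        _ ≤ _ := by gcongr
  | n + 1 => by
    obtain ⟨rU, rV⟩ := HY.boot h d hθ n
    have rV' : RN n (fun (j : h.UC × Fin 2) t ξ => h.sol j.1.1 (1 - j.2) t ξ) :=
      RN.reix (fun j : h.UC × Fin 2 => (j.1, 1 - j.2)) rV
    have rN : RN n (NF θ h) := by
      have h1 := RN.time (c := fun t => θ t ^ 3) (hθ.pow 3) (rV'.cv (rV'.cv rV))
      have h2 := RN.cmul (c := fun j : h.UC × Fin 2 => -(j.1.1 : ℝ)) ⟨1, fun j => by
        rw [abs_neg, abs_of_nonneg j.1.1.2.1]; exact j.1.1.2.2⟩ h1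
      exact h2
    have rd0 := HY.boot h d hθ 0
    refine ⟨⟨rU.rd, _, fun j t ξ => h.un_deriv j.1.1 j.2 t ξ, rV⟩, ⟨rV.rd, _, fun j t ξ => ?_, rN.add (rU.mulp om2_PG)⟩⟩
    refine (h.sol_deriv j.1.1 j.2 t ξ).congr_deriv ?_
    rw [h.Nn_eq]; push_cast; ring

end

end WaveGE

namespace WaveGE

/-! ### The solution in physical space -/

section
variable {ι : Type} {A : ι → ℝ → X → ℂ}

lemma J_real (hH : ∀ i t, Herm (A i t)) (i : ι) (p : P) : II (A i p.1) p.2 = ((J A i p : ℝ) : ℂ) :=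
  real_II (hH i p.1) p.2

lemma Herm.sy {B : X → ℂ} (h : Herm B) (a : Fin 2) : Herm fun ξ => sy a ξ * B ξ := by
  intro ξ
  simp only [WaveGE.sy]
  rw [h, map_mul, map_mul, Complex.conj_ofReal, Complex.conj_I, PiLp.neg_apply]
  push_cast; ring

/-- A function on the frequency side is controlled pointwise by the `L¹` norm of its transform. -/
lemma inv_real (hA : RS A) (hH : ∀ i t, Herm (A i t)) (i : ι) (t : ℝ)
    (hI : Integrable fun x => J A i (t, x)) (ξ : X) : ‖A i t ξ‖ ≤ ∫ x, |J A i (t, x)| := by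
  have e : II (A i t) = fun x => ((J A i (t, x) : ℝ) : ℂ) := funext fun x => J_real hH i (t, x)
  have h1 := inv_bound (hA.rd.slice i t) (hA.rd.int i t) (by rw [e]; exact hI.ofReal) ξ
  rw [e] at h1
  simpa only [Complex.norm_real, Real.norm_eq_abs] using h1

lemma br3_le (ξ : X) : br ξ ^ 3 ≤ 4 + 16 * (‖sy 0 ξ‖ ^ 3 + ‖sy 1 ξ‖ ^ 3) := by
  have h1 : ‖ξ‖ ≤ |ξ 0| + |ξ 1| := by
    rw [EuclideanSpace.norm_eq, Fin.sum_univ_two]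
    refine Real.sqrt_le_iff.2 ⟨by positivity, ?_⟩
    rw [Real.norm_eq_abs, Real.norm_eq_abs]
    nlinarith [abs_nonneg (ξ 0), abs_nonneg (ξ 1), mul_nonneg (abs_nonneg (ξ 0)) (abs_nonneg (ξ 1))]
  have h2 : ∀ a, |ξ a| ≤ ‖sy a ξ‖ := fun a => by
    simp only [sy, norm_mul, Complex.norm_I, Complex.norm_real, mul_one, norm_neg, Real.norm_eq_abs, abs_mul, abs_of_pos Real.pi_pos]
    rw [abs_of_pos (by norm_num : (0:ℝ) < 2)]
    refine le_mul_of_one_le_left (abs_nonneg _) ?_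
    nlinarith [Real.pi_gt_three]
  have key : ∀ a b : ℝ, 0 ≤ a → 0 ≤ b → (a + b) ^ 3 ≤ 4 * (a ^ 3 + b ^ 3) := fun a b ha hb => by
    nlinarith [mul_nonneg (add_nonneg ha hb) (sq_nonneg (a - b))]
  have h3 : ‖ξ‖ ≤ ‖sy 0 ξ‖ + ‖sy 1 ξ‖ := h1.trans (add_le_add (h2 0) (h2 1))
  have k1 := key 1 ‖ξ‖ zero_le_one (norm_nonneg ξ)
  have k2 := key _ _ (norm_nonneg (sy 0 ξ)) (norm_nonneg (sy 1 ξ))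
  have k3 := pow_le_pow_left₀ (norm_nonneg ξ) h3 3
  unfold br
  linarith

/-- The cubic weight on the frequency side is controlled by `L¹` norms of third space derivatives. -/
lemma br_L1 (hA : RS A) (hH : ∀ i t, Herm (A i t)) (i : ι) (t : ℝ) (h0 : Integrable fun x => J A i (t, x))
    (h3 : ∀ a, Integrable fun x => XW [a, a, a] (J A i) (t, x)) (ξ : X) :
    ‖A i t ξ‖ * br ξ ^ 3 ≤ 4 * (∫ x, |J A i (t, x)|) + 16 * ((∫ x, |XW [0, 0, 0] (J A i) (t, x)|) +
      ∫ x, |XW [1, 1, 1] (J A i) (t, x)|) := by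
  have H : ∀ a, ‖A i t ξ‖ * ‖sy a ξ‖ ^ 3 ≤ ∫ x, |XW [a, a, a] (J A i) (t, x)| := fun a => by
    have s1 := hA.mulp (sy_PG a)
    have s2 := s1.mulp (sy_PG a)
    have s3 := s2.mulp (sy_PG a)
    have e : XW [a, a, a] (J A i) = J (fun i t ξ => sy a ξ * (sy a ξ * (sy a ξ * A i t ξ))) i := by
      simp only [XW]
      rw [J_dx hA, J_dx s1, J_dx s2]
    have h3' := h3 a
    rw [e] at h3' ⊢
    have := inv_real s3 (fun i t => (((hH i t).sy a).sy a).sy a) i t h3' ξ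
    rw [norm_mul, norm_mul, norm_mul] at this
    linarith
  have hz := inv_real hA hH i t h0 ξ
  have H0 := H 0
  have H1 := H 1
  calc ‖A i t ξ‖ * br ξ ^ 3 ≤ ‖A i t ξ‖ * (4 + 16 * (‖sy 0 ξ‖ ^ 3 + ‖sy 1 ξ‖ ^ 3)) := by gcongr; exact br3_le ξ
    _ ≤ _ := by linarith

end

section
variable {U0 V0 : Fin 2 → X → ℂ} {θ : ℝ → ℝ} {M C0 : ℝ}

/-- The physical unknown, with the data prescribed at time `T0`. -/
def HY.wf (h : HY (Fre U0 V0) θ M C0) (T0 : ℝ) : h.UC × Fin 2 → P → ℝ :=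
  J fun j t ξ => h.un j.1.1 j.2 (t - T0) ξ

/-- The physical velocity. -/
def HY.vf (h : HY (Fre U0 V0) θ M C0) (T0 : ℝ) : h.UC × Fin 2 → P → ℝ :=
  J fun j t ξ => h.sol j.1.1 j.2 (t - T0) ξ

lemma HY.rsU (h : HY (Fre U0 V0) θ M C0) (d : Dat U0 V0) (hθ : ContDiff ℝ (⊤ : ℕ∞) θ) (T0 : ℝ) :
    RS fun (j : h.UC × Fin 2) t ξ => h.un j.1.1 j.2 (t - T0) ξ := fun n => (h.boot d hθ n).1.shift T0

lemma HY.rsV (h : HY (Fre U0 V0) θ M C0) (d : Dat U0 V0) (hθ : ContDiff ℝ (⊤ : ℕ∞) θ) (T0 : ℝ) :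
    RS fun (j : h.UC × Fin 2) t ξ => h.sol j.1.1 j.2 (t - T0) ξ := fun n => (h.boot d hθ n).2.shift T0

lemma HY.vH (h : HY (Fre U0 V0) θ M C0) (d : Dat U0 V0) (T0 : ℝ) (j : h.UC × Fin 2) (t : ℝ) :
    Herm fun ξ => h.sol j.1.1 j.2 (t - T0) ξ := h.sol_herm (fun i t => d.frh i t) j.1.1 j.2 (t - T0)

lemma HY.wf_dt (h : HY (Fre U0 V0) θ M C0) (d : Dat U0 V0) (hθ : ContDiff ℝ (⊤ : ℕ∞) θ) (T0 : ℝ) (j : h.UC × Fin 2) :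
    dt (h.wf T0 j) = h.vf T0 j :=
  J_dt (h.rsU d hθ T0) (h.rsV d hθ T0) (fun j t ξ => (h.un_deriv j.1.1 j.2 (t - T0) ξ).comp_sub_const t T0) j

lemma II_sum3 {A B C : X → ℂ} (hA : Integrable A) (hB : Integrable B) (hC : Integrable C) (x : ℝ × ℝ) :
    (II (fun ξ => A ξ) x).re - (II (fun ξ => B ξ) x).re - (II (fun ξ => C ξ) x).re = (II (fun ξ => A ξ - B ξ - C ξ) x).re := by
  have e : II (fun ξ => A ξ - B ξ - C ξ) x = II A x - II B x - II C x := by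
    have i12 : Integrable fun ξ => ck ξ x * A ξ - ck ξ x * B ξ := (II_int hA x).sub (II_int hB x)
    unfold II
    rw [← integral_sub (II_int hA x) (II_int hB x), ← integral_sub i12 (II_int hC x)]
    congr 1; funext ξ
    ring
  rw [e, Complex.sub_re, Complex.sub_re]

lemma sy_om (ξ : X) : sy 0 ξ * sy 0 ξ + sy 1 ξ * sy 1 ξ = -((om ξ ^ 2 : ℝ) : ℂ) := by
  have h : ‖ξ‖ ^ 2 = ξ 0 ^ 2 + ξ 1 ^ 2 := by
    rw [EuclideanSpace.norm_sq_eq, Fin.sum_univ_two, Real.norm_eq_abs, Real.norm_eq_abs, sq_abs, sq_abs]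
  have : om ξ ^ 2 = (2 * π) ^ 2 * (ξ 0 ^ 2 + ξ 1 ^ 2) := by rw [om, mul_pow, h]
  rw [this]
  simp only [sy]
  push_cast
  linear_combination (2 * (π : ℂ)) ^ 2 * ((ξ 0 : ℂ) ^ 2 + (ξ 1 : ℂ) ^ 2) * Complex.I_mul_I

lemma HY.wf_box (h : HY (Fre U0 V0) θ M C0) (d : Dat U0 V0) (hθ : ContDiff ℝ (⊤ : ℕ∞) θ) (T0 : ℝ) (j : h.UC) (i : Fin 2) (p : P) :
    Box (h.wf T0 (j, i)) p = -(j.1 : ℝ) * ((θ (p.1 - T0) * dt (h.wf T0 (j, 1 - i)) p) *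
      ((θ (p.1 - T0) * dt (h.wf T0 (j, 1 - i)) p) * (θ (p.1 - T0) * dt (h.wf T0 (j, i)) p))) := by
  have rU := h.rsU d hθ T0
  have rV := h.rsV d hθ T0
  obtain ⟨V', hV', rV'⟩ := rV.der
  have eV' : ∀ (j : h.UC × Fin 2) t ξ, V' j t ξ = NF θ h j (t - T0) ξ - ((om ξ ^ 2 : ℝ) : ℂ) * h.un j.1.1 j.2 (t - T0) ξ := fun j t ξ => by
    rw [← h.Nn_eq]
    exact (hV' j t ξ).unique ((h.sol_deriv j.1.1 j.2 (t - T0) ξ).comp_sub_const t T0)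
  have sx : ∀ a, RS fun (j : h.UC × Fin 2) t ξ => sy a ξ * (sy a ξ * h.un j.1.1 j.2 (t - T0) ξ) :=
    fun a => (rU.mulp (sy_PG a)).mulp (sy_PG a)
  have ex : ∀ a, dx a (dx a (h.wf T0 (j, i))) = J (fun (j : h.UC × Fin 2) t ξ => sy a ξ * (sy a ξ * h.un j.1.1 j.2 (t - T0) ξ)) (j, i) :=
    fun a => by rw [HY.wf, J_dx rU, J_dx (rU.mulp (sy_PG a))]
  have et : dt (dt (h.wf T0 (j, i))) = J V' (j, i) := by rw [h.wf_dt d hθ, HY.vf, J_dt rV rV' hV']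
  rw [h.wf_dt d hθ, h.wf_dt d hθ]
  unfold Box
  rw [et, ex, ex]
  have e1 : J V' (j, i) p - J (fun (j : h.UC × Fin 2) t ξ => sy 0 ξ * (sy 0 ξ * h.un j.1.1 j.2 (t - T0) ξ)) (j, i) p -
      J (fun (j : h.UC × Fin 2) t ξ => sy 1 ξ * (sy 1 ξ * h.un j.1.1 j.2 (t - T0) ξ)) (j, i) p =
      (II (fun ξ => V' (j, i) p.1 ξ - sy 0 ξ * (sy 0 ξ * h.un j.1 i (p.1 - T0) ξ) - sy 1 ξ * (sy 1 ξ * h.un j.1 i (p.1 - T0) ξ)) p.2).re :=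
    II_sum3 (rV'.rd.int (j, i) p.1) ((sx 0).rd.int (j, i) p.1) ((sx 1).rd.int (j, i) p.1) p.2
  rw [e1]
  have e2 : (fun ξ => V' (j, i) p.1 ξ - sy 0 ξ * (sy 0 ξ * h.un j.1 i (p.1 - T0) ξ) - sy 1 ξ * (sy 1 ξ * h.un j.1 i (p.1 - T0) ξ)) =
      fun ξ => NF θ h (j, i) (p.1 - T0) ξ := by
    funext ξ
    rw [eV']
    linear_combination -h.un j.1 i (p.1 - T0) ξ * sy_om ξ
  rw [e2]
  have iV : ∀ i, Integrable fun ξ => h.sol j.1 i (p.1 - T0) ξ := fun i => rV.rd.int (j, i) p.1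
  have icv : Integrable (cv (h.sol j.1 (1 - i) (p.1 - T0)) (h.sol j.1 i (p.1 - T0))) := by
    have r' : RS fun (j : h.UC × Fin 2) t ξ => h.sol j.1.1 (1 - j.2) (t - T0) ξ := fun n =>
      RN.reix (fun j : h.UC × Fin 2 => (j.1, 1 - j.2)) (rV n)
    exact (r'.cv rV).rd.int (j, i) p.1
  have e3 : II (fun ξ => NF θ h (j, i) (p.1 - T0) ξ) p.2 = ((-(j.1 : ℝ) : ℝ) : ℂ) * (((θ (p.1 - T0) ^ 3 : ℝ) : ℂ) *
      II (cv (h.sol j.1 (1 - i) (p.1 - T0)) (cv (h.sol j.1 (1 - i) (p.1 - T0)) (h.sol j.1 i (p.1 - T0)))) p.2) := by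
    unfold II
    rw [← integral_const_mul, ← integral_const_mul]
    congr 1; funext ξ
    simp only [NF]; ring
  have ev : ∀ i, II (h.sol j.1 i (p.1 - T0)) p.2 = ((h.vf T0 (j, i) p : ℝ) : ℂ) := fun i => J_real (h.vH d T0) (j, i) p
  rw [e3, II_cv (iV _) icv, II_cv (iV _) (iV _), ev, ev]
  have e4 : ((-(j.1 : ℝ) : ℝ) : ℂ) * (((θ (p.1 - T0) ^ 3 : ℝ) : ℂ) * (((h.vf T0 (j, 1 - i) p : ℝ) : ℂ) *
      (((h.vf T0 (j, 1 - i) p : ℝ) : ℂ) * ((h.vf T0 (j, i) p : ℝ) : ℂ)))) =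
      ((-(j.1 : ℝ) * (θ (p.1 - T0) ^ 3 * (h.vf T0 (j, 1 - i) p * (h.vf T0 (j, 1 - i) p * h.vf T0 (j, i) p))) : ℝ) : ℂ) := by
    push_cast; ring
  rw [e4, Complex.ofReal_re]
  ring

lemma HY.vf_lip (h : HY (Fre U0 V0) θ M C0) (d : Dat U0 V0) (hθ : ContDiff ℝ (⊤ : ℕ∞) θ) (T0 : ℝ) (j j' : h.UC) (i : Fin 2) (p : P) {D : ℝ}
    (hD : ∀ ξ, ‖h.sol j.1 i (p.1 - T0) ξ - h.sol j'.1 i (p.1 - T0) ξ‖ * br ξ ^ 3 ≤ D) :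
    |h.vf T0 (j, i) p - h.vf T0 (j', i) p| ≤ D * I0 := by
  have rV := h.rsV d hθ T0
  have i1 := II_int (rV.rd.int (j, i) p.1) p.2
  have i2 := II_int (rV.rd.int (j', i) p.1) p.2
  have e : h.vf T0 (j, i) p - h.vf T0 (j', i) p = (∫ ξ, (ck ξ p.2 * h.sol j.1 i (p.1 - T0) ξ - ck ξ p.2 * h.sol j'.1 i (p.1 - T0) ξ)).re := by
    rw [integral_sub i1 i2, Complex.sub_re]; rfl
  rw [e]
  refine (Complex.abs_re_le_norm _).trans ((norm_integral_le_of_norm_le (br_int.const_mul D) (Eventually.of_forall fun ξ => ?_)).trans_eq ?_)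
  · rw [← mul_sub, norm_mul, ck_norm, one_mul]
    exact div_br (hD ξ)
  · rw [integral_const_mul]; rfl

lemma HY.wf_data (h : HY (Fre U0 V0) θ M C0) (T0 : ℝ) (j : h.UC) (i : Fin 2) {f : ℝ × ℝ → ℝ}
    (hf : ∀ x, II (U0 i) x = f x) (x : ℝ × ℝ) : h.wf T0 (j, i) (T0, x) = f x := by
  have e : (fun ξ => h.un j.1 i (T0 - T0) ξ) = U0 i := by
    funext ξ; simp [HY.un]
  show (II (fun ξ => h.un j.1 i (T0 - T0) ξ) x).re = f x
  rw [e, hf, Complex.ofReal_re]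

lemma HY.vf_data (h : HY (Fre U0 V0) θ M C0) (T0 : ℝ) (j : h.UC) (i : Fin 2) {f : ℝ × ℝ → ℝ}
    (hf : ∀ x, II (V0 i) x = f x) (x : ℝ × ℝ) : h.vf T0 (j, i) (T0, x) = f x := by
  have e : (fun ξ => h.sol j.1 i (T0 - T0) ξ) = V0 i := by
    funext ξ; rw [h.sol_eq]; simp [Fre, Du]
  show (II (fun ξ => h.sol j.1 i (T0 - T0) ξ) x).re = f x
  rw [e, hf, Complex.ofReal_re]

end

end WaveGE

namespace WaveGE

/-! ### The cut-off Cauchy problem -/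

/-- The time cutoff, recentred so that the data sit at time `0`. -/
def thh (T0 T s : ℝ) : ℝ := chi T0 T (s + T0)

/-- Cauchy data `f`, `g` at time `T0`, supported in `|x| ≤ T0 - 1`, together with their Fourier
representations `U0`, `V0` and a bound `C0` for the free evolution. -/
structure Bas (T0 C0 : ℝ) (U0 V0 : Fin 2 → X → ℂ) (f g : Fin 2 → ℝ × ℝ → ℝ) : Prop where
  d : Dat U0 V0
  hf : ∀ i x, II (U0 i) x = f i x
  hg : ∀ i x, II (V0 i) x = g i x
  hT : 1 ≤ T0
  sp : ∀ i x, (T0 - 1) ^ 2 < n2 x → f i x = 0 ∧ g i x = 0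
  fb : ∀ i t ξ, ‖Fre U0 V0 i t ξ‖ * br ξ ^ 3 ≤ C0

section
variable {T0 C0 : ℝ} {U0 V0 : Fin 2 → X → ℂ} {f g : Fin 2 → ℝ × ℝ → ℝ} {T M : ℝ}

lemma thh_smooth (T0 T : ℝ) : ContDiff ℝ (⊤ : ℕ∞) (thh T0 T) :=
  (chi_smooth T0 T).comp (contDiff_id.add contDiff_const)

lemma Bas.C0n (b : Bas T0 C0 U0 V0 f g) : 0 ≤ C0 := nn_of_br (b.fb 0 0 0)

lemma Bas.hy (b : Bas T0 C0 U0 V0 f g) (T : ℝ) (hM : 0 < M) : HY (Fre U0 V0) (thh T0 T) M C0 :=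
  ⟨hM, b.d.frc, b.fb, (thh_smooth T0 T).continuous, fun t => chi_nonneg _ _ _, fun t => chi_le_one _ _ _⟩

lemma Bas.msol (b : Bas T0 C0 U0 V0 f g) (h : HY (Fre U0 V0) (thh T0 T) M C0) (j : h.UC) :
    MSol T0 j.1 (th T0 T) fun i => h.wf T0 (j, i) := by
  have sm : ∀ i, Sm (h.wf T0 (j, i)) := fun i => (h.rsU b.d (thh_smooth T0 T) T0).sm (j, i)
  have e : ∀ p : P, thh T0 T (p.1 - T0) = th T0 T p := fun p => by simp [thh, th]
  have eq : ∀ i q, Box (h.wf T0 (j, i)) q = NL j.1 (th T0 T) (fun i => h.wf T0 (j, i)) i q := fun i q => by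
    rw [h.wf_box b.d (thh_smooth T0 T) T0 j i q, e]; rfl
  refine ⟨sm, fun i => funext fun q => eq i q, fun i p hp hx => ?_⟩
  refine supp_cone sm (sm_th T0 T).cont b.hT eq (fun i x hx => ?_) i p hp.le hx
  rw [h.wf_data T0 j i (b.hf i), h.wf_dt b.d (thh_smooth T0 T) T0, h.vf_data T0 j i (b.hg i)]
  exact b.sp i x hx

lemma Bas.ini (b : Bas T0 C0 U0 V0 f g) (h : HY (Fre U0 V0) (thh T0 T) M C0) (j : h.UC) (i : Fin 2) (x : ℝ × ℝ) :
    h.wf T0 (j, i) (T0, x) = f i x ∧ dt (h.wf T0 (j, i)) (T0, x) = g i x := by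
  rw [h.wf_data T0 j i (b.hf i), h.wf_dt b.d (thh_smooth T0 T) T0, h.vf_data T0 j i (b.hg i)]
  exact ⟨rfl, rfl⟩

lemma L1_L2 {F : ℝ × ℝ → ℝ} {R : ℝ} (hF : Continuous F) (h0 : ∀ x ∉ Metric.closedBall 0 R, F x = 0) :
    Integrable F ∧ ∫ x, |F x| ≤ volume.real (Metric.closedBall (0 : ℝ × ℝ) R) + ∫ x, F x ^ 2 := by
  have hK := isCompact_closedBall (0 : ℝ × ℝ) R
  have i2 : Integrable fun x => F x ^ 2 := intK hK (hF.pow 2) fun x hx => by rw [h0 x hx]; norm_num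
  have i1 : Integrable F := intK hK hF h0
  refine ⟨i1, ?_⟩
  have ii : Integrable ((Metric.closedBall (0 : ℝ × ℝ) R).indicator fun _ => (1 : ℝ)) :=
    (integrable_indicator_iff measurableSet_closedBall).2 (integrableOn_const hK.measure_lt_top.ne)
  have e : volume.real (Metric.closedBall (0 : ℝ × ℝ) R) = ∫ x, (Metric.closedBall (0 : ℝ × ℝ) R).indicator (fun _ => (1 : ℝ)) x := by
    rw [integral_indicator measurableSet_closedBall, setIntegral_const]; simp
  rw [e, ← integral_add ii i2]
  refine integral_mono i1.abs (ii.add i2) fun x => ?_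
  by_cases hx : x ∈ Metric.closedBall (0 : ℝ × ℝ) R
  · simp only [Set.indicator_of_mem hx]
    nlinarith [sq_nonneg (|F x| - 1), sq_abs (F x)]
  · simp only [Set.indicator_of_notMem hx, h0 x hx]; norm_num

set_option maxHeartbeats 1000000 in
/-- A bound for the velocity gives a bound on the frequency side, independent of the clipping level. -/
lemma Bas.flat (b : Bas T0 C0 U0 V0 f g) (hTT : T0 ≤ T) {A : ℝ} (hA : 0 < A) :
    ∃ B, 0 ≤ B ∧ ∀ M (h : HY (Fre U0 V0) (thh T0 T) M C0) (j : h.UC),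
      (∀ i p, T0 < p.1 → |th T0 T p * dt (h.wf T0 (j, i)) p| ≤ A) →
      ∀ i s ξ, 0 ≤ s → s ≤ 2 * T → ‖h.sol j.1 i s ξ‖ * br ξ ^ 3 ≤ B := by
  set T1 := T0 + 2 * T + 1
  set E := |Ed0 f g| * Real.exp (CE * A ^ 2 * (2 * T))
  set Q := volume.real (Metric.closedBall (0 : ℝ × ℝ) T1)
  have hT0 := b.hT
  have CE0 : 0 ≤ CE := by unfold CE; positivity
  have hQ : 0 ≤ Q := measureReal_nonneg
  have hE : 0 ≤ E := by positivity
  refine ⟨4 * (Q + E) + 16 * ((Q + E) + (Q + E)), by positivity, fun M h j hb i s ξ h0 h1 => ?_⟩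
  have w := b.msol h j
  have rV := h.rsV b.d (thh_smooth T0 T) T0
  have ev : dt (h.wf T0 (j, i)) = h.vf T0 (j, i) := h.wf_dt b.d (thh_smooth T0 T) T0 (j, i)
  have μ0 : (0:ℝ) ≤ j.1 := j.1.2.1
  have μ1 : (j.1 : ℝ) ≤ 1 := j.1.2.2
  have key : ∀ I : List (Fin 2), I.length ≤ 3 → Integrable (fun x => XW I (h.vf T0 (j, i)) (s + T0, x)) ∧
      ∫ x, |XW I (h.vf T0 (j, i)) (s + T0, x)| ≤ Q + E := fun I hI => by
    have F := flat_energy b.hT w (fun i x => (b.ini h j i x).1) (fun i x => (b.ini h j i x).2) μ0 hA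
      (fun i p hp _ => hb i p hp) (t := s + T0) (T1 := T1) (by linarith) (by simp only [T1]; linarith) i hI
    simp only [ev] at F
    have c : Continuous (XW I (h.vf T0 (j, i))) := by rw [← ev]; exact ((w.sm i).dt.XW I).cont
    have z : Zc T0 (XW I (h.vf T0 (j, i))) := by rw [← ev]; exact (w.zc i).dt.XW I
    obtain ⟨a1, a2⟩ := L1_L2 (F := fun x => XW I (h.vf T0 (j, i)) (s + T0, x)) (R := T1)
      (c.comp (by fun_prop : Continuous fun x : ℝ × ℝ => (s + T0, x)))
      fun x hx => cone_out' b.hT (by linarith) (by simp only [T1]; linarith) c z hx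
    refine ⟨a1, a2.trans (add_le_add le_rfl (F.trans ?_))⟩
    refine mul_le_mul (le_abs_self _) (Real.exp_le_exp.2 ?_) (Real.exp_pos _).le (abs_nonneg _)
    have : CE * j.1 * A ^ 2 ≤ CE * A ^ 2 := by
      have := mul_le_of_le_one_right CE0 μ1
      gcongr
    have h3 : s + T0 - T0 = s := by ring
    rw [h3]
    exact mul_le_mul this h1 h0 (by positivity)
  have k0 := key [] (by simp)
  have k1 := key [0, 0, 0] (by simp)
  have k2 := key [1, 1, 1] (by simp)
  have := br_L1 rV (h.vH b.d T0) (j, i) (s + T0) k0.1 (fin2 k1.1 k2.1) ξ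
  have h3 : s + T0 - T0 = s := by ring
  simp only [h3] at this
  refine this.trans ?_
  have e0 := k0.2
  have e1 := k1.2
  have e2 := k2.2
  unfold HY.vf at e0 e1 e2
  simp only [XW] at e0
  linarith

/-- For small coupling, depending on `T`, the velocities obey the bound of the free evolution. -/
lemma Bas.uncl (b : Bas T0 C0 U0 V0 f g) (hT : 0 < T) (h : HY (Fre U0 V0) (thh T0 T) M C0) (μ : Set.Icc (0:ℝ) 1)
    (hs : 8 * (1 + 2 * T) * μ * c3 * C0 ^ 2 ≤ 1) (i : Fin 2) (t : ℝ) (ξ : X) :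
    ‖h.sol μ i t ξ‖ * br ξ ^ 3 ≤ 2 * C0 := by
  have hT0 := b.hT
  refine h.sol_small μ (D := Set.univ) (fun _ _ _ _ => Set.mem_univ _) (fun t _ => ?_) hs i (Set.mem_univ t) ξ
  rcases le_total t 0 with h0 | h0
  · refine (h.int_neg zero_le_one (fun s hs => chi_before (by linarith)) h0).trans (by linarith)
  · refine (h.int_pos (r := 2 * T) (by positivity) (fun s hs => chi_after hT (by linarith)) h0).trans (by linarith)

/-- Before the initial time the cutoff is active on a unit interval only. -/
lemma Bas.early (b : Bas T0 C0 U0 V0 f g) (h : HY (Fre U0 V0) (thh T0 T) M C0) (μ : Set.Icc (0:ℝ) 1)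
    (hs : 8 * μ * c3 * C0 ^ 2 ≤ 1) (i : Fin 2) {t : ℝ} (ht : t ≤ 0) (ξ : X) :
    ‖h.sol μ i t ξ‖ * br ξ ^ 3 ≤ 2 * C0 := by
  refine h.sol_small μ (D := Set.Iic 0) (R := 1) (fun t ht τ hτ => ?_) (fun t ht => ?_) (by linarith) i (Set.mem_Iic.2 ht) ξ
  · rw [Set.uIcc_of_ge (Set.mem_Iic.1 ht)] at hτ
    exact hτ.2
  · exact h.int_neg zero_le_one (fun s hs => chi_before (by linarith)) ht

lemma HY.vf_bd (h : HY (Fre U0 V0) (thh T0 T) M C0) (b : Bas T0 C0 U0 V0 f g) (j : h.UC) (i : Fin 2) (p : P) :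
    |h.vf T0 (j, i) p| ≤ M * I0 := by
  refine (Complex.abs_re_le_norm _).trans ((norm_integral_le_of_norm_le (br_int.const_mul M) (Eventually.of_forall fun ξ => ?_)).trans_eq ?_)
  · rw [norm_mul, ck_norm, one_mul]
    exact div_br (j.2 i _ ξ)
  · rw [integral_const_mul]; rfl

end

end WaveGE

namespace WaveGE

/-! ### Uniform bounds near the initial time -/

section
variable {T0 C0 : ℝ} {U0 V0 : Fin 2 → X → ℂ} {f g : Fin 2 → ℝ × ℝ → ℝ} {T M : ℝ}

lemma th_eq {T0 T T' : ℝ} (h0 : 0 < T) (h1 : T ≤ T') {p : P} (ha : T0 ≤ p.1) (hp : p.1 ≤ T) : th T0 T' p = th T0 T p := by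
  unfold th
  rw [chi_one h0 ha hp, chi_one (h0.trans_le h1) ha (hp.trans h1)]

/-- Solutions with different cutoffs agree as long as both cutoffs equal one. -/
lemma msol_agree (hT0 : 1 ≤ T0) {T T' μ : ℝ} (h0 : 0 < T) (h1 : T ≤ T') {w w' : Fin 2 → P → ℝ}
    (hw : MSol T0 μ (th T0 T) w) (hw' : MSol T0 μ (th T0 T') w')
    (hi : ∀ i x, w i (T0, x) = w' i (T0, x) ∧ dt (w i) (T0, x) = dt (w' i) (T0, x))
    (i : Fin 2) (p : P) (hp : T0 ≤ p.1) (hp1 : p.1 < T) : w' i p = w i p := by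
  refine (uniq hw.sm hw'.sm (sm_th T0 T).cont p hp (sub_pos.2 hp1) (μ := μ) (fun i q _ _ => ?_) (fun i q a1 a2 => ?_)
    (fun i x _ => hi i x) i).symm
  · rw [hw.eq i]; rfl
  · rw [hw'.eq i]
    simp only [NL]
    rw [th_eq h0 h1 a1.le (by linarith)]

lemma eq_left {F G : P → ℝ} (hF : Continuous F) (hG : Continuous G) {a c : ℝ} (hac : a < c)
    (h : ∀ p : P, a < p.1 → p.1 < c → F p = G p) (p : P) (h0 : a ≤ p.1) (h1 : p.1 < c) : F p = G p := by
  have : Set.EqOn (fun s => F (s, p.2)) (fun s => G (s, p.2)) (closure (Set.Ioo a c)) :=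
    Set.EqOn.closure (fun s hs => h (s, p.2) hs.1 hs.2) (hF.comp (by fun_prop)) (hG.comp (by fun_prop))
  rw [closure_Ioo hac.ne] at this
  exact this ⟨h0, h1.le⟩

lemma pd_open {u v : P → ℝ} {a c : ℝ} (h : ∀ p : P, a < p.1 → p.1 < c → u p = v p) (e : P) :
    ∀ p : P, a < p.1 → p.1 < c → pd e u p = pd e v p := fun p h0 h1 => by
  have : u =ᶠ[𝓝 p] v := by
    have o : IsOpen {q : P | a < q.1 ∧ q.1 < c} := (isOpen_lt continuous_const continuous_fst).inter (isOpen_lt continuous_fst continuous_const)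
    filter_upwards [o.mem_nhds ⟨h0, h1⟩] with q hq using h q hq.1 hq.2
  unfold pd
  rw [this.fderiv_eq]

lemma LW_open {u v : P → ℝ} {a c : ℝ} (h : ∀ p : P, a < p.1 → p.1 < c → u p = v p) (I : List (Fin 2)) :
    ∀ p : P, a < p.1 → p.1 < c → LW I u p = LW I v p := by
  induction I with
  | nil => exact h
  | cons b I ih =>
    intro p h0 h1
    simp only [LW, Lb, dt, dx]
    rw [pd_open ih _ p h0 h1, pd_open ih _ p h0 h1]

lemma Box_open {u v : P → ℝ} {a c : ℝ} (h : ∀ p : P, a < p.1 → p.1 < c → u p = v p) :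
    ∀ p : P, a < p.1 → p.1 < c → Box u p = Box v p := fun p h0 h1 => by
  simp only [Box, dt, dx]
  rw [pd_open (pd_open h _) _ p h0 h1, pd_open (pd_open h _) _ p h0 h1, pd_open (pd_open h _) _ p h0 h1]

lemma norm_le_of_cone {T1 : ℝ} (hT : 1 ≤ T0) {p : P} (h0 : T0 ≤ p.1) (h1 : p.1 ≤ T1) (h2 : n2 p.2 ≤ (p.1 - 1) ^ 2) : ‖p‖ ≤ T1 := by
  have a0 : 0 ≤ p.1 - 1 := by linarith
  unfold n2 at h2
  have e : ∀ y : ℝ, y ^ 2 ≤ (p.1 - 1) ^ 2 → ‖y‖ ≤ T1 := fun y hy => by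
    have := abs_le_of_sq_le_sq hy a0
    rw [Real.norm_eq_abs]; exact this.trans (by linarith)
  refine norm_prod_le_iff.2 ⟨?_, norm_prod_le_iff.2 ⟨e _ (by nlinarith [sq_nonneg p.2.2]), e _ (by nlinarith [sq_nonneg p.2.1])⟩⟩
  rw [Real.norm_eq_abs, abs_of_nonneg (by linarith)]; exact h1

/-- On the slab below the first hyperboloid all derivatives are bounded uniformly in the cutoff time. -/
lemma Bas.kb (b : Bas T0 C0 U0 V0 f g) {N : ℝ} (hN : Tone T0 < N) :
    ∃ μ1 K, 0 < μ1 ∧ 0 ≤ K ∧ ∀ T μ w, N ≤ T → 0 ≤ μ → μ ≤ μ1 → MSol T0 μ (th T0 T) w →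
      (∀ i x, w i (T0, x) = f i x ∧ dt (w i) (T0, x) = g i x) →
      ∀ i I, I.length ≤ 3 → ∀ p : P, T0 ≤ p.1 → p.1 ≤ Tone T0 →
        |dt (LW I (w i)) p| ≤ K ∧ ∀ a, |dx a (LW I (w i)) p| ≤ K := by
  have hT0 := b.hT
  have C0n := b.C0n
  have c0 := c3_nonneg
  have hTN : T0 < N := lt_of_le_of_lt (by unfold Tone; nlinarith) hN
  have N0 : 0 < N := by linarith
  have h := b.hy N (M := 2 * C0 + 1) (by linarith)
  set D := 8 * (1 + 2 * N) * c3 * C0 ^ 2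
  have D0 : 0 ≤ D := by positivity
  have ub := fun n => (h.rsU b.d (thh_smooth T0 N) T0).ub n
  have F : ∀ I, ∃ C, ∀ (j : h.UC × Fin 2) (p : P), ‖p‖ ≤ Tone T0 →
      |dt (LW I (h.wf T0 j)) p| ≤ C ∧ ∀ a, |dx a (LW I (h.wf T0 j)) p| ≤ C := fun I => by
    obtain ⟨_, u1, u2⟩ := UB.LW ub I 1
    obtain ⟨k1, hk1⟩ := (UB.zero u1).2 (Tone T0)
    choose k2 hk2 using fun a => (UB.zero (u2 a)).2 (Tone T0)
    refine ⟨|k1| + (|k2 0| + |k2 1|), fun j p hp => ⟨?_, ?_⟩⟩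
    · refine (hk1 j p hp).trans ((le_abs_self _).trans ?_)
      linarith [abs_nonneg (k2 0), abs_nonneg (k2 1)]
    · have a0 := abs_nonneg k1
      have a1 := abs_nonneg (k2 0)
      have a2 := abs_nonneg (k2 1)
      refine fin2 ((hk2 0 j p hp).trans ?_) ((hk2 1 j p hp).trans ?_)
      · linarith [le_abs_self (k2 0)]
      · linarith [le_abs_self (k2 1)]
  choose C hC using F
  have fin := List.finite_length_le (Fin 2) 3
  refine ⟨min 1 (1 / (D + 1)), ∑ I ∈ fin.toFinset, |C I|, by positivity, Finset.sum_nonneg fun I _ => abs_nonneg _, ?_⟩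
  intro T μ w hT hμ hμ1 hw hwi i I hI p hp hp1
  have m1 : μ ≤ 1 := hμ1.trans (min_le_left _ _)
  have m2 : D * μ ≤ 1 := by
    have := mul_le_mul_of_nonneg_left (hμ1.trans (min_le_right _ _)) D0
    refine this.trans ?_
    rw [mul_one_div, div_le_one (by linarith)]; linarith
  have hj : ∀ i t ξ, ‖h.sol ⟨μ, hμ, m1⟩ i t ξ‖ * br ξ ^ 3 ≤ 2 * C0 + 1 := fun i t ξ =>
    (b.uncl N0 h ⟨μ, hμ, m1⟩ (by simp only [D] at m2; show 8 * (1 + 2 * N) * μ * c3 * C0 ^ 2 ≤ 1; linarith) i t ξ).trans (by linarith)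
  set j : h.UC := ⟨⟨μ, hμ, m1⟩, hj⟩
  have wj := b.msol h j
  have ag : ∀ q : P, T0 < q.1 → q.1 < N → LW I (w i) q = LW I (h.wf T0 (j, i)) q :=
    LW_open (fun q q0 q1 => msol_agree hT0 N0 hT wj hw (fun i x => by
      rw [(b.ini h j i x).1, (b.ini h j i x).2, (hwi i x).1, (hwi i x).2]; exact ⟨rfl, rfl⟩) i q q0.le q1) I
  have s1 := (hw.sm i).LW I
  have s2 := (wj.sm i).LW I
  have e1 : dt (LW I (w i)) p = dt (LW I (h.wf T0 (j, i))) p :=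
    eq_left s1.dt.cont s2.dt.cont hTN (pd_open ag _) p hp (by linarith)
  have e2 : ∀ a, dx a (LW I (w i)) p = dx a (LW I (h.wf T0 (j, i))) p := fun a =>
    eq_left (s1.dx a).cont (s2.dx a).cont hTN (pd_open ag _) p hp (by linarith)
  have le : |C I| ≤ ∑ I ∈ fin.toFinset, |C I| :=
    Finset.single_le_sum (f := fun I => |C I|) (fun I _ => abs_nonneg _) (fin.mem_toFinset.2 hI)
  have main : |dt (LW I (w i)) p| ≤ |C I| ∧ ∀ a, |dx a (LW I (w i)) p| ≤ |C I| := by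
    by_cases hx : n2 p.2 ≤ (p.1 - 1) ^ 2
    · have := hC I (j, i) p (norm_le_of_cone hT0 hp hp1 hx)
      rw [e1]
      exact ⟨this.1.trans (le_abs_self _), fun a => by rw [e2]; exact (this.2 a).trans (le_abs_self _)⟩
    · have hz := (wj.zc i).LW I
      -- the complement of the cone at time `T0` is reached from later times by continuity
      have ez : ∀ {F : P → ℝ}, Continuous F → Zc T0 F → F p = 0 := fun {F} cF zF => by
        push Not at hx
        have o : IsOpen {s : ℝ | (s - 1) ^ 2 < n2 p.2} := isOpen_lt (by fun_prop) continuous_const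
        obtain ⟨ε, ε0, hε⟩ := Metric.isOpen_iff.1 o p.1 hx
        refine eq_left (a := p.1) (c := p.1 + ε) (F := fun q => F (q.1, p.2)) (G := fun _ => 0) (cF.comp (by fun_prop)) continuous_const (by linarith) (fun q q0 q1 => ?_) p le_rfl (by linarith)
        refine zF _ fun hk => ?_
        have : (q.1 - 1) ^ 2 < n2 p.2 := hε (by rw [Metric.mem_ball, Real.dist_eq, abs_of_pos (by linarith)]; linarith)
        rcases hk with hk | hk
        · simp only at hk; linarith
        · simp only at hk; unfold n2 at this; linarith
      rw [e1, ez s2.dt.cont hz.dt, abs_zero]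
      exact ⟨abs_nonneg _, fun a => by rw [e2, ez (s2.dx a).cont (hz.dx a), abs_zero]; exact abs_nonneg _⟩
  exact ⟨main.1.trans le, fun a => (main.2 a).trans le⟩

end

end WaveGE

namespace WaveGE

/-! ### Continuity argument in the coupling -/

section
variable {T0 C0 : ℝ} {U0 V0 : Fin 2 → X → ℂ} {f g : Fin 2 → ℝ × ℝ → ℝ}

/-- A property of the points of `[0, a]` which holds at `0` and propagates by a fixed step holds throughout. -/
lemma stepping {G : ℝ → Prop} {a η : ℝ} (hη : 0 < η) (h0 : G 0)
    (hs : ∀ μ μ', 0 ≤ μ → μ ≤ μ' → μ' ≤ a → μ' - μ ≤ η → G μ → G μ') {μ : ℝ} (h1 : 0 ≤ μ) (h2 : μ ≤ a) : G μ := by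
  have key : ∀ n : ℕ, ∀ μ, 0 ≤ μ → μ ≤ a → μ ≤ n * η → G μ := by
    intro n
    induction n with
    | zero =>
      intro μ h0' _ h2
      have : μ = 0 := le_antisymm (by simpa using h2) h0'
      rwa [this]
    | succ n ih =>
      intro μ ha hb hc
      push_cast at hc
      refine hs (max 0 (μ - η)) μ (le_max_left _ _) (max_le ha (by linarith)) hb (by linarith [le_max_right 0 (μ - η)]) (ih _ (le_max_left _ _) (max_le (ha.trans hb) (by linarith)) ?_)
      exact max_le (by positivity) (by linarith)
  obtain ⟨n, hn⟩ := exists_nat_ge (μ / η)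
  exact key n μ h1 h2 ((div_le_iff₀ hη).1 hn)

set_option maxHeartbeats 2000000 in
/-- For small coupling, the Cauchy problem with the nonlinearity switched off after time `2T` is solvable,
with a smallness threshold independent of `T`. -/
lemma Bas.core (b : Bas T0 C0 U0 V0 f g) :
    ∃ μ0 : ℝ, 0 < μ0 ∧ ∃ N : ℕ, T0 + 1 ≤ N ∧ ∀ T μ : ℝ, N ≤ T → 0 ≤ μ → μ ≤ μ0 →
      ∃ w, MSol T0 μ (th T0 T) w ∧ ∀ i x, w i (T0, x) = f i x ∧ dt (w i) (T0, x) = g i x := by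
  have hT0 := b.hT
  have C0n := b.C0n
  have c0 := c3_nonneg
  obtain ⟨N, hN⟩ := exists_nat_gt (Tone T0)
  have hTN : T0 < N := lt_of_le_of_lt (by unfold Tone; nlinarith) hN
  have hTN' : T0 + 1 ≤ N := le_trans (by unfold Tone; nlinarith) hN.le
  obtain ⟨μ1, K, μ1p, K0, hK⟩ := b.kb hN
  obtain ⟨κ0, A0, κp, Ap, hR⟩ := ray_apriori hT0 K0
  set D := 8 * c3 * C0 ^ 2
  have D0 : 0 ≤ D := by positivity
  refine ⟨min (min 1 μ1) (min (κ0 / (2 * A0) ^ 2) (1 / (D + 1))), by positivity, N, hTN', fun T μ hT hμ hμ0 => ?_⟩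
  set μ0 := min (min 1 μ1) (min (κ0 / (2 * A0) ^ 2) (1 / (D + 1)))
  have mm : ∀ m : ℝ, 0 ≤ m → m ≤ μ0 → m ≤ 1 ∧ m ≤ μ1 ∧ m * (2 * A0) ^ 2 ≤ κ0 ∧ D * m ≤ 1 := fun m m0 hm => by
    have h1 := hm.trans (min_le_left _ _)
    have h2 := hm.trans (min_le_right _ _)
    refine ⟨h1.trans (min_le_left _ _), h1.trans (min_le_right _ _), ?_, ?_⟩
    · exact (le_div_iff₀ (by positivity)).1 (h2.trans (min_le_left _ _))
    · have := mul_le_mul_of_nonneg_left (h2.trans (min_le_right _ _)) D0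
      refine this.trans ?_
      rw [mul_one_div, div_le_one (by linarith)]; linarith
  have Tp : 0 < T := by linarith
  obtain ⟨B, B0, hB⟩ := b.flat (T := T) (by linarith) Ap
  set M := 2 * C0 + (B + 1) + c3 * (B + 1) ^ 3 * (2 * T) + 1
  have Mp : 0 < M := by positivity
  have h := b.hy T Mp
  set E := Real.exp (lam M * (2 * T)) * (2 * (c3 * M ^ 3 / lam M))
  have lp := lam_pos M
  have E0 : 0 ≤ E := by positivity
  have I0n := I0_nonneg
  -- bounds on the frequency side up to time `2T` exclude clipping
  have UCC : ∀ m : Set.Icc (0:ℝ) 1, (m : ℝ) ≤ μ0 → (∀ i s ξ, 0 ≤ s → s ≤ 2 * T → ‖h.sol m i s ξ‖ * br ξ ^ 3 ≤ B + 1) →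
      ∀ i t ξ, ‖h.sol m i t ξ‖ * br ξ ^ 3 ≤ M := fun m hm hb i t ξ => by
    obtain ⟨q1, -, -, q2⟩ := mm m m.2.1 hm
    have p3 : 0 ≤ c3 * (B + 1) ^ 3 * (2 * T) := by positivity
    rcases le_total t 0 with ht | ht
    · refine (b.early h m (by simp only [D] at q2; linarith) i ht ξ).trans ?_
      simp only [M]; linarith
    · rcases le_total t (2 * T) with ht' | ht'
      · refine (hb i t ξ ht ht').trans ?_
        simp only [M]; linarith
      · refine (h.sol_late m (R := 2 * T) (by positivity) (fun s hs => chi_after Tp (by linarith)) (fun i t ξ a1 a2 => hb i t ξ a1 a2) i ht' ξ).trans ?_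
        have : (m:ℝ) * (c3 * (B + 1) ^ 3) * (2 * T) ≤ c3 * (B + 1) ^ 3 * (2 * T) := by
          have : (m:ℝ) * (c3 * (B + 1) ^ 3) ≤ c3 * (B + 1) ^ 3 := mul_le_of_le_one_left (by positivity) q1
          gcongr
        simp only [M]; linarith
  set Good : ℝ → Prop := fun m => ∃ j : h.UC, (j.1 : ℝ) = m ∧ (∀ i s ξ, 0 ≤ s → s ≤ 2 * T → ‖h.sol j.1 i s ξ‖ * br ξ ^ 3 ≤ B) ∧
    ∀ i (p : P), T0 ≤ p.1 → √p.1 * |h.vf T0 (j, i) p| ≤ A0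
  have vd : ∀ (j : h.UC) i, dt (h.wf T0 (j, i)) = h.vf T0 (j, i) := fun j i => h.wf_dt b.d (thh_smooth T0 T) T0 (j, i)
  -- the a priori estimate improves any bound of size `A` with `μ A² ≤ κ0`
  have impr : ∀ (j : h.UC) (A : ℝ), (j.1 : ℝ) ≤ μ0 → 0 < A → (j.1 : ℝ) * A ^ 2 ≤ κ0 →
      (∀ i (p : P), T0 ≤ p.1 → p.1 ≤ 2 * T → √p.1 * |h.vf T0 (j, i) p| ≤ A) → Good j.1 := fun j A hj hA hk hb => by
    have w := b.msol h j
    obtain ⟨q1, q2, q3, q4⟩ := mm j.1 j.1.2.1 hj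
    have r := hR T j.1 A Tp j.1.2.1 hA hk _ w (fun i p hp => ?_) (hK T j.1 _ hT j.1.2.1 q2 w (b.ini h j))
    · simp only [vd] at r
      refine ⟨j, rfl, hB M h j fun i p hp => ?_, r⟩
      have p1 : 1 ≤ √p.1 := Real.one_le_sqrt.2 (by linarith)
      have t0 : 0 ≤ th T0 T p := chi_nonneg T0 T p.1
      rw [vd, abs_mul, abs_of_nonneg t0]
      have := r i p hp.le
      have a0 := abs_nonneg (h.vf T0 (j, i) p)
      have t1 : th T0 T p ≤ 1 := chi_le_one T0 T p.1
      nlinarith [mul_le_mul_of_nonneg_right t1 a0]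
    · rw [vd]
      rcases le_total p.1 (2 * T) with h1 | h1
      · have := hb i p hp.le h1
        have t1 : th T0 T p ≤ 1 := chi_le_one T0 T p.1
        have t0 : 0 ≤ th T0 T p := chi_nonneg T0 T p.1
        have s2 : √p.1 ^ 2 = p.1 := Real.sq_sqrt (by linarith)
        have e : p.1 * (th T0 T p * h.vf T0 (j, i) p) ^ 2 = th T0 T p ^ 2 * (√p.1 * |h.vf T0 (j, i) p|) ^ 2 := by
          rw [mul_pow, mul_pow, sq_abs, s2]; ring
        rw [e]
        have k1 : th T0 T p ^ 2 ≤ 1 := pow_le_one₀ t0 t1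
        have k2 : (√p.1 * |h.vf T0 (j, i) p|) ^ 2 ≤ A ^ 2 := pow_le_pow_left₀ (by positivity) this 2
        exact (mul_le_of_le_one_left (by positivity) k1).trans k2
      · rw [show th T0 T p = 0 from chi_after Tp h1]
        simp; positivity
  have G0 : Good 0 := by
    have u0 : ∀ i t ξ, ‖h.sol ⟨0, le_rfl, zero_le_one⟩ i t ξ‖ * br ξ ^ 3 ≤ M := fun i t ξ => by
      refine (b.uncl Tp h ⟨0, le_rfl, zero_le_one⟩ (by simp) i t ξ).trans ?_
      have : 0 ≤ c3 * (B + 1) ^ 3 * (2 * T) := by positivity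
      simp only [M]; linarith
    refine impr ⟨⟨0, le_rfl, zero_le_one⟩, u0⟩ (√(2 * T) * (M * I0) + 1) (by show (0:ℝ) ≤ μ0; positivity) (by positivity) (by simp; positivity) fun i p h0 h1 => ?_
    have := h.vf_bd b ⟨⟨0, le_rfl, zero_le_one⟩, u0⟩ i p
    have s := Real.sqrt_le_sqrt h1
    exact (mul_le_mul s this (abs_nonneg _) (Real.sqrt_nonneg _)).trans (by linarith)
  set S := E + √(2 * T) * (E * I0)
  have S0 : 0 ≤ S := by positivity
  obtain ⟨j, hj, -, -⟩ := stepping (G := Good) (a := μ0) (η := min 1 A0 / (S + 1)) (by positivity) G0 (fun m m' h0 h1 h2 h3 hG => by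
    obtain ⟨j, rfl, j1, j2⟩ := hG
    have m1 := (mm m' (h0.trans h1) h2).1
    have d0 : 0 ≤ m' - j.1 := sub_nonneg.2 h1
    have dS : S * (m' - j.1) ≤ min 1 A0 := by
      refine (mul_le_mul_of_nonneg_left h3 S0).trans ?_
      rw [mul_div_assoc', div_le_iff₀ (by linarith)]
      nlinarith [show (0:ℝ) ≤ min 1 A0 by positivity]
    have k1 : 0 ≤ √(2 * T) * (E * I0) := by positivity
    have dE : E * (m' - j.1) ≤ 1 :=
      (mul_le_mul_of_nonneg_right (show E ≤ S by simp only [S]; linarith) d0).trans (dS.trans (min_le_left _ _))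
    have dA : √(2 * T) * (E * I0) * (m' - j.1) ≤ A0 :=
      (mul_le_mul_of_nonneg_right (show √(2 * T) * (E * I0) ≤ S by simp only [S]; linarith) d0).trans (dS.trans (min_le_right _ _))
    set mu : Set.Icc (0:ℝ) 1 := ⟨m', h0.trans h1, m1⟩
    have lip : ∀ i s ξ, 0 ≤ s → s ≤ 2 * T → ‖h.sol mu i s ξ - h.sol j.1 i s ξ‖ * br ξ ^ 3 ≤ E * (m' - j.1) := fun i s ξ s0 s1 => by
      refine (h.sol_lip mu j.1 i s ξ).trans ?_
      rw [abs_of_nonneg s0, show |(mu:ℝ) - j.1| = m' - j.1 from abs_of_nonneg d0, ← mul_assoc]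
      simp only [E]
      gcongr
    have uc : ∀ i t ξ, ‖h.sol mu i t ξ‖ * br ξ ^ 3 ≤ M := UCC mu h2 fun i s ξ s0 s1 => by
      have a1 := lip i s ξ s0 s1
      have a2 := j1 i s ξ s0 s1
      have a3 : ‖h.sol mu i s ξ‖ ≤ ‖h.sol mu i s ξ - h.sol j.1 i s ξ‖ + ‖h.sol j.1 i s ξ‖ := by
        simpa using norm_add_le (h.sol mu i s ξ - h.sol j.1 i s ξ) (h.sol j.1 i s ξ)
      have a4 := mul_le_mul_of_nonneg_right a3 (pow_pos (br_pos ξ) 3).le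
      linarith
    refine impr ⟨mu, uc⟩ (2 * A0) h2 (by positivity) (mm m' (h0.trans h1) h2).2.2.1 fun i p p0 p1 => ?_
    have a1 := h.vf_lip b.d (thh_smooth T0 T) T0 ⟨mu, uc⟩ j i p (D := E * (m' - j.1)) fun ξ => lip i _ ξ (by linarith) (by linarith)
    have a2 := j2 i p p0
    have a3 : |h.vf T0 (⟨mu, uc⟩, i) p| ≤ |h.vf T0 (⟨mu, uc⟩, i) p - h.vf T0 (j, i) p| + |h.vf T0 (j, i) p| := by
      simpa using abs_add_le (h.vf T0 (⟨mu, uc⟩, i) p - h.vf T0 (j, i) p) (h.vf T0 (j, i) p)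
    have a4 := mul_le_mul_of_nonneg_left a3 (Real.sqrt_nonneg p.1)
    have a5 := mul_le_mul (Real.sqrt_le_sqrt p1) a1 (abs_nonneg _) (Real.sqrt_nonneg _)
    rw [mul_add] at a4
    have e : √(2 * T) * (E * (m' - j.1) * I0) = √(2 * T) * (E * I0) * (m' - j.1) := by ring
    rw [e] at a5
    linarith) hμ hμ0
  have w := b.msol h j
  rw [hj] at w
  exact ⟨_, w, b.ini h j⟩

end

end WaveGE

namespace WaveGE

/-! ### Gluing, scaling and the original Cauchy problem -/

section
variable {T0 C0 : ℝ} {U0 V0 : Fin 2 → X → ℂ} {f g : Fin 2 → ℝ × ℝ → ℝ}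

lemma NL_open {u v : Fin 2 → P → ℝ} {a c : ℝ} (h : ∀ i (p : P), a < p.1 → p.1 < c → u i p = v i p) (μ : ℝ) (ϑ : P → ℝ) (i : Fin 2) :
    ∀ p : P, a < p.1 → p.1 < c → NL μ ϑ u i p = NL μ ϑ v i p := fun p h0 h1 => by
  simp only [NL, dt]
  rw [pd_open (h i) _ p h0 h1, pd_open (h (1 - i)) _ p h0 h1]

lemma slab_nhds {a c : ℝ} {p : P} (h0 : a < p.1) (h1 : p.1 < c) : {q : P | a < q.1 ∧ q.1 < c} ∈ 𝓝 p :=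
  ((isOpen_lt continuous_const continuous_fst).inter (isOpen_lt continuous_fst continuous_const)).mem_nhds ⟨h0, h1⟩

/-- Global solutions of the rescaled problem, obtained by gluing the solutions with cutoff times `n → ∞`. -/
lemma Bas.glob (b : Bas T0 C0 U0 V0 f g) :
    ∃ μ0 : ℝ, 0 < μ0 ∧ ∀ μ : ℝ, 0 ≤ μ → μ ≤ μ0 → ∃ u : Fin 2 → P → ℝ, (∀ i, Sm (u i)) ∧
      (∀ i (p : P), T0 < p.1 → Box (u i) p = NL μ (fun _ => 1) u i p) ∧
      ∀ i x, u i (T0, x) = f i x ∧ dt (u i) (T0, x) = g i x := by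
  have hT0 := b.hT
  obtain ⟨μ0, μp, N, hN, H⟩ := b.core
  refine ⟨μ0, μp, fun μ h0 h1 => ?_⟩
  have H' : ∀ n : ℕ, ∃ w, N ≤ n → MSol T0 μ (th T0 n) w ∧ ∀ i x, w i (T0, x) = f i x ∧ dt (w i) (T0, x) = g i x := fun n => by
    by_cases hn : N ≤ n
    · obtain ⟨w, hw⟩ := H n μ (Nat.cast_le.2 hn) h0 h1
      exact ⟨w, fun _ => hw⟩
    · exact ⟨fun _ _ => 0, fun h => absurd h hn⟩
  choose w hw using H'
  have ag0 : ∀ n m : ℕ, N ≤ n → n ≤ m → ∀ i (p : P), T0 ≤ p.1 → p.1 < n → w m i p = w n i p := fun n m hn hm i p a1 a2 =>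
    msol_agree hT0 (by linarith) (Nat.cast_le.2 hm) (hw n hn).1 (hw m (hn.trans hm)).1 (fun i x => by
      rw [((hw n hn).2 i x).1, ((hw n hn).2 i x).2, ((hw m (hn.trans hm)).2 i x).1, ((hw m (hn.trans hm)).2 i x).2]
      exact ⟨rfl, rfl⟩) i p a1 a2
  set k : P → ℕ := fun p => max N (⌊p.1⌋₊ + 1)
  have kN : ∀ p, N ≤ k p := fun p => le_max_left _ _
  have kp : ∀ p : P, p.1 < k p := fun p => by
    have := Nat.lt_floor_add_one p.1
    have h2 : ((⌊p.1⌋₊ + 1 : ℕ) : ℝ) ≤ k p := Nat.cast_le.2 (le_max_right _ _)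
    push_cast at h2
    linarith
  set u : Fin 2 → P → ℝ := fun i p => w (k p) i p
  have early : ∀ i (p : P), T0 - 1 < p.1 → p.1 < N → u i p = w N i p := fun i p _ hp => by
    have : k p = N := max_eq_left (by
      rcases le_total p.1 0 with h | h
      · rw [Nat.floor_of_nonpos h]
        have : (1:ℝ) ≤ N := by linarith
        exact_mod_cast this
      · have := (Nat.floor_lt h).2 hp
        omega)
    simp only [u, this]
  have early' : ∀ i (p : P), p.1 < N → u i p = w N i p := fun i p hp => by
    have : k p = N := max_eq_left (by
      rcases le_total p.1 0 with h | h
      · rw [Nat.floor_of_nonpos h]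
        have : (1:ℝ) ≤ N := by linarith
        exact_mod_cast this
      · have := (Nat.floor_lt h).2 hp
        omega)
    simp only [u, this]
  have late : ∀ n : ℕ, N ≤ n → ∀ i (p : P), T0 < p.1 → p.1 < n → u i p = w n i p := fun n hn i p h0 h1 => by
    rcases le_total (k p) n with h | h
    · exact (ag0 _ _ (kN p) h i p h0.le (kp p)).symm
    · exact ag0 _ _ hn h i p h0.le h1
  refine ⟨u, fun i => contDiff_iff_contDiffAt.2 fun p => ?_, fun i p hp => ?_, fun i x => ?_⟩
  · by_cases hp : p.1 < N
    · refine ((hw N le_rfl).1.sm i).contDiffAt.congr_of_eventuallyEq ?_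
      filter_upwards [(isOpen_lt continuous_fst continuous_const).mem_nhds (show p ∈ {q : P | q.1 < N} from hp)] with q hq
      exact early' i q hq
    · refine ((hw (k p) (kN p)).1.sm i).contDiffAt.congr_of_eventuallyEq ?_
      filter_upwards [slab_nhds (show T0 < p.1 by push Not at hp; linarith) (kp p)] with q hq
      exact late (k p) (kN p) i q hq.1 hq.2
  · have L := late (k p) (kN p)
    have hk : (N:ℝ) ≤ k p := Nat.cast_le.2 (kN p)
    rw [Box_open (L i) p hp (kp p), NL_open L _ _ _ p hp (kp p), (hw (k p) (kN p)).1.eq i]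
    have : th T0 (k p) p = 1 := chi_one (by linarith) hp.le (kp p).le
    simp only [NL, this]
  · have hx : T0 < (N : ℝ) := by linarith
    have e := (hw N le_rfl).2 i x
    rw [early' i (T0, x) hx]
    refine ⟨e.1, ?_⟩
    rw [← e.2]
    exact pd_open (early i) _ (T0, x) (by simp) hx

end

lemma supp_rad {f : ℝ × ℝ → ℝ} (h : HasCompactSupport f) : ∃ R : ℝ, 0 ≤ R ∧ ∀ x, R ^ 2 < n2 x → f x = 0 := by
  obtain ⟨r, hr⟩ := h.isCompact.isBounded.subset_closedBall (0 : ℝ × ℝ)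
  refine ⟨2 * |r|, by positivity, fun x hx => ?_⟩
  by_contra hf
  have := hr (subset_tsupport f hf)
  rw [mem_closedBall_zero_iff, norm_prod_le_iff, Real.norm_eq_abs, Real.norm_eq_abs] at this
  have h1 : x.1 ^ 2 ≤ r ^ 2 := sq_le_sq.2 (this.1.trans (le_abs_self r))
  have h2 : x.2 ^ 2 ≤ r ^ 2 := sq_le_sq.2 (this.2.trans (le_abs_self r))
  rw [mul_pow, sq_abs] at hx
  unfold n2 at hx
  nlinarith [sq_nonneg r]

/-- Smooth compactly supported data, placed at a sufficiently late time. -/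
lemma bas_exists {f g : Fin 2 → ℝ × ℝ → ℝ} (sf : ∀ i, Sm (f i)) (cf : ∀ i, HasCompactSupport (f i))
    (sg : ∀ i, Sm (g i)) (cg : ∀ i, HasCompactSupport (g i)) : ∃ T0 C0 U0 V0, Bas T0 C0 U0 V0 f g := by
  choose U0 u1 u2 u3 u4 using fun i => data_inv (sf i) (cf i)
  choose V0 v1 v2 v3 v4 using fun i => data_inv (sg i) (cg i)
  choose r hr0 hr using fun i => supp_rad (cf i)
  choose s hs0 hs using fun i => supp_rad (cg i)
  have bd : ∀ {W : Fin 2 → X → ℂ}, (∀ i (k : ℕ), ∃ C, ∀ ξ, ‖W i ξ‖ * br ξ ^ k ≤ C) → ∀ k : ℕ, ∃ C, ∀ i ξ, ‖W i ξ‖ * br ξ ^ k ≤ C := fun h k => by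
    choose C hC using fun i => h i k
    refine ⟨max (C 0) (C 1), fin2 (fun ξ => (hC 0 ξ).trans (le_max_left _ _)) fun ξ => (hC 1 ξ).trans (le_max_right _ _)⟩
  have d : Dat U0 V0 := ⟨u1, v1, bd u2, bd v2, u3, v3⟩
  obtain ⟨C0, hC0⟩ := d.frb 3
  set R := r 0 + r 1 + (s 0 + s 1)
  have a0 := hr0 0
  have a1 := hr0 1
  have a2 := hs0 0
  have a3 := hs0 1
  have le : ∀ y, 0 ≤ y → y ≤ R → ∀ x, (R + 1 - 1) ^ 2 < n2 x → y ^ 2 < n2 x := fun y y0 hy x hx => by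
    refine lt_of_le_of_lt ?_ hx
    rw [add_sub_cancel_right]
    exact pow_le_pow_left₀ y0 hy 2
  refine ⟨R + 1, C0, U0, V0, d, u4, v4, by simp only [R]; linarith, fun i x hx => ⟨?_, ?_⟩, hC0⟩
  · refine hr i x (le _ (hr0 i) ?_ x hx)
    revert i; apply fin2 <;> simp only [R] <;> linarith
  · refine hs i x (le _ (hs0 i) ?_ x hx)
    revert i; apply fin2 <;> simp only [R] <;> linarith

lemma pd_shift {u : P → ℝ} (e c : P) : pd e (fun q => u (q + c)) = fun q => pd e u (q + c) := by
  funext q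
  simp only [pd]
  rw [fderiv_comp_add_right]

lemma Sm.shift {u : P → ℝ} (hu : Sm u) (c : P) : Sm fun q => u (q + c) := hu.comp (contDiff_id.add contDiff_const)

/-- The scaling `u = ε w` turns the coupling `ε²` into one; the time origin is moved to `T0` at the same time. -/
lemma Box_scale {u : P → ℝ} (hu : Sm u) (ε : ℝ) (c p : P) : Box (fun q => ε * u (q + c)) p = ε * Box u (p + c) := by
  have D : ∀ {v : P → ℝ}, Sm v → ∀ e, pd e (fun q => ε * v (q + c)) = fun q => ε * pd e v (q + c) := fun {v} hv e => by
    funext q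
    rw [pd_cmul (hv.shift c), pd_shift]
  simp only [Box, dt, dx]
  rw [D hu, D (hu.pd _), D hu, D (hu.pd _), D hu, D (hu.pd _)]
  ring

section
variable {u : ℝ → ℝ → ℝ → ℝ} {v : P → ℝ}

lemma pt_eq (h : Sm v) : pt (fun t x1 x2 => v (t, x1, x2)) = fun t x1 x2 => dt v (t, x1, x2) := by
  funext t x1 x2
  have c : HasDerivAt (fun s : ℝ => ((s, x1, x2) : P)) (1, 0) t := (hasDerivAt_id t).prodMk (hasDerivAt_const t (x1, x2))
  exact ((h.diff (t, x1, x2)).hasFDerivAt.comp_hasDerivAt t c).deriv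

lemma p1_eq (h : Sm v) : p1 (fun t x1 x2 => v (t, x1, x2)) = fun t x1 x2 => dx 0 v (t, x1, x2) := by
  funext t x1 x2
  have c : HasDerivAt (fun s : ℝ => ((t, s, x2) : P)) (0, 1, 0) x1 :=
    (hasDerivAt_const x1 t).prodMk ((hasDerivAt_id x1).prodMk (hasDerivAt_const x1 x2))
  have := ((h.diff (t, x1, x2)).hasFDerivAt.comp_hasDerivAt x1 c).deriv
  exact this

lemma p2_eq (h : Sm v) : p2 (fun t x1 x2 => v (t, x1, x2)) = fun t x1 x2 => dx 1 v (t, x1, x2) := by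
  funext t x1 x2
  have c : HasDerivAt (fun s : ℝ => ((t, x1, s) : P)) (0, 0, 1) x2 :=
    (hasDerivAt_const x2 t).prodMk ((hasDerivAt_const x2 x1).prodMk (hasDerivAt_id x2))
  have := ((h.diff (t, x1, x2)).hasFDerivAt.comp_hasDerivAt x2 c).deriv
  exact this

lemma dAl_eq (h : Sm v) (t x1 x2 : ℝ) : dAlembert (fun t x1 x2 => v (t, x1, x2)) t x1 x2 = Box v (t, x1, x2) := by
  simp only [dAlembert, Box]
  rw [pt_eq h, pt_eq h.dt, p1_eq h, p1_eq (h.dx 0), p2_eq h, p2_eq (h.dx 1)]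

end

lemma isSolution_of {ε : ℝ} {f1 f2 g1 g2 : ℝ → ℝ → ℝ} {v : Fin 2 → P → ℝ} (hv : ∀ i, Sm (v i))
    (hb : ∀ i (p : P), 0 < p.1 → Box (v i) p = NL 1 (fun _ => 1) v i p)
    (h1 : ∀ x : ℝ × ℝ, v 0 (0, x) = ε * f1 x.1 x.2 ∧ dt (v 0) (0, x) = ε * g1 x.1 x.2)
    (h2 : ∀ x : ℝ × ℝ, v 1 (0, x) = ε * f2 x.1 x.2 ∧ dt (v 1) (0, x) = ε * g2 x.1 x.2) :
    IsSolution ε f1 f2 g1 g2 (fun t x1 x2 => v 0 (t, x1, x2)) (fun t x1 x2 => v 1 (t, x1, x2)) where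
  smooth1 := hv 0
  smooth2 := hv 1
  pde1 t x1 x2 ht := by
    rw [dAl_eq (hv 0), pt_eq (hv 0), pt_eq (hv 1), hb 0 _ ht]
    simp only [NL, show (1 : Fin 2) - 0 = 1 from rfl]; ring
  pde2 t x1 x2 ht := by
    rw [dAl_eq (hv 1), pt_eq (hv 0), pt_eq (hv 1), hb 1 _ ht]
    simp only [NL, show (1 : Fin 2) - 1 = 0 from rfl]; ring
  init1 x1 x2 := (h1 (x1, x2)).1
  init2 x1 x2 := (h2 (x1, x2)).1
  initd1 x1 x2 := by rw [pt_eq (hv 0)]; exact (h1 (x1, x2)).2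
  initd2 x1 x2 := by rw [pt_eq (hv 1)]; exact (h2 (x1, x2)).2

lemma of_isSolution {ε : ℝ} {f1 f2 g1 g2 : ℝ → ℝ → ℝ} {u1 u2 : ℝ → ℝ → ℝ → ℝ} (h : IsSolution ε f1 f2 g1 g2 u1 u2) :
    ∃ v : Fin 2 → P → ℝ, (v 0 = fun p => u1 p.1 p.2.1 p.2.2) ∧ (v 1 = fun p => u2 p.1 p.2.1 p.2.2) ∧ (∀ i, Sm (v i)) ∧
    (∀ i (p : P), 0 < p.1 → Box (v i) p = NL 1 (fun _ => 1) v i p) ∧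
    (∀ x : ℝ × ℝ, v 0 (0, x) = ε * f1 x.1 x.2 ∧ dt (v 0) (0, x) = ε * g1 x.1 x.2) ∧
    (∀ x : ℝ × ℝ, v 1 (0, x) = ε * f2 x.1 x.2 ∧ dt (v 1) (0, x) = ε * g2 x.1 x.2) := by
  set a : P → ℝ := fun p => u1 p.1 p.2.1 p.2.2
  set b : P → ℝ := fun p => u2 p.1 p.2.1 p.2.2
  have sa : Sm a := h.smooth1
  have sb : Sm b := h.smooth2
  have pa : pt u1 = fun t x1 x2 => dt a (t, x1, x2) := pt_eq sa
  have pb : pt u2 = fun t x1 x2 => dt b (t, x1, x2) := pt_eq sb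
  have q1 := h.pde1
  have q2 := h.pde2
  have i1 := h.initd1
  have i2 := h.initd2
  rw [pa] at q1 q2 i1
  rw [pb] at q1 q2 i2
  refine ⟨![a, b], rfl, rfl, fin2 sa sb, fin2 (fun p hp => ?_) (fun p hp => ?_), fun x => ⟨h.init1 x.1 x.2, i1 x.1 x.2⟩,
    fun x => ⟨h.init2 x.1 x.2, i2 x.1 x.2⟩⟩
  · have := (dAl_eq sa p.1 p.2.1 p.2.2).symm.trans (q1 p.1 p.2.1 p.2.2 hp)
    simp only [NL, show (1 : Fin 2) - 0 = 1 from rfl, Matrix.cons_val_zero, Matrix.cons_val_one]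
    rw [this]; ring
  · have := (dAl_eq sb p.1 p.2.1 p.2.2).symm.trans (q2 p.1 p.2.1 p.2.2 hp)
    simp only [NL, show (1 : Fin 2) - 1 = 0 from rfl, Matrix.cons_val_zero, Matrix.cons_val_one]
    rw [this]; ring

end WaveGE

/-- small-data global existence and uniqueness. -/
theorem global_existence_uniqueness (f1 f2 g1 g2 : ℝ → ℝ → ℝ)
    (hf1 : SmoothCompact2 f1) (hf2 : SmoothCompact2 f2)
    (hg1 : SmoothCompact2 g1) (hg2 : SmoothCompact2 g2) :
    ∃ ε₀ : ℝ, 0 < ε₀ ∧ ∀ ε : ℝ, 0 < ε → ε ≤ ε₀ →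
      ∃ u1 u2 : ℝ → ℝ → ℝ → ℝ, IsSolution ε f1 f2 g1 g2 u1 u2 ∧
        ∀ v1 v2 : ℝ → ℝ → ℝ → ℝ, IsSolution ε f1 f2 g1 g2 v1 v2 →
          ∀ t x1 x2 : ℝ, 0 ≤ t →
            v1 t x1 x2 = u1 t x1 x2 ∧ v2 t x1 x2 = u2 t x1 x2 := by
  classical
  obtain ⟨T0, C0, U0, V0, b⟩ := WaveGE.bas_exists (f := ![fun p => f1 p.1 p.2, fun p => f2 p.1 p.2])
    (g := ![fun p => g1 p.1 p.2, fun p => g2 p.1 p.2]) (WaveGE.fin2 hf1.1 hf2.1) (WaveGE.fin2 hf1.2 hf2.2)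
    (WaveGE.fin2 hg1.1 hg2.1) (WaveGE.fin2 hg1.2 hg2.2)
  obtain ⟨μ0, μp, H⟩ := b.glob
  refine ⟨min 1 μ0, by positivity, fun ε ε0 ε1 => ?_⟩
  have e1 : ε ≤ 1 := ε1.trans (min_le_left _ _)
  obtain ⟨w, sw, bw, iw⟩ := H (ε ^ 2) (by positivity) (by nlinarith [min_le_right 1 μ0])
  set v : Fin 2 → WaveGE.P → ℝ := fun i q => ε * w i (q + (T0, 0))
  have sv : ∀ i, WaveGE.Sm (v i) := fun i => (WaveGE.Sm.const ε).mul ((sw i).shift _)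
  have dv : ∀ i q, WaveGE.dt (v i) q = ε * WaveGE.dt (w i) (q + (T0, 0)) := fun i q => by
    simp only [WaveGE.dt, v]
    rw [WaveGE.pd_cmul ((sw i).shift _), WaveGE.pd_shift]
  have bv : ∀ i (p : WaveGE.P), 0 < p.1 → WaveGE.Box (v i) p = WaveGE.NL 1 (fun _ => 1) v i p := fun i p hp => by
    rw [WaveGE.Box_scale (sw i), bw i _ (by simpa using hp)]
    simp only [WaveGE.NL, dv]
    ring
  have h0 : ∀ x : ℝ × ℝ, ((0, x) : WaveGE.P) + (T0, 0) = (T0, x) := fun x => by simp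
  have s1 : ∀ x : ℝ × ℝ, v 0 (0, x) = ε * f1 x.1 x.2 ∧ WaveGE.dt (v 0) (0, x) = ε * g1 x.1 x.2 := fun x => by
    rw [dv]
    simp only [v, h0]
    rw [(iw 0 x).1, (iw 0 x).2]; exact ⟨rfl, rfl⟩
  have s2 : ∀ x : ℝ × ℝ, v 1 (0, x) = ε * f2 x.1 x.2 ∧ WaveGE.dt (v 1) (0, x) = ε * g2 x.1 x.2 := fun x => by
    rw [dv]
    simp only [v, h0]
    rw [(iw 1 x).1, (iw 1 x).2]; exact ⟨rfl, rfl⟩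
  refine ⟨_, _, WaveGE.isSolution_of sv bv s1 s2, fun v1 v2 hv t x1 x2 ht => ?_⟩
  obtain ⟨z, z1, z2, sz, bz, t1, t2⟩ := WaveGE.of_isSolution hv
  have key := WaveGE.uniq sz sv (ϑ := fun _ => 1) continuous_const (a := 0) (η := 1) (μ := 1) (t, x1, x2) ht one_pos
    (fun i q hq _ => bz i q hq) (fun i q hq _ => bv i q hq)
    (WaveGE.fin2 (fun x _ => by rw [(t1 x).1, (t1 x).2, (s1 x).1, (s1 x).2]; exact ⟨rfl, rfl⟩)
      (fun x _ => by rw [(t2 x).1, (t2 x).2, (s2 x).1, (s2 x).2]; exact ⟨rfl, rfl⟩))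
  have k0 := key 0
  have k1 := key 1
  rw [z1] at k0
  rw [z2] at k1
  exact ⟨k0, k1⟩

end
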